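/- (Proposition 2.5, uniform control of the Fourier transform of the profile.) There is a constant C such that, for δ, α as in the X-norm and ε₁ sufficiently small: if u is a classical solution of mKdV on [0,∞) satisfying ‖u‖_X ≤ ε₁, then its profile f satisfies sup_{t≥1} ‖f̂(t,·)‖_{L^∞(ℝ)} ≤ ‖û(0,·)‖_{L^∞(ℝ)} + C ε₁³. -/

import Mathlib

/-!
The proof uses the complete integrability of mKdV. The potential `w = u/√2` of the Zakharov-Shabat
system `c₁' = w e^{iξx} c₂`, `c₂' = -w e^{-iξx} c₁`, `(c₁, c₂)(-∞) = (0, 1)`, has a reflection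
coefficient `c₁(+∞)` whose modulus is conserved by the flow, so it suffices to compare this modulus
with that of the Fourier transform at a single time.

*Conservation* (`refl_conserved`). The system is solved for `w` cut off to `[-2R, 2R]`. The time
derivative of `|c₁(2R)|` is an integral whose integrand is an exact `x`-derivative up to terms
carrying the cutoff; these are small by uniform `H¹` bounds and tightness of the mass as `R → ∞`.
The definition of a classical solution contains no uniformity in time of the Schwartz seminorms, so
mass and energy conservation are not immediate from the pointwise identities. On time intervals with
an `H³` bound they hold (`energy_conserved`, `energy2_conserved`); a difference estimate between `u`
and its time translates (`diff_est`) propagates such a bound (`third_bound`), and Baire's theorem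
applied to the closed set of times near which the `H³` norm is unbounded shows that this set is empty
(`LB_all`). This yields the `H¹` bound `H1_all`.

*Comparison at time `t ≥ 1`* (`Spec.refl`). By Plancherel the X-norm controls `(∂_ξ - 3itξ²)û` and
`xu - 3tu_xx` in `L²`, besides `û` in `L^∞` (`spec_of_X`). After rescaling `x` by `t^{1/3}`, stationary
phase gives `|U| ≲ ε⟨x⟩^{-1/4}` and `|U'| ≲ ε⟨x⟩^{1/4}` (`decay_zero`, `decay_one`), and integration by
parts based on `(E(U' - iξU))' = E((x/3 + ξ²)U - F/3)`, with `E = e^{ixξ}` and `F = xU - 3U''`, bounds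
the truncated Fourier integrals of `U` away from the stationary points `x = -3ξ²` (`osc`). A
third-order expansion of the Zakharov-Shabat system (`scatter_abs`, `scatter_prof`) then gives
`|c₁(+∞)| = |∫ w e^{iξx}| + O(ε³)` uniformly in `ξ` and `t`.

*Times in `[0, 1]`* (`profile_unit`). Here `∂_t f̂ = -iξ e^{-itξ³} (u³)^`, whose integral is `O(ε³)`
directly from the `H¹` bound.
-/

noncomputable section

open MeasureTheory Real Complex

/-- Fourier transform: ĝ(ξ) = (2π)^{-1/2} ∫ e^{-ixξ} g(x) dx. -/
def FT (g : ℝ → ℂ) (ξ : ℝ) : ℂ :=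
  (Real.sqrt (2 * Real.pi) : ℂ)⁻¹ * ∫ x : ℝ, Complex.exp (-(Complex.I * x * ξ)) * g x

/-- L² norm. -/
def L2norm (g : ℝ → ℂ) : ℝ := Real.sqrt (∫ x : ℝ, ‖g x‖ ^ 2)

/-- L^∞ norm (as a pointwise supremum). -/
def LinfNorm (g : ℝ → ℂ) : ℝ := ⨆ x : ℝ, ‖g x‖

/-- H¹ norm: ‖g‖_{H¹}² = ‖g‖_{L²}² + ‖g'‖_{L²}². -/
def H1norm (g : ℝ → ℂ) : ℝ := Real.sqrt (L2norm g ^ 2 + L2norm (deriv g) ^ 2)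

/-- `u` is a classical solution of the (focusing) mKdV equation
`∂ₜu + ∂ₓ³u + ∂ₓ(u³) = 0` on the time set `s`: it is smooth, Schwartz in space
for each time in `s`, and solves the equation pointwise. -/
def IsMKdVOn (u : ℝ → ℝ → ℝ) (s : Set ℝ) : Prop :=
  ContDiffOn ℝ (⊤ : ℕ∞) (Function.uncurry u) (s ×ˢ Set.univ) ∧
  (∀ t ∈ s, ∃ g : SchwartzMap ℝ ℝ, ∀ x, u t x = g x) ∧
  (∀ t ∈ s, ∀ x : ℝ,
    deriv (fun t' => u t' x) t + iteratedDeriv 3 (fun y => u t y) x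
      + deriv (fun y => (u t y) ^ 3) x = 0)

/-- Fourier transform of the profile: f̂(t,ξ) = e^{-itξ³} û(t,ξ). -/
def profFT (u : ℝ → ℝ → ℝ) (t ξ : ℝ) : ℂ :=
  Complex.exp (-(Complex.I * t * ξ ^ 3)) * FT (fun x => (u t x : ℂ)) ξ

/-- The profile f(t) = e^{t∂ₓ³}u(t) in physical space (inverse Fourier transform of `profFT`). -/
def prof (u : ℝ → ℝ → ℝ) (t x : ℝ) : ℂ :=
  (Real.sqrt (2 * Real.pi) : ℂ)⁻¹ * ∫ ξ : ℝ, Complex.exp (Complex.I * x * ξ) * profFT u t ξ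

/-- The quantity inside the supremum defining the X-norm of `u`, at time `t`:
`t^{-δ}‖u(t)‖_{H¹} + t^{-1/6}‖x f(t)‖_{H¹} + t^{α/3-1/6}‖|∂ₓ|^α(x f(t))‖_{L²} + ‖f̂(t)‖_{L^∞}`,
where the `L²` norm of `|∂ₓ|^α (x f)` is expressed on the Fourier side (Plancherel). -/
def Xexpr (δ α : ℝ) (u : ℝ → ℝ → ℝ) (t : ℝ) : ℝ :=
  t ^ (-δ) * H1norm (fun x => (u t x : ℂ))
    + t ^ (-(1:ℝ)/6) * H1norm (fun x => (x : ℂ) * prof u t x)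
    + t ^ (α/3 - 1/6) *
        L2norm (fun ξ => ((|ξ| ^ α : ℝ) : ℂ) * FT (fun x => (x : ℂ) * prof u t x) ξ)
    + LinfNorm (profFT u t)

/-- `‖u‖_X ≤ ε`, i.e. the defining expression is `≤ ε` for every `t ≥ 1`. -/
def XLE (δ α : ℝ) (u : ℝ → ℝ → ℝ) (ε : ℝ) : Prop :=
  ∀ t : ℝ, 1 ≤ t → Xexpr δ α u t ≤ ε

/-- The weighted H¹ norm ‖⟨x⟩u₀‖_{H¹} of the initial data. -/
def initNorm (u : ℝ → ℝ → ℝ) : ℝ :=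
  H1norm (fun x => ((Real.sqrt (1 + x ^ 2) * u 0 x : ℝ) : ℂ))

set_option autoImplicit false
set_option linter.unusedSimpArgs false

/-! ### Rapidly decaying functions, cutoffs and smoothness in the open half plane -/

/-- Continuous real functions bounded by a multiple of `(1 + x²)⁻¹`: a class of integrable
functions stable under the algebraic operations used below. -/
def Dec (f : ℝ → ℝ) : Prop := Continuous f ∧ ∃ C, ∀ x, |f x| ≤ C * (1 + x ^ 2)⁻¹

lemma inv_one_add_sq_le_one (x : ℝ) : (1 + x ^ 2)⁻¹ ≤ 1 :=
  inv_le_one_of_one_le₀ (by nlinarith [sq_nonneg x])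

lemma Dec.cont {f : ℝ → ℝ} (hf : Dec f) : Continuous f := hf.1

lemma Dec.integrable {f : ℝ → ℝ} (hf : Dec f) : Integrable f := by
  obtain ⟨hc, C, hC⟩ := hf
  refine (integrable_inv_one_add_sq.const_mul C).mono' hc.aestronglyMeasurable ?_
  filter_upwards with x using hC x

lemma Dec.bdd {f : ℝ → ℝ} (hf : Dec f) : ∃ C, 0 ≤ C ∧ ∀ x, |f x| ≤ C := by
  obtain ⟨hc, C, hC⟩ := hf
  refine ⟨|C|, abs_nonneg _, fun x => (hC x).trans ?_⟩
  have h1 := inv_one_add_sq_le_one x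
  have h0 : 0 ≤ (1 + x ^ 2)⁻¹ := by positivity
  nlinarith [le_abs_self C, abs_nonneg C]

lemma Dec.mul_bdd {f g : ℝ → ℝ} (hf : Dec f) (hg : Continuous g) {C : ℝ}
    (hC : ∀ x, |g x| ≤ C) : Dec (fun x => f x * g x) := by
  obtain ⟨hc, D, hD⟩ := hf
  refine ⟨hc.mul hg, D * C, fun x => ?_⟩
  rw [abs_mul, mul_right_comm]
  exact mul_le_mul (hD x) (hC x) (abs_nonneg _) ((abs_nonneg _).trans (hD x))

lemma Dec.mul {f g : ℝ → ℝ} (hf : Dec f) (hg : Dec g) : Dec (fun x => f x * g x) := by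
  obtain ⟨C, -, hC⟩ := hg.bdd
  exact hf.mul_bdd hg.1 hC

lemma Dec.const_mul {f : ℝ → ℝ} (hf : Dec f) (c : ℝ) : Dec (fun x => c * f x) := by
  obtain ⟨hc, D, hD⟩ := hf
  refine ⟨continuous_const.mul hc, |c| * D, fun x => ?_⟩
  rw [abs_mul, mul_assoc]
  exact mul_le_mul_of_nonneg_left (hD x) (abs_nonneg _)

lemma Dec.add {f g : ℝ → ℝ} (hf : Dec f) (hg : Dec g) : Dec (fun x => f x + g x) := by
  obtain ⟨hc, D, hD⟩ := hf
  obtain ⟨hc', D', hD'⟩ := hg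
  refine ⟨hc.add hc', D + D', fun x => ?_⟩
  rw [add_mul]
  exact (abs_add_le _ _).trans (add_le_add (hD x) (hD' x))

lemma Dec.neg {f : ℝ → ℝ} (hf : Dec f) : Dec (fun x => - f x) := by
  simpa using hf.const_mul (-1)

lemma Dec.sub {f g : ℝ → ℝ} (hf : Dec f) (hg : Dec g) : Dec (fun x => f x - g x) := by
  simpa [sub_eq_add_neg] using hf.add hg.neg

lemma Dec.pow {f : ℝ → ℝ} (hf : Dec f) {n : ℕ} (hn : n ≠ 0) : Dec (fun x => f x ^ n) := by
  obtain ⟨m, rfl⟩ := Nat.exists_eq_succ_of_ne_zero hn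
  clear hn
  induction m with
  | zero => simpa using hf
  | succ m ih =>
    have := ih.mul hf
    simpa [pow_succ] using this

lemma Dec.abs {f : ℝ → ℝ} (hf : Dec f) : Dec (fun x => |f x|) :=
  ⟨hf.1.abs, by simpa using hf.2⟩

lemma Dec.tendsto_zero {f : ℝ → ℝ} (hf : Dec f) :
    Filter.Tendsto f (Filter.cocompact ℝ) (nhds 0) := by
  obtain ⟨hc, C, hC⟩ := hf
  rw [tendsto_zero_iff_abs_tendsto_zero]
  have h1 : Filter.Tendsto (fun x : ℝ => C * (1 + x ^ 2)⁻¹) (Filter.cocompact ℝ) (nhds 0) := by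
    have : Filter.Tendsto (fun x : ℝ => 1 + x ^ 2) (Filter.cocompact ℝ) Filter.atTop := by
      refine Filter.tendsto_atTop_add_const_left _ _ ?_
      have h := tendsto_norm_cocompact_atTop (E := ℝ)
      have h2 := (Filter.tendsto_pow_atTop (α := ℝ) (n := 2) (by norm_num)).comp h
      refine h2.congr fun x => ?_
      simp
    simpa using (tendsto_inv_atTop_zero.comp this).const_mul C
  exact squeeze_zero (fun _ => abs_nonneg _) hC h1

lemma dec_schwartz (g : SchwartzMap ℝ ℝ) : Dec g := by
  obtain ⟨C0, h0⟩ := g.decay 0 0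
  obtain ⟨C2, h2⟩ := g.decay 2 0
  refine ⟨g.continuous, C0 + C2, fun x => ?_⟩
  have a0 := h0.2 x
  have a2 := h2.2 x
  simp only [pow_zero, norm_iteratedFDeriv_zero, Real.norm_eq_abs, one_mul, sq_abs] at a0 a2
  rw [← div_eq_mul_inv, le_div_iff₀ (by positivity)]
  nlinarith

/-- The total integral of a derivative vanishes. -/
lemma Dec.integral_deriv {f f' : ℝ → ℝ} (hf : Dec f) (hf' : Dec f')
    (h : ∀ x, HasDerivAt f (f' x) x) : ∫ x, f' x = 0 :=
  integral_eq_zero_of_hasDerivAt_of_integrable h hf'.integrable hf.integrable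

/-- The elementary Sobolev embedding, with a free parameter. -/
lemma Dec.sq_le' {f f' : ℝ → ℝ} (hf : Dec f) (hf' : Dec f')
    (h : ∀ x, HasDerivAt f (f' x) x) {c : ℝ} (hc : 0 < c) (x : ℝ) :
    f x ^ 2 ≤ c * (∫ y, f y ^ 2) + c⁻¹ * ∫ y, f' y ^ 2 := by
  have hd : ∀ y ∈ Set.Iic x, HasDerivAt (fun y => f y ^ 2) (2 * (f y * f' y)) y := by
    intro y _
    refine ((h y).fun_pow 2).congr_deriv ?_
    norm_num
    ring
  have hi : Integrable (fun y => 2 * (f y * f' y)) := ((hf.mul hf').const_mul 2).integrable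
  have key := integral_Iic_of_hasDerivAt_of_tendsto' (a := x) hd hi.integrableOn
    (((hf.pow (n := 2) two_ne_zero).tendsto_zero).mono_left
      atBot_le_cocompact)
  rw [sub_zero] at key
  rw [← key, ← integral_const_mul, ← integral_const_mul,
    ← integral_add ((hf.pow two_ne_zero).const_mul c).integrable
      ((hf'.pow two_ne_zero).const_mul c⁻¹).integrable]
  have hs := (((hf.pow (n := 2) two_ne_zero).const_mul c).add
    ((hf'.pow (n := 2) two_ne_zero).const_mul c⁻¹)).integrable
  calc ∫ y in Set.Iic x, 2 * (f y * f' y)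
      ≤ ∫ y in Set.Iic x, (c * f y ^ 2 + c⁻¹ * f' y ^ 2) := by
        refine integral_mono hi.integrableOn hs.integrableOn fun y => ?_
        have : c * f y ^ 2 + c⁻¹ * f' y ^ 2 - 2 * (f y * f' y) = c⁻¹ * (c * f y - f' y) ^ 2 := by
          field_simp
          ring
        have h2 : 0 ≤ c⁻¹ * (c * f y - f' y) ^ 2 := by positivity
        simp only
        linarith
    _ ≤ ∫ y, (c * f y ^ 2 + c⁻¹ * f' y ^ 2) := by
        refine setIntegral_le_integral hs ?_
        filter_upwards with y
        simp only [Pi.zero_apply]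
        positivity

lemma Dec.sq_le {f f' : ℝ → ℝ} (hf : Dec f) (hf' : Dec f')
    (h : ∀ x, HasDerivAt f (f' x) x) (x : ℝ) :
    f x ^ 2 ≤ (∫ y, f y ^ 2) + ∫ y, f' y ^ 2 := by
  simpa using hf.sq_le' hf' h one_pos x

/-- `χ` is a twice differentiable cutoff, equal to `1` on `[-R, R]`, vanishing outside
`[-2R, 2R]`, with first and second derivatives `χ1`, `χ2` bounded by `k`. -/
structure IsCut (R k : ℝ) (χ χ1 χ2 : ℝ → ℝ) : Prop where
  d1 : ∀ x, HasDerivAt χ (χ1 x) x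
  d2 : ∀ x, HasDerivAt χ1 (χ2 x) x
  c2 : Continuous χ2
  nonneg : ∀ x, 0 ≤ χ x
  le_one : ∀ x, χ x ≤ 1
  one : ∀ x, |x| ≤ R → χ x = 1
  zero : ∀ x, 2 * R ≤ |x| → χ x = 0
  zero1 : ∀ x, 2 * R ≤ |x| → χ1 x = 0
  zero2 : ∀ x, 2 * R ≤ |x| → χ2 x = 0
  b1 : ∀ x, |χ1 x| ≤ k
  b2 : ∀ x, |χ2 x| ≤ k

namespace IsCut
variable {R k : ℝ} {χ χ1 χ2 : ℝ → ℝ}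

lemma c (h : IsCut R k χ χ1 χ2) : Continuous χ :=
  continuous_iff_continuousAt.2 fun x => (h.d1 x).continuousAt

lemma c1 (h : IsCut R k χ χ1 χ2) : Continuous χ1 :=
  continuous_iff_continuousAt.2 fun x => (h.d2 x).continuousAt

lemma abs_le_one (h : IsCut R k χ χ1 χ2) (x : ℝ) : |χ x| ≤ 1 := by
  rw [abs_of_nonneg (h.nonneg x)]; exact h.le_one x

lemma k_nonneg (h : IsCut R k χ χ1 χ2) : 0 ≤ k := (abs_nonneg _).trans (h.b1 0)

end IsCut

lemma exists_cut : ∃ K : ℝ, 0 < K ∧ ∀ R : ℝ, 1 ≤ R →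
    ∃ χ χ1 χ2 : ℝ → ℝ, IsCut R (K / R) χ χ1 χ2 := by
  let b : ContDiffBump (0 : ℝ) := ⟨1, 2, by norm_num, by norm_num⟩
  have hb : ContDiff ℝ 3 b := b.contDiff
  have hb1 : ContDiff ℝ 2 (deriv b) := by
    have : ContDiff ℝ (2 + 1) b := by simpa [show (2 : WithTop ℕ∞) + 1 = 3 by norm_num] using hb
    exact (contDiff_succ_iff_deriv.1 this).2.2
  have hb2 : ContDiff ℝ 1 (deriv (deriv b)) := by
    have : ContDiff ℝ (1 + 1) (deriv b) := by
      simpa [show (1 : WithTop ℕ∞) + 1 = 2 by norm_num] using hb1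
    exact (contDiff_succ_iff_deriv.1 this).2.2
  have hs : HasCompactSupport b := b.hasCompactSupport
  obtain ⟨K1, hK1⟩ := hs.deriv.exists_bound_of_continuous hb1.continuous
  obtain ⟨K2, hK2⟩ := hs.deriv.deriv.exists_bound_of_continuous hb2.continuous
  have d1 : ∀ x, HasDerivAt b (deriv b x) x := fun x =>
    (hb.differentiable (by norm_num) x).hasDerivAt
  have d2 : ∀ x, HasDerivAt (deriv b) (deriv (deriv b) x) x := fun x =>
    (hb1.differentiable (by norm_num) x).hasDerivAt
  have z0 : ∀ x : ℝ, 2 ≤ |x| → b x = 0 := by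
    intro x hx
    apply b.zero_of_le_dist
    simpa using hx
  have ts : tsupport b = Metric.closedBall 0 2 := b.tsupport_eq
  -- outside the open interval, the derivatives vanish by continuity
  have zz : ∀ g : ℝ → ℝ, Continuous g → (∀ x : ℝ, 2 < |x| → g x = 0) →
      ∀ x : ℝ, 2 ≤ |x| → g x = 0 := by
    intro g hg h x hx
    have hcl : IsClosed {x | g x = 0} := isClosed_eq hg continuous_const
    have hsub : closure {x : ℝ | 2 < |x|} ⊆ {x | g x = 0} := closure_minimal h hcl
    apply hsub
    rw [Metric.mem_closure_iff]
    intro ε hε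
    rcases le_total 0 x with h0 | h0
    · rw [abs_of_nonneg h0] at hx
      refine ⟨x + ε / 2, ?_, ?_⟩
      · rw [Set.mem_ofPred_eq, abs_of_nonneg (by linarith)]; linarith
      · rw [Real.dist_eq, abs_of_neg (by linarith)]; linarith
    · rw [abs_of_nonpos h0] at hx
      refine ⟨x - ε / 2, ?_, ?_⟩
      · rw [Set.mem_ofPred_eq, abs_of_neg (by linarith)]; linarith
      · rw [Real.dist_eq, abs_of_pos (by linarith)]; linarith
  have z1' : ∀ x : ℝ, 2 < |x| → deriv b x = 0 := by
    intro x hx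
    by_contra hne
    have := support_deriv_subset (f := b) hne
    rw [ts] at this
    simp at this
    linarith
  have z1 := zz _ hb1.continuous z1'
  have z2' : ∀ x : ℝ, 2 < |x| → deriv (deriv b) x = 0 := by
    intro x hx
    by_contra hne
    have h3 := support_deriv_subset (f := deriv b) hne
    have h4 := closure_mono (support_deriv_subset (f := (b : ℝ → ℝ))) h3
    rw [(isClosed_tsupport _).closure_eq, ts] at h4
    simp at h4
    linarith
  have z2 := zz _ hb2.continuous z2'
  refine ⟨|K1| + |K2| + 1, by positivity, fun R hR => ?_⟩
  have hR0 : 0 < R := by linarith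
  have e2 : ∀ x : ℝ, 2 * R ≤ |x| → 2 ≤ |x / R| := by
    intro x hx
    rw [abs_div, abs_of_pos hR0, le_div_iff₀ hR0]; exact hx
  have hdiv : ∀ x : ℝ, HasDerivAt (fun x => x / R) (1 / R) x := fun x =>
    (hasDerivAt_id x).div_const R
  refine ⟨fun x => b (x / R), fun x => deriv b (x / R) * (1 / R),
    fun x => deriv (deriv b) (x / R) * (1 / R) * (1 / R), ?_⟩
  refine ⟨fun x => ?_, fun x => ?_, ?_, fun x => b.nonneg, fun x => b.le_one, fun x hx => ?_,
    fun x hx => z0 _ (e2 x hx), fun x hx => ?_, fun x hx => ?_, fun x => ?_, fun x => ?_⟩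
  · exact HasDerivAt.comp (h₂ := (b : ℝ → ℝ)) x (d1 (x / R)) (hdiv x)
  · exact ((d2 (x / R)).comp x (hdiv x)).mul_const _
  · exact ((hb2.continuous.comp (continuous_id.div_const R)).mul continuous_const).mul
      continuous_const
  · apply b.one_of_mem_closedBall
    simp only [Metric.mem_closedBall, dist_zero_right, Real.norm_eq_abs]
    rw [abs_div, abs_of_pos hR0, div_le_iff₀ hR0]
    change |x| ≤ 1 * R
    linarith
  · simp [z1 _ (e2 x hx)]
  · simp [z2 _ (e2 x hx)]
  · have h := hK1 (x / R)
    rw [Real.norm_eq_abs] at h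
    rw [abs_mul, abs_of_pos (by positivity : 0 < 1 / R), mul_one_div]
    gcongr
    linarith [le_abs_self K1, abs_nonneg K2]
  · have h := hK2 (x / R)
    rw [Real.norm_eq_abs] at h
    rw [abs_mul, abs_mul, abs_of_pos (by positivity : 0 < 1 / R)]
    have h1 : 1 / R ≤ 1 := by rw [div_le_one hR0]; exact hR
    have h0 : 0 < 1 / R := by positivity
    have h2 : |deriv (deriv b) (x / R)| ≤ |K2| := h.trans (le_abs_self _)
    calc |deriv (deriv b) (x / R)| * (1 / R) * (1 / R) ≤ |K2| * (1 / R) * 1 := by gcongr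
      _ ≤ (|K1| + |K2| + 1) * (1 / R) := by
        have := abs_nonneg K1
        nlinarith
      _ = _ := by ring

/-- The open half plane `t > 0`. -/
def HP : Set (ℝ × ℝ) := Set.Ioi 0 ×ˢ Set.univ

lemma isOpen_HP : IsOpen HP := isOpen_Ioi.prod isOpen_univ

lemma mem_HP {t x : ℝ} (ht : 0 < t) : (t, x) ∈ HP := ⟨ht, trivial⟩

/-- Smooth functions of `(t, x)` in the open half plane. -/
def SmoothHP (F : ℝ → ℝ → ℝ) : Prop := ContDiffOn ℝ (⊤ : ℕ∞) (Function.uncurry F) HP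

lemma SmoothHP.contOn {F : ℝ → ℝ → ℝ} (hF : SmoothHP F) :
    ContinuousOn (Function.uncurry F) HP := ContDiffOn.continuousOn hF

lemma SmoothHP.fd {F : ℝ → ℝ → ℝ} (hF : SmoothHP F) {t x : ℝ} (ht : 0 < t) :
    HasFDerivAt (Function.uncurry F) (fderiv ℝ (Function.uncurry F) (t, x)) (t, x) :=
  ((hF.contDiffAt (isOpen_HP.mem_nhds (mem_HP ht))).differentiableAt
    (by simp)).hasFDerivAt

lemma SmoothHP.dx' {F : ℝ → ℝ → ℝ} (hF : SmoothHP F) {t : ℝ} (ht : 0 < t) (x : ℝ) :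
    HasDerivAt (F t) (fderiv ℝ (Function.uncurry F) (t, x) (0, 1)) x := by
  have h2 : HasDerivAt (fun y : ℝ => (t, y)) ((0 : ℝ), (1 : ℝ)) x :=
    (hasDerivAt_const x t).prodMk (hasDerivAt_id x)
  exact (hF.fd ht).comp_hasDerivAt x h2

lemma SmoothHP.dt' {F : ℝ → ℝ → ℝ} (hF : SmoothHP F) {t : ℝ} (ht : 0 < t) (x : ℝ) :
    HasDerivAt (fun s => F s x) (fderiv ℝ (Function.uncurry F) (t, x) (1, 0)) t := by
  have h2 : HasDerivAt (fun s : ℝ => (s, x)) ((1 : ℝ), (0 : ℝ)) t :=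
    (hasDerivAt_id t).prodMk (hasDerivAt_const t x)
  exact HasFDerivAt.comp_hasDerivAt (f := fun s : ℝ => (s, x)) t (hF.fd ht) h2

lemma SmoothHP.fderiv_apply {F : ℝ → ℝ → ℝ} (hF : SmoothHP F) (v : ℝ × ℝ) :
    SmoothHP (fun t x => fderiv ℝ (Function.uncurry F) (t, x) v) := by
  have h := ContDiffOn.fderiv_of_isOpen (m := (⊤ : ℕ∞)) hF isOpen_HP (by simp)
  exact h.clm_apply contDiffOn_const

lemma SmoothHP.congr {F G : ℝ → ℝ → ℝ} (hF : SmoothHP F) (h : ∀ t > 0, ∀ x, G t x = F t x) :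
    SmoothHP G := by
  refine ContDiffOn.congr hF ?_
  rintro ⟨t, x⟩ ⟨ht, -⟩
  exact h t ht x

lemma SmoothHP.dx {F : ℝ → ℝ → ℝ} (hF : SmoothHP F) :
    SmoothHP (fun t x => deriv (F t) x) :=
  (hF.fderiv_apply (0, 1)).congr fun _ ht x => (hF.dx' ht x).deriv

lemma SmoothHP.dt {F : ℝ → ℝ → ℝ} (hF : SmoothHP F) :
    SmoothHP (fun t x => deriv (fun s => F s x) t) :=
  (hF.fderiv_apply (1, 0)).congr fun _ ht x => (hF.dt' ht x).deriv

lemma SmoothHP.comm {F : ℝ → ℝ → ℝ} (hF : SmoothHP F) {t : ℝ} (ht : 0 < t) (x : ℝ) :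
    deriv (fun s => deriv (F s) x) t = deriv (fun y => deriv (fun s => F s y) t) x := by
  have hc := hF.contDiffAt (isOpen_HP.mem_nhds (mem_HP (x := x) ht))
  have l2 : (2 : WithTop ℕ∞) ≤ ((⊤ : ℕ∞) : WithTop ℕ∞) :=
    (show ((2 : ℕ∞) : WithTop ℕ∞) ≤ _ from WithTop.coe_le_coe.2 le_top)
  have hsymm := hc.isSymmSndFDerivAt (by simpa using l2)
  have hd : DifferentiableAt ℝ (fderiv ℝ (Function.uncurry F)) (t, x) := by
    refine (ContDiffAt.fderiv_right (m := 1) hc ?_).differentiableAt (by simp)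
    rw [one_add_one_eq_two]
    exact l2
  have e1 : deriv (fun s => deriv (F s) x) t
      = deriv (fun s => fderiv ℝ (Function.uncurry F) (s, x) (0, 1)) t := by
    apply Filter.EventuallyEq.deriv_eq
    filter_upwards [lt_mem_nhds ht] with s hs using (hF.dx' hs x).deriv
  have e2 : deriv (fun y => deriv (fun s => F s y) t) x
      = deriv (fun y => fderiv ℝ (Function.uncurry F) (t, y) (1, 0)) x := by
    congr 1
    ext y
    exact (hF.dt' ht y).deriv
  have h1 : HasDerivAt (fun s : ℝ => (s, x)) ((1 : ℝ), (0 : ℝ)) t :=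
    (hasDerivAt_id t).prodMk (hasDerivAt_const t x)
  have h2 : HasDerivAt (fun y : ℝ => (t, y)) ((0 : ℝ), (1 : ℝ)) x :=
    (hasDerivAt_const x t).prodMk (hasDerivAt_id x)
  have f1 : HasDerivAt (fun s => fderiv ℝ (Function.uncurry F) (s, x))
      (fderiv ℝ (fderiv ℝ (Function.uncurry F)) (t, x) (1, 0)) t :=
    HasFDerivAt.comp_hasDerivAt (f := fun s : ℝ => (s, x)) t hd.hasFDerivAt h1
  have f2 : HasDerivAt (fun y => fderiv ℝ (Function.uncurry F) (t, y))
      (fderiv ℝ (fderiv ℝ (Function.uncurry F)) (t, x) (0, 1)) x :=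
    HasFDerivAt.comp_hasDerivAt (f := fun y : ℝ => (t, y)) x hd.hasFDerivAt h2
  have g1 := (f1.clm_apply (hasDerivAt_const t ((0 : ℝ), (1 : ℝ)))).deriv
  have g2 := (f2.clm_apply (hasDerivAt_const x ((1 : ℝ), (0 : ℝ)))).deriv
  rw [map_zero, add_zero] at g1 g2
  rw [e1, e2, g1, g2]
  exact hsymm (1, 0) (0, 1)

/-- The spatial derivatives `∂ₓʲ u`. -/
def V (u : ℝ → ℝ → ℝ) (j : ℕ) (t x : ℝ) : ℝ := iteratedDeriv j (u t) x

/-- The time derivatives `∂ₜ ∂ₓʲ u`. -/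
def Vt (u : ℝ → ℝ → ℝ) (j : ℕ) (t x : ℝ) : ℝ := deriv (fun s => V u j s x) t

section
variable {u : ℝ → ℝ → ℝ}

lemma V_zero (t x : ℝ) : V u 0 t x = u t x := by simp [V]

lemma V_succ (j : ℕ) (t x : ℝ) : V u (j + 1) t x = deriv (V u j t) x := by
  simp only [V, iteratedDeriv_succ]
  rfl

lemma V_schwartz (hu : IsMKdVOn u (Set.Ici 0)) (j : ℕ) {t : ℝ} (ht : 0 ≤ t) :
    ∃ g : SchwartzMap ℝ ℝ, ∀ x, V u j t x = g x := by
  induction j with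
  | zero =>
    obtain ⟨g, hg⟩ := hu.2.1 t ht
    exact ⟨g, fun x => by rw [V_zero]; exact hg x⟩
  | succ j ih =>
    obtain ⟨g, hg⟩ := ih
    refine ⟨SchwartzMap.derivCLM ℝ ℝ g, fun x => ?_⟩
    rw [V_succ, SchwartzMap.derivCLM_apply]
    congr 1
    exact funext hg

lemma V_dec (hu : IsMKdVOn u (Set.Ici 0)) (j : ℕ) {t : ℝ} (ht : 0 ≤ t) : Dec (V u j t) := by
  obtain ⟨g, hg⟩ := V_schwartz hu j ht
  rw [show V u j t = g from funext hg]
  exact dec_schwartz g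

lemma V_dx (hu : IsMKdVOn u (Set.Ici 0)) (j : ℕ) {t : ℝ} (ht : 0 ≤ t) (x : ℝ) :
    HasDerivAt (V u j t) (V u (j + 1) t x) x := by
  obtain ⟨g, hg⟩ := V_schwartz hu j ht
  rw [V_succ, show V u j t = g from funext hg]
  exact g.differentiableAt.hasDerivAt

lemma V_smooth (hu : IsMKdVOn u (Set.Ici 0)) (j : ℕ) : SmoothHP (V u j) := by
  induction j with
  | zero =>
    have h : SmoothHP u := hu.1.mono (Set.prod_mono Set.Ioi_subset_Ici_self subset_rfl)
    exact h.congr fun t _ x => V_zero t x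
  | succ j ih => exact ih.dx.congr fun t _ x => V_succ j t x

lemma V_dt (hu : IsMKdVOn u (Set.Ici 0)) (j : ℕ) {t : ℝ} (ht : 0 < t) (x : ℝ) :
    HasDerivAt (fun s => V u j s x) (Vt u j t x) t :=
  ((V_smooth hu j).dt' ht x).differentiableAt.hasDerivAt

lemma Vt_smooth (hu : IsMKdVOn u (Set.Ici 0)) (j : ℕ) : SmoothHP (Vt u j) :=
  (V_smooth hu j).dt

lemma Vt_zero (hu : IsMKdVOn u (Set.Ici 0)) {t : ℝ} (ht : 0 < t) (x : ℝ) :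
    Vt u 0 t x = - V u 3 t x - 3 * (V u 0 t x ^ 2 * V u 1 t x) := by
  have h := hu.2.2 t ht.le x
  have h3 : deriv (fun y => (u t y) ^ 3) x = 3 * (V u 0 t x ^ 2 * V u 1 t x) := by
    have e : (fun y => (u t y) ^ 3) = fun y => V u 0 t y ^ 3 := by
      ext y; rw [V_zero]
    rw [e, ((V_dx hu 0 ht.le x).fun_pow 3).deriv]
    norm_num
    ring
  have h0 : deriv (fun t' => u t' x) t = Vt u 0 t x := by
    simp only [Vt, V_zero]
  have h1 : iteratedDeriv 3 (fun y => u t y) x = V u 3 t x := rfl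
  rw [h0, h1, h3] at h
  linarith

lemma Vt_one (hu : IsMKdVOn u (Set.Ici 0)) {t : ℝ} (ht : 0 < t) (x : ℝ) :
    Vt u 1 t x = - V u 4 t x - 6 * (V u 0 t x * V u 1 t x ^ 2)
      - 3 * (V u 0 t x ^ 2 * V u 2 t x) := by
  have h := (V_smooth hu 0).comm ht x
  have e1 : deriv (fun s => deriv (V u 0 s) x) t = Vt u 1 t x := by
    simp only [Vt, V_succ]
  have e2 : (fun y => deriv (fun s => V u 0 s y) t)
      = fun y => - V u 3 t y - 3 * (V u 0 t y ^ 2 * V u 1 t y) := by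
    ext y; exact Vt_zero hu ht y
  rw [e1, e2] at h
  rw [h]
  have d := ((V_dx hu 3 ht.le x).neg).sub
    (((((V_dx hu 0 ht.le x).fun_pow 2).mul (V_dx hu 1 ht.le x))).const_mul 3)
  refine d.deriv.trans ?_
  norm_num
  ring

lemma Vt_two (hu : IsMKdVOn u (Set.Ici 0)) {t : ℝ} (ht : 0 < t) (x : ℝ) :
    Vt u 2 t x = - V u 5 t x - 6 * V u 1 t x ^ 3
      - 18 * (V u 0 t x * V u 1 t x * V u 2 t x)
      - 3 * (V u 0 t x ^ 2 * V u 3 t x) := by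
  have h := (V_smooth hu 1).comm ht x
  have e1 : deriv (fun s => deriv (V u 1 s) x) t = Vt u 2 t x := by
    simp only [Vt, V_succ]
  have e2 : (fun y => deriv (fun s => V u 1 s y) t)
      = fun y => - V u 4 t y - 6 * (V u 0 t y * V u 1 t y ^ 2)
      - 3 * (V u 0 t y ^ 2 * V u 2 t y) := by
    ext y; exact Vt_one hu ht y
  rw [e1, e2] at h
  rw [h]
  have d := (((V_dx hu 4 ht.le x).neg).sub
    ((((V_dx hu 0 ht.le x).mul ((V_dx hu 1 ht.le x).fun_pow 2))).const_mul 6)).sub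
    (((((V_dx hu 0 ht.le x).fun_pow 2).mul (V_dx hu 2 ht.le x))).const_mul 3)
  refine d.deriv.trans ?_
  norm_num
  ring

end

/-! ### Localized conservation laws -/

section
variable {E : Type*} [NormedAddCommGroup E] [NormedSpace ℝ E]
variable {R k : ℝ} {χ χ1 χ2 : ℝ → ℝ}

lemma integrable_cut {ζ : ℝ → ℝ} (hζ : Continuous ζ) {a : ℝ} (h0 : ∀ x, a ≤ |x| → ζ x = 0)
    {g : ℝ → E} (hg : Continuous g) : Integrable (fun x => ζ x • g x) := by
  refine (hζ.smul hg).integrable_of_hasCompactSupport ?_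
  refine HasCompactSupport.intro (isCompact_Icc (a := -a) (b := a)) fun x hx => ?_
  have : a ≤ |x| := by
    by_contra hlt
    push Not at hlt
    exact hx ⟨(abs_lt.1 hlt).1.le, (abs_lt.1 hlt).2.le⟩
  simp [h0 x this]

/-- Differentiation under a compactly supported spatial integral. -/
lemma hasDerivAt_cut {ζ : ℝ → ℝ} (hζ : Continuous ζ) {a : ℝ} (h0 : ∀ x, a ≤ |x| → ζ x = 0)
    {ρ ρt : ℝ → ℝ → E}
    (hd : ∀ t > 0, ∀ x, HasDerivAt (fun s => ρ s x) (ρt t x) t)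
    (hc : ContinuousOn (Function.uncurry ρ) HP) (hct : ContinuousOn (Function.uncurry ρt) HP)
    {t : ℝ} (ht : 0 < t) :
    HasDerivAt (fun s => ∫ x, ζ x • ρ s x) (∫ x, ζ x • ρt t x) t := by
  have hcx : ∀ (g : ℝ → ℝ → E), ContinuousOn (Function.uncurry g) HP → ∀ s > 0,
      Continuous (g s) := by
    intro g hg s hs
    exact hg.comp_continuous (f := fun x => (s, x)) (by fun_prop) fun x => mem_HP hs
  have hK : IsCompact (Set.Icc (t / 2) (2 * t) ×ˢ Set.Icc (-a) a) :=
    isCompact_Icc.prod isCompact_Icc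
  have hsub : Set.Icc (t / 2) (2 * t) ×ˢ Set.Icc (-a) a ⊆ HP := by
    rintro ⟨s, x⟩ ⟨hs, -⟩
    exact mem_HP (by have := hs.1; simp only at this; linarith)
  obtain ⟨M, hM⟩ := hK.exists_bound_of_continuousOn
    (f := fun p : ℝ × ℝ => ζ p.2 • Function.uncurry ρt p)
    ((hζ.comp continuous_snd).continuousOn.smul (hct.mono hsub))
  have hpos : ∀ s ∈ Set.Ioo (t / 2) (2 * t), 0 < s := fun s hs => by
    have := hs.1; linarith
  refine (hasDerivAt_integral_of_dominated_loc_of_deriv_le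
    (s := Set.Ioo (t / 2) (2 * t)) (bound := fun x => (Set.Icc (-a) a).indicator (fun _ => |M|) x)
    (F' := fun s x => ζ x • ρt s x)
    (Ioo_mem_nhds (by linarith) (by linarith)) ?_ ?_ ?_ ?_ ?_ ?_).2
  · filter_upwards [Ioo_mem_nhds (by linarith : t / 2 < t) (by linarith : t < 2 * t)] with s hs
    exact (hζ.smul (hcx ρ hc s (hpos s hs))).aestronglyMeasurable
  · exact integrable_cut hζ h0 (hcx ρ hc t ht)
  · exact (hζ.smul (hcx ρt hct t ht)).aestronglyMeasurable
  · filter_upwards with x s hs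
    by_cases hx : x ∈ Set.Icc (-a) a
    · rw [Set.indicator_of_mem hx]
      exact (hM (s, x) ⟨⟨hs.1.le, hs.2.le⟩, hx⟩).trans (le_abs_self _)
    · rw [Set.indicator_of_notMem hx]
      have : a ≤ |x| := by
        by_contra hlt
        push Not at hlt
        exact hx ⟨(abs_lt.1 hlt).1.le, (abs_lt.1 hlt).2.le⟩
      simp [h0 x this]
  · rw [integrable_indicator_iff measurableSet_Icc]
    exact integrableOn_const (by simp)
  · filter_upwards with x s hs
    exact (hd s (hpos s hs) x).const_smul (ζ x)


/-- Integration by parts for a density whose time derivative is a sum of an `x`-derivative, a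
second `x`-derivative and a source. -/
lemma cut_flux (hχ : IsCut R k χ χ1 χ2) {ρt J1 J1x J2 J2x J2xx h : ℝ → E}
    (hJ1 : ∀ x, HasDerivAt J1 (J1x x) x) (hJ2 : ∀ x, HasDerivAt J2 (J2x x) x)
    (hJ2x : ∀ x, HasDerivAt J2x (J2xx x) x)
    (cJ1x : Continuous J1x) (cJ2xx : Continuous J2xx) (ch : Continuous h)
    (e : ∀ x, ρt x = - J1x x - J2xx x + h x) :
    ∫ x, χ x • ρt x = (∫ x, χ1 x • J1 x) - (∫ x, χ2 x • J2 x) + ∫ x, χ x • h x := by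
  have cJ1 : Continuous J1 := continuous_iff_continuousAt.2 fun x => (hJ1 x).continuousAt
  have cJ2 : Continuous J2 := continuous_iff_continuousAt.2 fun x => (hJ2 x).continuousAt
  have cJ2x : Continuous J2x := continuous_iff_continuousAt.2 fun x => (hJ2x x).continuousAt
  have i1 := integrable_cut (E := E) hχ.c1 hχ.zero1 cJ1
  have i2 := integrable_cut (E := E) hχ.c2 hχ.zero2 cJ2
  have ih := integrable_cut (E := E) hχ.c hχ.zero ch
  have iZ : Integrable (fun x => χ1 x • J2 x - χ x • (J1 x + J2x x)) :=
    (integrable_cut hχ.c1 hχ.zero1 cJ2).sub (integrable_cut hχ.c hχ.zero (cJ1.add cJ2x))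
  have iρ : Integrable (fun x => χ x • ρt x) := by
    refine integrable_cut hχ.c hχ.zero ?_
    rw [show ρt = fun x => - J1x x - J2xx x + h x from funext e]
    fun_prop
  have hZ : ∀ x, HasDerivAt (fun x => χ1 x • J2 x - χ x • (J1 x + J2x x))
      (χ x • ρt x - (χ1 x • J1 x - χ2 x • J2 x + χ x • h x)) x := by
    intro x
    have d := ((hχ.d2 x).smul (hJ2 x)).sub ((hχ.d1 x).smul ((hJ1 x).add (hJ2x x)))
    refine d.congr_deriv ?_
    rw [e x]
    simp only [smul_add, smul_sub, smul_neg]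
    simp only [Pi.add_apply, smul_add]
    abel
  have i12 : Integrable (fun x => χ1 x • J1 x - χ2 x • J2 x) := i1.sub i2
  have i3 : Integrable (fun x => χ1 x • J1 x - χ2 x • J2 x + χ x • h x) := i12.add ih
  have := integral_eq_zero_of_hasDerivAt_of_integrable hZ (iρ.sub i3) iZ
  rw [integral_sub iρ i3, integral_add i12 ih, integral_sub i1 i2, sub_eq_zero] at this
  exact this

end

/-- A density `ρ` on the time interval `[a, b]` satisfying `∂ₜρ = -∂ₓJ1 - ∂ₓ²J2 + h` with a
nonpositive source `h` and fluxes dominated by an integrable function of integral at most `A`. -/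
structure Flux (a b A : ℝ) (ρ ρt J1 J1x J2 J2x J2xx h w : ℝ → ℝ → ℝ) : Prop where
  dρ : ∀ t > 0, ∀ x, HasDerivAt (fun s => ρ s x) (ρt t x) t
  cρ : ContinuousOn (Function.uncurry ρ) HP
  cρt : ContinuousOn (Function.uncurry ρt) HP
  dJ1 : ∀ t ∈ Set.Icc a b, ∀ x, HasDerivAt (J1 t) (J1x t x) x
  dJ2 : ∀ t ∈ Set.Icc a b, ∀ x, HasDerivAt (J2 t) (J2x t x) x
  dJ2x : ∀ t ∈ Set.Icc a b, ∀ x, HasDerivAt (J2x t) (J2xx t x) x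
  cJ1x : ∀ t ∈ Set.Icc a b, Continuous (J1x t)
  cJ2xx : ∀ t ∈ Set.Icc a b, Continuous (J2xx t)
  ch : ∀ t ∈ Set.Icc a b, Continuous (h t)
  eq : ∀ t ∈ Set.Icc a b, ∀ x, ρt t x = - J1x t x - J2xx t x + h t x
  hle : ∀ t ∈ Set.Icc a b, ∀ x, h t x ≤ 0
  w1 : ∀ t ∈ Set.Icc a b, ∀ x, |J1 t x| ≤ w t x
  w2 : ∀ t ∈ Set.Icc a b, ∀ x, |J2 t x| ≤ w t x
  wi : ∀ t ∈ Set.Icc a b, Integrable (w t)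
  wA : ∀ t ∈ Set.Icc a b, ∫ x, w t x ≤ A

lemma abs_integral_cut_le {ζ J w : ℝ → ℝ} {k A : ℝ} (hk : 0 ≤ k) (hζ : ∀ x, |ζ x| ≤ k)
    (hJ : ∀ x, |J x| ≤ w x) (hw : Integrable w) (hA : ∫ x, w x ≤ A) :
    |∫ x, ζ x • J x| ≤ k * A := by
  have h1 : ‖∫ x, ζ x • J x‖ ≤ ∫ x, k * w x := by
    refine norm_integral_le_of_norm_le (hw.const_mul k) ?_
    filter_upwards with x
    rw [norm_smul]
    exact mul_le_mul (hζ x) (hJ x) (abs_nonneg _) hk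
  rw [integral_const_mul] at h1
  exact h1.trans (mul_le_mul_of_nonneg_left hA hk)

section
variable {a b A : ℝ} {ρ ρt J1 J1x J2 J2x J2xx h w : ℝ → ℝ → ℝ}

lemma Flux.cut_le (F : Flux a b A ρ ρt J1 J1x J2 J2x J2xx h w) (ha : 0 < a) (hab : a ≤ b)
    {R k : ℝ} {χ χ1 χ2 : ℝ → ℝ} (hχ : IsCut R k χ χ1 χ2) :
    ∫ x, χ x • ρ b x ≤ (∫ x, χ x • ρ a x) + (b - a) * (2 * k * A) := by
  have hd : ∀ t > 0, HasDerivAt (fun s => ∫ x, χ x • ρ s x) (∫ x, χ x • ρt t x) t := fun t ht =>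
    hasDerivAt_cut hχ.c hχ.zero F.dρ F.cρ F.cρt ht
  have hle : ∀ t ∈ Set.Icc a b, ∫ x, χ x • ρt t x ≤ 2 * k * A := by
    intro t ht
    rw [cut_flux hχ (F.dJ1 t ht) (F.dJ2 t ht) (F.dJ2x t ht) (F.cJ1x t ht) (F.cJ2xx t ht)
      (F.ch t ht) (F.eq t ht)]
    have e1 := abs_integral_cut_le hχ.k_nonneg hχ.b1 (F.w1 t ht) (F.wi t ht) (F.wA t ht)
    have e2 := abs_integral_cut_le hχ.k_nonneg hχ.b2 (F.w2 t ht) (F.wi t ht) (F.wA t ht)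
    have e3 : ∫ x, χ x • h t x ≤ 0 := by
      refine integral_nonpos fun x => ?_
      exact mul_nonpos_of_nonneg_of_nonpos (hχ.nonneg x) (F.hle t ht x)
    linarith [abs_le.1 e1, abs_le.1 e2]
  have hpos : ∀ t ∈ Set.Icc a b, 0 < t := fun t ht => lt_of_lt_of_le ha ht.1
  have := Convex.image_sub_le_mul_sub_of_deriv_le (convex_Icc a b)
    (f := fun s => ∫ x, χ x • ρ s x) (C := 2 * k * A)
    (fun t ht => (hd t (hpos t ht)).continuousAt.continuousWithinAt)
    (fun t ht => (hd t (hpos t (interior_subset ht))).differentiableAt.differentiableWithinAt)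
    (fun t ht => by
      rw [(hd t (hpos t (interior_subset ht))).deriv]
      exact hle t (interior_subset ht))
    a (Set.left_mem_Icc.2 hab) b (Set.right_mem_Icc.2 hab) hab
  linarith

/-- The cutoffs converge to `1`, so integrals against them converge. -/
lemma tendsto_cut {E : Type*} [NormedAddCommGroup E] [NormedSpace ℝ E] {K : ℝ} {χ χ1 χ2 : ℕ → ℝ → ℝ}
    (hχ : ∀ n : ℕ, IsCut (n + 1) (K / (n + 1)) (χ n) (χ1 n) (χ2 n)) {g : ℝ → E}
    (hg : Integrable g) :
    Filter.Tendsto (fun n => ∫ x, χ n x • g x) Filter.atTop (nhds (∫ x, g x)) := by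
  refine tendsto_integral_of_dominated_convergence (fun x => ‖g x‖) ?_ hg.norm ?_ ?_
  · intro n
    exact (hχ n).c.aestronglyMeasurable.smul hg.aestronglyMeasurable
  · intro n
    filter_upwards with x
    rw [norm_smul]
    calc ‖χ n x‖ * ‖g x‖ ≤ 1 * ‖g x‖ :=
        mul_le_mul_of_nonneg_right ((hχ n).abs_le_one x) (norm_nonneg _)
      _ = _ := one_mul _
  · filter_upwards with x
    obtain ⟨N, hN⟩ := exists_nat_ge |x|
    refine tendsto_const_nhds.congr' ?_
    filter_upwards [Filter.eventually_ge_atTop N] with n hn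
    rw [(hχ n).one x (hN.trans (by exact_mod_cast hn.trans (Nat.le_succ n))), one_smul]

lemma exists_cut_seq : ∃ K : ℝ, 0 < K ∧ ∃ χ χ1 χ2 : ℕ → ℝ → ℝ,
    ∀ n : ℕ, IsCut (n + 1) (K / (n + 1)) (χ n) (χ1 n) (χ2 n) := by
  obtain ⟨K, hK, h⟩ := exists_cut
  have h' : ∀ n : ℕ, ∃ χ χ1 χ2 : ℝ → ℝ, IsCut (n + 1 : ℝ) (K / (n + 1)) χ χ1 χ2 := fun n =>
    h (n + 1) (by have : (0 : ℝ) ≤ n := Nat.cast_nonneg n; linarith)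
  choose χ χ1 χ2 hχ using h'
  exact ⟨K, hK, χ, χ1, χ2, hχ⟩

lemma Flux.le (F : Flux a b A ρ ρt J1 J1x J2 J2x J2xx h w) (ha : 0 < a) (hab : a ≤ b)
    (ia : Integrable (ρ a)) (ib : Integrable (ρ b)) : ∫ x, ρ b x ≤ ∫ x, ρ a x := by
  obtain ⟨K, hK, χ, χ1, χ2, hχ⟩ := exists_cut_seq
  have l1 := tendsto_cut hχ ib
  have l2 := tendsto_cut hχ ia
  have l3 : Filter.Tendsto (fun n : ℕ => (b - a) * (2 * (K / ((n : ℝ) + 1)) * A)) Filter.atTop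
      (nhds 0) := by
    have h0 := (tendsto_one_div_add_atTop_nhds_zero_nat (𝕜 := ℝ)).const_mul ((b - a) * 2 * K * A)
    rw [mul_zero] at h0
    refine h0.congr fun n => ?_
    field_simp
  have l4 := l2.add l3
  rw [add_zero] at l4
  exact le_of_tendsto_of_tendsto' l1 l4 fun n => F.cut_le ha hab (hχ n)

end

/-! ### Mass, energy and the second energy -/

/-- The squared `L²` norm of `∂ₓʲ u(t)`. -/
def IV (u : ℝ → ℝ → ℝ) (j : ℕ) (t : ℝ) : ℝ := ∫ x, V u j t x ^ 2

section
variable {u : ℝ → ℝ → ℝ}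

lemma IV_nonneg (j : ℕ) (t : ℝ) : 0 ≤ IV u j t := integral_nonneg fun _ => sq_nonneg _

lemma V_sq_le (hu : IsMKdVOn u (Set.Ici 0)) (j : ℕ) {t : ℝ} (ht : 0 ≤ t) (x : ℝ) :
    V u j t x ^ 2 ≤ IV u j t + IV u (j + 1) t :=
  (V_dec hu j ht).sq_le (V_dec hu (j + 1) ht) (V_dx hu j ht) x

lemma V_sq_int (hu : IsMKdVOn u (Set.Ici 0)) (j : ℕ) {t : ℝ} (ht : 0 ≤ t) :
    Integrable (fun x => V u j t x ^ 2) := ((V_dec hu j ht).pow two_ne_zero).integrable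

lemma V_contOn (hu : IsMKdVOn u (Set.Ici 0)) (j : ℕ) :
    ContinuousOn (fun p : ℝ × ℝ => V u j p.1 p.2) HP := (V_smooth hu j).contOn

lemma Vt_contOn (hu : IsMKdVOn u (Set.Ici 0)) (j : ℕ) :
    ContinuousOn (fun p : ℝ × ℝ => Vt u j p.1 p.2) HP := (Vt_smooth hu j).contOn

lemma V_cont (hu : IsMKdVOn u (Set.Ici 0)) (j : ℕ) {t : ℝ} (ht : 0 ≤ t) :
    Continuous (V u j t) := (V_dec hu j ht).1

lemma mass_flux (hu : IsMKdVOn u (Set.Ici 0)) {a b M σ : ℝ} (ha : 0 < a) (hσ : |σ| ≤ 1)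
    (hM : ∀ t ∈ Set.Icc a b, IV u 0 t + IV u 1 t ≤ M) :
    Flux a b ((5 + 2 * M) * M) (fun t x => σ * V u 0 t x ^ 2)
      (fun t x => σ * (2 * V u 0 t x * Vt u 0 t x))
      (fun t x => σ * (-3 * V u 1 t x ^ 2 + 3 / 2 * V u 0 t x ^ 4))
      (fun t x => σ * (-6 * (V u 1 t x * V u 2 t x) + 6 * (V u 0 t x ^ 3 * V u 1 t x)))
      (fun t x => σ * (2 * (V u 0 t x * V u 1 t x)))
      (fun t x => σ * (2 * (V u 1 t x ^ 2 + V u 0 t x * V u 2 t x)))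
      (fun t x => σ * (2 * (3 * (V u 1 t x * V u 2 t x) + V u 0 t x * V u 3 t x)))
      (fun _ _ => 0)
      (fun t x => (5 + 2 * M) * (V u 0 t x ^ 2 + V u 1 t x ^ 2)) := by
  have hp : ∀ t ∈ Set.Icc a b, 0 < t := fun t ht => lt_of_lt_of_le ha ht.1
  have c0 := V_contOn hu 0
  have ct := Vt_contOn hu 0
  have cc : ∀ j, ∀ t ∈ Set.Icc a b, Continuous (V u j t) := fun j t ht => V_cont hu j (hp t ht).le
  have hM0 : ∀ t ∈ Set.Icc a b, 0 ≤ M := fun t ht =>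
    (add_nonneg (IV_nonneg 0 t) (IV_nonneg 1 t)).trans (hM t ht)
  refine ⟨fun t ht x => ?_, ?_, ?_, fun t ht x => ?_, fun t ht x => ?_, fun t ht x => ?_,
    fun t ht => ?_, fun t ht => ?_, fun t ht => continuous_const, fun t ht x => ?_,
    fun t ht x => le_rfl, fun t ht x => ?_, fun t ht x => ?_, fun t ht => ?_, fun t ht => ?_⟩
  · refine (((V_dt hu 0 ht x).fun_pow 2).const_mul σ).congr_deriv ?_
    norm_num
  · change ContinuousOn (fun p : ℝ × ℝ => σ * V u 0 p.1 p.2 ^ 2) HP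
    fun_prop
  · change ContinuousOn (fun p : ℝ × ℝ => σ * (2 * V u 0 p.1 p.2 * Vt u 0 p.1 p.2)) HP
    fun_prop
  · have h0 := V_dx hu 0 (hp t ht).le x
    have h1 := V_dx hu 1 (hp t ht).le x
    refine ((((h1.fun_pow 2).const_mul (-3)).add ((h0.fun_pow 4).const_mul (3 / 2))).const_mul
      σ).congr_deriv ?_
    simp only [Nat.cast_ofNat, Nat.reduceAdd, Nat.reduceSub, pow_one, zero_add]
    ring
  · have h0 := V_dx hu 0 (hp t ht).le x
    have h1 := V_dx hu 1 (hp t ht).le x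
    refine (((h0.mul h1).const_mul 2).const_mul σ).congr_deriv ?_
    simp only [Nat.cast_ofNat, Nat.reduceAdd, Nat.reduceSub, pow_one, zero_add]
    ring
  · have h0 := V_dx hu 0 (hp t ht).le x
    have h1 := V_dx hu 1 (hp t ht).le x
    have h2 := V_dx hu 2 (hp t ht).le x
    refine ((((h1.fun_pow 2).add (h0.mul h2)).const_mul 2).const_mul σ).congr_deriv ?_
    simp only [Nat.cast_ofNat, Nat.reduceAdd, Nat.reduceSub, pow_one, zero_add]
    ring
  · have c0 := cc 0 t ht
    have c1 := cc 1 t ht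
    have c2 := cc 2 t ht
    fun_prop
  · have c0 := cc 0 t ht
    have c1 := cc 1 t ht
    have c2 := cc 2 t ht
    have c3 := cc 3 t ht
    fun_prop
  · simp only [Vt_zero hu (hp t ht) x]
    ring
  · have hs := (V_sq_le hu 0 (hp t ht).le x).trans (hM t ht)
    have h0 := hM0 t ht
    rw [abs_mul]
    refine (mul_le_of_le_one_left (abs_nonneg _) hσ).trans ?_
    rw [abs_le]
    constructor <;> nlinarith [sq_nonneg (V u 0 t x), sq_nonneg (V u 1 t x),
      mul_nonneg (sq_nonneg (V u 0 t x)) (sub_nonneg.2 hs), mul_nonneg h0 (sq_nonneg (V u 1 t x)),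
      mul_nonneg h0 (sq_nonneg (V u 0 t x)), sq_nonneg (V u 0 t x ^ 2)]
  · have h0 := hM0 t ht
    rw [abs_mul]
    refine (mul_le_of_le_one_left (abs_nonneg _) hσ).trans ?_
    rw [abs_le]
    constructor <;> nlinarith [sq_nonneg (V u 0 t x + V u 1 t x),
      sq_nonneg (V u 0 t x - V u 1 t x), sq_nonneg (V u 0 t x), sq_nonneg (V u 1 t x),
      mul_nonneg h0 (sq_nonneg (V u 1 t x)), mul_nonneg h0 (sq_nonneg (V u 0 t x))]
  · exact ((V_sq_int hu 0 (hp t ht).le).add (V_sq_int hu 1 (hp t ht).le)).const_mul _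
  · have h0 := hM0 t ht
    rw [integral_const_mul, integral_add (V_sq_int hu 0 (hp t ht).le)
      (V_sq_int hu 1 (hp t ht).le)]
    exact mul_le_mul_of_nonneg_left (hM t ht) (by linarith)

lemma mass_conserved (hu : IsMKdVOn u (Set.Ici 0)) {a b M : ℝ} (ha : 0 < a) (hab : a ≤ b)
    (hM : ∀ t ∈ Set.Icc a b, IV u 0 t + IV u 1 t ≤ M) : IV u 0 b = IV u 0 a := by
  have i : ∀ σ t, 0 < t → Integrable (fun x => σ * V u 0 t x ^ 2) := fun σ t ht =>
    (V_sq_int hu 0 ht.le).const_mul σ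
  have h1 := (mass_flux hu (σ := 1) ha (by simp) hM).le ha hab (i _ _ ha)
    (i _ _ (ha.trans_le hab))
  have h2 := (mass_flux hu (σ := -1) ha (by simp) hM).le ha hab (i _ _ ha)
    (i _ _ (ha.trans_le hab))
  simp only [integral_const_mul] at h1 h2
  unfold IV
  linarith

end

section

lemma abs_mul_le_of_sq {a b M : ℝ} (ha : a ^ 2 ≤ M) (hb : b ^ 2 ≤ M) : |a * b| ≤ M := by
  rw [abs_le]
  constructor <;> nlinarith [sq_nonneg (a + b), sq_nonneg (a - b)]

lemma abs_mul_le_half (a b : ℝ) : |a * b| ≤ (a ^ 2 + b ^ 2) / 2 := by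
  rw [abs_le]
  constructor <;> nlinarith [sq_nonneg (a + b), sq_nonneg (a - b)]

lemma energy_flux_bound {a b c M : ℝ} (ha : a ^ 2 ≤ M) :
    |-(3 / 2) * c ^ 2 - a ^ 3 * c + 3 * (a ^ 2 * b ^ 2) - 1 / 2 * a ^ 6|
      ≤ (2 + 4 * M + M ^ 2) * (a ^ 2 + b ^ 2 + c ^ 2) := by
  have hM : 0 ≤ M := (sq_nonneg a).trans ha
  have t1 : |a ^ 3 * c| ≤ M * ((a ^ 2 + c ^ 2) / 2) := by
    rw [show a ^ 3 * c = a ^ 2 * (a * c) by ring, abs_mul, abs_of_nonneg (sq_nonneg a)]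
    exact mul_le_mul ha (abs_mul_le_half a c) (abs_nonneg _) hM
  have t2 : a ^ 2 * b ^ 2 ≤ M * b ^ 2 := mul_le_mul_of_nonneg_right ha (sq_nonneg b)
  have t3 : a ^ 6 ≤ M ^ 2 * a ^ 2 := by
    rw [show a ^ 6 = (a ^ 2) ^ 2 * a ^ 2 by ring]
    exact mul_le_mul_of_nonneg_right (pow_le_pow_left₀ (sq_nonneg a) ha 2) (sq_nonneg a)
  have p1 := mul_nonneg hM (sq_nonneg a)
  have p2 := mul_nonneg hM (sq_nonneg b)
  have p3 := mul_nonneg hM (sq_nonneg c)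
  have p4 := mul_nonneg (sq_nonneg M) (sq_nonneg a)
  have p5 := mul_nonneg (sq_nonneg M) (sq_nonneg b)
  have p6 := mul_nonneg (sq_nonneg M) (sq_nonneg c)
  have p7 := mul_nonneg (sq_nonneg a) (sq_nonneg b)
  have p8 : 0 ≤ a ^ 6 := by positivity
  have := abs_le.1 t1
  rw [abs_le]
  constructor <;> nlinarith [sq_nonneg a, sq_nonneg b, sq_nonneg c]

lemma energy2_flux_bound {a b c d M : ℝ} (ha : a ^ 2 ≤ M) (hb : b ^ 2 ≤ M) (hc : c ^ 2 ≤ M) :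
    |-3 * d ^ 2 + 1 / 2 * b ^ 4 + 10 * (a * b ^ 2 * c) + 8 * (a ^ 2 * c ^ 2)
      - 10 * (a ^ 2 * b * d) - 45 / 2 * (a ^ 4 * b ^ 2) + 3 * (a ^ 5 * c) + 9 / 8 * a ^ 8|
      ≤ (3 + 30 * M + 30 * M ^ 2 + 2 * M ^ 3) * (a ^ 2 + b ^ 2 + c ^ 2 + d ^ 2) := by
  have hM : 0 ≤ M := (sq_nonneg a).trans ha
  have a4 : (a ^ 2) ^ 2 ≤ M ^ 2 := pow_le_pow_left₀ (sq_nonneg a) ha 2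
  have a6 : (a ^ 2) ^ 3 ≤ M ^ 3 := pow_le_pow_left₀ (sq_nonneg a) ha 3
  have t1 : |b ^ 4| ≤ M * b ^ 2 := by
    rw [show b ^ 4 = b ^ 2 * b ^ 2 by ring, abs_of_nonneg (by positivity)]
    exact mul_le_mul_of_nonneg_right hb (sq_nonneg b)
  have t2 : |a * b ^ 2 * c| ≤ M * b ^ 2 := by
    rw [show a * b ^ 2 * c = (a * c) * b ^ 2 by ring, abs_mul, abs_of_nonneg (sq_nonneg b)]
    exact mul_le_mul_of_nonneg_right (abs_mul_le_of_sq ha hc) (sq_nonneg b)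
  have t3 : |a ^ 2 * c ^ 2| ≤ M * c ^ 2 := by
    rw [abs_of_nonneg (by positivity)]
    exact mul_le_mul_of_nonneg_right ha (sq_nonneg c)
  have t4 : |a ^ 2 * b * d| ≤ M * ((b ^ 2 + d ^ 2) / 2) := by
    rw [mul_assoc, abs_mul, abs_of_nonneg (sq_nonneg a)]
    exact mul_le_mul ha (abs_mul_le_half b d) (abs_nonneg _) hM
  have t5 : |a ^ 4 * b ^ 2| ≤ M ^ 2 * b ^ 2 := by
    rw [abs_of_nonneg (by positivity), show a ^ 4 = (a ^ 2) ^ 2 by ring]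
    exact mul_le_mul_of_nonneg_right a4 (sq_nonneg b)
  have t6 : |a ^ 5 * c| ≤ M ^ 2 * ((a ^ 2 + c ^ 2) / 2) := by
    rw [show a ^ 5 * c = (a ^ 2) ^ 2 * (a * c) by ring, abs_mul,
      abs_of_nonneg (sq_nonneg (a ^ 2))]
    exact mul_le_mul a4 (abs_mul_le_half a c) (abs_nonneg _) (sq_nonneg M)
  have t7 : |a ^ 8| ≤ M ^ 3 * a ^ 2 := by
    rw [show a ^ 8 = (a ^ 2) ^ 3 * a ^ 2 by ring, abs_of_nonneg (by positivity)]
    exact mul_le_mul_of_nonneg_right a6 (sq_nonneg a)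
  have hM3 : 0 ≤ M ^ 3 := by positivity
  have q : ∀ y : ℝ, 0 ≤ M * y ^ 2 ∧ 0 ≤ M ^ 2 * y ^ 2 ∧ 0 ≤ M ^ 3 * y ^ 2 ∧ 0 ≤ y ^ 2 := fun y =>
    ⟨by positivity, by positivity, by positivity, by positivity⟩
  have := abs_le.1 t1
  have := abs_le.1 t2
  have := abs_le.1 t3
  have := abs_le.1 t4
  have := abs_le.1 t5
  have := abs_le.1 t6
  have := abs_le.1 t7
  have := q a
  have := q b
  have := q c
  have := q d
  rw [abs_le]
  constructor <;> linarith

variable {u : ℝ → ℝ → ℝ}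

lemma energy_flux (hu : IsMKdVOn u (Set.Ici 0)) {a b M σ : ℝ} (ha : 0 < a) (hσ : |σ| ≤ 1)
    (hM : ∀ t ∈ Set.Icc a b, IV u 0 t + IV u 1 t + IV u 2 t ≤ M) :
    Flux a b ((2 + 4 * M + M ^ 2) * M)
      (fun t x => σ * (1 / 2 * V u 1 t x ^ 2 - 1 / 4 * V u 0 t x ^ 4))
      (fun t x => σ * (V u 1 t x * Vt u 1 t x - V u 0 t x ^ 3 * Vt u 0 t x))
      (fun t x => σ * (-(3 / 2) * V u 2 t x ^ 2 - V u 0 t x ^ 3 * V u 2 t x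
        + 3 * (V u 0 t x ^ 2 * V u 1 t x ^ 2) - 1 / 2 * V u 0 t x ^ 6))
      (fun t x => σ * (-3 * (V u 2 t x * V u 3 t x) + 3 * (V u 0 t x ^ 2 * V u 1 t x * V u 2 t x)
        - V u 0 t x ^ 3 * V u 3 t x + 6 * (V u 0 t x * V u 1 t x ^ 3)
        - 3 * (V u 0 t x ^ 5 * V u 1 t x)))
      (fun t x => σ * (V u 1 t x * V u 2 t x))
      (fun t x => σ * (V u 2 t x ^ 2 + V u 1 t x * V u 3 t x))
      (fun t x => σ * (3 * (V u 2 t x * V u 3 t x) + V u 1 t x * V u 4 t x))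
      (fun _ _ => 0)
      (fun t x => (2 + 4 * M + M ^ 2) * (V u 0 t x ^ 2 + V u 1 t x ^ 2 + V u 2 t x ^ 2)) := by
  have hp : ∀ t ∈ Set.Icc a b, 0 < t := fun t ht => lt_of_lt_of_le ha ht.1
  have c0 := V_contOn hu 0
  have c1 := V_contOn hu 1
  have ct := Vt_contOn hu 0
  have ct1 := Vt_contOn hu 1
  have cc : ∀ j, ∀ t ∈ Set.Icc a b, Continuous (V u j t) := fun j t ht => V_cont hu j (hp t ht).le
  have hM0 : ∀ t ∈ Set.Icc a b, 0 ≤ M := fun t ht => by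
    linarith [hM t ht, IV_nonneg (u := u) 0 t, IV_nonneg (u := u) 1 t, IV_nonneg (u := u) 2 t]
  refine ⟨fun t ht x => ?_, ?_, ?_, fun t ht x => ?_, fun t ht x => ?_, fun t ht x => ?_,
    fun t ht => ?_, fun t ht => ?_, fun t ht => continuous_const, fun t ht x => ?_,
    fun t ht x => le_rfl, fun t ht x => ?_, fun t ht x => ?_, fun t ht => ?_, fun t ht => ?_⟩
  · refine (((((V_dt hu 1 ht x).fun_pow 2).const_mul (1 / 2)).sub
      (((V_dt hu 0 ht x).fun_pow 4).const_mul (1 / 4))).const_mul σ).congr_deriv ?_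
    simp only [Nat.cast_ofNat, Nat.reduceAdd, Nat.reduceSub, pow_one, zero_add]
    ring
  · change ContinuousOn (fun p : ℝ × ℝ =>
      σ * (1 / 2 * V u 1 p.1 p.2 ^ 2 - 1 / 4 * V u 0 p.1 p.2 ^ 4)) HP
    fun_prop
  · change ContinuousOn (fun p : ℝ × ℝ =>
      σ * (V u 1 p.1 p.2 * Vt u 1 p.1 p.2 - V u 0 p.1 p.2 ^ 3 * Vt u 0 p.1 p.2)) HP
    fun_prop
  · have h0 := V_dx hu 0 (hp t ht).le x
    have h1 := V_dx hu 1 (hp t ht).le x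
    have h2 := V_dx hu 2 (hp t ht).le x
    refine ((((((h2.fun_pow 2).const_mul (-(3 / 2))).sub ((h0.fun_pow 3).mul h2)).add
      (((h0.fun_pow 2).mul (h1.fun_pow 2)).const_mul 3)).sub
      ((h0.fun_pow 6).const_mul (1 / 2))).const_mul σ).congr_deriv ?_
    simp only [Nat.cast_ofNat, Nat.reduceAdd, Nat.reduceSub, pow_one, zero_add]
    ring
  · have h1 := V_dx hu 1 (hp t ht).le x
    have h2 := V_dx hu 2 (hp t ht).le x
    refine ((h1.mul h2).const_mul σ).congr_deriv ?_
    simp only [Nat.reduceAdd]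
    ring
  · have h1 := V_dx hu 1 (hp t ht).le x
    have h2 := V_dx hu 2 (hp t ht).le x
    have h3 := V_dx hu 3 (hp t ht).le x
    refine (((h2.fun_pow 2).add (h1.mul h3)).const_mul σ).congr_deriv ?_
    simp only [Nat.cast_ofNat, Nat.reduceAdd, Nat.reduceSub, pow_one, zero_add]
    ring
  · have c0 := cc 0 t ht
    have c1 := cc 1 t ht
    have c2 := cc 2 t ht
    have c3 := cc 3 t ht
    fun_prop
  · have c1 := cc 1 t ht
    have c2 := cc 2 t ht
    have c3 := cc 3 t ht
    have c4 := cc 4 t ht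
    fun_prop
  · simp only [Vt_zero hu (hp t ht) x, Vt_one hu (hp t ht) x]
    ring
  · have hs : V u 0 t x ^ 2 ≤ M := by
      linarith [V_sq_le hu 0 (hp t ht).le x, hM t ht, IV_nonneg (u := u) 2 t]
    rw [abs_mul]
    exact (mul_le_of_le_one_left (abs_nonneg _) hσ).trans (energy_flux_bound hs)
  · have h0 := hM0 t ht
    rw [abs_mul]
    refine (mul_le_of_le_one_left (abs_nonneg _) hσ).trans ((abs_mul_le_half _ _).trans ?_)
    have e : 1 ≤ 2 + 4 * M + M ^ 2 := by nlinarith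
    nlinarith [sq_nonneg (V u 0 t x), sq_nonneg (V u 1 t x), sq_nonneg (V u 2 t x),
      mul_le_mul_of_nonneg_right e (add_nonneg (add_nonneg (sq_nonneg (V u 0 t x))
        (sq_nonneg (V u 1 t x))) (sq_nonneg (V u 2 t x)))]
  · exact (((V_sq_int hu 0 (hp t ht).le).add (V_sq_int hu 1 (hp t ht).le)).add
      (V_sq_int hu 2 (hp t ht).le)).const_mul _
  · have h0 := hM0 t ht
    have i01 : Integrable (fun x => V u 0 t x ^ 2 + V u 1 t x ^ 2) :=
      (V_sq_int hu 0 (hp t ht).le).add (V_sq_int hu 1 (hp t ht).le)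
    rw [integral_const_mul, integral_add i01 (V_sq_int hu 2 (hp t ht).le),
      integral_add (V_sq_int hu 0 (hp t ht).le) (V_sq_int hu 1 (hp t ht).le)]
    exact mul_le_mul_of_nonneg_left (hM t ht) (by positivity)

lemma energy2_flux (hu : IsMKdVOn u (Set.Ici 0)) {a b M σ : ℝ} (ha : 0 < a) (hσ : |σ| ≤ 1)
    (hM : ∀ t ∈ Set.Icc a b, IV u 0 t + IV u 1 t + IV u 2 t + IV u 3 t ≤ M) :
    Flux a b ((3 + 30 * M + 30 * M ^ 2 + 2 * M ^ 3) * M)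
      (fun t x => σ * (V u 2 t x ^ 2 - 5 * (V u 0 t x ^ 2 * V u 1 t x ^ 2)
        + 1 / 2 * V u 0 t x ^ 6))
      (fun t x => σ * (2 * (V u 2 t x * Vt u 2 t x)
        - 10 * (V u 0 t x * V u 1 t x ^ 2 * Vt u 0 t x)
        - 10 * (V u 0 t x ^ 2 * V u 1 t x * Vt u 1 t x) + 3 * (V u 0 t x ^ 5 * Vt u 0 t x)))
      (fun t x => σ * (-3 * V u 3 t x ^ 2 + 1 / 2 * V u 1 t x ^ 4
        + 10 * (V u 0 t x * V u 1 t x ^ 2 * V u 2 t x) + 8 * (V u 0 t x ^ 2 * V u 2 t x ^ 2)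
        - 10 * (V u 0 t x ^ 2 * V u 1 t x * V u 3 t x) - 45 / 2 * (V u 0 t x ^ 4 * V u 1 t x ^ 2)
        + 3 * (V u 0 t x ^ 5 * V u 2 t x) + 9 / 8 * V u 0 t x ^ 8))
      (fun t x => σ * (-6 * (V u 3 t x * V u 4 t x) + 12 * (V u 1 t x ^ 3 * V u 2 t x)
        + 36 * (V u 0 t x * V u 1 t x * V u 2 t x ^ 2)
        - 10 * (V u 0 t x * V u 1 t x ^ 2 * V u 3 t x)
        + 6 * (V u 0 t x ^ 2 * V u 2 t x * V u 3 t x)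
        - 10 * (V u 0 t x ^ 2 * V u 1 t x * V u 4 t x)
        - 90 * (V u 0 t x ^ 3 * V u 1 t x ^ 3) - 30 * (V u 0 t x ^ 4 * V u 1 t x * V u 2 t x)
        + 3 * (V u 0 t x ^ 5 * V u 3 t x) + 9 * (V u 0 t x ^ 7 * V u 1 t x)))
      (fun t x => σ * (2 * (V u 2 t x * V u 3 t x)))
      (fun t x => σ * (2 * (V u 3 t x ^ 2 + V u 2 t x * V u 4 t x)))
      (fun t x => σ * (6 * (V u 3 t x * V u 4 t x) + 2 * (V u 2 t x * V u 5 t x)))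
      (fun _ _ => 0)
      (fun t x => (3 + 30 * M + 30 * M ^ 2 + 2 * M ^ 3)
        * (V u 0 t x ^ 2 + V u 1 t x ^ 2 + V u 2 t x ^ 2 + V u 3 t x ^ 2)) := by
  have hp : ∀ t ∈ Set.Icc a b, 0 < t := fun t ht => lt_of_lt_of_le ha ht.1
  have c0 := V_contOn hu 0
  have c1 := V_contOn hu 1
  have c2 := V_contOn hu 2
  have ct := Vt_contOn hu 0
  have ct1 := Vt_contOn hu 1
  have ct2 := Vt_contOn hu 2
  have cc : ∀ j, ∀ t ∈ Set.Icc a b, Continuous (V u j t) := fun j t ht => V_cont hu j (hp t ht).le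
  have hn := fun j t => IV_nonneg (u := u) j t
  have hM0 : ∀ t ∈ Set.Icc a b, 0 ≤ M := fun t ht => by
    linarith [hM t ht, hn 0 t, hn 1 t, hn 2 t, hn 3 t]
  refine ⟨fun t ht x => ?_, ?_, ?_, fun t ht x => ?_, fun t ht x => ?_, fun t ht x => ?_,
    fun t ht => ?_, fun t ht => ?_, fun t ht => continuous_const, fun t ht x => ?_,
    fun t ht x => le_rfl, fun t ht x => ?_, fun t ht x => ?_, fun t ht => ?_, fun t ht => ?_⟩
  · refine (((((V_dt hu 2 ht x).fun_pow 2).sub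
      ((((V_dt hu 0 ht x).fun_pow 2).mul ((V_dt hu 1 ht x).fun_pow 2)).const_mul 5)).add
      (((V_dt hu 0 ht x).fun_pow 6).const_mul (1 / 2))).const_mul σ).congr_deriv ?_
    simp only [Nat.cast_ofNat, Nat.reduceAdd, Nat.reduceSub, pow_one, zero_add]
    ring
  · change ContinuousOn (fun p : ℝ × ℝ =>
      σ * (V u 2 p.1 p.2 ^ 2 - 5 * (V u 0 p.1 p.2 ^ 2 * V u 1 p.1 p.2 ^ 2)
        + 1 / 2 * V u 0 p.1 p.2 ^ 6)) HP
    fun_prop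
  · change ContinuousOn (fun p : ℝ × ℝ => σ * (2 * (V u 2 p.1 p.2 * Vt u 2 p.1 p.2)
        - 10 * (V u 0 p.1 p.2 * V u 1 p.1 p.2 ^ 2 * Vt u 0 p.1 p.2)
        - 10 * (V u 0 p.1 p.2 ^ 2 * V u 1 p.1 p.2 * Vt u 1 p.1 p.2)
        + 3 * (V u 0 p.1 p.2 ^ 5 * Vt u 0 p.1 p.2))) HP
    fun_prop
  · have h0 := V_dx hu 0 (hp t ht).le x
    have h1 := V_dx hu 1 (hp t ht).le x
    have h2 := V_dx hu 2 (hp t ht).le x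
    have h3 := V_dx hu 3 (hp t ht).le x
    refine ((((((((((h3.fun_pow 2).const_mul (-3)).add ((h1.fun_pow 4).const_mul (1 / 2))).add
      (((h0.mul (h1.fun_pow 2)).mul h2).const_mul 10)).add
      (((h0.fun_pow 2).mul (h2.fun_pow 2)).const_mul 8)).sub
      ((((h0.fun_pow 2).mul h1).mul h3).const_mul 10)).sub
      (((h0.fun_pow 4).mul (h1.fun_pow 2)).const_mul (45 / 2))).add
      (((h0.fun_pow 5).mul h2).const_mul 3)).add
      ((h0.fun_pow 8).const_mul (9 / 8))).const_mul σ).congr_deriv ?_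
    simp only [Nat.cast_ofNat, Nat.reduceAdd, Nat.reduceSub, pow_one, zero_add, Pi.mul_apply]
    ring
  · have h2 := V_dx hu 2 (hp t ht).le x
    have h3 := V_dx hu 3 (hp t ht).le x
    refine (((h2.mul h3).const_mul 2).const_mul σ).congr_deriv ?_
    simp only [Nat.reduceAdd]
    ring
  · have h2 := V_dx hu 2 (hp t ht).le x
    have h3 := V_dx hu 3 (hp t ht).le x
    have h4 := V_dx hu 4 (hp t ht).le x
    refine ((((h3.fun_pow 2).add (h2.mul h4)).const_mul 2).const_mul σ).congr_deriv ?_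
    simp only [Nat.cast_ofNat, Nat.reduceAdd, Nat.reduceSub, pow_one, zero_add]
    ring
  · have c0 := cc 0 t ht
    have c1 := cc 1 t ht
    have c2 := cc 2 t ht
    have c3 := cc 3 t ht
    have c4 := cc 4 t ht
    fun_prop
  · have c2 := cc 2 t ht
    have c3 := cc 3 t ht
    have c4 := cc 4 t ht
    have c5 := cc 5 t ht
    fun_prop
  · simp only [Vt_zero hu (hp t ht) x, Vt_one hu (hp t ht) x, Vt_two hu (hp t ht) x]
    ring
  · have hs0 : V u 0 t x ^ 2 ≤ M := by
      linarith [V_sq_le hu 0 (hp t ht).le x, hM t ht, hn 2 t, hn 3 t]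
    have hs1 : V u 1 t x ^ 2 ≤ M := by
      linarith [V_sq_le hu 1 (hp t ht).le x, hM t ht, hn 0 t, hn 3 t]
    have hs2 : V u 2 t x ^ 2 ≤ M := by
      linarith [V_sq_le hu 2 (hp t ht).le x, hM t ht, hn 0 t, hn 1 t]
    rw [abs_mul]
    exact (mul_le_of_le_one_left (abs_nonneg _) hσ).trans (energy2_flux_bound hs0 hs1 hs2)
  · have h0 := hM0 t ht
    rw [abs_mul]
    refine (mul_le_of_le_one_left (abs_nonneg _) hσ).trans ?_
    rw [abs_mul, abs_of_pos (by norm_num : (0 : ℝ) < 2)]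
    have e : 1 ≤ 3 + 30 * M + 30 * M ^ 2 + 2 * M ^ 3 := by
      have : 0 ≤ M ^ 2 := by positivity
      have : 0 ≤ M ^ 3 := by positivity
      linarith
    have e2 := mul_le_mul_of_nonneg_right e (add_nonneg (add_nonneg (add_nonneg
        (sq_nonneg (V u 0 t x)) (sq_nonneg (V u 1 t x))) (sq_nonneg (V u 2 t x)))
        (sq_nonneg (V u 3 t x)))
    linarith [sq_nonneg (V u 0 t x), sq_nonneg (V u 1 t x), abs_mul_le_half (V u 2 t x) (V u 3 t x)]
  · exact ((((V_sq_int hu 0 (hp t ht).le).add (V_sq_int hu 1 (hp t ht).le)).add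
      (V_sq_int hu 2 (hp t ht).le)).add (V_sq_int hu 3 (hp t ht).le)).const_mul _
  · have h0 := hM0 t ht
    have i01 : Integrable (fun x => V u 0 t x ^ 2 + V u 1 t x ^ 2) :=
      (V_sq_int hu 0 (hp t ht).le).add (V_sq_int hu 1 (hp t ht).le)
    have i02 : Integrable (fun x => V u 0 t x ^ 2 + V u 1 t x ^ 2 + V u 2 t x ^ 2) :=
      i01.add (V_sq_int hu 2 (hp t ht).le)
    rw [integral_const_mul, integral_add i02 (V_sq_int hu 3 (hp t ht).le),
      integral_add i01 (V_sq_int hu 2 (hp t ht).le),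
      integral_add (V_sq_int hu 0 (hp t ht).le) (V_sq_int hu 1 (hp t ht).le)]
    exact mul_le_mul_of_nonneg_left (hM t ht) (by positivity)

/-- The energy `∫ (½ uₓ² - ¼ u⁴)`. -/
def E1 (u : ℝ → ℝ → ℝ) (t : ℝ) : ℝ := ∫ x, (1 / 2 * V u 1 t x ^ 2 - 1 / 4 * V u 0 t x ^ 4)

/-- The second energy `∫ (uₓₓ² - 5 u² uₓ² + ½ u⁶)`. -/
def E2 (u : ℝ → ℝ → ℝ) (t : ℝ) : ℝ :=
  ∫ x, (V u 2 t x ^ 2 - 5 * (V u 0 t x ^ 2 * V u 1 t x ^ 2) + 1 / 2 * V u 0 t x ^ 6)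

lemma E1_int (hu : IsMKdVOn u (Set.Ici 0)) {t : ℝ} (ht : 0 < t) :
    Integrable (fun x => 1 / 2 * V u 1 t x ^ 2 - 1 / 4 * V u 0 t x ^ 4) :=
  ((((V_dec hu 1 ht.le).pow two_ne_zero).const_mul _).sub
    (((V_dec hu 0 ht.le).pow four_ne_zero).const_mul _)).integrable

lemma E2_int (hu : IsMKdVOn u (Set.Ici 0)) {t : ℝ} (ht : 0 < t) :
    Integrable (fun x => V u 2 t x ^ 2 - 5 * (V u 0 t x ^ 2 * V u 1 t x ^ 2)
      + 1 / 2 * V u 0 t x ^ 6) :=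
  ((((V_dec hu 2 ht.le).pow two_ne_zero).sub
    ((((V_dec hu 0 ht.le).pow two_ne_zero).mul ((V_dec hu 1 ht.le).pow two_ne_zero)).const_mul
      _)).add (((V_dec hu 0 ht.le).pow (by norm_num)).const_mul _)).integrable

lemma energy_conserved (hu : IsMKdVOn u (Set.Ici 0)) {a b M : ℝ} (ha : 0 < a) (hab : a ≤ b)
    (hM : ∀ t ∈ Set.Icc a b, IV u 0 t + IV u 1 t + IV u 2 t ≤ M) : E1 u b = E1 u a := by
  have hb := ha.trans_le hab
  have h1 := (energy_flux hu (σ := 1) ha (by simp) hM).le ha hab ((E1_int hu ha).const_mul _)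
    ((E1_int hu hb).const_mul _)
  have h2 := (energy_flux hu (σ := -1) ha (by simp) hM).le ha hab ((E1_int hu ha).const_mul _)
    ((E1_int hu hb).const_mul _)
  simp only [integral_const_mul] at h1 h2
  unfold E1
  linarith

lemma energy2_conserved (hu : IsMKdVOn u (Set.Ici 0)) {a b M : ℝ} (ha : 0 < a) (hab : a ≤ b)
    (hM : ∀ t ∈ Set.Icc a b, IV u 0 t + IV u 1 t + IV u 2 t + IV u 3 t ≤ M) :
    E2 u b = E2 u a := by
  have hb := ha.trans_le hab
  have h1 := (energy2_flux hu (σ := 1) ha (by simp) hM).le ha hab ((E2_int hu ha).const_mul _)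
    ((E2_int hu hb).const_mul _)
  have h2 := (energy2_flux hu (σ := -1) ha (by simp) hM).le ha hab ((E2_int hu ha).const_mul _)
    ((E2_int hu hb).const_mul _)
  simp only [integral_const_mul] at h1 h2
  unfold E2
  linarith

end

/-! ### Difference estimate for two solutions -/

lemma IsMKdVOn.shift {u : ℝ → ℝ → ℝ} (hu : IsMKdVOn u (Set.Ici 0)) {h : ℝ} (hh : 0 ≤ h) :
    IsMKdVOn (fun s => u (s + h)) (Set.Ici 0) := by
  obtain ⟨h1, h2, h3⟩ := hu
  refine ⟨?_, fun t ht => h2 (t + h) (add_nonneg ht hh), fun t ht x => ?_⟩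
  · have : ContDiffOn ℝ (⊤ : ℕ∞) (fun p : ℝ × ℝ => (p.1 + h, p.2)) (Set.Ici 0 ×ˢ Set.univ) := by
      fun_prop
    refine h1.comp this ?_
    rintro ⟨s, x⟩ ⟨hs, -⟩
    exact ⟨add_nonneg hs hh, trivial⟩
  · have := h3 (t + h) (add_nonneg ht hh) x
    rw [← deriv_comp_add_const (fun t' => u t' x) h t] at this
    exact this

section
variable {u w : ℝ → ℝ → ℝ}

lemma V_shift (h : ℝ) (j : ℕ) (t x : ℝ) : V (fun s => u (s + h)) j t x = V u j (t + h) x := rfl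

lemma IV_shift (h : ℝ) (j : ℕ) (t : ℝ) : IV (fun s => u (s + h)) j t = IV u j (t + h) := rfl

set_option maxHeartbeats 1000000 in
/-- The weighted `L²` distance of two solutions obeys a flux identity whose source is
`(-σ q_x - Λ) d²`, with `q = w² + w u + u²`; it has a sign once `|q_x| ≤ Λ = 6M`. -/
lemma diff_flux (hu : IsMKdVOn u (Set.Ici 0)) (hw : IsMKdVOn w (Set.Ici 0)) {a b M σ : ℝ}
    (ha : 0 < a) (hσ : σ ^ 2 = 1)
    (hM : ∀ t ∈ Set.Icc a b, IV u 0 t + IV u 1 t + IV u 2 t ≤ M)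
    (hM' : ∀ t ∈ Set.Icc a b, IV w 0 t + IV w 1 t + IV w 2 t ≤ M) :
    Flux a b (rexp (6 * M * b) * (12 + 12 * M) * (2 * M))
      (fun t x => σ * rexp (-σ * (6 * M) * t) * (V w 0 t x - V u 0 t x) ^ 2)
      (fun t x => σ * (rexp (-σ * (6 * M) * t) * (-σ * (6 * M)) * (V w 0 t x - V u 0 t x) ^ 2 +
        rexp (-σ * (6 * M) * t) * (2 * (V w 0 t x - V u 0 t x) * (Vt w 0 t x - Vt u 0 t x))))
      (fun t x => σ * rexp (-σ * (6 * M) * t) * (-3 * (V w 1 t x - V u 1 t x) ^ 2 +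
        (V w 0 t x ^ 2 + V w 0 t x * V u 0 t x + V u 0 t x ^ 2) * (V w 0 t x - V u 0 t x) ^ 2))
      (fun t x => σ * rexp (-σ * (6 * M) * t) *
        (-6 * ((V w 1 t x - V u 1 t x) * (V w 2 t x - V u 2 t x)) +
        ((2 * V w 0 t x * V w 1 t x + (V w 1 t x * V u 0 t x + V w 0 t x * V u 1 t x) +
          2 * V u 0 t x * V u 1 t x) * (V w 0 t x - V u 0 t x) ^ 2 +
        (V w 0 t x ^ 2 + V w 0 t x * V u 0 t x + V u 0 t x ^ 2) *
          (2 * (V w 0 t x - V u 0 t x) * (V w 1 t x - V u 1 t x)))))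
      (fun t x => σ * rexp (-σ * (6 * M) * t) *
        (2 * ((V w 0 t x - V u 0 t x) * (V w 1 t x - V u 1 t x))))
      (fun t x => σ * rexp (-σ * (6 * M) * t) *
        (2 * ((V w 1 t x - V u 1 t x) ^ 2 + (V w 0 t x - V u 0 t x) * (V w 2 t x - V u 2 t x))))
      (fun t x => σ * rexp (-σ * (6 * M) * t) *
        (2 * (3 * ((V w 1 t x - V u 1 t x) * (V w 2 t x - V u 2 t x)) +
          (V w 0 t x - V u 0 t x) * (V w 3 t x - V u 3 t x))))
      (fun t x => rexp (-σ * (6 * M) * t) * (V w 0 t x - V u 0 t x) ^ 2 *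
        (-σ * (2 * V w 0 t x * V w 1 t x + (V w 1 t x * V u 0 t x + V w 0 t x * V u 1 t x) +
          2 * V u 0 t x * V u 1 t x) - 6 * M))
      (fun t x => rexp (6 * M * b) * (12 + 12 * M) *
        ((V w 0 t x ^ 2 + V w 1 t x ^ 2) + (V u 0 t x ^ 2 + V u 1 t x ^ 2))) := by
  have hp : ∀ t ∈ Set.Icc a b, 0 < t := fun t ht => lt_of_lt_of_le ha ht.1
  have c0 := V_contOn hu 0
  have ct := Vt_contOn hu 0
  have d0 := V_contOn hw 0
  have dt := Vt_contOn hw 0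
  have cc : ∀ j, ∀ t ∈ Set.Icc a b, Continuous (V u j t) := fun j t ht => V_cont hu j (hp t ht).le
  have dd : ∀ j, ∀ t ∈ Set.Icc a b, Continuous (V w j t) := fun j t ht => V_cont hw j (hp t ht).le
  have hM0 : ∀ t ∈ Set.Icc a b, 0 ≤ M := fun t ht =>
    (add_nonneg (add_nonneg (IV_nonneg 0 t) (IV_nonneg 1 t)) (IV_nonneg 2 t)).trans (hM t ht)
  have bu : ∀ t ∈ Set.Icc a b, ∀ x, V u 0 t x ^ 2 ≤ M ∧ V u 1 t x ^ 2 ≤ M ∧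
      V w 0 t x ^ 2 ≤ M ∧ V w 1 t x ^ 2 ≤ M := by
    intro t ht x
    have p := (hp t ht).le
    have := V_sq_le hu 0 p x
    have := V_sq_le hu 1 p x
    have := V_sq_le hw 0 p x
    have := V_sq_le hw 1 p x
    have := hM t ht
    have := hM' t ht
    have := IV_nonneg (u := u) 0 t
    have := IV_nonneg (u := u) 2 t
    have := IV_nonneg (u := w) 0 t
    have := IV_nonneg (u := w) 2 t
    refine ⟨?_, ?_, ?_, ?_⟩ <;> linarith
  have hE : ∀ t ∈ Set.Icc a b, rexp (-σ * (6 * M) * t) ≤ rexp (6 * M * b) := by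
    intro t ht
    have h0 := hM0 t ht
    have hs : -σ ≤ 1 := by nlinarith
    refine Real.exp_le_exp.2 ?_
    have h1 : -σ * (6 * M * t) ≤ 1 * (6 * M * t) :=
      mul_le_mul_of_nonneg_right hs (mul_nonneg (by linarith) (hp t ht).le)
    have h2 : 6 * M * t ≤ 6 * M * b := mul_le_mul_of_nonneg_left ht.2 (by linarith)
    linarith
  have hσ1 : |σ| = 1 := by
    have : |σ| ^ 2 = 1 := by rw [sq_abs, hσ]
    nlinarith [abs_nonneg σ]
  have key : ∀ (t x J : ℝ), t ∈ Set.Icc a b →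
      |J| ≤ (12 + 12 * M) * ((V w 0 t x ^ 2 + V w 1 t x ^ 2) + (V u 0 t x ^ 2 + V u 1 t x ^ 2)) →
      |σ * rexp (-σ * (6 * M) * t) * J| ≤ rexp (6 * M * b) * (12 + 12 * M) *
        ((V w 0 t x ^ 2 + V w 1 t x ^ 2) + (V u 0 t x ^ 2 + V u 1 t x ^ 2)) := by
    intro t x J ht hJ
    rw [abs_mul, abs_mul, hσ1, one_mul, abs_of_pos (Real.exp_pos _), mul_assoc (rexp (6 * M * b))]
    exact mul_le_mul (hE t ht) hJ (abs_nonneg _) (Real.exp_pos _).le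
  refine ⟨fun t ht x => ?_, ?_, ?_, fun t ht x => ?_, fun t ht x => ?_, fun t ht x => ?_,
    fun t ht => ?_, fun t ht => ?_, fun t ht => ?_, fun t ht x => ?_,
    fun t ht x => ?_, fun t ht x => ?_, fun t ht x => ?_, fun t ht => ?_, fun t ht => ?_⟩
  · have e1 : HasDerivAt (fun s => rexp (-σ * (6 * M) * s))
        (rexp (-σ * (6 * M) * t) * (-σ * (6 * M))) t := by
      simpa using (((hasDerivAt_id t).const_mul (-σ * (6 * M))).exp)
    have := ((e1.mul (((V_dt hw 0 ht x).sub (V_dt hu 0 ht x)).fun_pow 2)).const_mul σ)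
    refine (this.congr_deriv ?_).congr_of_eventuallyEq ?_
    · simp
    · filter_upwards with s
      simp [mul_assoc]
  · change ContinuousOn (fun p : ℝ × ℝ => σ * rexp (-σ * (6 * M) * p.1) *
      (V w 0 p.1 p.2 - V u 0 p.1 p.2) ^ 2) HP
    fun_prop
  · change ContinuousOn (fun p : ℝ × ℝ => σ * (rexp (-σ * (6 * M) * p.1) * (-σ * (6 * M)) *
      (V w 0 p.1 p.2 - V u 0 p.1 p.2) ^ 2 + rexp (-σ * (6 * M) * p.1) *
      (2 * (V w 0 p.1 p.2 - V u 0 p.1 p.2) * (Vt w 0 p.1 p.2 - Vt u 0 p.1 p.2)))) HP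
    fun_prop
  · have h0 := V_dx hu 0 (hp t ht).le x
    have h1 := V_dx hu 1 (hp t ht).le x
    have k0 := V_dx hw 0 (hp t ht).le x
    have k1 := V_dx hw 1 (hp t ht).le x
    refine (((((k1.sub h1).fun_pow 2).const_mul (-3)).add
      ((((k0.fun_pow 2).add (k0.mul h0)).add (h0.fun_pow 2)).mul
        ((k0.sub h0).fun_pow 2))).const_mul _).congr_deriv ?_
    simp only [Nat.cast_ofNat, Nat.reduceAdd, Nat.reduceSub, pow_one, zero_add, Pi.add_apply,
      Pi.mul_apply, Pi.sub_apply]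
    ring
  · have h0 := V_dx hu 0 (hp t ht).le x
    have h1 := V_dx hu 1 (hp t ht).le x
    have k0 := V_dx hw 0 (hp t ht).le x
    have k1 := V_dx hw 1 (hp t ht).le x
    refine ((((k0.sub h0).mul (k1.sub h1)).const_mul 2).const_mul _).congr_deriv ?_
    simp only [Nat.cast_ofNat, Nat.reduceAdd, Nat.reduceSub, pow_one, zero_add, Pi.add_apply,
      Pi.mul_apply, Pi.sub_apply]
    ring
  · have h0 := V_dx hu 0 (hp t ht).le x
    have h1 := V_dx hu 1 (hp t ht).le x
    have h2 := V_dx hu 2 (hp t ht).le x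
    have k0 := V_dx hw 0 (hp t ht).le x
    have k1 := V_dx hw 1 (hp t ht).le x
    have k2 := V_dx hw 2 (hp t ht).le x
    refine (((((k1.sub h1).fun_pow 2).add ((k0.sub h0).mul (k2.sub h2))).const_mul 2).const_mul
      _).congr_deriv ?_
    simp only [Nat.cast_ofNat, Nat.reduceAdd, Nat.reduceSub, pow_one, zero_add, Pi.add_apply,
      Pi.mul_apply, Pi.sub_apply]
    ring
  · have := cc 0 t ht
    have := cc 1 t ht
    have := cc 2 t ht
    have := dd 0 t ht
    have := dd 1 t ht
    have := dd 2 t ht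
    fun_prop
  · have c : ∀ j, Continuous fun x => V w j t x - V u j t x := fun j =>
      (dd j t ht).sub (cc j t ht)
    exact continuous_const.mul (continuous_const.mul
      ((continuous_const.mul ((c 1).mul (c 2))).add ((c 0).mul (c 3))))
  · have := cc 0 t ht
    have := cc 1 t ht
    have := dd 0 t ht
    have := dd 1 t ht
    fun_prop
  · simp only [Vt_zero hu (hp t ht) x, Vt_zero hw (hp t ht) x]
    linear_combination (-(6 * M) * rexp (-σ * (6 * M) * t) * (V w 0 t x - V u 0 t x) ^ 2) * hσ
  · obtain ⟨b1, b2, b3, b4⟩ := bu t ht x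
    have e1 := abs_mul_le_of_sq b3 b4
    have e2 := abs_mul_le_of_sq b4 b1
    have e3 := abs_mul_le_of_sq b3 b2
    have e4 := abs_mul_le_of_sq b1 b2
    refine mul_nonpos_of_nonneg_of_nonpos (by positivity) ?_
    have : |2 * V w 0 t x * V w 1 t x + (V w 1 t x * V u 0 t x + V w 0 t x * V u 1 t x) +
          2 * V u 0 t x * V u 1 t x| ≤ 6 * M := by
      rw [abs_le] at *
      constructor <;> linarith
    have h2 := neg_abs_le (σ * (2 * V w 0 t x * V w 1 t x +
      (V w 1 t x * V u 0 t x + V w 0 t x * V u 1 t x) + 2 * V u 0 t x * V u 1 t x))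
    rw [abs_mul, hσ1, one_mul] at h2
    linarith
  · refine key t x _ ht ?_
    obtain ⟨b1, b2, b3, b4⟩ := bu t ht x
    have h0 := hM0 t ht
    have hq : |V w 0 t x ^ 2 + V w 0 t x * V u 0 t x + V u 0 t x ^ 2| ≤ 3 * M := by
      have := abs_le.1 (abs_mul_le_of_sq b3 b1)
      rw [abs_le]
      constructor <;> nlinarith [sq_nonneg (V w 0 t x), sq_nonneg (V u 0 t x)]
    have hd : (V w 0 t x - V u 0 t x) ^ 2 ≤ 2 * (V w 0 t x ^ 2 + V u 0 t x ^ 2) := by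
      nlinarith [sq_nonneg (V w 0 t x + V u 0 t x)]
    have hd1 : (V w 1 t x - V u 1 t x) ^ 2 ≤ 2 * (V w 1 t x ^ 2 + V u 1 t x ^ 2) := by
      nlinarith [sq_nonneg (V w 1 t x + V u 1 t x)]
    refine (abs_add_le _ _).trans ?_
    rw [abs_mul, abs_mul, abs_of_nonneg (sq_nonneg (V w 1 t x - V u 1 t x)),
      abs_of_nonneg (sq_nonneg (V w 0 t x - V u 0 t x))]
    have h3 := mul_le_mul hq hd (sq_nonneg _) (by linarith)
    rw [show |(-3 : ℝ)| = 3 by norm_num]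
    nlinarith [sq_nonneg (V w 0 t x), sq_nonneg (V u 0 t x), sq_nonneg (V w 1 t x),
      sq_nonneg (V u 1 t x), mul_nonneg h0 (sq_nonneg (V w 1 t x)),
      mul_nonneg h0 (sq_nonneg (V u 1 t x)), mul_nonneg h0 (sq_nonneg (V w 0 t x)),
      mul_nonneg h0 (sq_nonneg (V u 0 t x))]
  · refine key t x _ ht ?_
    have h0 := hM0 t ht
    have hd : (V w 0 t x - V u 0 t x) ^ 2 ≤ 2 * (V w 0 t x ^ 2 + V u 0 t x ^ 2) := by
      nlinarith [sq_nonneg (V w 0 t x + V u 0 t x)]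
    have hd1 : (V w 1 t x - V u 1 t x) ^ 2 ≤ 2 * (V w 1 t x ^ 2 + V u 1 t x ^ 2) := by
      nlinarith [sq_nonneg (V w 1 t x + V u 1 t x)]
    have h3 := abs_mul_le_half (V w 0 t x - V u 0 t x) (V w 1 t x - V u 1 t x)
    rw [abs_mul, abs_two]
    nlinarith [sq_nonneg (V w 0 t x), sq_nonneg (V u 0 t x), sq_nonneg (V w 1 t x),
      sq_nonneg (V u 1 t x), mul_nonneg h0 (sq_nonneg (V w 1 t x)),
      mul_nonneg h0 (sq_nonneg (V u 1 t x)), mul_nonneg h0 (sq_nonneg (V w 0 t x)),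
      mul_nonneg h0 (sq_nonneg (V u 0 t x))]
  · exact (((V_sq_int hw 0 (hp t ht).le).add (V_sq_int hw 1 (hp t ht).le)).add
      ((V_sq_int hu 0 (hp t ht).le).add (V_sq_int hu 1 (hp t ht).le))).const_mul _
  · have h0 := hM0 t ht
    have i1 : Integrable fun x => V w 0 t x ^ 2 + V w 1 t x ^ 2 :=
      (V_sq_int hw 0 (hp t ht).le).add (V_sq_int hw 1 (hp t ht).le)
    have i2 : Integrable fun x => V u 0 t x ^ 2 + V u 1 t x ^ 2 :=
      (V_sq_int hu 0 (hp t ht).le).add (V_sq_int hu 1 (hp t ht).le)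
    have : ∫ x, ((V w 0 t x ^ 2 + V w 1 t x ^ 2) + (V u 0 t x ^ 2 + V u 1 t x ^ 2)) =
        (IV w 0 t + IV w 1 t) + (IV u 0 t + IV u 1 t) := by
      rw [integral_add i1 i2, integral_add (V_sq_int hw 0 (hp t ht).le)
        (V_sq_int hw 1 (hp t ht).le), integral_add (V_sq_int hu 0 (hp t ht).le)
        (V_sq_int hu 1 (hp t ht).le)]
      rfl
    rw [integral_const_mul, this]
    have := hM t ht
    have := hM' t ht
    have := IV_nonneg (u := u) 2 t
    have := IV_nonneg (u := w) 2 t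
    refine mul_le_mul_of_nonneg_left ?_ (by positivity)
    linarith

/-- Squared `L²` distance of two solutions at time `t`. -/
def dist2 (u w : ℝ → ℝ → ℝ) (t : ℝ) : ℝ := ∫ x, (V w 0 t x - V u 0 t x) ^ 2

lemma diff_int (hu : IsMKdVOn u (Set.Ici 0)) (hw : IsMKdVOn w (Set.Ici 0)) {t : ℝ} (ht : 0 ≤ t) :
    Integrable (fun x => (V w 0 t x - V u 0 t x) ^ 2) :=
  (((V_dec hw 0 ht).sub (V_dec hu 0 ht)).pow two_ne_zero).integrable

lemma diff_est (hu : IsMKdVOn u (Set.Ici 0)) (hw : IsMKdVOn w (Set.Ici 0)) {a b M : ℝ}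
    (ha : 0 < a) (hab : a ≤ b)
    (hM : ∀ t ∈ Set.Icc a b, IV u 0 t + IV u 1 t + IV u 2 t ≤ M)
    (hM' : ∀ t ∈ Set.Icc a b, IV w 0 t + IV w 1 t + IV w 2 t ≤ M) :
    dist2 u w b ≤ rexp (6 * M * (b - a)) * dist2 u w a ∧
    dist2 u w a ≤ rexp (6 * M * (b - a)) * dist2 u w b := by
  have i : ∀ σ t, 0 < t → Integrable (fun x => σ * rexp (-σ * (6 * M) * t) *
      (V w 0 t x - V u 0 t x) ^ 2) := fun σ t ht => (diff_int hu hw ht.le).const_mul _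
  have h1 := (diff_flux hu hw (σ := 1) ha (by norm_num) hM hM').le ha hab (i _ _ ha)
    (i _ _ (ha.trans_le hab))
  have h2 := (diff_flux hu hw (σ := -1) ha (by norm_num) hM hM').le ha hab (i _ _ ha)
    (i _ _ (ha.trans_le hab))
  simp only [integral_const_mul] at h1 h2
  change _ * dist2 u w b ≤ _ * dist2 u w a at h1
  change _ * dist2 u w b ≤ _ * dist2 u w a at h2
  constructor
  · have := mul_le_mul_of_nonneg_left h1 (Real.exp_pos (6 * M * b)).le
    have e1 : rexp (6 * M * b) * rexp (-1 * (6 * M) * b) = 1 := by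
      rw [← Real.exp_add, Real.exp_eq_one_iff]; ring
    have e2 : rexp (6 * M * b) * rexp (-1 * (6 * M) * a) = rexp (6 * M * (b - a)) := by
      rw [← Real.exp_add]; congr 1; ring
    rw [← e2]
    linear_combination this - dist2 u w b * e1
  · have := mul_le_mul_of_nonneg_left h2 (Real.exp_pos (-(6 * M * a))).le
    have e1 : rexp (-(6 * M * a)) * rexp (- -1 * (6 * M) * a) = 1 := by
      rw [← Real.exp_add, Real.exp_eq_one_iff]; ring
    have e2 : rexp (-(6 * M * a)) * rexp (- -1 * (6 * M) * b) = rexp (6 * M * (b - a)) := by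
      rw [← Real.exp_add]; congr 1; ring
    rw [← e2]
    linear_combination this - dist2 u w a * e1

end

/-! ### Bounding three derivatives in `L²` on a time interval -/

/-- Fatou's lemma for nonnegative continuous functions with bounded integrals. -/
lemma fatou_le {f : ℕ → ℝ → ℝ} {g : ℝ → ℝ} {K : ℝ} (hf : ∀ n, Continuous (f n))
    (hf0 : ∀ n x, 0 ≤ f n x) (hfi : ∀ n, Integrable (f n)) (hK : ∀ n, ∫ x, f n x ≤ K)
    (hg : Continuous g) (hfg : ∀ x, Filter.Tendsto (fun n => f n x) Filter.atTop (nhds (g x))) :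
    ∫ x, g x ≤ K := by
  have hg0 : ∀ x, 0 ≤ g x := fun x => ge_of_tendsto' (hfg x) fun n => hf0 n x
  have hK0 : 0 ≤ K := (integral_nonneg (hf0 0)).trans (hK 0)
  rw [integral_eq_lintegral_of_nonneg_ae (Filter.Eventually.of_forall hg0)
    hg.aestronglyMeasurable]
  refine ENNReal.toReal_le_of_le_ofReal hK0 ?_
  calc ∫⁻ x, ENNReal.ofReal (g x)
      = ∫⁻ x, Filter.liminf (fun n => ENNReal.ofReal (f n x)) Filter.atTop := by
        refine lintegral_congr fun x => ?_
        exact (Filter.Tendsto.liminf_eq (ENNReal.tendsto_ofReal (hfg x))).symm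
    _ ≤ Filter.liminf (fun n => ∫⁻ x, ENNReal.ofReal (f n x)) Filter.atTop :=
        lintegral_liminf_le fun n => (hf n).measurable.ennreal_ofReal
    _ ≤ ENNReal.ofReal K := by
        refine Filter.liminf_le_of_le (by isBoundedDefault) fun b hb => ?_
        obtain ⟨n, hn⟩ := hb.exists
        refine hn.trans ?_
        rw [← ofReal_integral_eq_lintegral_ofReal (hfi n) (Filter.Eventually.of_forall (hf0 n))]
        exact ENNReal.ofReal_le_ofReal (hK n)

section
variable {u : ℝ → ℝ → ℝ}

lemma Vt_dec (hu : IsMKdVOn u (Set.Ici 0)) {t : ℝ} (ht : 0 < t) : Dec (Vt u 0 t) := by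
  have h0 := V_dec hu 0 ht.le
  have h1 := V_dec hu 1 ht.le
  have h3 := V_dec hu 3 ht.le
  have h := h3.neg.sub (((h0.pow two_ne_zero).mul h1).const_mul 3)
  have e : Vt u 0 t = fun x => -V u 3 t x - 3 * (V u 0 t x ^ 2 * V u 1 t x) := by
    funext x
    rw [Vt_zero hu ht x]
  rw [e]
  exact h

lemma Vt_sq_int (hu : IsMKdVOn u (Set.Ici 0)) {t : ℝ} (ht : 0 < t) :
    Integrable (fun x => Vt u 0 t x ^ 2) := ((Vt_dec hu ht).pow two_ne_zero).integrable

lemma V0_four_le (hu : IsMKdVOn u (Set.Ici 0)) {t M : ℝ} (ht : 0 < t)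
    (hM : IV u 0 t + IV u 1 t ≤ M) (x : ℝ) : V u 0 t x ^ 4 * V u 1 t x ^ 2 ≤
      M ^ 2 * V u 1 t x ^ 2 := by
  have h := (V_sq_le hu 0 ht.le x).trans hM
  refine mul_le_mul_of_nonneg_right ?_ (sq_nonneg _)
  calc V u 0 t x ^ 4 = (V u 0 t x ^ 2) ^ 2 := by ring
    _ ≤ M ^ 2 := by gcongr

lemma integral_Vt_le (hu : IsMKdVOn u (Set.Ici 0)) {t M : ℝ} (ht : 0 < t)
    (hM : IV u 0 t + IV u 1 t + IV u 2 t + IV u 3 t ≤ M) :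
    ∫ x, Vt u 0 t x ^ 2 ≤ 2 * M + 18 * M ^ 3 := by
  have p0 := IV_nonneg (u := u) 0 t
  have p1 := IV_nonneg (u := u) 1 t
  have p2 := IV_nonneg (u := u) 2 t
  have p3 := IV_nonneg (u := u) 3 t
  have i3 := V_sq_int hu 3 ht.le
  have i1 := V_sq_int hu 1 ht.le
  calc ∫ x, Vt u 0 t x ^ 2 ≤ ∫ x, (2 * V u 3 t x ^ 2 + 18 * M ^ 2 * V u 1 t x ^ 2) := by
        refine integral_mono (Vt_sq_int hu ht) ((i3.const_mul _).add (i1.const_mul _)) fun x => ?_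
        have h := V0_four_le hu ht (M := M) (by linarith) x
        simp only [Vt_zero hu ht x]
        nlinarith [sq_nonneg (V u 3 t x - 3 * V u 0 t x ^ 2 * V u 1 t x)]
    _ = 2 * IV u 3 t + 18 * M ^ 2 * IV u 1 t := by
        rw [integral_add (i3.const_mul _) (i1.const_mul _), integral_const_mul, integral_const_mul]
        rfl
    _ ≤ 2 * M + 18 * M ^ 2 * M := by
        gcongr <;> linarith
    _ = _ := by ring

lemma IV_three_le (hu : IsMKdVOn u (Set.Ici 0)) {t M : ℝ} (ht : 0 < t)
    (hM : IV u 0 t + IV u 1 t ≤ M) :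
    IV u 3 t ≤ 2 * (∫ x, Vt u 0 t x ^ 2) + 18 * M ^ 3 := by
  have p0 := IV_nonneg (u := u) 0 t
  have p1 := IV_nonneg (u := u) 1 t
  have i3 := Vt_sq_int hu ht
  have i1 := V_sq_int hu 1 ht.le
  calc IV u 3 t ≤ ∫ x, (2 * Vt u 0 t x ^ 2 + 18 * M ^ 2 * V u 1 t x ^ 2) := by
        refine integral_mono (V_sq_int hu 3 ht.le) ((i3.const_mul _).add (i1.const_mul _))
          fun x => ?_
        have h := V0_four_le hu ht (M := M) (by linarith) x
        simp only [Vt_zero hu ht x]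
        nlinarith [sq_nonneg (V u 3 t x + 6 * V u 0 t x ^ 2 * V u 1 t x)]
    _ = 2 * (∫ x, Vt u 0 t x ^ 2) + 18 * M ^ 2 * IV u 1 t := by
        rw [integral_add (i3.const_mul _) (i1.const_mul _), integral_const_mul, integral_const_mul]
        rfl
    _ ≤ 2 * (∫ x, Vt u 0 t x ^ 2) + 18 * M ^ 2 * M := by
        gcongr; linarith
    _ = _ := by ring

/-- An `L²` bound on `∂ₜu` makes `u` Lipschitz in time with values in `L²`. -/
lemma dist2_shift_le (hu : IsMKdVOn u (Set.Ici 0)) {s h K : ℝ} (hs : 0 < s) (hh : 0 < h)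
    (hK : ∀ t ∈ Set.Icc s (s + h), ∫ x, Vt u 0 t x ^ 2 ≤ K) :
    dist2 u (fun t => u (t + h)) s ≤ rexp 1 * (h ^ 2 * K) := by
  obtain ⟨K', hK', χ, χ1, χ2, hχ⟩ := exists_cut_seq
  have hint := diff_int hu (hu.shift hh.le) hs.le
  refine le_of_tendsto' (tendsto_cut hχ hint) fun n => ?_
  have c0 := V_contOn hu 0
  have ct := Vt_contOn hu 0
  have cs : Continuous (V u 0 s) := V_cont hu 0 hs.le
  set ρ : ℝ → ℝ → ℝ := fun t x => rexp (-(t - s) / h) * (V u 0 t x - V u 0 s x) ^ 2 with hρ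
  set ρt : ℝ → ℝ → ℝ := fun t x => rexp (-(t - s) / h) * (-1 / h) * (V u 0 t x - V u 0 s x) ^ 2 +
    rexp (-(t - s) / h) * (2 * (V u 0 t x - V u 0 s x) * Vt u 0 t x) with hρt
  have dρ : ∀ t > 0, ∀ x, HasDerivAt (fun s => ρ s x) (ρt t x) t := by
    intro t ht x
    have e1 : HasDerivAt (fun t => rexp (-(t - s) / h)) (rexp (-(t - s) / h) * (-1 / h)) t :=
      ((((hasDerivAt_id t).sub_const s).neg).div_const h).exp
    refine (e1.mul (((V_dt hu 0 ht x).sub_const (V u 0 s x)).fun_pow 2)).congr_deriv ?_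
    simp [hρt]
  have cρ : ContinuousOn (Function.uncurry ρ) HP := by
    change ContinuousOn (fun p : ℝ × ℝ => rexp (-(p.1 - s) / h) *
      (V u 0 p.1 p.2 - V u 0 s p.2) ^ 2) HP
    fun_prop
  have cρt : ContinuousOn (Function.uncurry ρt) HP := by
    change ContinuousOn (fun p : ℝ × ℝ => rexp (-(p.1 - s) / h) * (-1 / h) *
      (V u 0 p.1 p.2 - V u 0 s p.2) ^ 2 +
      rexp (-(p.1 - s) / h) * (2 * (V u 0 p.1 p.2 - V u 0 s p.2) * Vt u 0 p.1 p.2)) HP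
    fun_prop
  have hd : ∀ t > 0, HasDerivAt (fun s => ∫ x, χ n x • ρ s x) (∫ x, χ n x • ρt t x) t :=
    fun t ht => hasDerivAt_cut (hχ n).c (hχ n).zero dρ cρ cρt ht
  have hpos : ∀ t ∈ Set.Icc s (s + h), 0 < t := fun t ht => lt_of_lt_of_le hs ht.1
  have hle : ∀ t ∈ Set.Icc s (s + h), ∫ x, χ n x • ρt t x ≤ h * K := by
    intro t ht
    have i := Vt_sq_int hu (hpos t ht)
    have hc : Continuous (ρt t) :=
      cρt.comp_continuous (f := fun x => (t, x)) (by fun_prop) fun x => mem_HP (hpos t ht)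
    calc ∫ x, χ n x • ρt t x ≤ ∫ x, h * Vt u 0 t x ^ 2 := by
          refine integral_mono (integrable_cut (hχ n).c (hχ n).zero hc) (i.const_mul h)
            fun x => ?_
          simp only [smul_eq_mul, hρt]
          set d := V u 0 t x - V u 0 s x
          have e0 := Real.exp_pos (-(t - s) / h)
          have e1 : rexp (-(t - s) / h) ≤ 1 := by
            rw [Real.exp_le_one_iff]
            exact div_nonpos_of_nonpos_of_nonneg (by linarith [ht.1]) hh.le
          have key : (-1 / h) * d ^ 2 + 2 * d * Vt u 0 t x ≤ h * Vt u 0 t x ^ 2 := by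
            have : h * Vt u 0 t x ^ 2 - ((-1 / h) * d ^ 2 + 2 * d * Vt u 0 t x) =
                (h * Vt u 0 t x - d) ^ 2 / h := by
              field_simp
              ring
            have h2 : 0 ≤ (h * Vt u 0 t x - d) ^ 2 / h := by positivity
            linarith
          have b0 := (hχ n).nonneg x
          have b1 := (hχ n).le_one x
          have p0 : 0 ≤ h * Vt u 0 t x ^ 2 := by positivity
          calc χ n x * (rexp (-(t - s) / h) * (-1 / h) * d ^ 2 +
              rexp (-(t - s) / h) * (2 * d * Vt u 0 t x))
              = χ n x * (rexp (-(t - s) / h) * ((-1 / h) * d ^ 2 + 2 * d * Vt u 0 t x)) := by ring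
            _ ≤ χ n x * (rexp (-(t - s) / h) * (h * Vt u 0 t x ^ 2)) := by gcongr
            _ ≤ 1 * (1 * (h * Vt u 0 t x ^ 2)) := by gcongr
            _ = _ := by ring
      _ = h * ∫ x, Vt u 0 t x ^ 2 := integral_const_mul _ _
      _ ≤ h * K := mul_le_mul_of_nonneg_left (hK t ht) hh.le
  have := Convex.image_sub_le_mul_sub_of_deriv_le (convex_Icc s (s + h))
    (f := fun s => ∫ x, χ n x • ρ s x) (C := h * K)
    (fun t ht => (hd t (hpos t ht)).continuousAt.continuousWithinAt)
    (fun t ht => (hd t (hpos t (interior_subset ht))).differentiableAt.differentiableWithinAt)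
    (fun t ht => by
      rw [(hd t (hpos t (interior_subset ht))).deriv]
      exact hle t (interior_subset ht))
    s (Set.left_mem_Icc.2 (by linarith)) (s + h) (Set.right_mem_Icc.2 (by linarith)) (by linarith)
  simp only [hρ, sub_self, zero_pow two_ne_zero, mul_zero, smul_zero, integral_zero, sub_zero,
    add_sub_cancel_left, neg_div, div_self hh.ne'] at this
  have e : ∫ x, χ n x • (rexp (-1) * (V u 0 (s + h) x - V u 0 s x) ^ 2) =
      rexp (-1) * ∫ x, χ n x • (V u 0 (s + h) x - V u 0 s x) ^ 2 := by
    rw [← integral_const_mul]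
    congr 1
    funext x
    simp only [smul_eq_mul]
    ring
  rw [e] at this
  have h3 := mul_le_mul_of_nonneg_left this (Real.exp_pos 1).le
  rw [← mul_assoc, ← Real.exp_add, show (1 : ℝ) + -1 = 0 by norm_num, Real.exp_zero, one_mul] at h3
  calc _ ≤ _ := h3
    _ = _ := by ring

/-- On an interval with an `H²` bound, a bound on three derivatives near one time propagates. -/
lemma third_bound (hu : IsMKdVOn u (Set.Ici 0)) {a b M s0 s1 M0 : ℝ} (ha : 0 < a)
    (hM : ∀ t ∈ Set.Icc a b, IV u 0 t + IV u 1 t + IV u 2 t ≤ M) (h0 : a ≤ s0) (h01 : s0 < s1)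
    (h1 : s1 ≤ b)
    (hM0 : ∀ t ∈ Set.Icc s0 s1, IV u 0 t + IV u 1 t + IV u 2 t + IV u 3 t ≤ M0) :
    ∃ K, ∀ t ∈ Set.Ico a b, IV u 3 t ≤ K := by
  have hM00 : 0 ≤ M := by
    have := hM s0 ⟨h0, h01.le.trans h1⟩
    have := IV_nonneg (u := u) 0 s0
    have := IV_nonneg (u := u) 1 s0
    have := IV_nonneg (u := u) 2 s0
    linarith
  set K0 := 2 * M0 + 18 * M0 ^ 3
  set K1 := rexp (6 * M * (b - a)) * (rexp 1 * K0)
  refine ⟨2 * K1 + 18 * M ^ 3, fun t ht => ?_⟩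
  have htp : 0 < t := ha.trans_le ht.1
  have hK00 : 0 ≤ K0 := by
    have h2 := integral_Vt_le hu (ha.trans_le h0) (hM0 s0 (Set.left_mem_Icc.2 h01.le))
    exact (integral_nonneg fun x => sq_nonneg _).trans h2
  have key : ∀ h, 0 < h → h ≤ s1 - s0 → h ≤ b - t →
      dist2 u (fun r => u (r + h)) t ≤ h ^ 2 * K1 := by
    intro h hh hs hb
    have e1 : dist2 u (fun r => u (r + h)) s0 ≤ rexp 1 * (h ^ 2 * K0) :=
      dist2_shift_le hu (ha.trans_le h0) hh fun r hr =>
        integral_Vt_le hu ((ha.trans_le h0).trans_le hr.1) (hM0 r ⟨hr.1, by linarith [hr.2]⟩)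
    have e2 : dist2 u (fun r => u (r + h)) t ≤ rexp (6 * M * (b - a)) *
        dist2 u (fun r => u (r + h)) s0 := by
      have hd0 : 0 ≤ dist2 u (fun r => u (r + h)) s0 := integral_nonneg fun x => sq_nonneg _
      rcases le_total t s0 with hts | hts
      · have := (diff_est hu (hu.shift hh.le) htp hts (M := M)
          (fun r hr => hM r ⟨ht.1.trans hr.1, by linarith [hr.2]⟩)
          (fun r hr => hM (r + h) ⟨by linarith [hr.1, ht.1], by linarith [hr.2]⟩)).2
        refine this.trans ?_
        gcongr
        · linarith
        · exact ht.1
      · have := (diff_est hu (hu.shift hh.le) (ha.trans_le h0) hts (M := M)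
          (fun r hr => hM r ⟨h0.trans hr.1, by linarith [hr.2, ht.2]⟩)
          (fun r hr => hM (r + h) ⟨by linarith [hr.1], by linarith [hr.2]⟩)).1
        refine this.trans ?_
        gcongr
        exact ht.2.le
    calc _ ≤ _ := e2
      _ ≤ rexp (6 * M * (b - a)) * (rexp 1 * (h ^ 2 * K0)) := by gcongr
      _ = h ^ 2 * K1 := by ring
  have hV : ∫ x, Vt u 0 t x ^ 2 ≤ K1 := by
    set η := min (s1 - s0) (b - t) with hη
    have hη0 : 0 < η := lt_min (by linarith) (by linarith [ht.2])
    set hn : ℕ → ℝ := fun n => η / (n + 1)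
    have hn0 : ∀ n, 0 < hn n := fun n => by positivity
    have hnη : ∀ n, hn n ≤ η := fun n => div_le_self hη0.le (by
      have : (0 : ℝ) ≤ n := Nat.cast_nonneg n
      linarith)
    have hlim : Filter.Tendsto hn Filter.atTop (nhds 0) := by
      have h0 := (tendsto_one_div_add_atTop_nhds_zero_nat (𝕜 := ℝ)).const_mul η
      rw [mul_zero] at h0
      refine h0.congr fun n => ?_
      simp only [hn]
      ring
    have hint : ∀ n, Integrable fun x => (V u 0 (t + hn n) x - V u 0 t x) ^ 2 := fun n =>
      diff_int hu (hu.shift (hn0 n).le) htp.le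
    refine fatou_le (f := fun n x => ((hn n) ^ 2)⁻¹ * (V u 0 (t + hn n) x - V u 0 t x) ^ 2)
      (fun n => ?_) (fun n x => by positivity) (fun n => (hint n).const_mul _) (fun n => ?_)
      ((Vt_dec hu htp).cont.pow 2) fun x => ?_
    · have := V_cont hu 0 (t := t + hn n) (by linarith [hn0 n])
      have := V_cont hu 0 htp.le
      fun_prop
    · rw [integral_const_mul]
      have := key (hn n) (hn0 n) ((hnη n).trans (min_le_left _ _))
        ((hnη n).trans (min_le_right _ _))
      rw [inv_mul_le_iff₀ (by have := hn0 n; positivity)]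
      exact this
    · have hd := (V_dt hu 0 htp x).tendsto_slope_zero
      have hl : Filter.Tendsto hn Filter.atTop (nhdsWithin 0 {0}ᶜ) := by
        rw [tendsto_nhdsWithin_iff]
        exact ⟨hlim, Filter.Eventually.of_forall fun n => (hn0 n).ne'⟩
      refine ((hd.comp hl).pow 2).congr fun n => ?_
      simp only [Function.comp, smul_eq_mul]
      rw [mul_pow, inv_pow]
  have h2 := IV_three_le hu htp (M := M) (by
    have := hM t ⟨ht.1, ht.2.le⟩
    have := IV_nonneg (u := u) 2 t
    linarith)
  linarith

end

/-! ### Conservation laws on `(0, ∞)` -/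

section
variable {u : ℝ → ℝ → ℝ}

/-- The squared `H³` norm of `u(t)`. -/
def N3 (u : ℝ → ℝ → ℝ) (t : ℝ) : ℝ := IV u 0 t + IV u 1 t + IV u 2 t + IV u 3 t

lemma IV_one_le (hu : IsMKdVOn u (Set.Ici 0)) {t : ℝ} (ht : 0 < t) :
    IV u 1 t ≤ 4 * E1 u t + (IV u 0 t + 1) * IV u 0 t ^ 2 := by
  set m := IV u 0 t
  have p0 : 0 ≤ m := IV_nonneg (u := u) 0 t
  have p1 := IV_nonneg (u := u) 1 t
  have hs : ∀ x, V u 0 t x ^ 2 ≤ (m + 1) * m + (m + 1)⁻¹ * IV u 1 t := fun x =>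
    (V_dec hu 0 ht.le).sq_le' (V_dec hu 1 ht.le) (V_dx hu 0 ht.le) (by linarith) x
  have i4 : Integrable fun x => V u 0 t x ^ 4 := ((V_dec hu 0 ht.le).pow four_ne_zero).integrable
  have i1 := V_sq_int hu 1 ht.le
  have i0 := V_sq_int hu 0 ht.le
  have e : E1 u t = 1 / 2 * IV u 1 t - 1 / 4 * ∫ x, V u 0 t x ^ 4 := by
    unfold E1 IV
    rw [integral_sub (i1.const_mul _) (i4.const_mul _), integral_const_mul, integral_const_mul]
  have h4 : ∫ x, V u 0 t x ^ 4 ≤ ((m + 1) * m + (m + 1)⁻¹ * IV u 1 t) * m := by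
    change _ ≤ _ * ∫ x, V u 0 t x ^ 2
    rw [← integral_const_mul]
    refine integral_mono i4 (i0.const_mul _) fun x => ?_
    have := mul_le_mul_of_nonneg_right (hs x) (sq_nonneg (V u 0 t x))
    calc V u 0 t x ^ 4 = V u 0 t x ^ 2 * V u 0 t x ^ 2 := by ring
      _ ≤ _ := this
  have h5 : (m + 1)⁻¹ * IV u 1 t * m ≤ IV u 1 t := by
    have : (m + 1)⁻¹ * m ≤ 1 := by
      rw [inv_mul_le_iff₀ (by linarith)]; linarith
    nlinarith
  nlinarith

lemma E1_le (hu : IsMKdVOn u (Set.Ici 0)) {t : ℝ} (ht : 0 < t) : E1 u t ≤ 1 / 2 * IV u 1 t := by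
  unfold IV
  rw [← integral_const_mul]
  refine integral_mono (E1_int hu ht) ((V_sq_int hu 1 ht.le).const_mul _) fun x => ?_
  have : 0 ≤ V u 0 t x ^ 4 := by positivity
  simp only
  linarith

lemma IV_two_le (hu : IsMKdVOn u (Set.Ici 0)) {t P : ℝ} (ht : 0 < t)
    (hP : IV u 0 t + IV u 1 t ≤ P) : IV u 2 t ≤ E2 u t + 5 * P * IV u 1 t := by
  have i1 := V_sq_int hu 1 ht.le
  unfold E2
  conv_rhs => enter [2]; unfold IV
  rw [← integral_const_mul, ← integral_add (E2_int hu ht) (i1.const_mul _)]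
  refine integral_mono (V_sq_int hu 2 ht.le) ((E2_int hu ht).add (i1.const_mul _)) fun x => ?_
  have h0 := (V_sq_le hu 0 ht.le x).trans hP
  have h1 := mul_le_mul_of_nonneg_right h0 (sq_nonneg (V u 1 t x))
  have : 0 ≤ V u 0 t x ^ 6 := by positivity
  simp only [Pi.add_apply]
  linarith

lemma E2_le (hu : IsMKdVOn u (Set.Ici 0)) {t P : ℝ} (ht : 0 < t)
    (hP : IV u 0 t + IV u 1 t ≤ P) : E2 u t ≤ IV u 2 t + 1 / 2 * P ^ 2 * IV u 0 t := by
  have i2 := V_sq_int hu 2 ht.le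
  have i0 := V_sq_int hu 0 ht.le
  unfold IV
  rw [← integral_const_mul, ← integral_add i2 (i0.const_mul _)]
  refine integral_mono (E2_int hu ht) (i2.add (i0.const_mul _)) fun x => ?_
  have h0 := (V_sq_le hu 0 ht.le x).trans hP
  have h1 : V u 0 t x ^ 6 ≤ P ^ 2 * V u 0 t x ^ 2 := by
    calc V u 0 t x ^ 6 = (V u 0 t x ^ 2) ^ 2 * V u 0 t x ^ 2 := by ring
      _ ≤ _ := by gcongr
  have : 0 ≤ V u 0 t x ^ 2 * V u 1 t x ^ 2 := by positivity
  simp only [Pi.add_apply]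
  linarith

/-- The bound on the squared `H²` norm provided by the conserved quantities. -/
def Phi (M : ℝ) : ℝ := M + (2 * M + (M + 1) * M ^ 2) + (M + 1 / 2 * M ^ 2 * M +
  5 * (M + (2 * M + (M + 1) * M ^ 2)) * (2 * M + (M + 1) * M ^ 2))

lemma H2_transfer (hu : IsMKdVOn u (Set.Ici 0)) {a s M : ℝ} (ha : 0 < a) (hs : 0 < s)
    (e0 : IV u 0 s = IV u 0 a) (e1 : E1 u s = E1 u a) (e2 : E2 u s = E2 u a)
    (hM : IV u 0 a + IV u 1 a + IV u 2 a ≤ M) :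
    IV u 0 s + IV u 1 s + IV u 2 s ≤ Phi M := by
  have p0 := IV_nonneg (u := u) 0 a
  have p1 := IV_nonneg (u := u) 1 a
  have p2 := IV_nonneg (u := u) 2 a
  have q0 := IV_nonneg (u := u) 0 s
  have q1 := IV_nonneg (u := u) 1 s
  have hm : IV u 0 s ≤ M := by rw [e0]; linarith
  have hM0 : 0 ≤ M := q0.trans hm
  have h1 : IV u 1 s ≤ 2 * M + (M + 1) * M ^ 2 := by
    have := IV_one_le hu hs
    have h2 := E1_le hu ha
    have h3 : (IV u 0 s + 1) * IV u 0 s ^ 2 ≤ (M + 1) * M ^ 2 := by gcongr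
    rw [e1] at this
    linarith
  have h2 : IV u 2 s ≤ M + 1 / 2 * M ^ 2 * M +
      5 * (M + (2 * M + (M + 1) * M ^ 2)) * (2 * M + (M + 1) * M ^ 2) := by
    have h3 := IV_two_le hu hs (P := M + (2 * M + (M + 1) * M ^ 2)) (by linarith)
    have h4 := E2_le hu ha (P := M) (by linarith)
    rw [e2] at h3
    have h5 : 1 / 2 * M ^ 2 * IV u 0 a ≤ 1 / 2 * M ^ 2 * M := by gcongr; linarith
    have h6 : 5 * (M + (2 * M + (M + 1) * M ^ 2)) * IV u 1 s ≤
      5 * (M + (2 * M + (M + 1) * M ^ 2)) * (2 * M + (M + 1) * M ^ 2) := by gcongr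
    linarith
  unfold Phi
  linarith

/-- The `H³` norm is bounded near the time `t`. -/
def LB (u : ℝ → ℝ → ℝ) (t : ℝ) : Prop := ∃ M η : ℝ, 0 < η ∧ ∀ s, |s - t| < η → 0 < s → N3 u s ≤ M

lemma isOpen_LB : IsOpen {t | LB u t} := by
  rw [Metric.isOpen_iff]
  rintro t ⟨M, η, hη, h⟩
  refine ⟨η / 2, by positivity, fun t' ht' => ⟨M, η / 2, by positivity, fun s hs hs0 => h s ?_ hs0⟩⟩
  rw [Metric.mem_ball, Real.dist_eq] at ht'
  calc |s - t| = |(s - t') + (t' - t)| := by ring_nf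
    _ ≤ |s - t'| + |t' - t| := abs_add_le _ _
    _ < η := by linarith

lemma bdd_of_LB {a b : ℝ} (ha : 0 < a) (h : ∀ t ∈ Set.Icc a b, LB u t) :
    ∃ M, ∀ t ∈ Set.Icc a b, N3 u t ≤ M := by
  refine (isCompact_Icc (a := a) (b := b)).induction_on (p := fun S => ∃ M, ∀ t ∈ S ∩ Set.Icc a b,
    N3 u t ≤ M) ⟨0, by simp⟩ ?_ ?_ ?_ |>.imp fun M hM t ht => hM t ⟨ht, ht⟩
  · rintro S T hST ⟨M, hM⟩
    exact ⟨M, fun t ht => hM t ⟨hST ht.1, ht.2⟩⟩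
  · rintro S T ⟨M, hM⟩ ⟨M', hM'⟩
    refine ⟨max M M', fun t ht => ?_⟩
    rcases ht.1 with h1 | h1
    · exact (hM t ⟨h1, ht.2⟩).trans (le_max_left _ _)
    · exact (hM' t ⟨h1, ht.2⟩).trans (le_max_right _ _)
  · intro t ht
    obtain ⟨M, η, hη, hM⟩ := h t ht
    refine ⟨Metric.ball t η, mem_nhdsWithin_of_mem_nhds (Metric.ball_mem_nhds t hη), M, ?_⟩
    rintro s ⟨hs, hs'⟩
    rw [Metric.mem_ball, Real.dist_eq] at hs
    exact hM s hs (ha.trans_le hs'.1)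

/-- Two times have the same mass and energies. -/
def SameInv (u : ℝ → ℝ → ℝ) (a s : ℝ) : Prop :=
  IV u 0 s = IV u 0 a ∧ E1 u s = E1 u a ∧ E2 u s = E2 u a

lemma SameInv.symm {a s : ℝ} (h : SameInv u a s) : SameInv u s a :=
  ⟨h.1.symm, h.2.1.symm, h.2.2.symm⟩

lemma sameInv_of_bdd (hu : IsMKdVOn u (Set.Ici 0)) {a b M : ℝ} (ha : 0 < a) (hab : a ≤ b)
    (hM : ∀ t ∈ Set.Icc a b, N3 u t ≤ M) : SameInv u a b := by
  have p1 := fun t => IV_nonneg (u := u) 1 t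
  have p2 := fun t => IV_nonneg (u := u) 2 t
  have p3 := fun t => IV_nonneg (u := u) 3 t
  unfold N3 at hM
  refine ⟨mass_conserved hu (M := M) ha hab fun t ht => ?_, energy_conserved hu (M := M) ha hab
    fun t ht => ?_, energy2_conserved hu (M := M) ha hab hM⟩
  · linarith [hM t ht, p2 t, p3 t]
  · linarith [hM t ht, p2 t, p3 t]

lemma seg_bdd (hu : IsMKdVOn u (Set.Ici 0)) {a b : ℝ} (ha : 0 < a)
    (h : ∀ t ∈ Set.Ioo a b, LB u t) : ∃ M, ∀ t ∈ Set.Icc a b, N3 u t ≤ M := by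
  rcases le_or_gt b a with hba | hab
  · refine ⟨N3 u a, fun t ht => ?_⟩
    have : t = a := le_antisymm (ht.2.trans hba) ht.1
    rw [this]
  set c := (a + b) / 2 with hc
  have hca : a < c := by rw [hc]; linarith
  have hcb : c < b := by rw [hc]; linarith
  have p0 := fun t => IV_nonneg (u := u) 0 t
  have p1 := fun t => IV_nonneg (u := u) 1 t
  have p2 := fun t => IV_nonneg (u := u) 2 t
  have p3 := fun t => IV_nonneg (u := u) 3 t
  have hinv : ∀ s ∈ Set.Ioo a b, SameInv u c s := by
    intro s hs
    rcases le_total s c with hsc | hsc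
    · obtain ⟨M, hM⟩ := bdd_of_LB (u := u) (a := s) (b := c) (ha.trans hs.1) fun t ht =>
        h t ⟨hs.1.trans_le ht.1, ht.2.trans_lt hcb⟩
      exact (sameInv_of_bdd hu (ha.trans hs.1) hsc hM).symm
    · obtain ⟨M, hM⟩ := bdd_of_LB (u := u) (a := c) (b := s) (ha.trans hca) fun t ht =>
        h t ⟨hca.trans_le ht.1, ht.2.trans_lt hs.2⟩
      exact sameInv_of_bdd hu (ha.trans hca) hsc hM
  set M1 := Phi (N3 u c)
  have hH2 : ∀ t ∈ Set.Icc a b, IV u 0 t + IV u 1 t + IV u 2 t ≤ max M1 (max (N3 u a) (N3 u b)) := by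
    intro t ht
    rcases eq_or_lt_of_le ht.1 with h1 | h1
    · refine le_trans ?_ ((le_max_left _ _).trans (le_max_right _ _))
      rw [h1]
      unfold N3
      linarith [p3 t]
    rcases eq_or_lt_of_le ht.2 with h2 | h2
    · refine le_trans ?_ ((le_max_right _ _).trans (le_max_right _ _))
      rw [h2]
      unfold N3
      linarith [p3 b]
    obtain ⟨e0, e1, e2⟩ := hinv t ⟨h1, h2⟩
    refine le_trans (H2_transfer hu (ha.trans hca) (ha.trans h1) e0 e1 e2 ?_) (le_max_left _ _)
    unfold N3
    linarith [p3 c]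
  obtain ⟨M0, hM0⟩ := bdd_of_LB (u := u) (a := c) (b := (c + b) / 2) (ha.trans hca) fun t ht =>
    h t ⟨hca.trans_le ht.1, ht.2.trans_lt (by linarith)⟩
  obtain ⟨K, hK⟩ := third_bound hu ha hH2 hca.le (s1 := (c + b) / 2) (by linarith) (by linarith)
    hM0
  refine ⟨max (N3 u b) (max M1 (max (N3 u a) (N3 u b)) + K), fun t ht => ?_⟩
  rcases eq_or_lt_of_le ht.2 with h2 | h2
  · rw [h2]
    exact le_max_left _ _
  · refine le_trans ?_ (le_max_right _ _)
    have := hH2 t ht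
    have := hK t ⟨ht.1, h2⟩
    unfold N3 at *
    linarith

lemma N3_closed (hu : IsMKdVOn u (Set.Ici 0)) {s : ℕ → ℝ} {t M : ℝ} (ht : 0 < t)
    (hs : ∀ n, 0 < s n) (hlim : Filter.Tendsto s Filter.atTop (nhds t))
    (hM : ∀ n, N3 u (s n) ≤ M) : N3 u t ≤ M := by
  have hN : ∀ r, 0 < r → (∫ x, (V u 0 r x ^ 2 + V u 1 r x ^ 2 + V u 2 r x ^ 2 + V u 3 r x ^ 2))
      = N3 u r := by
    intro r hr
    have i := fun j => V_sq_int hu j hr.le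
    have i1 : Integrable fun x => V u 0 r x ^ 2 + V u 1 r x ^ 2 := (i 0).add (i 1)
    have i2 : Integrable fun x => V u 0 r x ^ 2 + V u 1 r x ^ 2 + V u 2 r x ^ 2 := i1.add (i 2)
    rw [integral_add i2 (i 3), integral_add i1 (i 2), integral_add (i 0) (i 1)]
    rfl
  rw [← hN t ht]
  have cc : ∀ j r, 0 < r → Continuous (V u j r) := fun j r hr => V_cont hu j hr.le
  refine fatou_le (f := fun n x => V u 0 (s n) x ^ 2 + V u 1 (s n) x ^ 2 + V u 2 (s n) x ^ 2 +
    V u 3 (s n) x ^ 2) (fun n => ?_) (fun n x => by positivity) (fun n => ?_) (fun n => ?_) ?_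
    fun x => ?_
  · have := cc 0 _ (hs n)
    have := cc 1 _ (hs n)
    have := cc 2 _ (hs n)
    have := cc 3 _ (hs n)
    fun_prop
  · have i := fun j => V_sq_int hu j (hs n).le
    exact (((i 0).add (i 1)).add (i 2)).add (i 3)
  · rw [hN _ (hs n)]
    exact hM n
  · have := cc 0 _ ht
    have := cc 1 _ ht
    have := cc 2 _ ht
    have := cc 3 _ ht
    fun_prop
  · have hc : ∀ j, Filter.Tendsto (fun n => V u j (s n) x) Filter.atTop (nhds (V u j t x)) :=
      fun j => (V_dt hu j ht x).continuousAt.tendsto.comp hlim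
    exact (((((hc 0).pow 2).add ((hc 1).pow 2)).add ((hc 2).pow 2)).add ((hc 3).pow 2))

/-- The nearest bad point on one side transfers its conserved quantities. -/
lemma H2_near_bad (hu : IsMKdVOn u (Set.Ici 0)) {t r M : ℝ} (hr : r < t)
    (hbad : ¬ LB u t)
    (hM : ∀ s, t - r ≤ s → s ≤ t + r → ¬ LB u s → N3 u s ≤ M) :
    ∀ s ∈ Set.Icc (t - r) (t + r), IV u 0 s + IV u 1 s + IV u 2 s ≤ Phi M := by
  intro s hs
  have hspos : 0 < s := by linarith [hs.1]
  have hclosed : IsClosed {t | ¬ LB u t} := isOpen_LB.isClosed_compl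
  have fin : ∀ a, 0 < a → N3 u a ≤ M → SameInv u a s →
      IV u 0 s + IV u 1 s + IV u 2 s ≤ Phi M := by
    intro a ha hN hI
    refine H2_transfer hu ha hspos hI.1 hI.2.1 hI.2.2 ?_
    have := IV_nonneg (u := u) 3 a
    unfold N3 at hN
    linarith
  rcases le_total t s with hts | hts
  · set S := {t | ¬ LB u t} ∩ Set.Icc t s
    have hS : IsCompact S := isCompact_Icc.inter_left hclosed
    have hne : S.Nonempty := ⟨t, hbad, le_rfl, hts⟩
    obtain ⟨h1, h2, h3⟩ := hS.sSup_mem hne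
    set a := sSup S
    have ha : 0 < a := by linarith [hs.1, hs.2]
    obtain ⟨M', hM'⟩ := seg_bdd (u := u) (b := s) hu ha fun y hy => by
      by_contra hb
      exact absurd (le_csSup hS.bddAbove ⟨hb, h2.trans hy.1.le, hy.2.le⟩) (not_le.2 hy.1)
    exact fin a ha (hM a (by linarith [hs.1, hs.2]) (h3.trans hs.2) h1) (sameInv_of_bdd hu ha h3 hM')
  · set S := {t | ¬ LB u t} ∩ Set.Icc s t
    have hS : IsCompact S := isCompact_Icc.inter_left hclosed
    have hne : S.Nonempty := ⟨t, hbad, hts, le_rfl⟩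
    obtain ⟨h1, h2, h3⟩ := hS.sInf_mem hne
    set a := sInf S
    obtain ⟨M', hM'⟩ := seg_bdd (u := u) (b := a) hu hspos fun y hy => by
      by_contra hb
      exact absurd (csInf_le hS.bddBelow ⟨hb, hy.1.le, hy.2.le.trans h3⟩) (not_le.2 hy.2)
    exact fin a (hspos.trans_le h2) (hM a (hs.1.trans h2) (by linarith [hs.1, hs.2]) h1)
      (sameInv_of_bdd hu hspos h2 hM').symm

/-- By Baire's theorem on the closed set of bad times, there are none: the `H³` norm is locally
bounded on `(0, ∞)`. -/
lemma LB_all (hu : IsMKdVOn u (Set.Ici 0)) : ∀ t > 0, LB u t := by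
  by_contra! hcon
  obtain ⟨t0, ht0, hb0⟩ := hcon
  set B : Set ℝ := Set.Ioi 0 ∩ {t | LB u t}ᶜ with hB
  have hlc : IsLocallyClosed B := isOpen_Ioi.isLocallyClosed.inter isOpen_LB.isClosed_compl.isLocallyClosed
  have : LocallyCompactSpace B := hlc.locallyCompactSpace
  have : Nonempty B := ⟨⟨t0, ht0, hb0⟩⟩
  have hcl : ∀ n : ℕ, IsClosed {t : B | N3 u t ≤ n} := by
    intro n
    rw [← isSeqClosed_iff_isClosed]
    intro s t hs hst
    exact N3_closed hu t.2.1 (fun k => (s k).2.1)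
      ((continuous_subtype_val.tendsto t).comp hst) hs
  obtain ⟨n, ⟨t, htB⟩, hn⟩ := nonempty_interior_of_iUnion_of_closed hcl (by
    rw [Set.eq_univ_iff_forall]
    intro t
    obtain ⟨n, hn⟩ := exists_nat_ge (N3 u t)
    exact Set.mem_iUnion.2 ⟨n, hn⟩)
  rw [mem_interior_iff_mem_nhds, Metric.mem_nhds_iff] at hn
  obtain ⟨η, hη, hsub⟩ := hn
  have htp : 0 < t := htB.1
  set r := min (η / 2) (t / 2)
  have hr0 : 0 < r := lt_min (by linarith) (by linarith)
  have hrη : r ≤ η / 2 := min_le_left _ _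
  have hrt : r ≤ t / 2 := min_le_right _ _
  have hM : ∀ s, t - r ≤ s → s ≤ t + r → ¬ LB u s → N3 u s ≤ n := by
    intro s h1 h2 hs
    have : (⟨s, (by linarith : (0 : ℝ) < s), hs⟩ : B) ∈
        Metric.ball (⟨t, htB⟩ : B) η := by
      rw [Metric.mem_ball, Subtype.dist_eq, Real.dist_eq, abs_lt]
      constructor <;> linarith
    exact hsub this
  have hH2 := H2_near_bad hu (by linarith : r < t) htB.2 hM
  apply htB.2
  by_cases hall : ∀ s ∈ Set.Ioo (t - r) (t + r), ¬ LB u s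
  · refine ⟨n, r, hr0, fun s hs _ => ?_⟩
    rw [abs_lt] at hs
    exact hM s (by linarith) (by linarith) (hall s ⟨by linarith, by linarith⟩)
  · push Not at hall
    obtain ⟨s, hs, M0, η', hη', hM0⟩ := hall
    obtain ⟨K, hK⟩ := third_bound hu (by linarith) hH2 (s0 := s)
      (s1 := s + min (η' / 2) (t + r - s)) (M0 := M0) hs.1.le
      (by have : 0 < min (η' / 2) (t + r - s) := lt_min (by linarith) (by linarith [hs.2])
          linarith)
      (by linarith [min_le_right (η' / 2) (t + r - s)])
      (fun y hy => hM0 y (by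
        rw [abs_lt]
        constructor <;> linarith [hy.1, hy.2, min_le_left (η' / 2) (t + r - s)])
        (by linarith [hy.1, hs.1]))
    refine ⟨Phi n + K, r, hr0, fun y hy _ => ?_⟩
    rw [abs_lt] at hy
    have h1 := hH2 y ⟨by linarith, by linarith⟩
    have h2 := hK y ⟨by linarith, by linarith⟩
    unfold N3
    linarith

lemma sameInv_all (hu : IsMKdVOn u (Set.Ici 0)) {a b : ℝ} (ha : 0 < a) (hb : 0 < b) :
    SameInv u a b := by
  rcases le_total a b with h | h
  · obtain ⟨M, hM⟩ := bdd_of_LB (u := u) ha fun t ht => LB_all hu t (ha.trans_le ht.1)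
    exact sameInv_of_bdd hu ha h hM
  · obtain ⟨M, hM⟩ := bdd_of_LB (u := u) hb fun t ht => LB_all hu t (hb.trans_le ht.1)
    exact (sameInv_of_bdd hu hb h hM).symm

/-- Uniform `H¹` control for all positive times. -/
lemma H1_all (hu : IsMKdVOn u (Set.Ici 0)) {ε : ℝ} (hε : ε ≤ 1) (h1 : IV u 0 1 + IV u 1 1 ≤ ε ^ 2)
    (hε0 : 0 ≤ ε) {t : ℝ} (ht : 0 < t) : IV u 0 t + IV u 1 t ≤ 5 * ε ^ 2 := by
  obtain ⟨e0, e1, -⟩ := sameInv_all hu one_pos ht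
  have a1 := IV_one_le hu ht
  have a2 := E1_le hu one_pos
  have p0 := IV_nonneg (u := u) 0 1
  have p1 := IV_nonneg (u := u) 1 1
  rw [e1, e0] at a1
  rw [e0]
  set m := IV u 0 1
  have hε2 : ε ^ 2 ≤ 1 := by nlinarith
  have hm : m ≤ ε ^ 2 := by linarith
  have : (m + 1) * m ^ 2 ≤ 2 * m := by nlinarith [mul_nonneg p0 p0]
  nlinarith

end

/-! ### The Fourier transform of the profile on the time interval `[0, 1]` -/

lemma abs_le_param {a lam : ℝ} (hl : 0 < lam) : a ≤ lam * a ^ 2 + lam⁻¹ := by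
  have h : lam * lam⁻¹ = 1 := mul_inv_cancel₀ hl.ne'
  have h2 : 0 < lam⁻¹ := inv_pos.2 hl
  have : 0 ≤ lam * (a - lam⁻¹) ^ 2 := by positivity
  nlinarith [mul_nonneg hl.le (sq_nonneg a)]

/-- Cutoff terms: the Cauchy-Schwarz inequality on the support of `ζ`, with a free parameter. -/
lemma norm_integral_cut_le {E : Type*} [NormedAddCommGroup E] [NormedSpace ℝ E]
    {ζ : ℝ → ℝ} {k a A lam : ℝ} (hk : 0 ≤ k) (ha : 0 ≤ a) (hζ : ∀ x, |ζ x| ≤ k)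
    (h0 : ∀ x, a ≤ |x| → ζ x = 0) {g : ℝ → E} {W : ℝ → ℝ} (hg : ∀ x, ‖g x‖ ^ 2 ≤ W x)
    (hW : Integrable W) (hA : ∫ x, W x ≤ A) (hl : 0 < lam) :
    ‖∫ x, ζ x • g x‖ ≤ k * (lam * A + lam⁻¹ * (2 * a)) := by
  have hi : Integrable (Set.indicator (Set.Icc (-a) a) (fun _ => lam⁻¹)) :=
    (integrable_indicator_iff measurableSet_Icc).2 (by simp)
  have hi2 : ∫ x, Set.indicator (Set.Icc (-a) a) (fun _ => lam⁻¹) x = lam⁻¹ * (2 * a) := by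
    rw [integral_indicator measurableSet_Icc, integral_const]
    simp only [MeasurableSet.univ, measureReal_restrict_apply, Set.univ_inter, volume_real_Icc, smul_eq_mul]
    rw [max_eq_left (by linarith)]; ring
  have h1 : ‖∫ x, ζ x • g x‖ ≤ ∫ x, k * (lam * W x + Set.indicator (Set.Icc (-a) a) (fun _ => lam⁻¹) x) := by
    refine norm_integral_le_of_norm_le (((hW.const_mul lam).add hi).const_mul k) ?_
    filter_upwards with x
    rw [norm_smul, Real.norm_eq_abs]
    have hl2 : 0 < lam⁻¹ := inv_pos.2 hl
    by_cases hx : x ∈ Set.Icc (-a) a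
    · rw [Set.indicator_of_mem hx]
      refine mul_le_mul (hζ x) ?_ (norm_nonneg _) hk
      exact (abs_le_param hl).trans (by nlinarith [hg x])
    · have : a ≤ |x| := by
        by_contra hlt
        push Not at hlt
        exact hx (abs_le.1 hlt.le)
      rw [h0 x this, Set.indicator_of_notMem hx]
      simp only [abs_zero, zero_mul, add_zero]
      have := (sq_nonneg _).trans (hg x)
      positivity
  refine h1.trans ?_
  rw [integral_const_mul, integral_add (hW.const_mul lam) hi, integral_const_mul, hi2]
  gcongr

/-- The oscillating factor `e^{-i(xξ + tξ³)}`. -/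
def ph (ξ t x : ℝ) : ℂ := Complex.exp (-(I * x * ξ) - I * t * ξ ^ 3)

lemma norm_ph (ξ t x : ℝ) : ‖ph ξ t x‖ = 1 := by
  have : -(I * x * ξ) - I * t * ξ ^ 3 = ((-(x * ξ) - t * ξ ^ 3 : ℝ) : ℂ) * I := by
    push_cast; ring
  rw [ph, this, Complex.norm_exp_ofReal_mul_I]

lemma ph_dx (ξ t x : ℝ) : HasDerivAt (ph ξ t) (-(I * ξ) * ph ξ t x) x := by
  have h : HasDerivAt (fun y : ℝ => -(I * (y : ℂ) * ξ) - I * t * ξ ^ 3) (-(I * ξ)) x := by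
    have := (((Complex.ofRealCLM.hasDerivAt (x := x)).const_mul I).mul_const (ξ : ℂ)).neg.sub_const
      (I * t * ξ ^ 3)
    refine this.congr_deriv ?_
    simp
  refine h.cexp.congr_deriv ?_
  rw [ph]; ring

lemma ph_dt (ξ t x : ℝ) : HasDerivAt (fun s => ph ξ s x) (-(I * ξ ^ 3) * ph ξ t x) t := by
  have h : HasDerivAt (fun s : ℝ => -(I * (x : ℂ) * ξ) - I * (s : ℂ) * ξ ^ 3) (-(I * ξ ^ 3)) t := by
    have := (((Complex.ofRealCLM.hasDerivAt (x := t)).const_mul I).mul_const ((ξ : ℂ) ^ 3)).const_sub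
      (-(I * (x : ℂ) * ξ))
    refine this.congr_deriv ?_
    simp
  refine h.cexp.congr_deriv ?_
  rw [ph]; ring

lemma ph_cont (ξ : ℝ) : Continuous (fun p : ℝ × ℝ => ph ξ p.1 p.2) := by
  unfold ph; fun_prop

lemma profFT_eq (u : ℝ → ℝ → ℝ) (t ξ : ℝ) :
    profFT u t ξ = (Real.sqrt (2 * Real.pi) : ℂ)⁻¹ * ∫ x, ph ξ t x * (V u 0 t x : ℂ) := by
  rw [profFT, FT, mul_left_comm, ← integral_const_mul]
  congr 2
  ext x
  rw [V_zero, ph, ← mul_assoc, ← Complex.exp_add]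
  congr 2; ring

section
variable {u : ℝ → ℝ → ℝ}

lemma V_dxC (hu : IsMKdVOn u (Set.Ici 0)) (j : ℕ) {t : ℝ} (ht : 0 ≤ t) (x : ℝ) :
    HasDerivAt (fun y => (V u j t y : ℂ)) (V u (j + 1) t x) x :=
  (V_dx hu j ht x).ofReal_comp

lemma V_contC (hu : IsMKdVOn u (Set.Ici 0)) (j : ℕ) {t : ℝ} (ht : 0 ≤ t) :
    Continuous (fun x => (V u j t x : ℂ)) := Complex.continuous_ofReal.comp (V_cont hu j ht)

lemma ph_contx (ξ t : ℝ) : Continuous (ph ξ t) :=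
  continuous_iff_continuousAt.2 fun x => (ph_dx ξ t x).continuousAt

lemma norm_ph_mul (ξ t x : ℝ) (z : ℂ) : ‖ph ξ t x * z‖ = ‖z‖ := by rw [norm_mul, norm_ph, one_mul]

lemma V_bound (hu : IsMKdVOn u (Set.Ici 0)) {t M : ℝ} (ht : 0 ≤ t)
    (hM : IV u 0 t + IV u 1 t ≤ M ^ 2) (hM0 : 0 ≤ M) (x : ℝ) : |V u 0 t x| ≤ M := by
  have := V_sq_le hu 0 ht x
  exact abs_le_of_sq_le_sq (this.trans hM) hM0

lemma profile_cut_deriv (hu : IsMKdVOn u (Set.Ici 0)) {R k : ℝ} {χ χ1 χ2 : ℝ → ℝ}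
    (hχ : IsCut R k χ χ1 χ2) (hR : 0 < R) (ξ : ℝ) {t M : ℝ} (ht : 0 < t)
    (hM : IV u 0 t + IV u 1 t ≤ M ^ 2) (hM0 : 0 ≤ M) {lam : ℝ} (hl : 0 < lam) :
    ∃ D, HasDerivAt (fun s => ∫ x, χ x • (ph ξ s x * (V u 0 s x : ℂ))) D t ∧
      ‖D‖ ≤ 2 * (k * (lam * (2 * (1 + ξ ^ 2) ^ 2 * M ^ 2) + lam⁻¹ * (2 * (2 * R)))) + 3 * M ^ 3 := by
  have hD := hasDerivAt_cut (E := ℂ) hχ.c hχ.zero (ρ := fun s x => ph ξ s x * (V u 0 s x : ℂ))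
    (ρt := fun s x => -(I * ξ ^ 3) * ph ξ s x * (V u 0 s x : ℂ) + ph ξ s x * (Vt u 0 s x : ℂ))
    (fun s hs x => (ph_dt ξ s x).mul (V_dt hu 0 hs x).ofReal_comp)
    ((ph_cont ξ).continuousOn.mul (Complex.continuous_ofReal.comp_continuousOn (V_contOn hu 0)))
    (((continuousOn_const.mul (ph_cont ξ).continuousOn).mul
      (Complex.continuous_ofReal.comp_continuousOn (V_contOn hu 0))).add
      ((ph_cont ξ).continuousOn.mul (Complex.continuous_ofReal.comp_continuousOn (Vt_contOn hu 0))))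
    ht
  refine ⟨_, hD, ?_⟩
  have c := V_contC hu
  have h0 := fun x => V_dxC hu 0 ht.le x
  have h1 := fun x => V_dxC hu 1 ht.le x
  have h2 := fun x => V_dxC hu 2 ht.le x
  have hp := ph_dx ξ t
  have hpc := ph_contx ξ t
  rw [cut_flux (E := ℂ) hχ
    (J1 := fun x => ph ξ t x * (2 * I * ξ * (V u 1 t x : ℂ) - ξ ^ 2 * (V u 0 t x : ℂ)))
    (J1x := fun x => ph ξ t x * (2 * ξ ^ 2 * (V u 1 t x : ℂ) + I * ξ ^ 3 * (V u 0 t x : ℂ)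
      + 2 * I * ξ * (V u 2 t x : ℂ) - ξ ^ 2 * (V u 1 t x : ℂ)))
    (J2 := fun x => ph ξ t x * (V u 1 t x : ℂ))
    (J2x := fun x => ph ξ t x * (-(I * ξ) * (V u 1 t x : ℂ) + (V u 2 t x : ℂ)))
    (J2xx := fun x => ph ξ t x * (-ξ ^ 2 * (V u 1 t x : ℂ) - 2 * I * ξ * (V u 2 t x : ℂ)
      + (V u 3 t x : ℂ)))
    (h := fun x => ph ξ t x * (-3 * ((V u 0 t x : ℂ) ^ 2 * (V u 1 t x : ℂ))))]
  · have hk := hχ.k_nonneg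
    have hW : Integrable (fun x => 2 * (1 + ξ ^ 2) ^ 2 * (V u 0 t x ^ 2 + V u 1 t x ^ 2)) :=
      ((V_sq_int hu 0 ht.le).add (V_sq_int hu 1 ht.le)).const_mul _
    have hWA : ∫ x, 2 * (1 + ξ ^ 2) ^ 2 * (V u 0 t x ^ 2 + V u 1 t x ^ 2) ≤
        2 * (1 + ξ ^ 2) ^ 2 * M ^ 2 := by
      rw [integral_const_mul, integral_add (V_sq_int hu 0 ht.le) (V_sq_int hu 1 ht.le)]
      exact mul_le_mul_of_nonneg_left hM (by positivity)
    have hw : ∀ x, ∀ z : ℂ, ‖z‖ ≤ (1 + ξ ^ 2) * (|V u 0 t x| + |V u 1 t x|) →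
        ‖z‖ ^ 2 ≤ 2 * (1 + ξ ^ 2) ^ 2 * (V u 0 t x ^ 2 + V u 1 t x ^ 2) := by
      intro x z hz
      have e1 : ‖z‖ ^ 2 ≤ ((1 + ξ ^ 2) * (|V u 0 t x| + |V u 1 t x|)) ^ 2 := by gcongr
      have e2 : (|V u 0 t x| + |V u 1 t x|) ^ 2 ≤ 2 * (V u 0 t x ^ 2 + V u 1 t x ^ 2) := by
        nlinarith [sq_nonneg (|V u 0 t x| - |V u 1 t x|), sq_abs (V u 0 t x), sq_abs (V u 1 t x)]
      rw [mul_pow] at e1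
      nlinarith [mul_le_mul_of_nonneg_left e2 (sq_nonneg (1 + ξ ^ 2))]
    have b1 := norm_integral_cut_le (E := ℂ) (ζ := χ1) (a := 2 * R) (lam := lam) hk (by linarith)
      hχ.b1 hχ.zero1
      (g := fun x => ph ξ t x * (2 * I * ξ * (V u 1 t x : ℂ) - ξ ^ 2 * (V u 0 t x : ℂ)))
      (fun x => hw x _ (by
        rw [norm_ph_mul]
        refine (norm_sub_le _ _).trans ?_
        simp only [norm_mul, norm_pow, Complex.norm_real, Complex.norm_I, Complex.norm_ofNat,
          Real.norm_eq_abs, mul_one, sq_abs]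
        have : 2 * |ξ| ≤ 1 + ξ ^ 2 := by nlinarith [sq_nonneg (|ξ| - 1), sq_abs ξ]
        nlinarith [abs_nonneg (V u 0 t x), abs_nonneg (V u 1 t x), abs_nonneg ξ,
          mul_le_mul_of_nonneg_right this (abs_nonneg (V u 1 t x))]))
      hW hWA hl
    have b2 := norm_integral_cut_le (E := ℂ) (ζ := χ2) (a := 2 * R) (lam := lam) hk (by linarith)
      hχ.b2 hχ.zero2
      (g := fun x => ph ξ t x * (V u 1 t x : ℂ))
      (fun x => hw x _ (by
        rw [norm_ph_mul, Complex.norm_real, Real.norm_eq_abs]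
        nlinarith [abs_nonneg (V u 0 t x), abs_nonneg (V u 1 t x), sq_nonneg ξ,
          mul_nonneg (sq_nonneg ξ) (abs_nonneg (V u 0 t x)),
          mul_nonneg (sq_nonneg ξ) (abs_nonneg (V u 1 t x))]))
      hW hWA hl
    have b3 : ‖∫ x, χ x • (ph ξ t x * (-3 * ((V u 0 t x : ℂ) ^ 2 * (V u 1 t x : ℂ))))‖ ≤
        3 * M ^ 3 := by
      have hi := ((V_sq_int hu 0 ht.le).add (V_sq_int hu 1 ht.le)).const_mul (3 * M)
      have : ‖∫ x, χ x • (ph ξ t x * (-3 * ((V u 0 t x : ℂ) ^ 2 * (V u 1 t x : ℂ))))‖ ≤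
          ∫ x, 3 * M * (V u 0 t x ^ 2 + V u 1 t x ^ 2) := by
        refine norm_integral_le_of_norm_le hi ?_
        filter_upwards with x
        have hb := V_bound hu ht.le hM hM0 x
        rw [norm_smul, norm_ph_mul]
        simp only [norm_mul, norm_neg, norm_pow, Complex.norm_real, Complex.norm_ofNat,
          Real.norm_eq_abs]
        have hx := hχ.abs_le_one x
        have a0 := abs_nonneg (V u 0 t x)
        have a1 := abs_nonneg (V u 1 t x)
        have : |V u 0 t x| ^ 2 * |V u 1 t x| ≤ M * (V u 0 t x ^ 2 + V u 1 t x ^ 2) := by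
          have := mul_le_mul_of_nonneg_right hb (mul_nonneg a0 a1)
          have h2 : |V u 0 t x| * |V u 1 t x| ≤ V u 0 t x ^ 2 + V u 1 t x ^ 2 := by
            nlinarith [sq_nonneg (|V u 0 t x| - |V u 1 t x|), sq_abs (V u 0 t x),
              sq_abs (V u 1 t x)]
          nlinarith [mul_le_mul_of_nonneg_left h2 hM0]
        have h3 : |χ x| * (3 * (|V u 0 t x| ^ 2 * |V u 1 t x|)) ≤
            1 * (3 * (|V u 0 t x| ^ 2 * |V u 1 t x|)) := by gcongr
        linarith
      refine this.trans ?_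
      rw [integral_const_mul, integral_add (V_sq_int hu 0 ht.le) (V_sq_int hu 1 ht.le)]
      have := mul_le_mul_of_nonneg_left hM (show 0 ≤ 3 * M by positivity)
      calc _ ≤ _ := this
        _ = _ := by ring
    refine (norm_add_le _ _).trans ?_
    refine (add_le_add (norm_sub_le _ _) le_rfl).trans ?_
    linarith
  · intro x
    refine ((hp x).mul (((h1 x).const_mul (2 * I * ξ)).sub ((h0 x).const_mul (ξ ^ 2 : ℂ)))).congr_deriv ?_
    simp only [Nat.reduceAdd, zero_add, Pi.sub_apply]
    linear_combination (-2 * ξ ^ 2 * (V u 1 t x : ℂ) * ph ξ t x) * Complex.I_sq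
  · intro x
    refine ((hp x).mul (h1 x)).congr_deriv ?_
    simp only [Nat.reduceAdd, zero_add, Pi.sub_apply]
    ring
  · intro x
    refine ((hp x).mul (((h1 x).const_mul (-(I * ξ))).add (h2 x))).congr_deriv ?_
    simp only [Nat.reduceAdd, zero_add, Pi.add_apply]
    linear_combination (ξ ^ 2 * (V u 1 t x : ℂ) * ph ξ t x) * Complex.I_sq
  · have := c 0 ht.le; have := c 1 ht.le; have := c 2 ht.le
    fun_prop
  · have := c 3 ht.le; have := c 1 ht.le; have := c 2 ht.le
    fun_prop
  · have := c 0 ht.le; have := c 1 ht.le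
    fun_prop
  · intro x
    rw [Vt_zero hu ht]
    push_cast
    ring

/-- On `[0, 1]` the Fourier transform of the profile moves by `O(M³)`. -/
lemma profile_unit (hu : IsMKdVOn u (Set.Ici 0)) {M : ℝ} (hM0 : 0 ≤ M)
    (hM : ∀ t, 0 < t → t ≤ 1 → IV u 0 t + IV u 1 t ≤ M ^ 2) (ξ : ℝ) :
    ‖profFT u 1 ξ - FT (fun x => (u 0 x : ℂ)) ξ‖ ≤ 3 * M ^ 3 := by
  have e0 : FT (fun x => (u 0 x : ℂ)) ξ = profFT u 0 ξ := by simp [profFT]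
  rw [e0, profFT_eq, profFT_eq, ← mul_sub, norm_mul]
  obtain ⟨K, hK, χ, χ1, χ2, hχ⟩ := exists_cut_seq
  set F : ℕ → ℝ → ℂ := fun n s => ∫ x, χ n x • (ph ξ s x * (V u 0 s x : ℂ)) with hF
  have hI : ∀ t, 0 ≤ t → Integrable (fun x => ph ξ t x * (V u 0 t x : ℂ)) := by
    intro t ht
    refine ((V_dec hu 0 ht).integrable.norm).mono'
      ((ph_contx ξ t).mul (V_contC hu 0 ht)).aestronglyMeasurable ?_
    filter_upwards with x
    rw [norm_ph_mul, Complex.norm_real]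
  have hb : ∀ n : ℕ, ‖F n 1 - F n 0‖ ≤ 3 * M ^ 3 +
      2 * K * (2 * (1 + ξ ^ 2) ^ 2 * M ^ 2 + 4) * (Real.sqrt ((n : ℝ) + 1))⁻¹ := by
    intro n
    have hn : (0 : ℝ) < (n : ℝ) + 1 := by positivity
    have hsq := Real.sqrt_pos.2 hn
    have hss := Real.mul_self_sqrt hn.le
    set σ := Real.sqrt ((n : ℝ) + 1) with hσ
    have step : ∀ s, 0 < s → s ≤ 1 → ‖F n 1 - F n s‖ ≤ 3 * M ^ 3 +
      2 * K * (2 * (1 + ξ ^ 2) ^ 2 * M ^ 2 + 4) * σ⁻¹ := by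
      intro s hs hs1
      have hd := fun t (ht : t ∈ Set.Icc s 1) => profile_cut_deriv hu (hχ n) hn ξ
        (lt_of_lt_of_le hs ht.1) (hM t (lt_of_lt_of_le hs ht.1) ht.2) hM0 hsq
      choose! D hD1 hD2 using hd
      have := norm_image_sub_le_of_norm_deriv_le_segment' (f := F n) (f' := D)
        (C := 3 * M ^ 3 + 2 * K * (2 * (1 + ξ ^ 2) ^ 2 * M ^ 2 + 4) * σ⁻¹)
        (fun t ht => (hD1 t ht).hasDerivWithinAt)
        (fun t ht => (hD2 t ⟨ht.1, ht.2.le⟩).trans (le_of_eq (by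
          rw [← hss]; field_simp; ring))) 1 ⟨hs1, le_rfl⟩
      refine this.trans ?_
      have h0 : 0 ≤ 3 * M ^ 3 + 2 * K * (2 * (1 + ξ ^ 2) ^ 2 * M ^ 2 + 4) * σ⁻¹ := by positivity
      nlinarith
    have hc : ContinuousOn (F n) (Set.Ici 0) := by
      refine continuousOn_integral_of_compact_support (isCompact_Icc (a := -(2 * ((n : ℝ) + 1)))
        (b := 2 * ((n : ℝ) + 1))) (f := fun s x => χ n x • (ph ξ s x * (V u 0 s x : ℂ))) ?_ ?_
      · have hV : ContinuousOn (fun p : ℝ × ℝ => (V u 0 p.1 p.2 : ℂ)) (Set.Ici 0 ×ˢ Set.univ) := by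
          refine Complex.continuous_ofReal.comp_continuousOn ?_
          refine hu.1.continuousOn.congr ?_
          rintro ⟨t, x⟩ -
          exact V_zero t x
        exact ((hχ n).c.comp continuous_snd).continuousOn.smul ((ph_cont ξ).continuousOn.mul hV)
      · intro s x _ hx
        rw [(hχ n).zero x, zero_smul]
        by_contra hlt
        push Not at hlt
        exact hx (abs_le.1 hlt.le)
    have ht : Filter.Tendsto (fun s => ‖F n 1 - F n s‖) (nhdsWithin 0 (Set.Ioi 0))
        (nhds ‖F n 1 - F n 0‖) :=
      (tendsto_const_nhds.sub
        ((hc 0 Set.self_mem_Ici).tendsto.mono_left (nhdsWithin_mono _ Set.Ioi_subset_Ici_self))).norm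
    refine le_of_tendsto ht ?_
    filter_upwards [Ioc_mem_nhdsGT (show (0 : ℝ) < 1 by norm_num)] with s hs using step s hs.1 hs.2
  have l1 := ((tendsto_cut hχ (hI 1 zero_le_one)).sub (tendsto_cut hχ (hI 0 le_rfl))).norm
  have l2 : Filter.Tendsto (fun n : ℕ => 3 * M ^ 3 +
      2 * K * (2 * (1 + ξ ^ 2) ^ 2 * M ^ 2 + 4) * (Real.sqrt ((n : ℝ) + 1))⁻¹) Filter.atTop
      (nhds (3 * M ^ 3)) := by
    have : Filter.Tendsto (fun n : ℕ => (Real.sqrt ((n : ℝ) + 1))⁻¹) Filter.atTop (nhds 0) :=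
      (Real.tendsto_sqrt_atTop.comp
        (Filter.tendsto_atTop_add_const_right _ _ tendsto_natCast_atTop_atTop)).inv_tendsto_atTop
    simpa using (this.const_mul (2 * K * (2 * (1 + ξ ^ 2) ^ 2 * M ^ 2 + 4))).const_add (3 * M ^ 3)
  have key := le_of_tendsto_of_tendsto' l1 l2 hb
  have hs : ‖(Real.sqrt (2 * Real.pi) : ℂ)⁻¹‖ ≤ 1 := by
    rw [norm_inv, Complex.norm_real, Real.norm_eq_abs, abs_of_nonneg (Real.sqrt_nonneg _)]
    refine inv_le_one_of_one_le₀ ?_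
    rw [Real.one_le_sqrt]
    nlinarith [Real.pi_gt_three]
  calc _ ≤ 1 * (3 * M ^ 3) := mul_le_mul hs key (norm_nonneg _) zero_le_one
    _ = _ := one_mul _
end

/-! ### The Zakharov-Shabat system -/

/-- The character `e^{iξx}`. -/
def ex (ξ x : ℝ) : ℂ := Complex.exp (I * (ξ * x))

lemma norm_ex (ξ x : ℝ) : ‖ex ξ x‖ = 1 := by
  have : I * (ξ * x) = ((ξ * x : ℝ) : ℂ) * I := by push_cast; ring
  rw [ex, this, Complex.norm_exp_ofReal_mul_I]

lemma ex_dx (ξ x : ℝ) : HasDerivAt (ex ξ) (I * ξ * ex ξ x) x := by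
  have h : HasDerivAt (fun y : ℝ => I * ((ξ : ℂ) * (y : ℂ))) (I * ξ) x := by
    have := (((Complex.ofRealCLM.hasDerivAt (x := x)).const_mul (ξ : ℂ)).const_mul I)
    refine this.congr_deriv ?_
    simp
  refine h.cexp.congr_deriv ?_
  rw [ex]; ring

lemma ex_cont (ξ : ℝ) : Continuous (ex ξ) := by unfold ex; fun_prop

lemma conj_ex (ξ x : ℝ) : (starRingEnd ℂ) (ex ξ x) = ex (-ξ) x := by
  rw [ex, ex, ← Complex.exp_conj]
  congr 1
  simp

lemma ex_mul_neg (ξ x : ℝ) : ex ξ x * ex (-ξ) x = 1 := by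
  rw [ex, ex, ← Complex.exp_add, ← Complex.exp_zero]
  congr 1; push_cast; ring

/-- `(c1, c2)` solves the Zakharov-Shabat system with potential `w` at frequency `ξ` on `[a, b]`;
it is normalised to have length one. -/
structure ZS (w : ℝ → ℝ) (ξ a b : ℝ) (c1 c2 : ℝ → ℂ) : Prop where
  d1 : ∀ x ∈ Set.Icc a b, HasDerivAt c1 (w x * ex ξ x * c2 x) x
  d2 : ∀ x ∈ Set.Icc a b, HasDerivAt c2 (-(w x * ex (-ξ) x * c1 x)) x
  norm : ∀ x ∈ Set.Icc a b, ‖c1 x‖ ^ 2 + ‖c2 x‖ ^ 2 = 1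

lemma ZS.le1 {w : ℝ → ℝ} {ξ a b : ℝ} {c1 c2 : ℝ → ℂ} (h : ZS w ξ a b c1 c2) {x : ℝ}
    (hx : x ∈ Set.Icc a b) : ‖c1 x‖ ≤ 1 := by
  have := h.norm x hx
  nlinarith [sq_nonneg ‖c2 x‖, norm_nonneg (c1 x)]

lemma ZS.le2 {w : ℝ → ℝ} {ξ a b : ℝ} {c1 c2 : ℝ → ℂ} (h : ZS w ξ a b c1 c2) {x : ℝ}
    (hx : x ∈ Set.Icc a b) : ‖c2 x‖ ≤ 1 := by
  have := h.norm x hx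
  nlinarith [sq_nonneg ‖c1 x‖, norm_nonneg (c2 x)]

lemma ZS.cont1 {w : ℝ → ℝ} {ξ a b : ℝ} {c1 c2 : ℝ → ℂ} (h : ZS w ξ a b c1 c2) :
    ContinuousOn c1 (Set.Icc a b) := fun x hx => (h.d1 x hx).continuousAt.continuousWithinAt

lemma ZS.cont2 {w : ℝ → ℝ} {ξ a b : ℝ} {c1 c2 : ℝ → ℂ} (h : ZS w ξ a b c1 c2) :
    ContinuousOn c2 (Set.Icc a b) := fun x hx => (h.d2 x hx).continuousAt.continuousWithinAt

lemma ZS.mono {w : ℝ → ℝ} {ξ a b : ℝ} {c1 c2 : ℝ → ℂ} (h : ZS w ξ a b c1 c2) {a' b' : ℝ}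
    (ha : a ≤ a') (hb : b' ≤ b) : ZS w ξ a' b' c1 c2 :=
  have hs : Set.Icc a' b' ⊆ Set.Icc a b := Set.Icc_subset_Icc ha hb
  ⟨fun x hx => h.d1 x (hs hx), fun x hx => h.d2 x (hs hx), fun x hx => h.norm x (hs hx)⟩

lemma ZS.congr {w w' : ℝ → ℝ} {ξ a b : ℝ} {c1 c2 : ℝ → ℂ} (h : ZS w ξ a b c1 c2)
    (e : ∀ x ∈ Set.Icc a b, w x = w' x) : ZS w' ξ a b c1 c2 :=
  ⟨fun x hx => by rw [← e x hx]; exact h.d1 x hx, fun x hx => by rw [← e x hx]; exact h.d2 x hx,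
    h.norm⟩

/-- Existence, by the Picard-Lindelöf theorem for a truncated system: conservation of
`|c1|² + |c2|²` shows that the truncation is never active. -/
lemma exists_ZS {w : ℝ → ℝ} (hw : Continuous w) (ξ : ℝ) {Y : ℝ} (hY : 0 < Y) :
    ∃ c1 c2 : ℝ → ℂ, ZS w ξ (-Y) Y c1 c2 ∧ c1 (-Y) = 0 ∧ c2 (-Y) = 1 := by
  let b : ContDiffBump (0 : ℂ × ℂ) := ⟨2, 3, by norm_num, by norm_num⟩
  let ψ : ℂ × ℂ → ℂ × ℂ := fun c => b c • c
  have hψc : ContDiff ℝ 1 ψ := (b.contDiff (n := 1)).smul contDiff_id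
  have hψs : HasCompactSupport ψ := b.hasCompactSupport.smul_right
  obtain ⟨K, hK⟩ := ContDiff.lipschitzWith_of_hasCompactSupport (𝕂 := ℝ) hψs hψc one_ne_zero
  have hψb : ∀ c, ‖ψ c‖ ≤ 3 := by
    intro c
    by_cases hc : c ∈ Metric.ball (0 : ℂ × ℂ) 3
    · simp only [ψ, norm_smul, Real.norm_eq_abs]
      rw [abs_of_nonneg b.nonneg]
      have h1 := b.le_one (x := c)
      have h2 : ‖c‖ < 3 := by simpa using hc
      have h3 := b.nonneg (x := c)
      nlinarith [norm_nonneg c]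
    · have : b c = 0 := by
        have hs := b.support_eq
        by_contra hne
        have : c ∈ Function.support b := hne
        rw [hs] at this
        exact hc this
      simp [ψ, this]
  obtain ⟨W, hW⟩ := (isCompact_Icc (a := -Y - 1) (b := Y + 1)).exists_bound_of_continuousOn
    hw.continuousOn
  have hW0 : 0 ≤ W := (norm_nonneg _).trans (hW 0 ⟨by linarith, by linarith⟩)
  let f : ℝ → ℂ × ℂ → ℂ × ℂ := fun x c => (w x * ex ξ x * (ψ c).2, -(w x * ex (-ξ) x * (ψ c).1))
  have hfl : ∀ x ∈ Set.Icc (-Y - 1) (Y + 1), ∀ c c', ‖f x c - f x c'‖ ≤ W * ‖ψ c - ψ c'‖ := by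
    intro x hx c c'
    have hwx := hW x hx
    rw [Prod.norm_def]
    refine max_le ?_ ?_
    · have : (f x c - f x c').1 = w x * ex ξ x * (ψ c - ψ c').2 := by simp [f]; ring
      rw [this, norm_mul, norm_mul, norm_ex, Complex.norm_real, mul_one]
      exact mul_le_mul hwx (norm_snd_le _) (norm_nonneg _) hW0
    · have : (f x c - f x c').2 = -(w x * ex (-ξ) x * (ψ c - ψ c').1) := by simp [f]; ring
      rw [this, norm_neg, norm_mul, norm_mul, norm_ex, Complex.norm_real, mul_one]
      exact mul_le_mul hwx (norm_fst_le _) (norm_nonneg _) hW0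
  have hψ0 : ψ 0 = 0 := by simp [ψ]
  have hf0 : ∀ x, f x 0 = 0 := by intro x; simp [f, hψ0]
  have hfb : ∀ x ∈ Set.Icc (-Y - 1) (Y + 1), ∀ c, ‖f x c‖ ≤ W * 3 := by
    intro x hx c
    have := hfl x hx c 0
    rw [hf0, hψ0, sub_zero, sub_zero] at this
    exact this.trans (by gcongr; exact hψb c)
  have hPL : IsPicardLindelof f (tmin := -Y - 1) (tmax := Y + 1) ⟨-Y, by constructor <;> linarith⟩
      ((0 : ℂ), (1 : ℂ)) (Real.toNNReal (W * 3 * (2 * Y + 1))) 0 (Real.toNNReal (W * 3))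
      (Real.toNNReal W * K) := by
    constructor
    · intro x hx
      refine (LipschitzWith.of_dist_le_mul fun c c' => ?_).lipschitzOnWith
      rw [dist_eq_norm, dist_eq_norm]
      refine (hfl x hx c c').trans ?_
      have := hK.dist_le_mul c c'
      rw [dist_eq_norm, dist_eq_norm] at this
      rw [NNReal.coe_mul, Real.coe_toNNReal _ hW0, mul_assoc]
      gcongr
    · intro c _
      refine Continuous.continuousOn ?_
      have := ex_cont ξ; have := ex_cont (-ξ)
      simp only [f]
      fun_prop
    · intro x hx c _
      rw [Real.coe_toNNReal _ (by positivity)]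
      exact hfb x hx c
    · rw [Real.coe_toNNReal _ (by positivity), Real.coe_toNNReal _ (by positivity)]
      simp only [NNReal.coe_zero, sub_zero]
      refine mul_le_mul_of_nonneg_left (max_le ?_ ?_) (by positivity) <;> linarith
  obtain ⟨α, hα0, hα⟩ := hPL.exists_eq_forall_mem_Icc_hasDerivWithinAt₀
  replace hα0 : α (-Y) = (0, 1) := hα0
  have hα' : ∀ x ∈ Set.Icc (-Y) Y, HasDerivAt α (f x (α x)) x := fun x hx =>
    (hα x ⟨by linarith [hx.1], by linarith [hx.2]⟩).hasDerivAt
      (Icc_mem_nhds (by linarith [hx.1]) (by linarith [hx.2]))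
  have e1 : ∀ x ∈ Set.Icc (-Y) Y, HasDerivAt (fun y => (α y).1) (f x (α x)).1 x := fun x hx =>
    ((ContinuousLinearMap.fst ℝ ℂ ℂ).hasFDerivAt.comp_hasDerivAt x (hα' x hx))
  have e2 : ∀ x ∈ Set.Icc (-Y) Y, HasDerivAt (fun y => (α y).2) (f x (α x)).2 x := fun x hx =>
    ((ContinuousLinearMap.snd ℝ ℂ ℂ).hasFDerivAt.comp_hasDerivAt x (hα' x hx))
  have hN : ∀ x ∈ Set.Icc (-Y) Y, ‖(α x).1‖ ^ 2 + ‖(α x).2‖ ^ 2 = 1 := by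
    have hd : ∀ x ∈ Set.Icc (-Y) Y, HasDerivAt (fun y => (α y).1 * star (α y).1
        + (α y).2 * star (α y).2) 0 x := by
      intro x hx
      refine (((e1 x hx).mul (e1 x hx).star).add ((e2 x hx).mul (e2 x hx).star)).congr_deriv ?_
      simp only [f, ψ, Prod.smul_fst, Prod.smul_snd, Complex.real_smul]
      simp only [← starRingEnd_apply, map_mul, map_neg, Complex.conj_ofReal, conj_ex, neg_neg]
      ring
    have hc := constant_of_derivWithin_zero (a := -Y) (b := Y)
      (fun x hx => (hd x hx).differentiableAt.differentiableWithinAt)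
      (fun x hx => (hd x ⟨hx.1, hx.2.le⟩).hasDerivWithinAt.derivWithin
        ((uniqueDiffOn_Icc (by linarith)) x ⟨hx.1, hx.2.le⟩))
    intro x hx
    have := hc x hx
    simp only [hα0, ← starRingEnd_apply, Complex.mul_conj'] at this
    simp only [norm_zero, norm_one, map_one] at this
    have h2 : ((‖(α x).1‖ ^ 2 + ‖(α x).2‖ ^ 2 : ℝ) : ℂ) = ((1 : ℝ) : ℂ) := by
      push_cast; rw [this]; simp
    exact Complex.ofReal_injective h2
  have hψ1 : ∀ x ∈ Set.Icc (-Y) Y, ψ (α x) = α x := by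
    intro x hx
    have h := hN x hx
    have : b (α x) = 1 := by
      refine b.one_of_mem_closedBall ?_
      rw [mem_closedBall_zero_iff, Prod.norm_def]
      refine max_le ?_ ?_
      · show _ ≤ (2 : ℝ)
        nlinarith [sq_nonneg ‖(α x).2‖, norm_nonneg (α x).1]
      · show _ ≤ (2 : ℝ)
        nlinarith [sq_nonneg ‖(α x).1‖, norm_nonneg (α x).2]
    simp [ψ, this]
  refine ⟨fun x => (α x).1, fun x => (α x).2, ⟨fun x hx => ?_, fun x hx => ?_, hN⟩, by simp [hα0],
    by simp [hα0]⟩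
  · have := e1 x hx
    simp only [f, hψ1 x hx] at this
    exact this
  · have := e2 x hx
    simp only [f, hψ1 x hx] at this
    exact this

/-! ### Dependence of the Zakharov-Shabat system on the potential -/

section
variable {w w' : ℝ → ℝ} {ξ a b : ℝ} {c1 c2 d1 d2 : ℝ → ℂ}

lemma ZS.int_wronskian (h : ZS w ξ a b c1 c2) (h' : ZS w' ξ a b d1 d2) (hw : Continuous w)
    (hw' : Continuous w') {y : ℝ} (hy : y ∈ Set.Icc a b) :
    ∫ x in a..y, ((w x - w' x : ℝ) : ℂ) * (ex ξ x * (c2 x * d2 x) + ex (-ξ) x * (c1 x * d1 x)) =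
      (c1 y * d2 y - c2 y * d1 y) - (c1 a * d2 a - c2 a * d1 a) := by
  have hs : Set.uIcc a y ⊆ Set.Icc a b := by
    rw [Set.uIcc_of_le hy.1]; exact Set.Icc_subset_Icc le_rfl hy.2
  have a1 := h.cont1.mono hs
  have a2 := h.cont2.mono hs
  have a3 := h'.cont1.mono hs
  have a4 := h'.cont2.mono hs
  refine intervalIntegral.integral_eq_sub_of_hasDerivAt (f := fun y => c1 y * d2 y - c2 y * d1 y)
    (fun x hx => ?_) (ContinuousOn.intervalIntegrable ?_)
  · have hx' := hs hx
    refine (((h.d1 x hx').mul (h'.d2 x hx')).sub ((h.d2 x hx').mul (h'.d1 x hx'))).congr_deriv ?_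
    push_cast; ring
  · have := (ex_cont ξ).continuousOn (s := Set.uIcc a y)
    have := (ex_cont (-ξ)).continuousOn (s := Set.uIcc a y)
    have := hw.continuousOn (s := Set.uIcc a y)
    have := hw'.continuousOn (s := Set.uIcc a y)
    refine ContinuousOn.mul (Complex.continuous_ofReal.comp_continuousOn (by fun_prop)) (by fun_prop)

lemma ZS.int_inner (h : ZS w ξ a b c1 c2) (h' : ZS w' ξ a b d1 d2) (hw : Continuous w)
    (hw' : Continuous w') {y : ℝ} (hy : y ∈ Set.Icc a b) :
    ∫ x in a..y, ((w x - w' x : ℝ) : ℂ) * (ex ξ x * (c2 x * star (d1 x))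
      - ex (-ξ) x * (c1 x * star (d2 x))) =
      (c1 y * star (d1 y) + c2 y * star (d2 y)) - (c1 a * star (d1 a) + c2 a * star (d2 a)) := by
  have hs : Set.uIcc a y ⊆ Set.Icc a b := by
    rw [Set.uIcc_of_le hy.1]; exact Set.Icc_subset_Icc le_rfl hy.2
  have a1 := h.cont1.mono hs
  have a2 := h.cont2.mono hs
  have a3 := (h'.cont1.mono hs).star
  have a4 := (h'.cont2.mono hs).star
  refine intervalIntegral.integral_eq_sub_of_hasDerivAt
    (f := fun y => c1 y * star (d1 y) + c2 y * star (d2 y))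
    (fun x hx => ?_) (ContinuousOn.intervalIntegrable ?_)
  · have hx' := hs hx
    refine (((h.d1 x hx').mul (h'.d1 x hx').star).add
      ((h.d2 x hx').mul (h'.d2 x hx').star)).congr_deriv ?_
    simp only [← starRingEnd_apply, map_mul, map_neg, Complex.conj_ofReal, conj_ex, neg_neg]
    push_cast; ring
  · have := (ex_cont ξ).continuousOn (s := Set.uIcc a y)
    have := (ex_cont (-ξ)).continuousOn (s := Set.uIcc a y)
    have := hw.continuousOn (s := Set.uIcc a y)
    have := hw'.continuousOn (s := Set.uIcc a y)
    refine ContinuousOn.mul (Complex.continuous_ofReal.comp_continuousOn (by fun_prop)) (by fun_prop)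

end

/-- Differentiation of `s ↦ ∫ (W_s - W_t) K_s` at `s = t`: only the derivative of `W` matters. -/
lemma hasDerivAt_kernel {Y t L B : ℝ} (hY : 0 < Y) {W : ℝ → ℝ → ℝ} {Wt : ℝ → ℝ} {K : ℝ → ℝ → ℂ}
    (hW : ∀ x ∈ Set.Icc (-Y) Y, HasDerivAt (fun s => W s x) (Wt x) t)
    (hWc : ∀ᶠ s in nhds t, Continuous (W s)) (hL0 : 0 ≤ L)
    (hL : ∀ᶠ s in nhds t, ∀ x ∈ Set.Icc (-Y) Y, |W s x - W t x| ≤ L * |s - t|)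
    (hK : ∀ᶠ s in nhds t, ContinuousOn (K s) (Set.Icc (-Y) Y))
    (hB : ∀ᶠ s in nhds t, ∀ x ∈ Set.Icc (-Y) Y, ‖K s x‖ ≤ B)
    (hKt : ∀ x ∈ Set.Icc (-Y) Y, Filter.Tendsto (fun s => K s x) (nhds t) (nhds (K t x))) :
    HasDerivAt (fun s => ∫ x in (-Y)..Y, ((W s x - W t x : ℝ) : ℂ) * K s x)
      (∫ x in (-Y)..Y, (Wt x : ℂ) * K t x) t := by
  have hsub : Set.uIoc (-Y) Y ⊆ Set.Icc (-Y) Y := by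
    rw [Set.uIoc_of_le (by linarith)]; exact Set.Ioc_subset_Icc_self
  have hWct : Continuous (W t) := hWc.self_of_nhds
  rw [hasDerivAt_iff_tendsto_slope]
  have e : ∀ s, slope (fun s => ∫ x in (-Y)..Y, ((W s x - W t x : ℝ) : ℂ) * K s x) t s =
      ∫ x in (-Y)..Y, (((s - t)⁻¹ * (W s x - W t x) : ℝ) : ℂ) * K s x := by
    intro s
    rw [slope_def_module]
    simp only [sub_self, Complex.ofReal_zero, zero_mul, intervalIntegral.integral_zero, sub_zero]
    rw [Complex.real_smul, ← intervalIntegral.integral_const_mul]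
    congr 1; ext x; push_cast; ring
  rw [Filter.tendsto_congr e]
  refine intervalIntegral.tendsto_integral_filter_of_dominated_convergence (fun _ => L * B) ?_ ?_
    (by simp) ?_
  · filter_upwards [hWc.filter_mono nhdsWithin_le_nhds, hK.filter_mono nhdsWithin_le_nhds] with s h1 h2
    refine ContinuousOn.aestronglyMeasurable ?_ measurableSet_uIoc
    refine ContinuousOn.mul (Complex.continuous_ofReal.comp_continuousOn ?_) (h2.mono hsub)
    exact (continuous_const.mul (h1.sub hWct)).continuousOn
  · filter_upwards [hL.filter_mono nhdsWithin_le_nhds, hB.filter_mono nhdsWithin_le_nhds,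
      self_mem_nhdsWithin] with s h1 h2 h3
    filter_upwards with x hx
    have hx' := hsub hx
    rw [norm_mul, Complex.norm_real, Real.norm_eq_abs, abs_mul, abs_inv]
    have hst : 0 < |s - t| := abs_pos.2 (sub_ne_zero.2 h3)
    refine mul_le_mul ?_ (h2 x hx') (norm_nonneg _) hL0
    rw [inv_mul_le_iff₀ hst, mul_comm]
    exact h1 x hx'
  · filter_upwards with x hx
    have hx' := hsub hx
    have h1 := (hasDerivAt_iff_tendsto_slope.1 (hW x hx'))
    refine Filter.Tendsto.mul ((Complex.continuous_ofReal.tendsto _).comp ?_)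
      ((hKt x hx').mono_left nhdsWithin_le_nhds)
    refine h1.congr fun s => ?_
    rw [slope_def_module, smul_eq_mul]

/-- The time derivative of the modulus of the reflection coefficient of a family of potentials. -/
lemma hasDerivAt_reflection {Y t L ξ : ℝ} (hY : 0 < Y) {W : ℝ → ℝ → ℝ} {Wt : ℝ → ℝ}
    {C1 C2 : ℝ → ℝ → ℂ}
    (hW : ∀ x ∈ Set.Icc (-Y) Y, HasDerivAt (fun s => W s x) (Wt x) t)
    (hWc : ∀ᶠ s in nhds t, Continuous (W s)) (hL0 : 0 ≤ L)
    (hL : ∀ᶠ s in nhds t, ∀ x ∈ Set.Icc (-Y) Y, |W s x - W t x| ≤ L * |s - t|)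
    (hC : ∀ᶠ s in nhds t, ZS (W s) ξ (-Y) Y (C1 s) (C2 s) ∧ C1 s (-Y) = 0 ∧ C2 s (-Y) = 1) :
    HasDerivAt (fun s => ‖C1 s Y‖ ^ 2) (2 * (star (C1 t Y) * star (C2 t Y) *
      ∫ x in (-Y)..Y, (Wt x : ℂ) * (ex ξ x * (C2 t x * C2 t x) + ex (-ξ) x * (C1 t x * C1 t x))).re) t := by
  have hWct : Continuous (W t) := hWc.self_of_nhds
  obtain ⟨ht, ht1, ht2⟩ := hC.self_of_nhds
  have hYm : Y ∈ Set.Icc (-Y) Y := ⟨by linarith, le_rfl⟩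
  set Kp : ℝ → ℝ → ℂ := fun s x => ex ξ x * (C2 s x * C2 t x) + ex (-ξ) x * (C1 s x * C1 t x) with hKp
  set Kq : ℝ → ℝ → ℂ := fun s x => ex ξ x * (C2 s x * star (C1 t x))
      - ex (-ξ) x * (C1 s x * star (C2 t x)) with hKq
  have bKp : ∀ s, ZS (W s) ξ (-Y) Y (C1 s) (C2 s) → ∀ x ∈ Set.Icc (-Y) Y, ‖Kp s x‖ ≤ 2 := by
    intro s hs x hx
    have := hs.le1 hx; have := hs.le2 hx; have := ht.le1 hx; have := ht.le2 hx
    refine (norm_add_le _ _).trans ?_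
    simp only [norm_mul, norm_ex, one_mul]
    have h1 := mul_le_mul (hs.le2 hx) (ht.le2 hx) (norm_nonneg _) zero_le_one
    have h2 := mul_le_mul (hs.le1 hx) (ht.le1 hx) (norm_nonneg _) zero_le_one
    linarith
  have bKq : ∀ s, ZS (W s) ξ (-Y) Y (C1 s) (C2 s) → ∀ x ∈ Set.Icc (-Y) Y, ‖Kq s x‖ ≤ 2 := by
    intro s hs x hx
    refine (norm_sub_le _ _).trans ?_
    simp only [norm_mul, norm_ex, one_mul, norm_star]
    have h1 := mul_le_mul (hs.le2 hx) (ht.le1 hx) (norm_nonneg _) zero_le_one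
    have h2 := mul_le_mul (hs.le1 hx) (ht.le2 hx) (norm_nonneg _) zero_le_one
    linarith
  have ip : ∀ s, ZS (W s) ξ (-Y) Y (C1 s) (C2 s) → C1 s (-Y) = 0 → C2 s (-Y) = 1 → Continuous (W s) →
      ∀ y ∈ Set.Icc (-Y) Y, ∫ x in (-Y)..y, ((W s x - W t x : ℝ) : ℂ) * Kp s x =
        C1 s y * C2 t y - C2 s y * C1 t y := by
    intro s hs h1 h2 hc y hy
    rw [hKp, hs.int_wronskian ht hc hWct hy, h1, h2, ht1, ht2]; ring
  have iq : ∀ s, ZS (W s) ξ (-Y) Y (C1 s) (C2 s) → C1 s (-Y) = 0 → C2 s (-Y) = 1 → Continuous (W s) →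
      ∀ y ∈ Set.Icc (-Y) Y, ∫ x in (-Y)..y, ((W s x - W t x : ℝ) : ℂ) * Kq s x =
        (C1 s y * star (C1 t y) + C2 s y * star (C2 t y)) - 1 := by
    intro s hs h1 h2 hc y hy
    rw [hKq, hs.int_inner ht hc hWct hy, h1, h2, ht1, ht2]; simp
  have unit : ∀ y ∈ Set.Icc (-Y) Y, C1 t y * star (C1 t y) + C2 t y * star (C2 t y) = 1 := by
    intro y hy
    have := ht.norm y hy
    rw [← starRingEnd_apply, ← starRingEnd_apply, Complex.mul_conj', Complex.mul_conj']
    exact_mod_cast this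
  -- the solution depends continuously on the potential
  have close : ∀ᶠ s in nhds t, ∀ y ∈ Set.Icc (-Y) Y,
      ‖C1 s y - C1 t y‖ ≤ 8 * Y * L * |s - t| ∧ ‖C2 s y - C2 t y‖ ≤ 8 * Y * L * |s - t| := by
    filter_upwards [hC, hWc, hL] with s ⟨hs, h1, h2⟩ hc hl y hy
    have est : ∀ K : ℝ → ℂ, (∀ x ∈ Set.Icc (-Y) Y, ‖K x‖ ≤ 2) →
        ‖∫ x in (-Y)..y, ((W s x - W t x : ℝ) : ℂ) * K x‖ ≤ 4 * Y * L * |s - t| := by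
      intro K hK
      have : ‖∫ x in (-Y)..y, ((W s x - W t x : ℝ) : ℂ) * K x‖ ≤ (L * |s - t| * 2) * |y - -Y| := by
        refine intervalIntegral.norm_integral_le_of_norm_le_const fun x hx => ?_
        rw [Set.uIoc_of_le hy.1] at hx
        have hx' : x ∈ Set.Icc (-Y) Y := ⟨hx.1.le, hx.2.trans hy.2⟩
        rw [norm_mul, Complex.norm_real, Real.norm_eq_abs]
        exact mul_le_mul (hl x hx') (hK x hx') (norm_nonneg _) (by positivity)
      refine this.trans ?_
      have : |y - -Y| ≤ 2 * Y := by rw [abs_of_nonneg (by linarith [hy.1])]; linarith [hy.2]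
      calc _ ≤ (L * |s - t| * 2) * (2 * Y) := by gcongr
        _ = _ := by ring
    have p := est _ (bKp s hs)
    have q := est _ (bKq s hs)
    rw [ip s hs h1 h2 hc y hy] at p
    rw [iq s hs h1 h2 hc y hy] at q
    have l1 := ht.le1 hy
    have l2 := ht.le2 hy
    have un := unit y hy
    constructor
    · have : C1 s y - C1 t y = ((C1 s y * star (C1 t y) + C2 s y * star (C2 t y)) - 1) * C1 t y
          + (C1 s y * C2 t y - C2 s y * C1 t y) * star (C2 t y) := by
        linear_combination (- C1 s y) * un
      rw [this]
      refine (norm_add_le _ _).trans ?_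
      rw [norm_mul, norm_mul, norm_star]
      have := mul_le_of_le_one_right (norm_nonneg
        ((C1 s y * star (C1 t y) + C2 s y * star (C2 t y)) - 1)) l1
      have := mul_le_of_le_one_right (norm_nonneg (C1 s y * C2 t y - C2 s y * C1 t y)) l2
      linarith
    · have : C2 s y - C2 t y = ((C1 s y * star (C1 t y) + C2 s y * star (C2 t y)) - 1) * C2 t y
          - (C1 s y * C2 t y - C2 s y * C1 t y) * star (C1 t y) := by
        linear_combination (- C2 s y) * un
      rw [this]
      refine (norm_sub_le _ _).trans ?_
      rw [norm_mul, norm_mul, norm_star]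
      have := mul_le_of_le_one_right (norm_nonneg
        ((C1 s y * star (C1 t y) + C2 s y * star (C2 t y)) - 1)) l2
      have := mul_le_of_le_one_right (norm_nonneg (C1 s y * C2 t y - C2 s y * C1 t y)) l1
      linarith
  have lim0 : Filter.Tendsto (fun s => 8 * Y * L * |s - t|) (nhds t) (nhds 0) := by
    have : Continuous (fun s => 8 * Y * L * |s - t|) := by fun_prop
    simpa using this.tendsto t
  have l1 : ∀ y ∈ Set.Icc (-Y) Y, Filter.Tendsto (fun s => C1 s y) (nhds t) (nhds (C1 t y)) := by
    intro y hy
    rw [tendsto_iff_norm_sub_tendsto_zero]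
    refine squeeze_zero' (.of_forall fun _ => norm_nonneg _) ?_ lim0
    filter_upwards [close] with s hs using (hs y hy).1
  have l2 : ∀ y ∈ Set.Icc (-Y) Y, Filter.Tendsto (fun s => C2 s y) (nhds t) (nhds (C2 t y)) := by
    intro y hy
    rw [tendsto_iff_norm_sub_tendsto_zero]
    refine squeeze_zero' (.of_forall fun _ => norm_nonneg _) ?_ lim0
    filter_upwards [close] with s hs using (hs y hy).2
  have ce := (ex_cont ξ).continuousOn (s := Set.Icc (-Y) Y)
  have ce' := (ex_cont (-ξ)).continuousOn (s := Set.Icc (-Y) Y)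
  have dp := hasDerivAt_kernel (K := Kp) (B := 2) hY hW hWc hL0 hL
    (by
      filter_upwards [hC] with s hs
      exact (ce.mul (hs.1.cont2.mul ht.cont2)).add (ce'.mul (hs.1.cont1.mul ht.cont1)))
    (by filter_upwards [hC] with s hs using bKp s hs.1)
    (fun x hx => (((l2 x hx).mul_const _).const_mul _).add (((l1 x hx).mul_const _).const_mul _))
  have dq := hasDerivAt_kernel (K := Kq) (B := 2) hY hW hWc hL0 hL
    (by
      filter_upwards [hC] with s hs
      exact (ce.mul (hs.1.cont2.mul ht.cont1.star)).sub (ce'.mul (hs.1.cont1.mul ht.cont2.star)))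
    (by filter_upwards [hC] with s hs using bKq s hs.1)
    (fun x hx => (((l2 x hx).mul_const _).const_mul _).sub (((l1 x hx).mul_const _).const_mul _))
  set P := ∫ x in (-Y)..Y, (Wt x : ℂ) * Kp t x with hP
  set Q := ∫ x in (-Y)..Y, (Wt x : ℂ) * Kq t x with hQ
  have dC : HasDerivAt (fun s => C1 s Y) (Q * C1 t Y + P * star (C2 t Y)) t := by
    have := ((dq.add_const 1).mul_const (C1 t Y)).add (dp.mul_const (star (C2 t Y)))
    refine this.congr_of_eventuallyEq ?_
    filter_upwards [hC, hWc] with s ⟨hs, h1, h2⟩ hc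
    simp only [Pi.add_apply]
    rw [ip s hs h1 h2 hc Y hYm, iq s hs h1 h2 hc Y hYm]
    linear_combination (- C1 s Y) * unit Y hYm
  refine dC.norm_sq.congr_deriv ?_
  congr 1
  have hQre : Q.re = 0 := by
    have hcj : star Q = - Q := by
      rw [hQ, ← starRingEnd_apply, ← intervalIntegral.integral_neg]
      rw [intervalIntegral.integral_of_le (by linarith), intervalIntegral.integral_of_le (by linarith),
        ← integral_conj]
      congr 1; ext x
      simp only [hKq, ← starRingEnd_apply, map_mul, map_sub, map_neg, Complex.conj_ofReal, conj_ex,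
        neg_neg, Complex.conj_conj]
      ring
    have := congrArg Complex.re hcj
    simp at this
    linarith
  rw [Complex.inner]
  have e : (starRingEnd ℂ) (C1 t Y) * (Q * C1 t Y + P * star (C2 t Y)) =
      ((‖C1 t Y‖ ^ 2 : ℝ) : ℂ) * Q + star (C1 t Y) * star (C2 t Y) * P := by
    push_cast
    rw [← Complex.conj_mul', starRingEnd_apply]
    ring
  rw [mul_comm, e, Complex.add_re, Complex.re_ofReal_mul, hQre]; simp

/-! ### Time derivative of the reflection coefficient of a truncated solution -/

/-- The factor `1/√2` relating mKdV to the Zakharov-Shabat potential. -/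
def rr : ℝ := (Real.sqrt 2)⁻¹

lemma rr_pos : 0 < rr := by unfold rr; positivity

lemma rr_sq : rr ^ 2 = 1 / 2 := by
  rw [rr, inv_pow, Real.sq_sqrt (by norm_num)]; norm_num

lemma rr_le_one : rr ≤ 1 := by nlinarith [rr_sq, rr_pos]

section
variable {u : ℝ → ℝ → ℝ}

/-- The cut off Zakharov-Shabat potential. -/
def pot (u : ℝ → ℝ → ℝ) (χ : ℝ → ℝ) (t x : ℝ) : ℝ := χ x * (rr * V u 0 t x)

lemma pot_cont (hu : IsMKdVOn u (Set.Ici 0)) {χ : ℝ → ℝ} (hχ : Continuous χ) {t : ℝ} (ht : 0 ≤ t) :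
    Continuous (pot u χ t) := hχ.mul (continuous_const.mul (V_cont hu 0 ht))

lemma pot_lip (hu : IsMKdVOn u (Set.Ici 0)) {χ : ℝ → ℝ} (hχ : ∀ x, |χ x| ≤ 1) {t : ℝ} (ht : 0 < t)
    (Y : ℝ) : ∃ L, 0 ≤ L ∧ ∀ᶠ s in nhds t, ∀ x ∈ Set.Icc (-Y) Y,
      |pot u χ s x - pot u χ t x| ≤ L * |s - t| := by
  obtain ⟨L, hL⟩ := ((isCompact_Icc (a := t / 2) (b := 2 * t)).prod
    (isCompact_Icc (a := -Y) (b := Y))).exists_bound_of_continuousOn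
    ((Vt_contOn hu 0).mono (by
      rintro ⟨s, x⟩ ⟨hs, -⟩
      exact mem_HP (lt_of_lt_of_le (by linarith) hs.1)))
  refine ⟨|L|, abs_nonneg _, ?_⟩
  filter_upwards [Icc_mem_nhds (show t / 2 < t by linarith) (show t < 2 * t by linarith)] with s hs x hx
  have h1 : ‖V u 0 s x - V u 0 t x‖ ≤ |L| * ‖s - t‖ := by
    refine (convex_Icc (t / 2) (2 * t)).norm_image_sub_le_of_norm_hasDerivWithin_le
      (f := fun s => V u 0 s x) (f' := fun s => Vt u 0 s x)
      (fun y hy => (V_dt hu 0 (lt_of_lt_of_le (by linarith) hy.1) x).hasDerivWithinAt)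
      (fun y hy => (hL (y, x) ⟨hy, hx⟩).trans (le_abs_self _)) ⟨by linarith, by linarith⟩ hs
  rw [Real.norm_eq_abs, Real.norm_eq_abs] at h1
  have e : pot u χ s x - pot u χ t x = χ x * (rr * (V u 0 s x - V u 0 t x)) := by
    unfold pot; ring
  rw [e, abs_mul, abs_mul, abs_of_pos rr_pos]
  have h2 := hχ x
  have h3 := rr_le_one
  have h4 := rr_pos
  calc |χ x| * (rr * |V u 0 s x - V u 0 t x|) ≤ 1 * (1 * |V u 0 s x - V u 0 t x|) := by gcongr
    _ = _ := by ring
    _ ≤ _ := h1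

/-- Pointwise bound of the error produced by the cut-off in the nonlinear term. -/
lemma lax_err_cubic {mu z a e : ℝ} {v0 v1 S : ℂ} (hm : 0 < mu) (hx0 : 0 ≤ z) (hx1 : z ≤ 1)
    (hS : ‖S‖ ≤ 1) (hsq : ‖v0‖ ^ 2 ≤ 3 * |a|) (hv1 : ‖v1‖ ≤ |e|) :
    ‖6 * ((z - (z : ℂ) ^ 3) * (v0 ^ 2 * v1 * S))‖ ≤
      36 * (mu⁻¹ * ((1 - z) * a ^ 2) + mu * e ^ 2) := by
    set A := |a| with hA
    set E := |e| with hE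
    have hA0 : 0 ≤ A := abs_nonneg _
    have hE0 : 0 ≤ E := abs_nonneg _
    have hdiff : ‖(z - (z : ℂ) ^ 3)‖ ≤ 2 * (1 - z) := by
      have : (z - (z : ℂ) ^ 3) = ((z - z ^ 3 : ℝ) : ℂ) := by push_cast; ring
      rw [this, Complex.norm_real, Real.norm_eq_abs, abs_le]
      constructor
      · nlinarith [mul_nonneg hx0 (sub_nonneg.2 hx1), mul_nonneg (mul_nonneg hx0 hx0) (sub_nonneg.2 hx1)]
      · nlinarith [mul_nonneg hx0 (sub_nonneg.2 hx1), mul_nonneg (mul_nonneg hx0 hx0) (sub_nonneg.2 hx1),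
          mul_nonneg (sub_nonneg.2 hx1) (sub_nonneg.2 hx1),
          mul_nonneg (mul_nonneg hx0 (sub_nonneg.2 hx1)) (sub_nonneg.2 hx1)]
    have h1χ : 0 ≤ 1 - z := by linarith
    rw [norm_mul, norm_mul, norm_mul, norm_mul, norm_pow, Complex.norm_ofNat]
    have : 6 * (‖(z - (z : ℂ) ^ 3)‖ * (‖v0‖ ^ 2 * ‖v1‖ * ‖S‖)) ≤
        6 * (2 * (1 - z) * (3 * A * E * 1)) := by gcongr
    refine this.trans ?_
    have key : A * E ≤ mu⁻¹ * A ^ 2 + mu * E ^ 2 := by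
      have hmm : mu * mu⁻¹ = 1 := mul_inv_cancel₀ hm.ne'
      have hm2 : 0 < mu⁻¹ := inv_pos.2 hm
      have : 0 ≤ mu * (E - mu⁻¹ * A) ^ 2 := by positivity
      have e : mu * (E - mu⁻¹ * A) ^ 2 = mu * E ^ 2 - 2 * (mu * mu⁻¹) * (A * E)
        + (mu * mu⁻¹) * mu⁻¹ * A ^ 2 := by ring
      rw [e, hmm] at this
      nlinarith [mul_nonneg hA0 hE0]
    have eA : A ^ 2 = a ^ 2 := sq_abs _
    have eE : E ^ 2 = e ^ 2 := sq_abs _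
    rw [← eA, ← eE]
    have k2 := mul_le_mul_of_nonneg_left key h1χ
    have k3 : (1 - z) * (mu * E ^ 2) ≤ 1 * (mu * E ^ 2) := by
      gcongr; linarith
    linarith

/-- Pointwise bound of the error produced by differentiating the cut-off. -/
lemma lax_err_cut {k ξ z p q A E : ℝ} {v0 v1 S D M : ℂ} (hk : 0 ≤ k) (hA0 : 0 ≤ A) (hE0 : 0 ≤ E)
    (hXn : ‖(z : ℂ)‖ ≤ 1) (b1 : ‖(p : ℂ)‖ ≤ k) (b2 : ‖(q : ℂ)‖ ≤ k)
    (hSn : ‖S‖ ≤ 1) (hDn : ‖D‖ ≤ 1) (hMn : ‖M‖ ≤ 1) (hv0 : ‖v0‖ ≤ A)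
    (hsq : ‖v0‖ ^ 2 ≤ 3 * A) (hcu : ‖v0‖ ^ 3 ≤ 9 * A) (hv1 : ‖v1‖ ≤ E) :
    ‖((p : ℂ) * (2 * I * ξ * (v1 * D) + 2 * I * ξ * (z * v0 ^ 2 * M)
      - 6 * ((z : ℂ) ^ 2 * v0 ^ 3 * S) + ξ ^ 2 * (v0 * S)) + (q : ℂ) * (v1 * S))‖
      ≤ 120 * k * (1 + ξ ^ 2) * (A + E) := by
    have hξ : 2 * |ξ| ≤ 1 + ξ ^ 2 := by nlinarith [sq_nonneg (|ξ| - 1), sq_abs ξ]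
    have p1 : ‖2 * I * ξ * (v1 * D)‖ ≤ (1 + ξ ^ 2) * E := by
      simp only [norm_mul, Complex.norm_real, Complex.norm_I, Complex.norm_ofNat, Real.norm_eq_abs, mul_one]
      calc _ ≤ (1 + ξ ^ 2) * (E * 1) := by gcongr
        _ = _ := by ring
    have p2 : ‖2 * I * ξ * (z * v0 ^ 2 * M)‖ ≤ (1 + ξ ^ 2) * (3 * A) := by
      rw [norm_mul, norm_mul (_ * _) (M), norm_mul (z : ℂ), norm_pow]
      simp only [norm_mul (2 * I), norm_mul 2 I, Complex.norm_I, Complex.norm_ofNat, mul_one]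
      rw [Complex.norm_real, Real.norm_eq_abs]
      calc _ ≤ (1 + ξ ^ 2) * (1 * (3 * A) * 1) := by gcongr
        _ = _ := by ring
    have p3 : ‖6 * ((z : ℂ) ^ 2 * v0 ^ 3 * S)‖ ≤ 54 * A := by
      rw [norm_mul, norm_mul (_ * _) (S), norm_mul (_ ^ 2), norm_pow, norm_pow, Complex.norm_ofNat]
      calc _ ≤ 6 * (1 ^ 2 * (9 * A) * 1) := by gcongr
        _ = _ := by ring
    have p4 : ‖(ξ : ℂ) ^ 2 * (v0 * S)‖ ≤ ξ ^ 2 * A := by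
      rw [norm_mul, norm_pow, Complex.norm_real, Real.norm_eq_abs, sq_abs, norm_mul]
      calc _ ≤ ξ ^ 2 * (A * 1) := by gcongr
        _ = _ := by ring
    have p5 : ‖v1 * S‖ ≤ E := by
      rw [norm_mul]
      calc _ ≤ E * 1 := by gcongr
        _ = _ := by ring
    have q1 := (norm_add_le (2 * I * ξ * (v1 * D) + 2 * I * ξ * (z * v0 ^ 2 * M)
      - 6 * ((z : ℂ) ^ 2 * v0 ^ 3 * S)) ((ξ : ℂ) ^ 2 * (v0 * S)))
    have q2 := norm_sub_le (2 * I * ξ * (v1 * D) + 2 * I * ξ * (z * v0 ^ 2 * M))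
      (6 * ((z : ℂ) ^ 2 * v0 ^ 3 * S))
    have q3 := norm_add_le (2 * I * ξ * (v1 * D)) (2 * I * ξ * (z * v0 ^ 2 * M))
    have q4 : ‖(2 * I * ξ * (v1 * D) + 2 * I * ξ * (z * v0 ^ 2 * M)
      - 6 * ((z : ℂ) ^ 2 * v0 ^ 3 * S) + ξ ^ 2 * (v0 * S))‖ ≤
        119 * (1 + ξ ^ 2) * (A + E) := by
      have hξ2 := sq_nonneg ξ
      nlinarith [mul_nonneg hξ2 hA0, mul_nonneg hξ2 hE0]
    refine (norm_add_le _ _).trans ?_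
    rw [norm_mul, norm_mul (q : ℂ)]
    have r1 := mul_le_mul b1 q4 (norm_nonneg _) hk
    have r2 := mul_le_mul b2 p5 (norm_nonneg _) hk
    have r3 : k * E ≤ k * ((1 + ξ ^ 2) * (A + E)) := by
      gcongr
      nlinarith [mul_nonneg (sq_nonneg ξ) hA0, mul_nonneg (sq_nonneg ξ) hE0]
    linarith

set_option maxHeartbeats 1600000 in
/-- The integral `∫ ∂ₜw (e c2² + ē c1²)` is an explicit boundary term plus cutoff errors: the
integrand is an exact derivative when the cutoff is absent. -/
lemma lax_identity (hu : IsMKdVOn u (Set.Ici 0)) {R k : ℝ} {χ χ1 χ2 : ℝ → ℝ}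
    (hχ : IsCut R k χ χ1 χ2) (hR : 0 < R) {t ξ : ℝ} (ht : 0 < t)
    (hM : IV u 0 t + IV u 1 t ≤ 5) {c1 c2 : ℝ → ℂ}
    (hc : ZS (pot u χ t) ξ (-(2 * R)) (2 * R) c1 c2) (hc0 : c1 (-(2 * R)) = 0)
    {lam mu : ℝ} (hl : 0 < lam) (hm : 0 < mu) :
    ∃ Err : ℂ, ∫ x in (-(2 * R))..(2 * R), ((χ x * (rr * Vt u 0 t x) : ℝ) : ℂ) *
      (ex ξ x * (c2 x * c2 x) + ex (-ξ) x * (c1 x * c1 x)) =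
        -(I * ξ ^ 3) * (c1 (2 * R) * c2 (2 * R)) - Err ∧
      ‖Err‖ ≤ 36 * (mu⁻¹ * (∫ x, (1 - χ x) * V u 0 t x ^ 2) + mu * 5)
        + 120 * k * (1 + ξ ^ 2) * (lam * 5 + 8 * R * lam⁻¹) := by
  set Y := 2 * R with hY
  have hYY : -Y ≤ Y := by linarith
  set S : ℝ → ℂ := fun x => ex ξ x * (c2 x * c2 x) + ex (-ξ) x * (c1 x * c1 x) with hS
  set D : ℝ → ℂ := fun x => ex ξ x * (c2 x * c2 x) - ex (-ξ) x * (c1 x * c1 x) with hD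
  set M : ℝ → ℂ := fun x => 2 * (c1 x * c2 x) with hMd
  set v : ℕ → ℝ → ℂ := fun j x => (rr : ℂ) * (V u j t x : ℂ) with hv
  have dv : ∀ j x, HasDerivAt (v j) (v (j + 1) x) x := fun j x => (V_dxC hu j ht.le x).const_mul _
  have cv : ∀ j, Continuous (v j) := fun j => continuous_const.mul (V_contC hu j ht.le)
  have cχ := Complex.continuous_ofReal.comp hχ.c
  have cχ1 := Complex.continuous_ofReal.comp hχ.c1
  have cχ2 := Complex.continuous_ofReal.comp hχ.c2
  have dχ : ∀ x, HasDerivAt (fun y => (χ y : ℂ)) (χ1 x) x := fun x => (hχ.d1 x).ofReal_comp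
  have dχ1 : ∀ x, HasDerivAt (fun y => (χ1 y : ℂ)) (χ2 x) x := fun x => (hχ.d2 x).ofReal_comp
  have ce := ex_cont ξ
  have ce' := ex_cont (-ξ)
  have hw : ∀ x, ((pot u χ t x : ℝ) : ℂ) = χ x * v 0 x := by intro x; simp [pot, hv]
  have dS : ∀ x ∈ Set.Icc (-Y) Y, HasDerivAt S (I * ξ * D x) x := by
    intro x hx
    have e1 := hc.d1 x hx
    have e2 := hc.d2 x hx
    refine (((ex_dx ξ x).mul (e2.mul e2)).add ((ex_dx (-ξ) x).mul (e1.mul e1))).congr_deriv ?_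
    simp only [hD, hw, Pi.mul_apply]
    push_cast
    ring
  have dD : ∀ x ∈ Set.Icc (-Y) Y, HasDerivAt D (I * ξ * S x - 2 * (χ x * v 0 x) * M x) x := by
    intro x hx
    have e1 := hc.d1 x hx
    have e2 := hc.d2 x hx
    refine (((ex_dx ξ x).mul (e2.mul e2)).sub ((ex_dx (-ξ) x).mul (e1.mul e1))).congr_deriv ?_
    simp only [hS, hMd, hw, Pi.mul_apply]
    push_cast
    linear_combination (-4 * (χ x : ℂ) * v 0 x * c1 x * c2 x) * ex_mul_neg ξ x
  have dM : ∀ x ∈ Set.Icc (-Y) Y, HasDerivAt M (2 * (χ x * v 0 x) * D x) x := by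
    intro x hx
    have e1 := hc.d1 x hx
    have e2 := hc.d2 x hx
    refine ((e1.mul e2).const_mul 2).congr_deriv ?_
    simp only [hD, hw, Pi.mul_apply]
    ring
  set B : ℝ → ℂ := fun x => (χ x : ℂ) * (-(v 2 x * S x) + I * ξ * (v 1 x * D x))
    + I * ξ * ((χ x : ℂ) ^ 2 * v 0 x ^ 2 * M x) - 2 * ((χ x : ℂ) ^ 3 * v 0 x ^ 3 * S x)
    + ξ ^ 2 * (χ x * v 0 x * S x) - (I * ξ ^ 3 / 2) * M x + (χ1 x : ℂ) * (v 1 x * S x) with hB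
  set G : ℝ → ℂ := fun x => 6 * ((χ x - (χ x : ℂ) ^ 3) * (v 0 x ^ 2 * v 1 x * S x))
    + ((χ1 x : ℂ) * (2 * I * ξ * (v 1 x * D x) + 2 * I * ξ * (χ x * v 0 x ^ 2 * M x)
      - 6 * ((χ x : ℂ) ^ 2 * v 0 x ^ 3 * S x) + ξ ^ 2 * (v 0 x * S x)) + (χ2 x : ℂ) * (v 1 x * S x)) with hG
  have dB : ∀ x ∈ Set.Icc (-Y) Y, HasDerivAt B
      ((χ x : ℂ) * (-(v 3 x) - 6 * (v 0 x ^ 2 * v 1 x)) * S x + G x) x := by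
    intro x hx
    have s := dS x hx
    have d := dD x hx
    have m := dM x hx
    have v0 := dv 0 x
    have v1 := dv 1 x
    have v2 := dv 2 x
    have x0 := dχ x
    have x1 := dχ1 x
    have t1 := x0.mul ((v2.mul s).neg.add ((v1.mul d).const_mul (I * ξ)))
    have t2 := (((x0.fun_pow 2).mul (v0.fun_pow 2)).mul m).const_mul (I * ξ)
    have t3 := (((x0.fun_pow 3).mul (v0.fun_pow 3)).mul s).const_mul 2
    have t4 := ((x0.mul v0).mul s).const_mul ((ξ : ℂ) ^ 2)
    have t5 := m.const_mul (I * ξ ^ 3 / 2)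
    have t6 := x1.mul (v1.mul s)
    refine (((((t1.add t2).sub t3).add t4).sub t5).add t6).congr_deriv ?_
    simp only [hG, Nat.cast_ofNat, Nat.reduceAdd, Nat.reduceSub, pow_one, zero_add, Pi.add_apply,
      Pi.mul_apply, Pi.sub_apply, Pi.neg_apply]
    linear_combination ((χ x : ℂ) * v 1 x * ξ ^ 2 * S x) * Complex.I_sq
  have hu' : Set.uIcc (-Y) Y = Set.Icc (-Y) Y := Set.uIcc_of_le hYY
  have cS : ContinuousOn S (Set.Icc (-Y) Y) := fun x hx => (dS x hx).continuousAt.continuousWithinAt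
  have cD : ContinuousOn D (Set.Icc (-Y) Y) := fun x hx => (dD x hx).continuousAt.continuousWithinAt
  have cM : ContinuousOn M (Set.Icc (-Y) Y) := fun x hx => (dM x hx).continuousAt.continuousWithinAt
  have c0 := (cv 0).continuousOn (s := Set.Icc (-Y) Y)
  have c1' := (cv 1).continuousOn (s := Set.Icc (-Y) Y)
  have c3 := (cv 3).continuousOn (s := Set.Icc (-Y) Y)
  have cX := cχ.continuousOn (s := Set.Icc (-Y) Y)
  have cX1 := cχ1.continuousOn (s := Set.Icc (-Y) Y)
  have cX2 := cχ2.continuousOn (s := Set.Icc (-Y) Y)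
  simp only [Function.comp_def] at cX cX1 cX2
  have cG : ContinuousOn G (Set.Icc (-Y) Y) := by
    have g1 : ContinuousOn (fun x => 6 * ((χ x - (χ x : ℂ) ^ 3) * (v 0 x ^ 2 * v 1 x * S x)))
      (Set.Icc (-Y) Y) := continuousOn_const.mul ((cX.sub (cX.pow 3)).mul (((c0.pow 2).mul c1').mul cS))
    have g2 : ContinuousOn (fun x => 2 * I * ξ * (v 1 x * D x)) (Set.Icc (-Y) Y) :=
      continuousOn_const.mul (c1'.mul cD)
    have g3 : ContinuousOn (fun x => 2 * I * ξ * (χ x * v 0 x ^ 2 * M x)) (Set.Icc (-Y) Y) :=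
      continuousOn_const.mul ((cX.mul (c0.pow 2)).mul cM)
    have g4 : ContinuousOn (fun x => 6 * ((χ x : ℂ) ^ 2 * v 0 x ^ 3 * S x)) (Set.Icc (-Y) Y) :=
      continuousOn_const.mul (((cX.pow 2).mul (c0.pow 3)).mul cS)
    have g5 : ContinuousOn (fun x => ξ ^ 2 * (v 0 x * S x)) (Set.Icc (-Y) Y) :=
      continuousOn_const.mul (c0.mul cS)
    exact g1.add ((cX1.mul (((g2.add g3).sub g4).add g5)).add (cX2.mul (c1'.mul cS)))
  have cF : ContinuousOn (fun x => (χ x : ℂ) * (-(v 3 x) - 6 * (v 0 x ^ 2 * v 1 x)) * S x)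
      (Set.Icc (-Y) Y) :=
    (cX.mul (c3.neg.sub (continuousOn_const.mul ((c0.pow 2).mul c1')))).mul cS
  have iG : IntervalIntegrable G volume (-Y) Y := ContinuousOn.intervalIntegrable (by rwa [hu'])
  have iF : IntervalIntegrable (fun x => (χ x : ℂ) * (-(v 3 x) - 6 * (v 0 x ^ 2 * v 1 x)) * S x)
    volume (-Y) Y := ContinuousOn.intervalIntegrable (by rwa [hu'])
  have ftc := intervalIntegral.integral_eq_sub_of_hasDerivAt (a := -Y) (b := Y) (f := B)
    (fun x hx => dB x (by rwa [hu'] at hx)) (iF.add iG)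
  rw [intervalIntegral.integral_add iF iG] at ftc
  have hYabs : 2 * R ≤ |Y| := by rw [abs_of_nonneg (by linarith)]
  have hYabs' : 2 * R ≤ |-Y| := by rw [abs_neg]; exact hYabs
  have bY : B Y = -(I * ξ ^ 3) * (c1 Y * c2 Y) := by
    simp only [hB, hMd, hχ.zero Y hYabs, hχ.zero1 Y hYabs]
    push_cast; ring
  have bY' : B (-Y) = 0 := by
    simp only [hB, hMd, hχ.zero (-Y) hYabs', hχ.zero1 (-Y) hYabs', hc0]
    push_cast; ring
  refine ⟨∫ x in (-Y)..Y, G x, ?_, ?_⟩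
  · have e : (fun x => ((χ x * (rr * Vt u 0 t x) : ℝ) : ℂ) *
        (ex ξ x * (c2 x * c2 x) + ex (-ξ) x * (c1 x * c1 x))) =
        fun x => (χ x : ℂ) * (-(v 3 x) - 6 * (v 0 x ^ 2 * v 1 x)) * S x := by
      ext x
      have h2 : (rr : ℂ) ^ 2 = 1 / 2 := by rw [← Complex.ofReal_pow, rr_sq]; norm_num
      rw [Vt_zero hu ht]
      simp only [hS, hv]
      push_cast
      linear_combination (6 * χ x * (rr * (V u 0 t x : ℂ) ^ 2 * (V u 1 t x : ℂ)) *
        (ex ξ x * (c2 x * c2 x) + ex (-ξ) x * (c1 x * c1 x))) * h2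
    rw [e]
    rw [bY, bY', sub_zero] at ftc
    linear_combination ftc
  · -- the error terms
    have i0 := V_sq_int hu 0 ht.le
    have i1 := V_sq_int hu 1 ht.le
    have hk := hχ.k_nonneg
    have iT : Integrable (fun x => (1 - χ x) * V u 0 t x ^ 2) := by
      refine i0.bdd_mul (c := 1) (continuous_const.sub hχ.c).aestronglyMeasurable ?_
      filter_upwards with x
      rw [Real.norm_eq_abs, abs_le]
      constructor <;> linarith [hχ.nonneg x, hχ.le_one x]
    set gb : ℝ → ℝ := fun x => 36 * (mu⁻¹ * ((1 - χ x) * V u 0 t x ^ 2) + mu * V u 1 t x ^ 2)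
      + 120 * k * (1 + ξ ^ 2) * (lam * (V u 0 t x ^ 2 + V u 1 t x ^ 2)) with hgb
    have igb : Integrable gb :=
      (((iT.const_mul _).add (i1.const_mul _)).const_mul _).add (((i0.add i1).const_mul _).const_mul _)
    have gb0 : ∀ x, 0 ≤ gb x := by
      intro x
      have : 0 ≤ (1 - χ x) := by linarith [hχ.le_one x]
      positivity
    have hbd : ∀ x ∈ Set.Icc (-Y) Y, ‖G x‖ ≤ gb x + 120 * k * (1 + ξ ^ 2) * (2 * lam⁻¹) := by
      intro x hx
      have n1 := hc.norm x hx
      have hSn : ‖S x‖ ≤ 1 := by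
        refine (norm_add_le _ _).trans ?_
        simp only [norm_mul, norm_ex, one_mul]
        nlinarith
      have hDn : ‖D x‖ ≤ 1 := by
        refine (norm_sub_le _ _).trans ?_
        simp only [norm_mul, norm_ex, one_mul]
        nlinarith
      have hMn : ‖M x‖ ≤ 1 := by
        simp only [hMd, norm_mul, Complex.norm_ofNat]
        nlinarith [sq_nonneg (‖c1 x‖ - ‖c2 x‖)]
      have hub : |V u 0 t x| ≤ 3 := V_bound hu ht.le (M := 3) (by linarith) (by norm_num) x
      set A := |V u 0 t x| with hA
      set E := |V u 1 t x| with hE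
      have hA0 : 0 ≤ A := abs_nonneg _
      have hE0 : 0 ≤ E := abs_nonneg _
      have hv0 : ‖v 0 x‖ ≤ A := by
        simp only [hv, norm_mul, Complex.norm_real, Real.norm_eq_abs, abs_of_pos rr_pos]
        exact mul_le_of_le_one_left hA0 rr_le_one
      have hv1 : ‖v 1 x‖ ≤ E := by
        simp only [hv, norm_mul, Complex.norm_real, Real.norm_eq_abs, abs_of_pos rr_pos]
        exact mul_le_of_le_one_left hE0 rr_le_one
      have hv0n := norm_nonneg (v 0 x)
      have hv1n := norm_nonneg (v 1 x)
      have hx0 := hχ.nonneg x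
      have hx1 := hχ.le_one x
      have hXn : ‖(χ x : ℂ)‖ ≤ 1 := by
        rw [Complex.norm_real]; exact hχ.abs_le_one x
      have hsq : ‖v 0 x‖ ^ 2 ≤ 3 * A := by nlinarith
      have hcu : ‖v 0 x‖ ^ 3 ≤ 9 * A := by
        calc ‖v 0 x‖ ^ 3 = ‖v 0 x‖ ^ 2 * ‖v 0 x‖ := by ring
          _ ≤ (3 * A) * 3 := by gcongr; linarith
          _ = _ := by ring
      have first := lax_err_cubic (S := S x) (v1 := v 1 x) hm hx0 hx1 hSn hsq hv1
      have second := lax_err_cut (ξ := ξ) hk hA0 hE0 hXn (b1 := by rw [Complex.norm_real]; exact hχ.b1 x)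
        (b2 := by rw [Complex.norm_real]; exact hχ.b2 x) hSn hDn hMn hv0 hsq hcu hv1
      have third : A + E ≤ lam * (V u 0 t x ^ 2 + V u 1 t x ^ 2) + 2 * lam⁻¹ := by
        have r1 := abs_le_param (a := A) hl
        have r2 := abs_le_param (a := E) hl
        rw [hA, sq_abs] at r1
        rw [hE, sq_abs] at r2
        linarith
      refine (norm_add_le _ _).trans ((add_le_add first second).trans ?_)
      have := mul_le_mul_of_nonneg_left third (show 0 ≤ 120 * k * (1 + ξ ^ 2) by positivity)
      simp only [hgb]
      linarith
    have h1 : ‖∫ x in (-Y)..Y, G x‖ ≤ ∫ x in (-Y)..Y, (gb x + 120 * k * (1 + ξ ^ 2) * (2 * lam⁻¹)) := by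
      refine intervalIntegral.norm_integral_le_of_norm_le hYY ?_ (igb.intervalIntegrable.add (by simp))
      filter_upwards with x hx using hbd x (Set.Ioc_subset_Icc_self hx)
    refine h1.trans ?_
    rw [intervalIntegral.integral_add igb.intervalIntegrable (by simp), intervalIntegral.integral_const]
    have h2 : ∫ x in (-Y)..Y, gb x ≤ ∫ x, gb x := by
      rw [intervalIntegral.integral_of_le hYY]
      exact setIntegral_le_integral igb (.of_forall gb0)
    have h3 : ∫ x, gb x = 36 * (mu⁻¹ * (∫ x, (1 - χ x) * V u 0 t x ^ 2) + mu * IV u 1 t)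
        + 120 * k * (1 + ξ ^ 2) * (lam * (IV u 0 t + IV u 1 t)) := by
      simp only [hgb]
      have j1 : Integrable (fun x => mu⁻¹ * ((1 - χ x) * V u 0 t x ^ 2)) := iT.const_mul _
      have j2 : Integrable (fun x => mu * V u 1 t x ^ 2) := i1.const_mul _
      have j3 : Integrable (fun x => 36 * (mu⁻¹ * ((1 - χ x) * V u 0 t x ^ 2) + mu * V u 1 t x ^ 2)) :=
        (j1.add j2).const_mul _
      have j4 : Integrable (fun x => 120 * k * (1 + ξ ^ 2) * (lam * (V u 0 t x ^ 2 + V u 1 t x ^ 2))) :=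
        ((i0.add i1).const_mul _).const_mul _
      rw [integral_add j3 j4, integral_const_mul, integral_const_mul,
        integral_const_mul, integral_add i0 i1, integral_add j1 j2,
        integral_const_mul, integral_const_mul]
      rfl
    have p0 := IV_nonneg (u := u) 0 t
    have p1 := IV_nonneg (u := u) 1 t
    have h4 : mu * IV u 1 t ≤ mu * 5 := by gcongr; linarith
    have h5 : 120 * k * (1 + ξ ^ 2) * (lam * (IV u 0 t + IV u 1 t)) ≤
      120 * k * (1 + ξ ^ 2) * (lam * 5) := by gcongr
    rw [smul_eq_mul]
    have h6 : (Y - -Y) * (120 * k * (1 + ξ ^ 2) * (2 * lam⁻¹)) =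
      120 * k * (1 + ξ ^ 2) * (8 * R * lam⁻¹) := by rw [hY]; ring
    rw [h6]
    linarith

/-- Tightness: the mass outside of a large ball grows slowly. -/
lemma tail_le (hu : IsMKdVOn u (Set.Ici 0)) {R k : ℝ} {χ χ1 χ2 : ℝ → ℝ}
    (hχ : IsCut R k χ χ1 χ2) (hM : ∀ t, 0 < t → IV u 0 t + IV u 1 t ≤ 5) {t : ℝ} (ht : 1 ≤ t) :
    ∫ x, (1 - χ x) * V u 0 t x ^ 2 ≤ (∫ x, (1 - χ x) * V u 0 1 x ^ 2) + (t - 1) * (150 * k) := by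
  have hM' : ∀ s ∈ Set.Icc 1 t, IV u 0 s + IV u 1 s ≤ 5 := fun s hs => hM s (by linarith [hs.1])
  have h1 := (mass_flux hu (σ := -1) one_pos (by simp) hM').cut_le one_pos ht hχ
  have h2 := mass_conserved hu one_pos ht hM'
  have e : ∀ s, 0 < s → ∫ x, (1 - χ x) * V u 0 s x ^ 2 = IV u 0 s + ∫ x, χ x • (-1 * V u 0 s x ^ 2) := by
    intro s hs
    have i0 := V_sq_int hu 0 hs.le
    have i1 : Integrable (fun x => χ x • (-1 * V u 0 s x ^ 2)) :=
      integrable_cut (E := ℝ) hχ.c hχ.zero (continuous_const.mul ((V_cont hu 0 hs.le).pow 2))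
    rw [IV, ← integral_add i0 i1]
    congr 1; ext x; simp only [smul_eq_mul]; ring
  rw [e t (by linarith), e 1 one_pos, h2]
  linarith

end

/-! ### Removing the truncation -/

section
variable {u : ℝ → ℝ → ℝ}

lemma norm_refl_sub_le (hu : IsMKdVOn u (Set.Ici 0)) (hM : ∀ t, 0 < t → IV u 0 t + IV u 1 t ≤ 5)
    {R k : ℝ} {χ χ1 χ2 : ℝ → ℝ} (hχ : IsCut R k χ χ1 χ2) (hR : 0 < R) {ξ T : ℝ} (hT : 1 ≤ T)
    {C1 C2 : ℝ → ℝ → ℂ}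
    (hC : ∀ s, 0 < s → ZS (pot u χ s) ξ (-(2 * R)) (2 * R) (C1 s) (C2 s) ∧
      C1 s (-(2 * R)) = 0 ∧ C2 s (-(2 * R)) = 1)
    {lam mu : ℝ} (hl : 0 < lam) (hm : 0 < mu) :
    |‖C1 T (2 * R)‖ ^ 2 - ‖C1 1 (2 * R)‖ ^ 2| ≤ 2 *
      (36 * (mu⁻¹ * ((∫ x, (1 - χ x) * V u 0 1 x ^ 2) + (T - 1) * (150 * k)) + mu * 5)
        + 120 * k * (1 + ξ ^ 2) * (lam * 5 + 8 * R * lam⁻¹)) * (T - 1) := by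
  have hk := hχ.k_nonneg
  have main : ∀ s ∈ Set.Icc 1 T, ∃ d : ℝ, HasDerivAt (fun s => ‖C1 s (2 * R)‖ ^ 2) d s ∧
      ‖d‖ ≤ 2 *
      (36 * (mu⁻¹ * ((∫ x, (1 - χ x) * V u 0 1 x ^ 2) + (T - 1) * (150 * k)) + mu * 5)
        + 120 * k * (1 + ξ ^ 2) * (lam * 5 + 8 * R * lam⁻¹)) := by
    intro s hs
    have hs0 : 0 < s := by linarith [hs.1]
    have ev : ∀ᶠ r in nhds s, 0 < r := lt_mem_nhds hs0
    obtain ⟨L, hL0, hL⟩ := pot_lip hu hχ.abs_le_one hs0 (2 * R)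
    have h := hasDerivAt_reflection (Y := 2 * R) (t := s) (ξ := ξ) (by linarith) (W := pot u χ)
      (Wt := fun x => χ x * (rr * Vt u 0 s x)) (C1 := C1) (C2 := C2)
      (fun x _ => ((V_dt hu 0 hs0 x).const_mul rr).const_mul (χ x))
      (ev.mono fun r hr => pot_cont hu hχ.c hr.le) hL0 hL (ev.mono fun r hr => hC r hr)
    refine ⟨_, h, ?_⟩
    obtain ⟨hz, h0, -⟩ := hC s hs0
    obtain ⟨Err, e1, e2⟩ := lax_identity hu hχ hR hs0 (hM s hs0) hz h0 hl hm
    rw [e1]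
    have hY : (2 * R) ∈ Set.Icc (-(2 * R)) (2 * R) := ⟨by linarith, le_rfl⟩
    have l1 := hz.le1 hY
    have l2 := hz.le2 hY
    set p := C1 s (2 * R)
    set q := C2 s (2 * R)
    have e3 : (star p * star q * (-(I * ξ ^ 3) * (p * q) - Err)).re = -(star p * star q * Err).re := by
      have : star p * star q * (-(I * ξ ^ 3) * (p * q) - Err) =
        -(I * ((ξ ^ 3 * (Complex.normSq p * Complex.normSq q) : ℝ) : ℂ)) - star p * star q * Err := by
        push_cast
        rw [Complex.normSq_eq_conj_mul_self, Complex.normSq_eq_conj_mul_self]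
        simp only [← starRingEnd_apply]
        ring
      rw [this, Complex.sub_re, Complex.neg_re, Complex.I_mul_re, Complex.ofReal_im]
      ring
    rw [e3, Real.norm_eq_abs, abs_mul, abs_neg, abs_of_pos (by norm_num : (0:ℝ) < 2)]
    gcongr
    have t := tail_le hu hχ hM hs.1
    have : (s - 1) * (150 * k) ≤ (T - 1) * (150 * k) := by gcongr; exact hs.2
    calc |(star p * star q * Err).re| ≤ ‖star p * star q * Err‖ := Complex.abs_re_le_norm _
      _ = ‖p‖ * ‖q‖ * ‖Err‖ := by simp [norm_star]
      _ ≤ 1 * 1 * ‖Err‖ := by gcongr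
      _ = ‖Err‖ := by ring
      _ ≤ _ := e2
      _ ≤ _ := by gcongr; linarith
  choose! d hd hdb using main
  have := norm_image_sub_le_of_norm_deriv_le_segment' (f := fun s => ‖C1 s (2 * R)‖ ^ 2) (f' := d)
    (a := 1) (b := T) (fun s hs => (hd s hs).hasDerivWithinAt) (fun s hs => hdb s (Set.Ico_subset_Icc_self hs))
    T ⟨hT, le_rfl⟩
  simpa only [Real.norm_eq_abs] using this

/-- The modulus of the reflection coefficient `c₁` of the truncated Zakharov–Shabat problem is
conserved in time, up to an error that vanishes as the truncation is removed. -/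
lemma refl_conserved (hu : IsMKdVOn u (Set.Ici 0)) (hM : ∀ t, 0 < t → IV u 0 t + IV u 1 t ≤ 5)
    {K : ℝ} (hK : 0 < K) {χ χ1 χ2 : ℕ → ℝ → ℝ}
    (hχ : ∀ n : ℕ, IsCut (n + 1) (K / (n + 1)) (χ n) (χ1 n) (χ2 n)) {ξ T : ℝ} (hT : 1 ≤ T)
    {C1 C2 : ℕ → ℝ → ℝ → ℂ}
    (hC : ∀ n : ℕ, ∀ s, 0 < s → ZS (pot u (χ n) s) ξ (-(2 * (n + 1))) (2 * (n + 1)) (C1 n s) (C2 n s) ∧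
      C1 n s (-(2 * (n + 1))) = 0 ∧ C2 n s (-(2 * (n + 1))) = 1) {η : ℝ} (hη : 0 < η) :
    ∀ᶠ n : ℕ in Filter.atTop, ‖C1 n T (2 * (n + 1))‖ ≤ ‖C1 n 1 (2 * (n + 1))‖ + η := by
  set P : ℝ := 360 + 1920 * K * (1 + ξ ^ 2) with hP
  have hP0 : 0 < P := by positivity
  set θ : ℝ := η ^ 2 / (T * P + 1) with hθ
  have hTP : 0 < T * P + 1 := by positivity
  have hθ0 : 0 < θ := by positivity
  have hr : Filter.Tendsto (fun n : ℕ => (1:ℝ) / (n + 1)) Filter.atTop (nhds 0) :=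
    tendsto_one_div_add_atTop_nhds_zero_nat
  have hh : Filter.Tendsto (fun n : ℕ => ∫ x, (1 - χ n x) * V u 0 1 x ^ 2) Filter.atTop (nhds 0) := by
    have i0 := V_sq_int hu 0 zero_le_one
    have h := (tendsto_cut hχ i0).const_sub (∫ x, V u 0 1 x ^ 2)
    rw [sub_self] at h
    refine h.congr fun n => ?_
    have i1 : Integrable (fun x => χ n x • V u 0 1 x ^ 2) :=
      integrable_cut (E := ℝ) (hχ n).c (hχ n).zero ((V_cont hu 0 zero_le_one).pow 2)
    rw [← integral_sub i0 i1]
    congr 1; ext x; simp only [smul_eq_mul]; ring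
  have hlim : Filter.Tendsto (fun n : ℕ => 2 *
      (36 * (θ⁻¹ * ((∫ x, (1 - χ n x) * V u 0 1 x ^ 2) + (T - 1) * (150 * (K * (1 / ((n:ℝ) + 1))))) + θ * 5)
        + 120 * K * (1 + ξ ^ 2) * (θ⁻¹ * 5 * (1 / ((n:ℝ) + 1)) + 8 * θ)) * (T - 1)) Filter.atTop
      (nhds (2 * (36 * (θ⁻¹ * (0 + (T - 1) * (150 * (K * 0))) + θ * 5)
        + 120 * K * (1 + ξ ^ 2) * (θ⁻¹ * 5 * 0 + 8 * θ)) * (T - 1))) :=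
    (((((((hh.add (((hr.const_mul K).const_mul 150).const_mul (T - 1))).const_mul θ⁻¹).add_const _).const_mul
      36).add (((hr.const_mul (θ⁻¹ * 5)).add_const _).const_mul _)).const_mul 2).mul_const _)
  have hlt : 2 * (36 * (θ⁻¹ * (0 + (T - 1) * (150 * (K * 0))) + θ * 5)
        + 120 * K * (1 + ξ ^ 2) * (θ⁻¹ * 5 * 0 + 8 * θ)) * (T - 1) < η ^ 2 := by
    have e : 2 * (36 * (θ⁻¹ * (0 + (T - 1) * (150 * (K * 0))) + θ * 5)
        + 120 * K * (1 + ξ ^ 2) * (θ⁻¹ * 5 * 0 + 8 * θ)) * (T - 1) = θ * (P * (T - 1)) := by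
      rw [hP]; ring
    rw [e]
    have h1 : θ * (T * P + 1) = η ^ 2 := by rw [hθ]; field_simp
    rw [← h1]
    gcongr
    nlinarith
  filter_upwards [hlim.eventually_lt_const hlt] with n hn
  have hn1 : (0:ℝ) < (n:ℝ) + 1 := by positivity
  have h := norm_refl_sub_le hu hM (hχ n) hn1 hT (hC n) (lam := θ⁻¹) (mu := θ) (inv_pos.2 hθ0) hθ0
  have e : 120 * (K / ((n:ℝ) + 1)) * (1 + ξ ^ 2) * (θ⁻¹ * 5 + 8 * ((n:ℝ) + 1) * (θ⁻¹)⁻¹) =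
    120 * K * (1 + ξ ^ 2) * (θ⁻¹ * 5 * (1 / ((n:ℝ) + 1)) + 8 * θ) := by
    rw [inv_inv]; field_simp
  have e' : K / ((n:ℝ) + 1) = K * (1 / ((n:ℝ) + 1)) := by ring
  rw [e, e'] at h
  have h2 := (abs_le.1 (h.trans hn.le)).2
  by_contra hcon
  push Not at hcon
  have := norm_nonneg (C1 n 1 (2 * ((n:ℝ) + 1)))
  nlinarith

end

/-! ### Third-order expansion of the scattering data -/

section
variable {w : ℝ → ℝ} {ξ a b : ℝ} {c1 c2 : ℝ → ℂ}

/-- The second-order normal form of `c₁` with respect to a primitive `l` of `w e^{iξx}`. -/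
def nf (l c1 c2 : ℝ → ℂ) (x : ℝ) : ℂ :=
  c1 x - l x * c2 x - (1 / 2) * (l x * (starRingEnd ℂ) (l x)) * c1 x

/-- Up to a rotation, the normal form solves an equation with a cubic right-hand side. -/
lemma nf_change (hz : ZS w ξ a b c1 c2) (hw : Continuous w) {l : ℝ → ℂ}
    (hl : ∀ x, HasDerivAt l (w x * ex ξ x) x) (hab : a ≤ b) (hl1 : ∀ x ∈ Set.Icc a b, ‖l x‖ ≤ 1) :
    |‖nf l c1 c2 b‖ - ‖nf l c1 c2 a‖| ≤ 2 * ∫ x in a..b, ‖l x‖ ^ 2 * |w x| := by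
  set l' : ℝ → ℂ := fun x => w x * ex ξ x with hl'
  have cl : Continuous l := continuous_iff_continuousAt.2 fun x => (hl x).continuousAt
  have cl' : Continuous l' := (Complex.continuous_ofReal.comp hw).mul (ex_cont ξ)
  have hconj : ∀ x, (starRingEnd ℂ) (l' x) = w x * ex (-ξ) x := by
    intro x; simp only [hl', map_mul, Complex.conj_ofReal, conj_ex]
  set r : ℝ → ℝ := fun x => ((starRingEnd ℂ) (l x) * l' x).im with hr
  have cr : Continuous r := Complex.continuous_im.comp ((Complex.continuous_conj.comp cl).mul cl')
  set A : ℝ → ℝ := fun x => ∫ y in a..x, r y with hA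
  have dA : ∀ x, HasDerivAt A (r x) x := fun x => cr.integral_hasStrictDerivAt a x |>.hasDerivAt
  have hr2 : ∀ x, (2 : ℂ) * I * (r x : ℂ) = (starRingEnd ℂ) (l x) * l' x - l x * (starRingEnd ℂ) (l' x) := by
    intro x
    have := Complex.sub_conj ((starRingEnd ℂ) (l x) * l' x)
    rw [map_mul, Complex.conj_conj] at this
    rw [this]; simp only [hr]; push_cast; ring
  set e : ℝ → ℂ := fun x => cexp (I * (A x : ℂ)) with he
  have de : ∀ x, HasDerivAt e (I * r x * e x) x := by
    intro x
    have := (((dA x).ofReal_comp).const_mul I).cexp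
    refine this.congr_deriv ?_
    simp only [he]; ring
  have ne : ∀ x, ‖e x‖ = 1 := by
    intro x; simp only [he]; rw [mul_comm, Complex.norm_exp_ofReal_mul_I]
  set er : ℝ → ℂ := fun x => I * r x * (-(l x * c2 x) - (1 / 2) * (l x * (starRingEnd ℂ) (l x)) * c1 x)
    - (1 / 2) * (l x * (starRingEnd ℂ) (l x)) * (l' x * c2 x) with her
  have dN : ∀ x ∈ Set.Icc a b, HasDerivAt (fun y => e y * nf l c1 c2 y) (e x * er x) x := by
    intro x hx
    have h1 := hz.d1 x hx
    have h2 := hz.d2 x hx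
    have hc : HasDerivAt (fun y => (starRingEnd ℂ) (l y)) ((starRingEnd ℂ) (l' x)) x := (hl x).star
    have hn := ((h1.sub ((hl x).mul h2)).sub ((((hl x).mul hc).const_mul (1 / 2)).mul h1))
    refine ((de x).mul hn).congr_deriv ?_
    have hc' := hconj x
    have hl'x : l' x = w x * ex ξ x := rfl
    simp only [her, Pi.mul_apply, Pi.sub_apply, ← hl'x, ← hc']
    linear_combination (e x * (1 / 2) * c1 x) * hr2 x
  have hrb : ∀ x, |r x| ≤ ‖l x‖ * |w x| := by
    intro x
    refine (Complex.abs_im_le_norm _).trans ?_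
    simp [hl', norm_mul, norm_ex]
  have herb : ∀ x ∈ Set.Icc a b, ‖e x * er x‖ ≤ 2 * (‖l x‖ ^ 2 * |w x|) := by
    intro x hx
    have n1 := hz.le1 hx
    have n2 := hz.le2 hx
    have n3 := hl1 x hx
    have n4 := hrb x
    have m1 : ‖-(l x * c2 x) - (1 / 2) * (l x * (starRingEnd ℂ) (l x)) * c1 x‖ ≤ 3 / 2 * ‖l x‖ := by
      refine (norm_sub_le _ _).trans ?_
      rw [norm_neg, norm_mul, norm_mul, norm_mul, norm_mul, RCLike.norm_conj]
      have : ‖(1 / 2 : ℂ)‖ = 1 / 2 := by norm_num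
      rw [this]
      have i1 : ‖l x‖ * ‖c2 x‖ ≤ ‖l x‖ * 1 := by gcongr
      have i2 : 1 / 2 * (‖l x‖ * ‖l x‖) * ‖c1 x‖ ≤ 1 / 2 * (‖l x‖ * 1) * 1 := by gcongr
      linarith
    have m2 : ‖(1 / 2) * (l x * (starRingEnd ℂ) (l x)) * (l' x * c2 x)‖ ≤ 1 / 2 * (‖l x‖ ^ 2 * |w x|) := by
      rw [norm_mul, norm_mul, norm_mul, norm_mul, RCLike.norm_conj]
      have : ‖(1 / 2 : ℂ)‖ = 1 / 2 := by norm_num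
      rw [this]
      have i0 : ‖l' x‖ = |w x| := by simp [hl', norm_mul, norm_ex]
      rw [i0]
      have : 1 / 2 * (‖l x‖ * ‖l x‖) * (|w x| * ‖c2 x‖) ≤ 1 / 2 * (‖l x‖ * ‖l x‖) * (|w x| * 1) := by gcongr
      nlinarith
    rw [norm_mul, ne, one_mul]
    refine (norm_sub_le _ _).trans ?_
    have m3 : ‖I * r x * (-(l x * c2 x) - (1 / 2) * (l x * (starRingEnd ℂ) (l x)) * c1 x)‖ ≤
        (‖l x‖ * |w x|) * (3 / 2 * ‖l x‖) := by
      rw [norm_mul, norm_mul, Complex.norm_I, Complex.norm_real, Real.norm_eq_abs, one_mul]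
      gcongr
    linarith
  have cc1 := hz.cont1
  have cc2 := hz.cont2
  have ce : Continuous e := continuous_iff_continuousAt.2 fun x => (de x).continuousAt
  have cer : ContinuousOn (fun x => e x * er x) (Set.Icc a b) := by
    have c3 : ContinuousOn l (Set.Icc a b) := cl.continuousOn
    have c4 : ContinuousOn (fun x => (starRingEnd ℂ) (l x)) (Set.Icc a b) :=
      (Complex.continuous_conj.comp cl).continuousOn
    have c5 : ContinuousOn (fun x => (r x : ℂ)) (Set.Icc a b) := (Complex.continuous_ofReal.comp cr).continuousOn
    have c6 := cl'.continuousOn (s := Set.Icc a b)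
    have c7 := ce.continuousOn (s := Set.Icc a b)
    have c8 : ContinuousOn (fun x => (1 / 2 : ℂ) * (l x * (starRingEnd ℂ) (l x))) (Set.Icc a b) :=
      continuousOn_const.mul (c3.mul c4)
    exact c7.mul (((continuousOn_const.mul c5).mul ((c3.mul cc2).neg.sub (c8.mul cc1))).sub
      (c8.mul (c6.mul cc2)))
  have ftc := intervalIntegral.integral_eq_sub_of_hasDerivAt (a := a) (b := b)
    (f := fun y => e y * nf l c1 c2 y) (f' := fun x => e x * er x)
    (fun x hx => dN x (by rwa [Set.uIcc_of_le hab] at hx))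
    (ContinuousOn.intervalIntegrable (by rwa [Set.uIcc_of_le hab]))
  have hint : IntervalIntegrable (fun x => 2 * (‖l x‖ ^ 2 * |w x|)) volume a b :=
    (continuous_const.mul ((cl.norm.pow 2).mul hw.abs)).intervalIntegrable _ _
  have hb : ‖∫ x in a..b, e x * er x‖ ≤ ∫ x in a..b, 2 * (‖l x‖ ^ 2 * |w x|) := by
    refine intervalIntegral.norm_integral_le_of_norm_le hab ?_ hint
    filter_upwards with x hx using herb x (Set.Ioc_subset_Icc_self hx)
  rw [ftc, intervalIntegral.integral_const_mul] at hb
  have e1 : ‖nf l c1 c2 b‖ = ‖e b * nf l c1 c2 b‖ := by rw [norm_mul, ne, one_mul]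
  have e2 : ‖nf l c1 c2 a‖ = ‖e a * nf l c1 c2 a‖ := by rw [norm_mul, ne, one_mul]
  rw [e1, e2]
  exact (abs_norm_sub_norm_le _ _).trans hb

lemma prim_hasDerivAt (hw : Continuous w) (ξ a x : ℝ) :
    HasDerivAt (fun x => ∫ y in a..x, (w y : ℂ) * ex ξ y) (w x * ex ξ x) x :=
  ((((Complex.continuous_ofReal.comp hw).mul (ex_cont ξ)).integral_hasStrictDerivAt a x)).hasDerivAt

/-- On an interval on which `w` is small in `L¹`, the scattering data are given by the first Born
approximation up to quadratic (`c₂`) and cubic (`c₁`) errors. -/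
lemma ZS.born (hz : ZS w ξ a b c1 c2) (hw : Continuous w) (hab : a ≤ b) {B : ℝ}
    (hB : ∫ x in a..b, |w x| ≤ B) :
    ‖c2 b - c2 a‖ ≤ B * (‖c1 a‖ + B) ∧
    ‖c1 b - c1 a - (∫ x in a..b, (w x : ℂ) * ex ξ x) * c2 a‖ ≤ B * (B * (‖c1 a‖ + B)) := by
  have sub : ∀ x ∈ Set.Icc a b, Set.Icc a x ⊆ Set.Icc a b := fun x hx => Set.Icc_subset_Icc le_rfl hx.2
  have cw := (Complex.continuous_ofReal.comp hw)
  simp only [Function.comp_def] at cw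
  have cc1 := hz.cont1
  have cc2 := hz.cont2
  have iw : ∀ x, IntervalIntegrable (fun y => |w y|) volume a x := fun x => hw.abs.intervalIntegrable _ _
  have hI : ∀ x ∈ Set.Icc a b, ∫ y in a..x, |w y| ≤ B := by
    intro x hx
    refine le_trans ?_ hB
    exact intervalIntegral.integral_mono_interval le_rfl hx.1 hx.2 (.of_forall fun y => abs_nonneg _) (iw b)
  have hB0 : 0 ≤ B := le_trans (by simp) (hI a ⟨le_rfl, hab⟩)
  have key : ∀ (K : ℝ) (g : ℝ → ℂ), 0 ≤ K → (∀ y ∈ Set.Icc a b, ‖g y‖ ≤ K * |w y|) → ∀ x ∈ Set.Icc a b,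
      ‖∫ y in a..x, g y‖ ≤ K * B := by
    intro K g hK hg x hx
    have : ‖∫ y in a..x, g y‖ ≤ ∫ y in a..x, K * |w y| := by
      refine intervalIntegral.norm_integral_le_of_norm_le hx.1 ?_ ((iw x).const_mul _)
      filter_upwards with y hy using hg y (sub x hx (Set.Ioc_subset_Icc_self hy))
    rw [intervalIntegral.integral_const_mul] at this
    exact this.trans (mul_le_mul_of_nonneg_left (hI x hx) hK)
  have i1 : ∀ x ∈ Set.Icc a b, ‖c1 x‖ ≤ ‖c1 a‖ + B := by
    intro x hx
    have ftc := intervalIntegral.integral_eq_sub_of_hasDerivAt (a := a) (b := x) (f := c1)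
      (fun y hy => hz.d1 y (by rw [Set.uIcc_of_le hx.1] at hy; exact sub x hx hy))
      (ContinuousOn.intervalIntegrable (by
        rw [Set.uIcc_of_le hx.1]
        exact ((cw.mul (ex_cont ξ)).continuousOn.mul (cc2.mono (sub x hx)))))
    have h := key 1 (fun y => w y * ex ξ y * c2 y) zero_le_one (fun y hy => by
      rw [norm_mul, norm_mul, norm_ex, Complex.norm_real, Real.norm_eq_abs, one_mul, mul_one]
      exact mul_le_of_le_one_right (abs_nonneg _) (hz.le2 hy)) x hx
    rw [ftc, one_mul] at h
    have := norm_sub_norm_le (c1 x) (c1 a)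
    linarith
  have i2 : ∀ x ∈ Set.Icc a b, ‖c2 x - c2 a‖ ≤ (‖c1 a‖ + B) * B := by
    intro x hx
    have ftc := intervalIntegral.integral_eq_sub_of_hasDerivAt (a := a) (b := x) (f := c2)
      (fun y hy => hz.d2 y (by rw [Set.uIcc_of_le hx.1] at hy; exact sub x hx hy))
      (ContinuousOn.intervalIntegrable (by
        rw [Set.uIcc_of_le hx.1]
        exact ((cw.mul (ex_cont (-ξ))).continuousOn.mul (cc1.mono (sub x hx))).neg))
    rw [← ftc]
    refine key _ _ (by positivity) (fun y hy => ?_) x hx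
    rw [norm_neg, norm_mul, norm_mul, norm_ex, Complex.norm_real, Real.norm_eq_abs, mul_one, mul_comm]
    exact mul_le_mul_of_nonneg_right (i1 y hy) (abs_nonneg _)
  refine ⟨by rw [mul_comm]; exact i2 b ⟨hab, le_rfl⟩, ?_⟩
  have ftc := intervalIntegral.integral_eq_sub_of_hasDerivAt (a := a) (b := b)
    (f := fun x => c1 x - (∫ y in a..x, (w y : ℂ) * ex ξ y) * c2 a)
    (f' := fun x => w x * ex ξ x * (c2 x - c2 a))
      (fun y hy => ((hz.d1 y (by rwa [Set.uIcc_of_le hab] at hy)).sub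
        ((prim_hasDerivAt hw ξ a y).mul_const (c2 a))).congr_deriv (by ring))
      (ContinuousOn.intervalIntegrable (by
        rw [Set.uIcc_of_le hab]
        exact ((cw.mul (ex_cont ξ)).continuousOn.mul (cc2.sub continuousOn_const))))
  have h := key ((‖c1 a‖ + B) * B) (fun x => w x * ex ξ x * (c2 x - c2 a)) (by positivity) (fun y hy => by
    rw [norm_mul, norm_mul, norm_ex, Complex.norm_real, Real.norm_eq_abs, mul_one, mul_comm]
    exact mul_le_mul_of_nonneg_right (i2 y hy) (abs_nonneg _)) b ⟨hab, le_rfl⟩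
  rw [ftc, intervalIntegral.integral_same] at h
  calc _ = ‖c1 b - (∫ y in a..b, (w y : ℂ) * ex ξ y) * c2 a - (c1 a - 0 * c2 a)‖ := by congr 1; ring
    _ ≤ _ := h
    _ = _ := by ring

set_option maxHeartbeats 1000000 in
/-- If the phase integrals of `w` are `O(B)` and their cubic interactions are `O(B³)`, then the
reflection coefficient agrees with the Fourier transform of `w` up to `O(B³)`. -/
lemma scatter_abs {R xa xb B κ : ℝ} (hz : ZS w ξ (-R) R c1 c2) (hw : Continuous w)
    (h1 : -R ≤ xa) (h2 : xa ≤ xb) (h3 : xb ≤ R) (hB0 : 0 ≤ B) (hB1 : B ≤ 1) (hκ0 : 0 ≤ κ) (hκ1 : κ ≤ 1)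
    (hc : ‖c1 (-R)‖ ≤ κ)
    (hL : ∀ x ∈ Set.Icc (-R) xa, ‖∫ y in (-R)..x, (w y : ℂ) * ex ξ y‖ ≤ B)
    (hL3 : ∫ x in (-R)..xa, ‖∫ y in (-R)..x, (w y : ℂ) * ex ξ y‖ ^ 2 * |w x| ≤ B ^ 3)
    (hm : ∫ x in xa..xb, |w x| ≤ B)
    (hR : ∀ x ∈ Set.Icc xb R, ‖∫ y in R..x, (w y : ℂ) * ex ξ y‖ ≤ B)
    (hR3 : ∫ x in xb..R, ‖∫ y in R..x, (w y : ℂ) * ex ξ y‖ ^ 2 * |w x| ≤ B ^ 3) :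
    |‖c1 R‖ - ‖∫ y in (-R)..R, (w y : ℂ) * ex ξ y‖| ≤ 120 * (B ^ 3 + κ) := by
  have zl := hz.mono (a' := -R) (b' := xa) le_rfl (h2.trans h3)
  have zm := hz.mono (a' := xa) (b' := xb) h1 h3
  have zr := hz.mono (a' := xb) (b' := R) (h1.trans h2) le_rfl
  have nl := nf_change zl hw (fun x => prim_hasDerivAt hw ξ (-R) x) h1 (fun x hx => (hL x hx).trans hB1)
  have nr := nf_change zr hw (fun x => prim_hasDerivAt hw ξ R x) h3 (fun x hx => (hR x hx).trans hB1)
  obtain ⟨m2, m1⟩ := zm.born hw h2 hm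
  have ii : ∀ a b : ℝ, IntervalIntegrable (fun y => (w y : ℂ) * ex ξ y) volume a b := fun a b =>
    ((Complex.continuous_ofReal.comp hw).mul (ex_cont ξ)).intervalIntegrable _ _
  have hmB : ‖∫ x in xa..xb, (w x : ℂ) * ex ξ x‖ ≤ B := by
    refine le_trans (intervalIntegral.norm_integral_le_of_norm_le h2 ?_ (hw.abs.intervalIntegrable _ _)) hm
    filter_upwards with x hx
    rw [norm_mul, norm_ex, Complex.norm_real, Real.norm_eq_abs, mul_one]
  have hsum : (∫ y in (-R)..R, (w y : ℂ) * ex ξ y) = (∫ y in (-R)..xa, (w y : ℂ) * ex ξ y) +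
      (∫ x in xa..xb, (w x : ℂ) * ex ξ x) - ∫ y in R..xb, (w y : ℂ) * ex ξ y := by
    rw [intervalIntegral.integral_add_adjacent_intervals (ii _ _) (ii _ _),
      intervalIntegral.integral_symm xb R, sub_neg_eq_add,
      intervalIntegral.integral_add_adjacent_intervals (ii _ _) (ii _ _)]
  have e1 : nf (fun x => ∫ y in (-R)..x, (w y : ℂ) * ex ξ y) c1 c2 (-R) = c1 (-R) := by simp [nf]
  have e2 : nf (fun x => ∫ y in R..x, (w y : ℂ) * ex ξ y) c1 c2 R = c1 R := by simp [nf]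
  rw [e1] at nl
  rw [e2] at nr
  have hLa := hL xa ⟨h1, le_rfl⟩
  have hRb := hR xb ⟨le_rfl, h3⟩
  have hxa : xa ∈ Set.Icc (-R) R := ⟨h1, h2.trans h3⟩
  have hxb : xb ∈ Set.Icc (-R) R := ⟨h1.trans h2, h3⟩
  have n1 := hz.norm xa hxa
  have l1 := hz.le1 hxa
  have l2 := hz.le2 hxa
  set N := ∫ y in (-R)..R, (w y : ℂ) * ex ξ y
  have q1 := (abs_le.1 (nl.trans (mul_le_mul_of_nonneg_left hL3 (by norm_num)))).2
  have q2 := nr.trans (mul_le_mul_of_nonneg_left hR3 (by norm_num))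
  have f1 : nf (fun x => ∫ y in (-R)..x, (w y : ℂ) * ex ξ y) c1 c2 xa = c1 xa -
    (∫ y in (-R)..xa, (w y : ℂ) * ex ξ y) * c2 xa - (1 / 2) * ((∫ y in (-R)..xa, (w y : ℂ) * ex ξ y) *
      (starRingEnd ℂ) (∫ y in (-R)..xa, (w y : ℂ) * ex ξ y)) * c1 xa := rfl
  have f2 : nf (fun x => ∫ y in R..x, (w y : ℂ) * ex ξ y) c1 c2 xb = c1 xb -
    (∫ y in R..xb, (w y : ℂ) * ex ξ y) * c2 xb - (1 / 2) * ((∫ y in R..xb, (w y : ℂ) * ex ξ y) *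
      (starRingEnd ℂ) (∫ y in R..xb, (w y : ℂ) * ex ξ y)) * c1 xb := rfl
  set L := ∫ y in (-R)..xa, (w y : ℂ) * ex ξ y
  set l := ∫ y in R..xb, (w y : ℂ) * ex ξ y
  set m := ∫ x in xa..xb, (w x : ℂ) * ex ξ x
  set na := nf (fun x => ∫ y in (-R)..x, (w y : ℂ) * ex ξ y) c1 c2 xa
  set nb := nf (fun x => ∫ y in R..x, (w y : ℂ) * ex ξ y) c1 c2 xb
  set p := ‖c1 xa‖ with hp
  have hp0 : 0 ≤ p := norm_nonneg _
  have half : ‖(1 / 2 : ℂ)‖ = 1 / 2 := by norm_num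
  have quad : ∀ z c : ℂ, ‖z‖ ≤ B → ‖(1 / 2) * (z * (starRingEnd ℂ) z) * c‖ ≤ 1 / 2 * B ^ 2 * ‖c‖ := by
    intro z c hz
    rw [norm_mul, norm_mul, norm_mul, RCLike.norm_conj, half]
    have : ‖z‖ * ‖z‖ ≤ B ^ 2 := by nlinarith [norm_nonneg z]
    gcongr
  have B2 : B ^ 2 ≤ B := by nlinarith
  have B3 : B ^ 3 ≤ B := by nlinarith
  have B3' : 0 ≤ B ^ 3 := by positivity
  have Bk : B ^ 2 * κ ≤ κ := by nlinarith
  have a1 : p ≤ κ + 4 * B := by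
    have e : c1 xa = na + L * c2 xa + (1 / 2) * (L * (starRingEnd ℂ) L) * c1 xa := by rw [f1]; ring
    have t1 := norm_add_le (na + L * c2 xa) ((1 / 2) * (L * (starRingEnd ℂ) L) * c1 xa)
    have t2 := norm_add_le na (L * c2 xa)
    rw [← e] at t1
    have t3 := quad L (c1 xa) hLa
    have t4 : ‖L * c2 xa‖ ≤ B := by
      rw [norm_mul]; exact (mul_le_of_le_one_right (norm_nonneg _) l2).trans hLa
    have t5 : 1 / 2 * B ^ 2 * p ≤ 1 / 2 * B ^ 2 * 1 := by gcongr
    linarith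
  have a2 : ‖c1 xa - L * c2 xa‖ ≤ 2 * κ + 4 * B ^ 3 := by
    have e : c1 xa - L * c2 xa = na + (1 / 2) * (L * (starRingEnd ℂ) L) * c1 xa := by rw [f1]; ring
    rw [e]
    refine (norm_add_le _ _).trans ?_
    have t3 := quad L (c1 xa) hLa
    have t5 : 1 / 2 * B ^ 2 * p ≤ 1 / 2 * B ^ 2 * (κ + 4 * B) := by gcongr
    linarith
  have a3 : B * (B * (p + B)) ≤ κ + 5 * B ^ 3 := by
    have : B * (B * (p + B)) ≤ B * (B * ((κ + 4 * B) + B)) := by gcongr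
    linarith
  have a4 : ‖c1 xb‖ ≤ 2 * κ + 10 * B := by
    have e : c1 xb = (c1 xb - c1 xa - m * c2 xa) + c1 xa + m * c2 xa := by ring
    have t1 := norm_add_le ((c1 xb - c1 xa - m * c2 xa) + c1 xa) (m * c2 xa)
    have t2 := norm_add_le (c1 xb - c1 xa - m * c2 xa) (c1 xa)
    rw [← e] at t1
    have t4 : ‖m * c2 xa‖ ≤ B := by
      rw [norm_mul]; exact (mul_le_of_le_one_right (norm_nonneg _) l2).trans hmB
    linarith
  have a5 : ‖nb - N * c2 xa‖ ≤ 5 * κ + 19 * B ^ 3 := by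
    have e : nb - N * c2 xa = ((c1 xb - c1 xa - m * c2 xa) + (c1 xa - L * c2 xa)) +
        (-(l * (c2 xb - c2 xa)) - (1 / 2) * (l * (starRingEnd ℂ) l) * c1 xb) := by
      rw [f2, hsum]; ring
    rw [e]
    refine (norm_add_le _ _).trans ?_
    have t1 := norm_add_le (c1 xb - c1 xa - m * c2 xa) (c1 xa - L * c2 xa)
    have t2 := norm_sub_le (-(l * (c2 xb - c2 xa))) ((1 / 2) * (l * (starRingEnd ℂ) l) * c1 xb)
    have t3 := quad l (c1 xb) hRb
    have t4 : ‖-(l * (c2 xb - c2 xa))‖ ≤ B * (B * (p + B)) := by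
      rw [norm_neg, norm_mul]; gcongr
    have t5 : 1 / 2 * B ^ 2 * ‖c1 xb‖ ≤ 1 / 2 * B ^ 2 * (2 * κ + 10 * B) := by gcongr
    linarith
  have a6 : ‖N‖ ≤ 3 * B := by
    rw [hsum]
    have t1 := norm_sub_le (L + m) l
    have t2 := norm_add_le L m
    linarith
  have a7 : |‖N * c2 xa‖ - ‖N‖| ≤ 6 * κ + 96 * B ^ 3 := by
    have hp2 : p ^ 2 ≤ 2 * κ + 32 * B ^ 2 := by nlinarith [sq_nonneg (κ - 4 * B)]
    have hc2 : 1 - ‖c2 xa‖ ≤ p ^ 2 := by nlinarith [norm_nonneg (c2 xa)]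
    have hn := norm_nonneg N
    rw [norm_mul, abs_le]
    have t : ‖N‖ * (1 - ‖c2 xa‖) ≤ 3 * B * (2 * κ + 32 * B ^ 2) :=
      mul_le_mul a6 (hc2.trans hp2) (by linarith) (by linarith)
    have tk : B * κ ≤ κ := by nlinarith
    constructor
    · linarith
    · have : ‖N‖ * ‖c2 xa‖ ≤ ‖N‖ * 1 := by gcongr
      linarith
  have a8 := abs_norm_sub_norm_le nb (N * c2 xa)
  have r1 := abs_le.1 (a8.trans a5)
  have r2 := abs_le.1 a7
  have r3 := abs_le.1 q2
  rw [abs_le]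
  constructor <;> linarith [r1.1, r1.2, r2.1, r2.2, r3.1, r3.2]

end

/-! ### Pointwise decay by stationary phase -/

/-- A stationary-phase integration by parts: `p` is an amplitude, `x + 3η²` the derivative of the
phase, and `z` the localization scale around the stationary points. -/
lemma stat_phase {h h1 : ℝ → ℂ} {p p' M : ℝ → ℝ} {x z : ℝ} (hz : 1 ≤ z)
    (hd : ∀ η, HasDerivAt h (h1 η) η) (ch1 : Continuous h1)
    (hp : ∀ η, HasDerivAt p (p' η) η) (cp' : Continuous p')
    (ip : Integrable (fun η => (p η : ℂ) * h η)) (iM : Integrable M)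
    (hM : ∀ η, z ^ 2 * |p η| / ((3 * η ^ 2 + x) ^ 2 + z ^ 2) * ‖h η‖
      + |p η * (3 * η ^ 2 + x) / ((3 * η ^ 2 + x) ^ 2 + z ^ 2)| * ‖h1 η - 3 * I * η ^ 2 * h η‖
      + |p' η * (3 * η ^ 2 + x) / ((3 * η ^ 2 + x) ^ 2 + z ^ 2) + p η * (6 * η) *
        (z ^ 2 - (3 * η ^ 2 + x) ^ 2) / ((3 * η ^ 2 + x) ^ 2 + z ^ 2) ^ 2| * ‖h η‖ ≤ M η) :
    ‖∫ η, (p η : ℂ) * h η * ex x η‖ ≤ ∫ η, M η := by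
  have hD : ∀ η : ℝ, 0 < (3 * η ^ 2 + x) ^ 2 + z ^ 2 := fun η => by positivity
  have ch : Continuous h := continuous_iff_continuousAt.2 fun y => (hd y).continuousAt
  have cp : Continuous p := continuous_iff_continuousAt.2 fun y => (hp y).continuousAt
  set D : ℝ → ℝ := fun η => (3 * η ^ 2 + x) ^ 2 + z ^ 2 with hDd
  have cD : Continuous D := by fun_prop
  set b : ℝ → ℝ := fun η => p η * (3 * η ^ 2 + x) / D η with hb
  set b' : ℝ → ℝ := fun η => p' η * (3 * η ^ 2 + x) / D η + p η * (6 * η) *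
        (z ^ 2 - (3 * η ^ 2 + x) ^ 2) / D η ^ 2 with hb'
  have cs : Continuous (fun η : ℝ => 3 * η ^ 2 + x) := by fun_prop
  have cb : Continuous b := (cp.mul cs).div cD fun η => (hD η).ne'
  have cb' : Continuous b' := ((cp'.mul cs).div cD fun η => (hD η).ne').add
    (((cp.mul (by fun_prop)).mul (continuous_const.sub (cs.pow 2))).div (cD.pow 2)
      fun η => (pow_pos (hD η) 2).ne')
  have ds : ∀ η : ℝ, HasDerivAt (fun η : ℝ => 3 * η ^ 2 + x) (6 * η) η := by
    intro η
    refine (((hasDerivAt_pow 2 η).const_mul 3).add_const x).congr_deriv ?_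
    norm_num; ring
  have db : ∀ η, HasDerivAt b (b' η) η := by
    intro η
    have hDη : HasDerivAt D (2 * (3 * η ^ 2 + x) * (6 * η)) η := by
      refine (((ds η).fun_pow 2).add_const (z ^ 2)).congr_deriv ?_
      norm_num
    refine (((hp η).mul (ds η)).div hDη (hD η).ne').congr_deriv ?_
    have := (hD η).ne'
    simp only [hb', hDd, Pi.mul_apply]
    field_simp
    ring
  set G : ℝ → ℂ := fun η => h1 η - 3 * I * η ^ 2 * h η with hG
  have cG : Continuous G := ch1.sub ((continuous_const.mul ((Complex.continuous_ofReal).pow 2)).mul ch)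
  set K : ℝ → ℂ := fun η => ex x η * ((b' η : ℂ) * h η + (b η : ℂ) * G η) with hK
  set Z : ℝ → ℂ := fun η => ex x η * (((z ^ 2 * p η / D η : ℝ) : ℂ) * h η) with hZ
  have dH : ∀ η, HasDerivAt (fun η => (b η : ℂ) * (ex x η * h η))
      (I * ((p η : ℂ) * h η * ex x η - Z η) + K η) η := by
    intro η
    refine (((db η).ofReal_comp).mul ((ex_dx x η).mul (hd η))).congr_deriv ?_
    have e : (b η : ℂ) * (3 * η ^ 2 + x) = p η - ((z ^ 2 * p η / D η : ℝ) : ℂ) := by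
      have : b η * (3 * η ^ 2 + x) = p η - z ^ 2 * p η / D η := by
        have := (hD η).ne'
        simp only [hb, hDd]
        field_simp
        ring
      exact_mod_cast congrArg (fun r : ℝ => (r : ℂ)) this
    simp only [hK, hZ, hG, Pi.mul_apply]
    linear_combination (I * ex x η * h η) * e
  have cex := ex_cont x
  have cpC := Complex.continuous_ofReal.comp cp
  have cbC := Complex.continuous_ofReal.comp cb
  have cb'C := Complex.continuous_ofReal.comp cb'
  have cpD : Continuous (fun η => z ^ 2 * p η / D η) := (continuous_const.mul cp).div cD fun η => (hD η).ne'
  have cZ : Continuous Z := cex.mul ((Complex.continuous_ofReal.comp cpD).mul ch)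
  have cK : Continuous K := cex.mul ((cb'C.mul ch).add (cbC.mul cG))
  have bZ : ∀ η, ‖Z η‖ = z ^ 2 * |p η| / D η * ‖h η‖ := by
    intro η
    simp only [hZ]
    rw [norm_mul, norm_ex, one_mul, norm_mul, Complex.norm_real, Real.norm_eq_abs, abs_div, abs_mul,
      abs_of_pos (hD η), abs_of_pos (by positivity : 0 < z ^ 2)]
  have bK : ∀ η, ‖K η‖ ≤ |b η| * ‖G η‖ + |b' η| * ‖h η‖ := by
    intro η
    simp only [hK]
    rw [norm_mul, norm_ex, one_mul]
    refine (norm_add_le _ _).trans ?_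
    rw [norm_mul, norm_mul, Complex.norm_real, Complex.norm_real, Real.norm_eq_abs, Real.norm_eq_abs]
    linarith
  have hM' : ∀ η, ‖Z η‖ + ‖K η‖ ≤ M η := by
    intro η
    have := hM η
    have e1 := bZ η
    have e2 := bK η
    simp only [hb, hb', hG, hDd] at e1 e2
    linarith
  have iZ : Integrable Z := iM.mono' cZ.aestronglyMeasurable
    (.of_forall fun η => by linarith [hM' η, norm_nonneg (K η)])
  have iK : Integrable K := iM.mono' cK.aestronglyMeasurable
    (.of_forall fun η => by linarith [hM' η, norm_nonneg (Z η)])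
  have iP : Integrable (fun η => (p η : ℂ) * h η * ex x η) := by
    refine ip.mono ((cpC.mul ch).mul cex).aestronglyMeasurable (.of_forall fun η => ?_)
    rw [norm_mul _ (ex x η), norm_ex, mul_one]
  have iH : Integrable (fun η => (b η : ℂ) * (ex x η * h η)) := by
    refine ip.mono (cbC.mul (cex.mul ch)).aestronglyMeasurable (.of_forall fun η => ?_)
    rw [norm_mul, norm_mul, norm_ex, one_mul, norm_mul]
    gcongr
    rw [Complex.norm_real, Complex.norm_real, Real.norm_eq_abs, Real.norm_eq_abs]
    simp only [hb]
    rw [abs_div, abs_mul, abs_of_pos (hD η), div_le_iff₀ (hD η)]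
    gcongr
    nlinarith [sq_nonneg (|3 * η ^ 2 + x| - 1), sq_abs (3 * η ^ 2 + x), abs_nonneg (3 * η ^ 2 + x)]
  have iPZ : Integrable (fun η => I * ((p η : ℂ) * h η * ex x η - Z η)) := (iP.sub iZ).const_mul I
  have h0 := integral_eq_zero_of_hasDerivAt_of_integrable dH (iPZ.add iK) iH
  rw [integral_add iPZ iK, integral_const_mul, integral_sub iP iZ] at h0
  have e : ∫ η, (p η : ℂ) * h η * ex x η = ∫ η, (Z η + I * K η) := by
    rw [integral_add iZ (iK.const_mul I), integral_const_mul]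
    linear_combination (-I) * h0 + ((∫ η, (p η : ℂ) * h η * ex x η) - ∫ η, Z η) * Complex.I_sq
  rw [e]
  refine norm_integral_le_of_norm_le iM (.of_forall fun η => ?_)
  refine (norm_add_le _ _).trans ?_
  rw [norm_mul I, Complex.norm_I, one_mul]
  exact hM' η

lemma integral_lorentz {c : ℝ} (hc : 0 < c) (a : ℝ) :
    Integrable (fun η : ℝ => (1 + (c * (η - a)) ^ 2)⁻¹) ∧
      ∫ η : ℝ, (1 + (c * (η - a)) ^ 2)⁻¹ = c⁻¹ * π := by
  constructor
  · exact (integrable_inv_one_add_sq.comp_mul_left' hc.ne').comp_sub_right a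
  · rw [integral_sub_right_eq_self (fun η : ℝ => (1 + (c * η) ^ 2)⁻¹) a,
      Measure.integral_comp_mul_left (fun η : ℝ => (1 + η ^ 2)⁻¹), integral_univ_inv_one_add_sq,
      abs_of_pos (inv_pos.2 hc), smul_eq_mul]

/-- Majorants of the kernels `1/D` and `η²/D`, `D = (3η² + x)² + z²`, with `z⁴ = 1 + |x|`. -/
lemma phase_majorant {x z : ℝ} (hz : 1 ≤ z) (hx : z ^ 4 = 1 + |x|) :
    ∃ P Q : ℝ → ℝ, Integrable P ∧ Integrable Q ∧ ∫ η, P η ≤ 7 * (z ^ 3)⁻¹ ∧ ∫ η, Q η ≤ 7 * (z ^ 2)⁻¹ ∧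
      (∀ η, 0 ≤ P η ∧ 0 ≤ Q η) ∧
      (∀ η, 1 / ((3 * η ^ 2 + x) ^ 2 + z ^ 2) ≤ 2 * P η) ∧
      (∀ η, |η| / ((3 * η ^ 2 + x) ^ 2 + z ^ 2) ≤ 4 * z ^ 2 * P η + 2 * Q η) ∧
      (∀ η, η ^ 2 / ((3 * η ^ 2 + x) ^ 2 + z ^ 2) ≤ 4 * z ^ 4 * P η + 4 * Q η) := by
  have hz0 : 0 < z := by linarith
  obtain ⟨a, ha0, ha⟩ : ∃ a : ℝ, 0 ≤ a ∧ ((0 ≤ x ∧ a = 0) ∨ (x = -3 * a ^ 2)) := by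
    rcases le_total 0 x with h | h
    · exact ⟨0, le_rfl, .inl ⟨h, rfl⟩⟩
    · refine ⟨√(-x / 3), Real.sqrt_nonneg _, .inr ?_⟩
      rw [Real.sq_sqrt (by linarith)]; ring
  have haz : a ≤ z ^ 2 := by
    have : a ^ 2 ≤ (z ^ 2) ^ 2 := by
      rw [show (z ^ 2) ^ 2 = z ^ 4 by ring, hx]
      rcases ha with ⟨_, h⟩ | h
      · rw [h]; nlinarith [abs_nonneg x]
      · rw [h, abs_mul, abs_of_nonneg (sq_nonneg a)]; norm_num; nlinarith [sq_nonneg a]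
    exact (sq_le_sq₀ ha0 (by positivity)).1 this
  obtain ⟨i1, e1⟩ := integral_lorentz hz0 a
  obtain ⟨i2, e2⟩ := integral_lorentz hz0 (-a)
  have hz2 : 0 < (z ^ 2)⁻¹ := by positivity
  obtain ⟨i3, e3⟩ := integral_lorentz hz2 a
  obtain ⟨i4, e4⟩ := integral_lorentz hz2 (-a)
  set W : ℝ → ℝ → ℝ := fun c r => (1 + (c * r) ^ 2)⁻¹ with hW
  have W0 : ∀ c r, 0 ≤ W c r := fun c r => by simp only [hW]; positivity
  have Wabs : ∀ c η, W c (|η| - a) ≤ W c (η - a) + W c (η - -a) := by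
    intro c η
    rcases le_total 0 η with h | h
    · rw [abs_of_nonneg h]; linarith [W0 c (η - -a)]
    · rw [abs_of_nonpos h]
      have : W c (-η - a) = W c (η - -a) := by simp only [hW]; congr 2; ring
      rw [this]; linarith [W0 c (η - a)]
  have key : ∀ η : ℝ, (|η| - a) ^ 2 * ((|η| - a) ^ 2 + z ^ 4) + z ^ 2 ≤ 2 * ((3 * η ^ 2 + x) ^ 2 + z ^ 2) := by
    intro η
    have hη := abs_nonneg η
    rw [← sq_abs η]
    set y := |η|
    have z2 : 1 ≤ z ^ 2 := by nlinarith
    have hr : (y - a) ^ 2 ≤ 1 / 4 + (y - a) ^ 4 := by nlinarith [sq_nonneg ((y - a) ^ 2 - 1 / 2)]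
    have hr4 : (y - a) ^ 4 ≤ (y - a) ^ 2 * (y + a) ^ 2 := by
      have : (y - a) ^ 2 ≤ (y + a) ^ 2 := by nlinarith [mul_nonneg hη ha0]
      nlinarith [mul_le_mul_of_nonneg_left this (sq_nonneg (y - a))]
    rw [hx]
    rcases ha with ⟨h, h'⟩ | h
    · rw [abs_of_nonneg h]
      subst h'
      simp only [sub_zero, add_zero] at *
      nlinarith [mul_nonneg (sq_nonneg y) h, sq_nonneg x, sq_nonneg (y ^ 2)]
    · have hxa : |x| = 3 * a ^ 2 := by rw [h, abs_mul, abs_of_nonneg (sq_nonneg a)]; norm_num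
      rw [hxa, h]
      have : (y - a) ^ 2 * a ^ 2 ≤ (y - a) ^ 2 * (y + a) ^ 2 :=
        mul_le_mul_of_nonneg_left (by nlinarith [mul_nonneg hη ha0, sq_nonneg y]) (sq_nonneg _)
      have e : (3 * y ^ 2 + -3 * a ^ 2) ^ 2 = 9 * ((y - a) ^ 2 * (y + a) ^ 2) := by ring
      rw [e]
      nlinarith [mul_nonneg (sq_nonneg (y - a)) (sq_nonneg (y + a))]
  have k1 : ∀ η : ℝ, 1 / ((3 * η ^ 2 + x) ^ 2 + z ^ 2) ≤ 2 * ((z ^ 2)⁻¹ * W z (|η| - a)) := by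
    intro η
    have hD : 0 < (3 * η ^ 2 + x) ^ 2 + z ^ 2 := by positivity
    simp only [hW]
    rw [← mul_inv, ← div_eq_mul_inv, div_le_div_iff₀ hD (by positivity)]
    nlinarith [key η, sq_nonneg ((|η| - a) ^ 2)]
  have k2 : ∀ η : ℝ, (|η| - a) ^ 2 / ((3 * η ^ 2 + x) ^ 2 + z ^ 2) ≤
      2 * ((z ^ 4)⁻¹ * W ((z ^ 2)⁻¹) (|η| - a)) := by
    intro η
    have hD : 0 < (3 * η ^ 2 + x) ^ 2 + z ^ 2 := by positivity
    have e : (z ^ 4)⁻¹ * W ((z ^ 2)⁻¹) (|η| - a) = ((|η| - a) ^ 2 + z ^ 4)⁻¹ := by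
      simp only [hW]
      rw [← mul_inv]; congr 1; field_simp; ring
    rw [e, ← div_eq_mul_inv, div_le_div_iff₀ hD (by positivity)]
    nlinarith [key η]
  refine ⟨fun η => (z ^ 2)⁻¹ * (W z (η - a) + W z (η - -a)),
    fun η => (z ^ 4)⁻¹ * (W ((z ^ 2)⁻¹) (η - a) + W ((z ^ 2)⁻¹) (η - -a)),
    (i1.add i2).const_mul _, (i3.add i4).const_mul _, ?_, ?_, ?_, ?_⟩
  · rw [integral_const_mul, integral_add i1 i2, e1, e2]
    have hpi : 2 * π ≤ 7 := by linarith [Real.pi_lt_d2]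
    have : (z ^ 2)⁻¹ * (z⁻¹ * π + z⁻¹ * π) = (2 * π) * (z ^ 3)⁻¹ := by field_simp; ring
    rw [this]; gcongr
  · rw [integral_const_mul, integral_add i3 i4, e3, e4]
    have hpi : 2 * π ≤ 7 := by linarith [Real.pi_lt_d2]
    have : (z ^ 4)⁻¹ * ((z ^ 2)⁻¹⁻¹ * π + (z ^ 2)⁻¹⁻¹ * π) = (2 * π) * (z ^ 2)⁻¹ := by field_simp; ring
    rw [this]; gcongr
  · intro η
    exact ⟨mul_nonneg hz2.le (add_nonneg (W0 _ _) (W0 _ _)),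
      mul_nonneg (by positivity) (add_nonneg (W0 _ _) (W0 _ _))⟩
  have m1 : ∀ η : ℝ, 1 / ((3 * η ^ 2 + x) ^ 2 + z ^ 2) ≤
      2 * ((z ^ 2)⁻¹ * (W z (η - a) + W z (η - -a))) := fun η =>
    (k1 η).trans (by gcongr; exact Wabs z η)
  have m2 : ∀ η : ℝ, (|η| - a) ^ 2 / ((3 * η ^ 2 + x) ^ 2 + z ^ 2) ≤
      2 * ((z ^ 4)⁻¹ * (W ((z ^ 2)⁻¹) (η - a) + W ((z ^ 2)⁻¹) (η - -a))) := fun η =>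
    (k2 η).trans (by gcongr; exact Wabs _ η)
  refine ⟨m1, fun η => ?_, fun η => ?_⟩
  · have hD : 0 < (3 * η ^ 2 + x) ^ 2 + z ^ 2 := by positivity
    have : |η| / ((3 * η ^ 2 + x) ^ 2 + z ^ 2) ≤ 2 * z ^ 2 * (1 / ((3 * η ^ 2 + x) ^ 2 + z ^ 2))
        + (|η| - a) ^ 2 / ((3 * η ^ 2 + x) ^ 2 + z ^ 2) := by
      rw [mul_one_div, ← add_div]
      gcongr
      nlinarith [sq_nonneg (|η| - a - 1), sq_nonneg (|η| - a)]
    have h1 := mul_le_mul_of_nonneg_left (m1 η) (show 0 ≤ 2 * z ^ 2 by positivity)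
    have h2 := m2 η
    simp only at h1 h2 ⊢
    linarith
  · have hD : 0 < (3 * η ^ 2 + x) ^ 2 + z ^ 2 := by positivity
    have : η ^ 2 / ((3 * η ^ 2 + x) ^ 2 + z ^ 2) ≤ 2 * z ^ 4 * (1 / ((3 * η ^ 2 + x) ^ 2 + z ^ 2))
        + 2 * ((|η| - a) ^ 2 / ((3 * η ^ 2 + x) ^ 2 + z ^ 2)) := by
      rw [mul_one_div, mul_div_assoc', ← add_div]
      gcongr
      rw [← sq_abs η]
      have : a ^ 2 ≤ z ^ 4 := by nlinarith
      nlinarith [sq_nonneg (|η| - 2 * a)]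
    have h1 := mul_le_mul_of_nonneg_left (m1 η) (show 0 ≤ 2 * z ^ 4 by positivity)
    have h2 := m2 η
    simp only at h1 h2 ⊢
    linarith

/-- The pointwise decay `ε ⟨x⟩^{-1/4}` of a function whose profile has bounded Fourier transform with
square-integrable derivative; here `z = ⟨x⟩^{1/4}`. -/
lemma decay_zero {h h1 : ℝ → ℂ} {x z ε : ℝ} (hz : 1 ≤ z) (hx : z ^ 4 = 1 + |x|) (hε : 0 < ε)
    (hd : ∀ η, HasDerivAt h (h1 η) η) (ch1 : Continuous h1) (hb : ∀ η, ‖h η‖ ≤ ε)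
    (ih : Integrable h) (iG : Integrable (fun η : ℝ => ‖h1 η - 3 * I * η ^ 2 * h η‖ ^ 2))
    (hG : ∫ η : ℝ, ‖h1 η - 3 * I * η ^ 2 * h η‖ ^ 2 ≤ ε ^ 2) :
    ‖∫ η, h η * ex x η‖ ≤ 300 * ε / z := by
  obtain ⟨P, Q, iP, iQ, eP, eQ, h0, k0, k1, k2⟩ := phase_majorant hz hx
  have hz0 : 0 < z := by linarith
  have hzε : 0 < z * ε := by positivity
  set M : ℝ → ℝ := fun η => 27 * ε * z ^ 2 * P η + 12 * ε * Q η +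
    (2 * (z * ε))⁻¹ * ‖h1 η - 3 * I * η ^ 2 * h η‖ ^ 2 with hM
  have j1 : Integrable (fun η => 27 * ε * z ^ 2 * P η) := iP.const_mul _
  have j2 : Integrable (fun η => 12 * ε * Q η) := iQ.const_mul _
  have j3 : Integrable (fun η : ℝ => (2 * (z * ε))⁻¹ * ‖h1 η - 3 * I * η ^ 2 * h η‖ ^ 2) :=
    iG.const_mul _
  have j12 : Integrable (fun η => 27 * ε * z ^ 2 * P η + 12 * ε * Q η) := j1.add j2
  have iM : Integrable M := j12.add j3
  have eM : ∫ η, M η ≤ 300 * ε / z := by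
    rw [hM, integral_add j12 j3, integral_add j1 j2, integral_const_mul, integral_const_mul,
      integral_const_mul]
    have a1 : 27 * ε * z ^ 2 * ∫ η, P η ≤ 27 * ε * z ^ 2 * (7 * (z ^ 3)⁻¹) := by gcongr
    have a2 : 12 * ε * ∫ η, Q η ≤ 12 * ε * (7 * (z ^ 2)⁻¹) := by gcongr
    have a3 : (2 * (z * ε))⁻¹ * ∫ η : ℝ, ‖h1 η - 3 * I * η ^ 2 * h η‖ ^ 2 ≤
      (2 * (z * ε))⁻¹ * ε ^ 2 := by gcongr
    refine (add_le_add (add_le_add a1 a2) a3).trans ?_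
    have e1 : 27 * ε * z ^ 2 * (7 * (z ^ 3)⁻¹) = 189 * ε / z := by field_simp; ring
    have e2 : 12 * ε * (7 * (z ^ 2)⁻¹) ≤ 84 * ε / z := by
      rw [show 12 * ε * (7 * (z ^ 2)⁻¹) = 84 * ε / z ^ 2 by field_simp; ring]
      gcongr; nlinarith
    have e3 : (2 * (z * ε))⁻¹ * ε ^ 2 = (1 / 2) * ε / z := by field_simp
    rw [e1, e3]
    have : 300 * ε / z = 189 * ε / z + 84 * ε / z + (1 / 2) * ε / z + (53 / 2) * ε / z := by ring
    rw [this]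
    have : 0 ≤ (53 / 2) * ε / z := by positivity
    linarith
  refine le_trans (le_of_eq ?_) ((stat_phase (x := x) (p := fun _ => 1) (p' := fun _ => 0) (M := M) hz hd ch1
    (fun η => hasDerivAt_const _ _) continuous_const (by simpa using ih) iM fun η => ?_).trans eM)
  · simp
  · have hDp : 0 < (3 * η ^ 2 + x) ^ 2 + z ^ 2 := by positivity
    have h0' := h0 η
    have k0' := k0 η
    have k1' := k1 η
    set s := 3 * η ^ 2 + x with hs
    set D := s ^ 2 + z ^ 2 with hD
    set g := ‖h1 η - 3 * I * η ^ 2 * h η‖ with hg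
    have hb' := hb η
    have n0 := norm_nonneg (h η)
    have t1 : z ^ 2 * |(1:ℝ)| / D * ‖h η‖ ≤ z ^ 2 * (2 * P η) * ε := by
      have := h0'.1
      rw [abs_one, mul_div_assoc]
      exact mul_le_mul (by gcongr) hb' n0 (by positivity)
    have t2 : |1 * s / D| * g ≤ z * ε * P η + (2 * (z * ε))⁻¹ * g ^ 2 := by
      have q1 : |1 * s / D| ^ 2 ≤ 2 * P η := by
        refine le_trans ?_ k0'
        rw [sq_abs, one_mul, div_pow, div_le_div_iff₀ (by positivity) hDp]
        nlinarith [sq_nonneg z]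
      have q2 : |1 * s / D| * g ≤ (z * ε) / 2 * |1 * s / D| ^ 2 + (2 * (z * ε))⁻¹ * g ^ 2 := by
        have := sq_nonneg ((z * ε) * |1 * s / D| - g)
        have e : (z * ε) / 2 * |1 * s / D| ^ 2 + (2 * (z * ε))⁻¹ * g ^ 2 - |1 * s / D| * g =
          (2 * (z * ε))⁻¹ * ((z * ε) * |1 * s / D| - g) ^ 2 := by field_simp; ring
        have : 0 ≤ (2 * (z * ε))⁻¹ * ((z * ε) * |1 * s / D| - g) ^ 2 := by positivity
        linarith
      have q3 : (z * ε) / 2 * |1 * s / D| ^ 2 ≤ (z * ε) / 2 * (2 * P η) := by gcongr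
      linarith
    have t3 : |0 * s / D + 1 * (6 * η) * (z ^ 2 - s ^ 2) / D ^ 2| * ‖h η‖ ≤
        6 * (4 * z ^ 2 * P η + 2 * Q η) * ε := by
      have q : |0 * s / D + 1 * (6 * η) * (z ^ 2 - s ^ 2) / D ^ 2| ≤ 6 * (|η| / D) := by
        rw [zero_mul, zero_div, zero_add, one_mul, abs_div, abs_mul, abs_mul, abs_of_pos
          (pow_pos hDp 2), div_le_iff₀ (by positivity)]
        have : |z ^ 2 - s ^ 2| ≤ D := abs_le.2 ⟨by nlinarith [sq_nonneg z], by nlinarith [sq_nonneg s]⟩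
        have e : 6 * (|η| / D) * D ^ 2 = |(6:ℝ)| * |η| * D := by
          rw [abs_of_pos (by norm_num : (0:ℝ) < 6)]; field_simp
        rw [e]; gcongr
      have : 6 * (|η| / D) ≤ 6 * (4 * z ^ 2 * P η + 2 * Q η) := by gcongr
      exact mul_le_mul (q.trans this) hb' n0 (by have := h0'.1; have := h0'.2; positivity)
    have z2 : z * ε * P η ≤ z ^ 2 * ε * P η := by
      have := h0'.1
      gcongr; nlinarith
    simp only [hM]
    linarith

set_option maxHeartbeats 800000 in
/-- The companion of `decay_zero` for the derivative, which may grow like `ε ⟨x⟩^{1/4}`. -/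
lemma decay_one {h h1 : ℝ → ℂ} {x z ε : ℝ} (hz : 1 ≤ z) (hx : z ^ 4 = 1 + |x|) (hε : 0 < ε)
    (hd : ∀ η, HasDerivAt h (h1 η) η) (ch1 : Continuous h1) (hb : ∀ η, ‖h η‖ ≤ ε)
    (ih : Integrable (fun η : ℝ => (η : ℂ) * h η))
    (iG : Integrable (fun η : ℝ => ‖h1 η - 3 * I * η ^ 2 * h η‖ ^ 2))
    (hG : ∫ η : ℝ, ‖h1 η - 3 * I * η ^ 2 * h η‖ ^ 2 ≤ ε ^ 2) :
    ‖∫ η : ℝ, (η : ℂ) * h η * ex x η‖ ≤ 600 * ε * z := by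
  obtain ⟨P, Q, iP, iQ, eP, eQ, h0, k0, k1, k2⟩ := phase_majorant hz hx
  have hz0 : 0 < z := by linarith
  set M : ℝ → ℝ := fun η => 44 * ε * z ^ 4 * P η + 40 * ε * z ^ 2 * Q η +
    (z / (2 * ε)) * ‖h1 η - 3 * I * η ^ 2 * h η‖ ^ 2 with hM
  have j1 : Integrable (fun η => 44 * ε * z ^ 4 * P η) := iP.const_mul _
  have j2 : Integrable (fun η => 40 * ε * z ^ 2 * Q η) := iQ.const_mul _
  have j3 : Integrable (fun η : ℝ => (z / (2 * ε)) * ‖h1 η - 3 * I * η ^ 2 * h η‖ ^ 2) :=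
    iG.const_mul _
  have j12 : Integrable (fun η => 44 * ε * z ^ 4 * P η + 40 * ε * z ^ 2 * Q η) := j1.add j2
  have iM : Integrable M := j12.add j3
  have eM : ∫ η, M η ≤ 600 * ε * z := by
    rw [hM, integral_add j12 j3, integral_add j1 j2, integral_const_mul, integral_const_mul,
      integral_const_mul]
    have a1 : 44 * ε * z ^ 4 * ∫ η, P η ≤ 44 * ε * z ^ 4 * (7 * (z ^ 3)⁻¹) := by gcongr
    have a2 : 40 * ε * z ^ 2 * ∫ η, Q η ≤ 40 * ε * z ^ 2 * (7 * (z ^ 2)⁻¹) := by gcongr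
    have a3 : (z / (2 * ε)) * ∫ η : ℝ, ‖h1 η - 3 * I * η ^ 2 * h η‖ ^ 2 ≤
      (z / (2 * ε)) * ε ^ 2 := by gcongr
    refine (add_le_add (add_le_add a1 a2) a3).trans ?_
    have e1 : 44 * ε * z ^ 4 * (7 * (z ^ 3)⁻¹) = 308 * (ε * z) := by field_simp; ring
    have e2 : 40 * ε * z ^ 2 * (7 * (z ^ 2)⁻¹) = 280 * ε := by field_simp; ring
    have e3 : (z / (2 * ε)) * ε ^ 2 = (1 / 2) * (ε * z) := by field_simp
    rw [e1, e2, e3]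
    nlinarith
  refine le_trans (le_of_eq ?_) ((stat_phase (x := x) (p := fun η => η) (p' := fun _ => 1) (M := M) hz hd ch1
    (fun η => hasDerivAt_id _) continuous_const ih iM fun η => ?_).trans eM)
  · rfl
  · have hDp : 0 < (3 * η ^ 2 + x) ^ 2 + z ^ 2 := by positivity
    have h0' := h0 η
    have k0' := k0 η
    have k1' := k1 η
    have k2' := k2 η
    have hsb : |3 * η ^ 2 + x| ≤ 3 * η ^ 2 + z ^ 4 := by
      refine (abs_add_le _ _).trans ?_
      rw [abs_of_nonneg (by positivity : 0 ≤ 3 * η ^ 2), hx]; linarith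
    set s := 3 * η ^ 2 + x with hs
    set D := s ^ 2 + z ^ 2 with hD
    set g := ‖h1 η - 3 * I * η ^ 2 * h η‖ with hg
    have hb' := hb η
    have n0 := norm_nonneg (h η)
    obtain ⟨P0, Q0⟩ := h0'
    have t1 : z ^ 2 * |η| / D * ‖h η‖ ≤ z ^ 2 * (4 * z ^ 2 * P η + 2 * Q η) * ε := by
      rw [mul_div_assoc]; gcongr
    have t2 : |η * s / D| * g ≤ (ε / (2 * z)) * (4 * z ^ 4 * P η + 4 * Q η) + (z / (2 * ε)) * g ^ 2 := by
      have q1 : |η * s / D| ^ 2 ≤ 4 * z ^ 4 * P η + 4 * Q η := by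
        refine le_trans ?_ k2'
        rw [sq_abs, div_pow, div_le_div_iff₀ (by positivity) hDp]
        have : 0 ≤ η ^ 2 * D * z ^ 2 := by positivity
        nlinarith
      have q2 : |η * s / D| * g ≤ (ε / (2 * z)) * |η * s / D| ^ 2 + (z / (2 * ε)) * g ^ 2 := by
        have e : (ε / (2 * z)) * |η * s / D| ^ 2 + (z / (2 * ε)) * g ^ 2 - |η * s / D| * g =
          (2 * (z * ε))⁻¹ * (ε * |η * s / D| - z * g) ^ 2 := by field_simp; ring
        have : 0 ≤ (2 * (z * ε))⁻¹ * (ε * |η * s / D| - z * g) ^ 2 := by positivity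
        linarith
      have q3 : (ε / (2 * z)) * |η * s / D| ^ 2 ≤ (ε / (2 * z)) * (4 * z ^ 4 * P η + 4 * Q η) := by gcongr
      linarith
    have t3 : |1 * s / D + η * (6 * η) * (z ^ 2 - s ^ 2) / D ^ 2| * ‖h η‖ ≤
        (38 * z ^ 4 * P η + 36 * Q η) * ε := by
      have q : |1 * s / D + η * (6 * η) * (z ^ 2 - s ^ 2) / D ^ 2| ≤ |s| / D + 6 * (η ^ 2 / D) := by
        refine (abs_add_le _ _).trans ?_
        rw [one_mul, abs_div s, abs_of_pos hDp]
        refine add_le_add le_rfl ?_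
        rw [abs_div, abs_mul, abs_of_nonneg (by nlinarith [sq_nonneg η] : 0 ≤ η * (6 * η)), abs_of_pos
          (pow_pos hDp 2), div_le_iff₀ (by positivity)]
        have : |z ^ 2 - s ^ 2| ≤ D := abs_le.2 ⟨by nlinarith [sq_nonneg z], by nlinarith [sq_nonneg s]⟩
        have e : 6 * (η ^ 2 / D) * D ^ 2 = η * (6 * η) * D := by field_simp
        rw [e]
        exact mul_le_mul_of_nonneg_left this (by nlinarith [sq_nonneg η])
      have q' : |s| / D ≤ 3 * (η ^ 2 / D) + z ^ 4 * (1 / D) := by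
        rw [mul_one_div, mul_div_assoc', ← add_div]; gcongr
      have q'' : z ^ 4 * (1 / D) ≤ z ^ 4 * (2 * P η) := by gcongr
      exact mul_le_mul (by linarith) hb' n0 (by positivity)
    have z2 : (ε / (2 * z)) * (4 * z ^ 4 * P η + 4 * Q η) ≤ 2 * ε * z ^ 4 * P η + 2 * ε * z ^ 2 * Q η := by
      have : ε / (2 * z) ≤ ε / 2 := by gcongr; linarith
      have h1 : (ε / (2 * z)) * (4 * z ^ 4 * P η + 4 * Q η) ≤ ε / 2 * (4 * z ^ 4 * P η + 4 * Q η) := by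
        gcongr
      have : ε * Q η ≤ ε * Q η * z ^ 2 := le_mul_of_one_le_right (by positivity) (by nlinarith)
      nlinarith
    have z3 : 36 * Q η * ε ≤ 36 * ε * z ^ 2 * Q η := by
      have : ε * Q η ≤ ε * Q η * z ^ 2 := le_mul_of_one_le_right (by positivity) (by nlinarith)
      nlinarith
    simp only [hM]
    linarith

/-! ### Oscillatory integrals of functions with the decay of a solution at time one -/

/-- The weight `(1 + |x|)^{1/4}`. -/
def zz (x : ℝ) : ℝ := √(√(1 + |x|))

lemma zz_pow (x : ℝ) : zz x ^ 4 = 1 + |x| := by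
  have : zz x ^ 4 = (zz x ^ 2) ^ 2 := by ring
  rw [this, zz, Real.sq_sqrt (Real.sqrt_nonneg _), Real.sq_sqrt (by positivity)]

lemma one_le_zz (x : ℝ) : 1 ≤ zz x := by
  rw [zz, Real.one_le_sqrt, Real.one_le_sqrt]; linarith [abs_nonneg x]

lemma zz_cont : Continuous zz := by unfold zz; fun_prop

lemma zz_inv_integrable : Integrable (fun x => (zz x ^ 5)⁻¹) := by
  have h := integrable_one_add_norm (E := ℝ) (μ := volume) (r := 5 / 4) (by simp; norm_num)
  refine h.congr (.of_forall fun x => ?_)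
  have e : (1 + ‖x‖) ^ (-(5 / 4 : ℝ)) = (zz x ^ 5)⁻¹ := by
    rw [Real.norm_eq_abs, ← zz_pow, Real.rpow_neg (by positivity), ← Real.rpow_natCast (zz x) 4,
      ← Real.rpow_mul (by linarith [one_le_zz x])]
    norm_num
  exact e

/-- The constant `∫ (1 + |x|)^{-5/4}`. -/
def T0 : ℝ := ∫ x, (zz x ^ 5)⁻¹

lemma T0_nonneg : 0 ≤ T0 := integral_nonneg fun x => by have := one_le_zz x; positivity

/-- A real function with the pointwise decay of a small solution at time one, for which moreover
`xU - 3U''` is small in `L²`. -/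
structure Pf (U U1 U2 : ℝ → ℝ) (B : ℝ) : Prop where
  pos : 0 < B
  d0 : ∀ x, HasDerivAt U (U1 x) x
  d1 : ∀ x, HasDerivAt U1 (U2 x) x
  c2 : Continuous U2
  b0 : ∀ x, |U x| ≤ B / zz x
  b1 : ∀ x, |U1 x| ≤ B * zz x
  iF : Integrable (fun x => (x * U x - 3 * U2 x) ^ 2)
  bF : ∫ x, (x * U x - 3 * U2 x) ^ 2 ≤ B ^ 2

lemma Pf.c0 {U U1 U2 : ℝ → ℝ} {B : ℝ} (h : Pf U U1 U2 B) : Continuous U :=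
  continuous_iff_continuousAt.2 fun x => (h.d0 x).continuousAt

lemma Pf.c1 {U U1 U2 : ℝ → ℝ} {B : ℝ} (h : Pf U U1 U2 B) : Continuous U1 :=
  continuous_iff_continuousAt.2 fun x => (h.d1 x).continuousAt

/-- Comparison of the weights: away from the stationary point either `⟨x⟩^{1/4} ≳ σ`, or `|x/3 + ξ²|`
dominates `ξ²`. -/
lemma weight_cases {ξ σ x r : ℝ} (hσ : 1 ≤ σ) (hσ2 : σ ^ 2 = 1 + |ξ|)
    (hQ : r ^ 2 = |x / 3 + ξ ^ 2|) : σ ≤ 2 * zz x ∨ 2 * ξ ^ 2 ≤ 3 * r ^ 2 := by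
  rcases le_total (ξ ^ 2) |x| with h | h
  · left
    have : σ ^ 4 ≤ (2 * zz x) ^ 4 := by
      have e : (2 * zz x) ^ 4 = 16 * (1 + |x|) := by rw [mul_pow, zz_pow]; norm_num
      have : σ ^ 4 = (1 + |ξ|) ^ 2 := by rw [← hσ2]; ring
      rw [e, this]
      nlinarith [sq_abs ξ, sq_nonneg (|ξ| - 1)]
    exact (pow_le_pow_iff_left₀ (by linarith) (by linarith [one_le_zz x]) (by norm_num)).1 this
  · right
    rw [hQ]
    have := le_abs_self (x / 3 + ξ ^ 2)
    have := neg_abs_le x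
    linarith

/-- The size of `U' - iξU` away from the stationary point. -/
lemma amp_bound {U U1 U2 : ℝ → ℝ} {B ξ σ x r : ℝ} (hP : Pf U U1 U2 B) (hσ : 1 ≤ σ)
    (hσ2 : σ ^ 2 = 1 + |ξ|) (hr : 0 ≤ r) (hQ : r ^ 2 = |x / 3 + ξ ^ 2|) (hrσ : σ ≤ r ^ 2) :
    ‖(U1 x : ℂ) - I * ξ * U x‖ ≤ 4 * B * (σ + r) := by
  have hB := hP.pos
  have z1 := one_le_zz x
  have hr1 : 1 ≤ r := by nlinarith
  have k1 : zz x ≤ 2 * (σ + r) := by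
    have : zz x ^ 4 ≤ (2 * (σ + r)) ^ 4 := by
      rw [zz_pow]
      have hx : |x| ≤ 3 * r ^ 2 + 3 * ξ ^ 2 := by
        rw [hQ]
        have : x = 3 * (x / 3 + ξ ^ 2) - 3 * ξ ^ 2 := by ring
        have h2 : |x| ≤ |3 * (x / 3 + ξ ^ 2)| + |3 * ξ ^ 2| := by
          nth_rewrite 1 [this]; exact abs_sub _ _
        rw [abs_mul, abs_mul, abs_of_nonneg (sq_nonneg ξ)] at h2
        norm_num at h2
        linarith
      have h4 : σ ^ 4 = (1 + |ξ|) ^ 2 := by rw [← hσ2]; ring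
      have h5 : ξ ^ 2 + 1 ≤ σ ^ 4 := by rw [h4]; nlinarith [sq_abs ξ, abs_nonneg ξ]
      have h6 : r ^ 2 ≤ r ^ 4 := by nlinarith [mul_nonneg (sq_nonneg r) (by nlinarith : 0 ≤ r ^ 2 - 1)]
      have h7 : σ ^ 4 + r ^ 4 ≤ (σ + r) ^ 4 := by
        have : (σ + r) ^ 4 = σ ^ 4 + r ^ 4 + (4 * σ ^ 3 * r + 6 * σ ^ 2 * r ^ 2 + 4 * σ * r ^ 3) := by ring
        rw [this]
        have : 0 ≤ 4 * σ ^ 3 * r + 6 * σ ^ 2 * r ^ 2 + 4 * σ * r ^ 3 := by positivity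
        linarith
      rw [mul_pow]
      nlinarith [pow_nonneg hr 4]
    exact (pow_le_pow_iff_left₀ (by linarith) (by linarith) (by norm_num)).1 this
  have k2 : |ξ| / zz x ≤ 2 * (σ + r) := by
    rw [div_le_iff₀ (by linarith)]
    rcases weight_cases hσ hσ2 hQ with h | h
    · nlinarith [mul_nonneg hr (by linarith : 0 ≤ zz x)]
    · have : |ξ| ≤ 2 * r := by
        refine abs_le_of_sq_le_sq ?_ (by linarith)
        nlinarith
      nlinarith
  calc ‖(U1 x : ℂ) - I * ξ * U x‖ ≤ |U1 x| + |ξ| * |U x| := by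
        refine (norm_sub_le _ _).trans (le_of_eq ?_)
        simp
    _ ≤ B * zz x + |ξ| * (B / zz x) := by
        gcongr
        · exact hP.b1 x
        · exact hP.b0 x
    _ = B * zz x + B * (|ξ| / zz x) := by ring
    _ ≤ B * (2 * (σ + r)) + B * (2 * (σ + r)) := by gcongr
    _ = 4 * B * (σ + r) := by ring

/-- Integrals of negative powers of an affine function `N` of slope `±1/3`, bounded below by `μ²`. -/
lemma int_powers {N : ℝ → ℝ} {s μ a b : ℝ} (hs : s = 1 ∨ s = -1) (hμ : 0 < μ) (hab : a ≤ b)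
    (dN : ∀ x, HasDerivAt N (s / 3) x) (hN : ∀ x ∈ Set.Icc a b, μ ^ 2 ≤ N x) :
    IntervalIntegrable (fun x => (N x ^ 2)⁻¹) volume a b ∧
    IntervalIntegrable (fun x => (√(N x) ^ 3)⁻¹) volume a b ∧
    ∫ x in a..b, (N x ^ 2)⁻¹ ≤ 3 / μ ^ 2 ∧ ∫ x in a..b, (√(N x) ^ 3)⁻¹ ≤ 6 / μ := by
  have cN : Continuous N := continuous_iff_continuousAt.2 fun x => (dN x).continuousAt
  have hμ2 : 0 < μ ^ 2 := by positivity
  have hp : ∀ x ∈ Set.Icc a b, 0 < N x := fun x hx => hμ2.trans_le (hN x hx)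
  have hsp : ∀ x ∈ Set.Icc a b, μ ≤ √(N x) := fun x hx => Real.le_sqrt_of_sq_le (hN x hx)
  have hs0 : ∀ x ∈ Set.Icc a b, 0 < √(N x) := fun x hx => hμ.trans_le (hsp x hx)
  have ma := Set.left_mem_Icc.2 hab
  have mb := Set.right_mem_Icc.2 hab
  have i1 : IntervalIntegrable (fun x => (N x ^ 2)⁻¹) volume a b := by
    refine ContinuousOn.intervalIntegrable ?_
    rw [Set.uIcc_of_le hab]
    exact (cN.pow 2).continuousOn.inv₀ fun x hx => (pow_pos (hp x hx) 2).ne'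
  have i2 : IntervalIntegrable (fun x => (√(N x) ^ 3)⁻¹) volume a b := by
    refine ContinuousOn.intervalIntegrable ?_
    rw [Set.uIcc_of_le hab]
    exact (cN.sqrt.pow 3).continuousOn.inv₀ fun x hx => (pow_pos (hs0 x hx) 3).ne'
  have hss : s * s = 1 := by rcases hs with h | h <;> rw [h] <;> norm_num
  refine ⟨i1, i2, ?_, ?_⟩
  · have : ∫ x in a..b, (N x ^ 2)⁻¹ = (-(3 * s)) * (N b)⁻¹ - (-(3 * s)) * (N a)⁻¹ := by
      refine intervalIntegral.integral_eq_sub_of_hasDerivAt (f := fun x => (-(3 * s)) * (N x)⁻¹)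
        (fun x hx => ?_) i1
      rw [Set.uIcc_of_le hab] at hx
      refine (((dN x).fun_inv (hp x hx).ne').const_mul _).congr_deriv ?_
      have := (hp x hx).ne'
      field_simp
      linear_combination hss
    rw [this]
    have ha : (N a)⁻¹ ≤ (μ ^ 2)⁻¹ := inv_anti₀ hμ2 (hN a ma)
    have hb : (N b)⁻¹ ≤ (μ ^ 2)⁻¹ := inv_anti₀ hμ2 (hN b mb)
    have ha' : 0 < (N a)⁻¹ := inv_pos.2 (hp a ma)
    have hb' : 0 < (N b)⁻¹ := inv_pos.2 (hp b mb)
    rw [div_eq_mul_inv]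
    rcases hs with h | h <;> rw [h] <;> linarith
  · have : ∫ x in a..b, (√(N x) ^ 3)⁻¹ = (-(6 * s)) * (√(N b))⁻¹ - (-(6 * s)) * (√(N a))⁻¹ := by
      refine intervalIntegral.integral_eq_sub_of_hasDerivAt (f := fun x => (-(6 * s)) * (√(N x))⁻¹)
        (fun x hx => ?_) i2
      rw [Set.uIcc_of_le hab] at hx
      refine ((((dN x).sqrt (hp x hx).ne').fun_inv (hs0 x hx).ne').const_mul _).congr_deriv ?_
      have := (hs0 x hx).ne'
      field_simp
      linear_combination 6 * hss
    rw [this]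
    have ha : (√(N a))⁻¹ ≤ μ⁻¹ := inv_anti₀ hμ (hsp a ma)
    have hb : (√(N b))⁻¹ ≤ μ⁻¹ := inv_anti₀ hμ (hsp b mb)
    have ha' : 0 < (√(N a))⁻¹ := inv_pos.2 (hs0 a ma)
    have hb' : 0 < (√(N b))⁻¹ := inv_pos.2 (hs0 b mb)
    rw [div_eq_mul_inv]
    rcases hs with h | h <;> rw [h] <;> linarith

set_option maxHeartbeats 800000 in
/-- Away from the stationary point the truncated Fourier integral gains from the identity
`(E (U' - iξU))' = E ((x/3 + ξ²) U - F/3)` with `E = e^{ixξ}`, `F = xU - 3U''`. -/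
lemma osc {U U1 U2 : ℝ → ℝ} {B ξ σ s μ a b : ℝ} (hP : Pf U U1 U2 B) (hσ : 1 ≤ σ)
    (hσ2 : σ ^ 2 = 1 + |ξ|) (hs : s = 1 ∨ s = -1) (hμ : 0 < μ) (hμσ : σ ≤ μ ^ 2) (hab : a ≤ b)
    (hN : ∀ x ∈ Set.Icc a b, μ ^ 2 ≤ s * (x / 3 + ξ ^ 2)) :
    ‖∫ x in a..b, (U x : ℂ) * ex ξ x‖ ≤ 20 * B * (σ / μ ^ 2 + 1 / μ) := by
  have hB := hP.pos
  have hμ2 : 0 < μ ^ 2 := by positivity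
  set N : ℝ → ℝ := fun x => s * (x / 3 + ξ ^ 2) with hNd
  have hss : s * s = 1 := by rcases hs with h | h <;> rw [h] <;> norm_num
  have dN : ∀ x, HasDerivAt N (s / 3) x := by
    intro x
    refine ((((hasDerivAt_id x).div_const 3).add_const (ξ ^ 2)).const_mul s).congr_deriv ?_
    ring
  have hp : ∀ x ∈ Set.Icc a b, 0 < N x := fun x hx => hμ2.trans_le (hN x hx)
  obtain ⟨i1, i2, e1, e2⟩ := int_powers hs hμ hab dN hN
  have ma := Set.left_mem_Icc.2 hab
  have mb := Set.right_mem_Icc.2 hab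
  set F : ℝ → ℝ := fun x => x * U x - 3 * U2 x with hF
  have cF : Continuous F := (continuous_id.mul hP.c0).sub (continuous_const.mul hP.c2)
  set A : ℝ → ℂ := fun x => (U1 x : ℂ) - I * ξ * U x with hA
  have cA : Continuous A := (Complex.continuous_ofReal.comp hP.c1).sub
    (continuous_const.mul (Complex.continuous_ofReal.comp hP.c0))
  have cex := ex_cont ξ
  have cN : Continuous N := continuous_iff_continuousAt.2 fun x => (dN x).continuousAt
  have absN : ∀ x ∈ Set.Icc a b, √(N x) ^ 2 = |x / 3 + ξ ^ 2| := by
    intro x hx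
    have h0 := hp x hx
    rw [Real.sq_sqrt h0.le, ← abs_of_pos h0]
    simp only [hNd]
    rw [abs_mul]
    rcases hs with h | h <;> rw [h] <;> norm_num
  have bA : ∀ x ∈ Set.Icc a b, ‖A x‖ ≤ 4 * B * (σ + √(N x)) := fun x hx =>
    amp_bound hP hσ hσ2 (Real.sqrt_nonneg _) (absN x hx)
      (by rw [Real.sq_sqrt (hp x hx).le]; exact hμσ.trans (hN x hx))
  -- boundary terms
  have bb : ∀ x ∈ Set.Icc a b, ‖(s : ℂ) * (ex ξ x * A x) * ((N x : ℂ))⁻¹‖ ≤ 4 * B * (σ / μ ^ 2 + 1 / μ) := by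
    intro x hx
    have h0 := hp x hx
    have hr : 0 < √(N x) := Real.sqrt_pos.2 h0
    have hsn : ‖(s : ℂ)‖ = 1 := by rcases hs with h | h <;> rw [h] <;> simp
    rw [norm_mul, norm_mul, norm_mul, norm_ex, hsn, one_mul, one_mul, norm_inv, Complex.norm_real,
      Real.norm_eq_abs, abs_of_pos h0]
    calc ‖A x‖ * (N x)⁻¹ ≤ 4 * B * (σ + √(N x)) * (N x)⁻¹ := by gcongr; exact bA x hx
      _ = 4 * B * (σ / N x + 1 / √(N x)) := by
          have e : (1 : ℝ) / √(N x) = √(N x) * (N x)⁻¹ := by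
            rw [div_eq_iff hr.ne']
            have := Real.mul_self_sqrt h0.le
            field_simp
            linarith
          rw [e]; ring
      _ ≤ 4 * B * (σ / μ ^ 2 + 1 / μ) := by
          gcongr
          · exact hN x hx
          · exact Real.le_sqrt_of_sq_le (hN x hx)
  set Rm : ℝ → ℂ := fun x => (ex ξ x * A x) * ((3 * N x ^ 2 : ℝ) : ℂ)⁻¹ + s * (ex ξ x * F x) * ((3 * N x : ℝ) : ℂ)⁻¹
    with hRm
  have dΦ : ∀ x ∈ Set.uIcc a b, HasDerivAt (fun x => (s : ℂ) * (ex ξ x * A x) * ((N x : ℂ))⁻¹)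
      ((U x : ℂ) * ex ξ x - Rm x) x := by
    intro x hx
    rw [Set.uIcc_of_le hab] at hx
    have hne : (N x : ℂ) ≠ 0 := by exact_mod_cast (hp x hx).ne'
    have dA : HasDerivAt A ((U2 x : ℂ) - I * ξ * U1 x) x :=
      ((hP.d1 x).ofReal_comp).sub (((hP.d0 x).ofReal_comp).const_mul _)
    have h := (((ex_dx ξ x).mul dA).const_mul (s : ℂ)).mul (((dN x).ofReal_comp).fun_inv hne)
    refine h.congr_deriv ?_
    have eF : (F x : ℂ) = x * U x - 3 * U2 x := by simp [hF]
    have eN : (N x : ℂ) = s * (x / 3 + ξ ^ 2) := by simp [hNd]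
    have eU : (U2 x : ℂ) = (x * U x - F x) / 3 := by rw [eF]; ring
    have hssC : (s : ℂ) * s = 1 := by exact_mod_cast hss
    have eU2 : (U2 x : ℂ) = s * N x * U x - ξ ^ 2 * U x - F x / 3 := by
      rw [eU, eN]; linear_combination (-(x / 3 + ξ ^ 2) * U x : ℂ) * hssC
    simp only [hRm, hA, Pi.mul_apply]
    rw [eU2]
    push_cast
    field_simp
    linear_combination (ex ξ x * (3 * (N x : ℂ) ^ 2 * U x - (U1 x - I * ξ * U x))) * hssC
      - (3 * (s : ℂ) * ξ ^ 2 * ex ξ x * U x * N x) * Complex.I_sq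
  set m : ℝ → ℝ := fun x => (4 * B / 3) * (σ * (N x ^ 2)⁻¹ + (√(N x) ^ 3)⁻¹)
    + (1 / 6) * (μ * B * (N x ^ 2)⁻¹ + (μ * B)⁻¹ * F x ^ 2) with hm
  have iF2 : IntervalIntegrable (fun x => F x ^ 2) volume a b := (cF.pow 2).intervalIntegrable _ _
  have j1 : IntervalIntegrable (fun x => σ * (N x ^ 2)⁻¹ + (√(N x) ^ 3)⁻¹) volume a b :=
    (i1.const_mul _).add i2
  have j2 : IntervalIntegrable (fun x => μ * B * (N x ^ 2)⁻¹ + (μ * B)⁻¹ * F x ^ 2) volume a b :=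
    (i1.const_mul _).add (iF2.const_mul _)
  have im : IntervalIntegrable m volume a b := (j1.const_mul _).add (j2.const_mul _)
  have em : ∫ x in a..b, m x ≤ B * (4 * (σ / μ ^ 2) + 9 * (1 / μ)) := by
    rw [hm, intervalIntegral.integral_add (j1.const_mul _) (j2.const_mul _),
      intervalIntegral.integral_const_mul, intervalIntegral.integral_const_mul,
      intervalIntegral.integral_add (i1.const_mul _) i2,
      intervalIntegral.integral_add (i1.const_mul _) (iF2.const_mul _),
      intervalIntegral.integral_const_mul, intervalIntegral.integral_const_mul,
      intervalIntegral.integral_const_mul]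
    have eF : ∫ x in a..b, F x ^ 2 ≤ B ^ 2 := by
      rw [intervalIntegral.integral_of_le hab]
      exact (setIntegral_le_integral hP.iF (.of_forall fun x => sq_nonneg _)).trans hP.bF
    have a1 : σ * ∫ x in a..b, (N x ^ 2)⁻¹ ≤ σ * (3 / μ ^ 2) := by gcongr
    have a2 : μ * B * ∫ x in a..b, (N x ^ 2)⁻¹ ≤ μ * B * (3 / μ ^ 2) := by gcongr
    have a3 : (μ * B)⁻¹ * ∫ x in a..b, F x ^ 2 ≤ (μ * B)⁻¹ * B ^ 2 := by gcongr
    have q1 : μ * B * (3 / μ ^ 2) = 3 * (B * (1 / μ)) := by field_simp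
    have q2 : (μ * B)⁻¹ * B ^ 2 = B * (1 / μ) := by field_simp
    have q3 : (4 * B / 3) * ((σ * ∫ x in a..b, (N x ^ 2)⁻¹) + ∫ x in a..b, (√(N x) ^ 3)⁻¹) ≤
      (4 * B / 3) * (σ * (3 / μ ^ 2) + 6 / μ) := by gcongr
    have q4 : (4 * B / 3) * (σ * (3 / μ ^ 2) + 6 / μ) = B * (4 * (σ / μ ^ 2) + 8 * (1 / μ)) := by ring
    have : 0 ≤ B * (1 / μ) := by positivity
    rw [q1] at a2
    rw [q2] at a3
    rw [q4] at q3
    linarith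
  have bR : ∀ x ∈ Set.Icc a b, ‖Rm x‖ ≤ m x := by
    intro x hx
    have h0 := hp x hx
    have hr : 0 < √(N x) := Real.sqrt_pos.2 h0
    have hsn : ‖(s : ℂ)‖ = 1 := by rcases hs with h | h <;> rw [h] <;> simp
    refine (norm_add_le _ _).trans (add_le_add ?_ ?_)
    · rw [norm_mul, norm_mul, norm_ex, one_mul, norm_inv, Complex.norm_real, Real.norm_eq_abs,
        abs_of_pos (by positivity)]
      calc ‖A x‖ * (3 * N x ^ 2)⁻¹ ≤ 4 * B * (σ + √(N x)) * (3 * N x ^ 2)⁻¹ := by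
            gcongr; exact bA x hx
        _ = (4 * B / 3) * (σ * (N x ^ 2)⁻¹ + √(N x) * (N x ^ 2)⁻¹) := by field_simp
        _ = (4 * B / 3) * (σ * (N x ^ 2)⁻¹ + (√(N x) ^ 3)⁻¹) := by
            congr 2
            nth_rewrite 2 [← Real.sq_sqrt h0.le]
            field_simp
    · rw [norm_mul, norm_mul, norm_mul, norm_ex, hsn, one_mul, one_mul, norm_inv, Complex.norm_real,
        Complex.norm_real, Real.norm_eq_abs, Real.norm_eq_abs, abs_of_pos (by positivity : 0 < 3 * N x)]
      have e : (1 / 6) * (μ * B * (N x ^ 2)⁻¹ + (μ * B)⁻¹ * F x ^ 2) - |F x| * (3 * N x)⁻¹ =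
          (6 * (μ * B))⁻¹ * (μ * B * (N x)⁻¹ - |F x|) ^ 2 := by
        rw [← sq_abs (F x)]; field_simp; ring
      have : 0 ≤ (6 * (μ * B))⁻¹ * (μ * B * (N x)⁻¹ - |F x|) ^ 2 := by positivity
      linarith
  have cNi : ContinuousOn (fun x => (N x : ℂ)⁻¹) (Set.Icc a b) :=
    (Complex.continuous_ofReal.comp cN).continuousOn.inv₀ fun x hx => by
      simpa using (hp x hx).ne'
  have iU : IntervalIntegrable (fun x => (U x : ℂ) * ex ξ x) volume a b :=
    ((Complex.continuous_ofReal.comp hP.c0).mul cex).intervalIntegrable _ _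
  have iR : IntervalIntegrable Rm volume a b := by
    refine ContinuousOn.intervalIntegrable ?_
    rw [Set.uIcc_of_le hab]
    refine ((cex.mul cA).continuousOn.mul ?_).add
      ((continuous_const.mul (cex.mul (Complex.continuous_ofReal.comp cF))).continuousOn.mul ?_)
    · exact (Complex.continuous_ofReal.comp (continuous_const.mul (cN.pow 2))).continuousOn.inv₀
        fun x hx => by simpa using (hp x hx).ne'
    · exact (Complex.continuous_ofReal.comp (continuous_const.mul cN)).continuousOn.inv₀
        fun x hx => by simpa using (hp x hx).ne'
  have ftc := intervalIntegral.integral_eq_sub_of_hasDerivAt dΦ (iU.sub iR)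
  rw [intervalIntegral.integral_sub iU iR] at ftc
  have eq : ∫ x in a..b, (U x : ℂ) * ex ξ x = ((s : ℂ) * (ex ξ b * A b) * ((N b : ℂ))⁻¹
      - (s : ℂ) * (ex ξ a * A a) * ((N a : ℂ))⁻¹) + ∫ x in a..b, Rm x := by
    rw [← ftc]; ring
  rw [eq]
  have nR : ‖∫ x in a..b, Rm x‖ ≤ ∫ x in a..b, m x :=
    intervalIntegral.norm_integral_le_of_norm_le hab
      (.of_forall fun x hx => bR x (Set.Ioc_subset_Icc_self hx)) im
  have := (norm_add_le _ _).trans (add_le_add ((norm_sub_le _ _).trans (add_le_add (bb b mb) (bb a ma)))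
    (nR.trans em))
  refine this.trans ?_
  have h1 : 0 ≤ B * (σ / μ ^ 2) := by positivity
  have h2 : 0 ≤ B * (1 / μ) := by positivity
  nlinarith

lemma inv_fifth_le {p z : ℝ} (hp : 1 ≤ p) (hz : 1 ≤ z) : (p ^ 4 * z)⁻¹ ≤ (p ^ 5)⁻¹ + (z ^ 5)⁻¹ := by
  have p5 : 0 < (p ^ 5)⁻¹ := by positivity
  have z5 : 0 < (z ^ 5)⁻¹ := by positivity
  rcases le_total p z with h | h
  · have : (p ^ 4 * z)⁻¹ ≤ (p ^ 5)⁻¹ := by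
      refine inv_anti₀ (by positivity) ?_
      rw [pow_succ p 4]; gcongr
    linarith
  · have : (p ^ 4 * z)⁻¹ ≤ (z ^ 5)⁻¹ := by
      refine inv_anti₀ (by positivity) ?_
      rw [pow_succ z 4]; gcongr
    linarith

/-- Pointwise form of the cubic bound: the square of a truncated Fourier integral times `|U|` is
dominated by an integrable function whose integral is bounded uniformly in `ξ`. -/
lemma cubic_pt {U U1 U2 : ℝ → ℝ} {B ξ σ x r l : ℝ} (hP : Pf U U1 U2 B) (hσ : 1 ≤ σ)
    (hσ2 : σ ^ 2 = 1 + |ξ|) (hr : 0 < r) (hQ : r ^ 2 = |x / 3 + ξ ^ 2|) (hrσ : σ ≤ r ^ 2)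
    (hl0 : 0 ≤ l) (hl : l ≤ 20 * B * (σ / r ^ 2 + 1 / r)) :
    l ^ 2 * |U x| ≤ 20800 * B ^ 3 * (σ * (r ^ 4)⁻¹ + (zz (x / 3 + ξ ^ 2) ^ 5)⁻¹ + (zz x ^ 5)⁻¹) := by
  have hB := hP.pos
  have z1 := one_le_zz x
  have p1 := one_le_zz (x / 3 + ξ ^ 2)
  have p4 := zz_pow (x / 3 + ξ ^ 2)
  rw [← hQ] at p4
  set p := zz (x / 3 + ξ ^ 2)
  set z := zz x
  have hr1 : 1 ≤ r := by nlinarith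
  have c1 : (r ^ 2 * z)⁻¹ ≤ 2 * (p ^ 5)⁻¹ + 2 * (z ^ 5)⁻¹ := by
    have : (r ^ 2 * z)⁻¹ ≤ 2 * (p ^ 4 * z)⁻¹ := by
      have : p ^ 4 ≤ 2 * r ^ 2 := by rw [p4]; nlinarith
      rw [show 2 * (p ^ 4 * z)⁻¹ = (p ^ 4 * z / 2)⁻¹ by field_simp]
      refine inv_anti₀ (by positivity) ?_
      nlinarith
    linarith [inv_fifth_le p1 z1]
  have c2 : σ ^ 2 * (r ^ 4 * z)⁻¹ ≤ 2 * (σ * (r ^ 4)⁻¹) + 24 * (p ^ 5)⁻¹ := by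
    have q1 : 0 ≤ (p ^ 5)⁻¹ := by positivity
    have q2 : 0 ≤ σ * (r ^ 4)⁻¹ := by positivity
    rcases weight_cases hσ hσ2 hQ with h | h
    · have : σ ^ 2 * (r ^ 4 * z)⁻¹ ≤ 2 * (σ * (r ^ 4)⁻¹) := by
        rw [mul_inv]
        have : σ * z⁻¹ ≤ 2 := by rw [← div_eq_mul_inv, div_le_iff₀ (by linarith)]; exact h
        calc σ ^ 2 * ((r ^ 4)⁻¹ * z⁻¹) = (σ * (r ^ 4)⁻¹) * (σ * z⁻¹) := by ring
          _ ≤ (σ * (r ^ 4)⁻¹) * 2 := by gcongr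
          _ = _ := by ring
      linarith
    · have h1 : σ ^ 2 ≤ 3 * r := by
        have : (σ ^ 2) ^ 2 ≤ (3 * r) ^ 2 := by
          rw [hσ2]; nlinarith [sq_abs ξ, sq_nonneg (|ξ| - 1)]
        exact (sq_le_sq₀ (by positivity) (by positivity)).1 this
      have h2 : p ^ 5 ≤ 8 * r ^ 3 := by
        have a : p ^ 2 ≤ 2 * r := by
          have : (p ^ 2) ^ 2 ≤ (2 * r) ^ 2 := by
            rw [show (p ^ 2) ^ 2 = p ^ 4 by ring, p4]; nlinarith
          exact (sq_le_sq₀ (by positivity) (by positivity)).1 this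
        have b : (p ^ 2) ^ 3 ≤ (2 * r) ^ 3 := by gcongr
        have c : p ^ 5 ≤ (p ^ 2) ^ 3 := by
          rw [show (p ^ 2) ^ 3 = p ^ 5 * p by ring]
          exact le_mul_of_one_le_right (by positivity) p1
        nlinarith
      have h3 : σ ^ 2 * (r ^ 4 * z)⁻¹ ≤ 3 * (r ^ 3)⁻¹ := by
        have : (r ^ 4 * z)⁻¹ ≤ (r ^ 4)⁻¹ := inv_anti₀ (by positivity) (by nlinarith [pow_pos hr 4])
        calc σ ^ 2 * (r ^ 4 * z)⁻¹ ≤ 3 * r * (r ^ 4)⁻¹ := by gcongr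
          _ = _ := by field_simp
      have h4 : 3 * (r ^ 3)⁻¹ ≤ 24 * (p ^ 5)⁻¹ := by
        rw [← div_eq_mul_inv, ← div_eq_mul_inv, div_le_div_iff₀ (by positivity) (by positivity)]
        linarith
      linarith
  have s1 : l ^ 2 ≤ 800 * B ^ 2 * (σ ^ 2 * (r ^ 4)⁻¹ + (r ^ 2)⁻¹) := by
    calc l ^ 2 ≤ (20 * B * (σ / r ^ 2 + 1 / r)) ^ 2 := by gcongr
      _ = 400 * B ^ 2 * (σ / r ^ 2 + 1 / r) ^ 2 := by ring
      _ ≤ 400 * B ^ 2 * (2 * ((σ / r ^ 2) ^ 2 + (1 / r) ^ 2)) := by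
          gcongr; nlinarith [sq_nonneg (σ / r ^ 2 - 1 / r)]
      _ = _ := by field_simp; ring
  calc l ^ 2 * |U x| ≤ 800 * B ^ 2 * (σ ^ 2 * (r ^ 4)⁻¹ + (r ^ 2)⁻¹) * (B / z) := by
        gcongr; exact hP.b0 x
    _ = 800 * B ^ 3 * (σ ^ 2 * (r ^ 4 * z)⁻¹ + (r ^ 2 * z)⁻¹) := by field_simp
    _ ≤ 800 * B ^ 3 * ((2 * (σ * (r ^ 4)⁻¹) + 24 * (p ^ 5)⁻¹) + (2 * (p ^ 5)⁻¹ + 2 * (z ^ 5)⁻¹)) := by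
        gcongr
    _ ≤ 800 * B ^ 3 * (26 * (σ * (r ^ 4)⁻¹ + (p ^ 5)⁻¹ + (z ^ 5)⁻¹)) := by
        gcongr
        have q1 : 0 ≤ (z ^ 5)⁻¹ := by positivity
        have q2 : 0 ≤ σ * (r ^ 4)⁻¹ := by positivity
        linarith
    _ = _ := by ring

lemma zz_shift (ξ : ℝ) : Integrable (fun x : ℝ => (zz (x / 3 + ξ ^ 2) ^ 5)⁻¹) ∧
    ∫ x : ℝ, (zz (x / 3 + ξ ^ 2) ^ 5)⁻¹ = 3 * T0 := by
  have h : Integrable (fun y : ℝ => (zz (y + ξ ^ 2) ^ 5)⁻¹) := zz_inv_integrable.comp_add_right (ξ ^ 2)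
  refine ⟨h.comp_div (by norm_num : (3:ℝ) ≠ 0), ?_⟩
  rw [Measure.integral_comp_div (fun y : ℝ => (zz (y + ξ ^ 2) ^ 5)⁻¹) 3,
    integral_add_right_eq_self (fun y : ℝ => (zz y ^ 5)⁻¹) (ξ ^ 2)]
  simp [T0]

lemma cubic_side {U U1 U2 : ℝ → ℝ} {B ξ σ s a b : ℝ} {L : ℝ → ℂ} (hP : Pf U U1 U2 B) (hσ : 1 ≤ σ)
    (hσ2 : σ ^ 2 = 1 + |ξ|) (hs : s = 1 ∨ s = -1) (hab : a ≤ b) (cL : Continuous L)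
    (hN : ∀ x ∈ Set.Icc a b, σ ≤ s * (x / 3 + ξ ^ 2))
    (hL : ∀ x ∈ Set.Icc a b, ‖L x‖ ≤ 20 * B * (σ / √(s * (x / 3 + ξ ^ 2)) ^ 2 +
      1 / √(s * (x / 3 + ξ ^ 2)))) :
    ∫ x in a..b, ‖L x‖ ^ 2 * |U x| ≤ 20800 * B ^ 3 * (3 + 4 * T0) := by
  have hB := hP.pos
  set N : ℝ → ℝ := fun x => s * (x / 3 + ξ ^ 2) with hNd
  have dN : ∀ x, HasDerivAt N (s / 3) x := by
    intro x
    refine ((((hasDerivAt_id x).div_const 3).add_const (ξ ^ 2)).const_mul s).congr_deriv ?_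
    ring
  have hσs : √σ ^ 2 = σ := Real.sq_sqrt (by linarith)
  obtain ⟨i1, -, e1, -⟩ := int_powers (μ := √σ) hs (Real.sqrt_pos.2 (by linarith)) hab dN
    (by rw [hσs]; exact hN)
  rw [hσs] at e1
  obtain ⟨i2, e2⟩ := zz_shift ξ
  have i2' := i2.intervalIntegrable (a := a) (b := b)
  have i3' := zz_inv_integrable.intervalIntegrable (a := a) (b := b)
  have i12 : IntervalIntegrable (fun x => σ * (N x ^ 2)⁻¹ + (zz (x / 3 + ξ ^ 2) ^ 5)⁻¹) volume a b :=
    (i1.const_mul σ).add i2'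
  have im : IntervalIntegrable (fun x => 20800 * B ^ 3 * (σ * (N x ^ 2)⁻¹ + (zz (x / 3 + ξ ^ 2) ^ 5)⁻¹ +
    (zz x ^ 5)⁻¹)) volume a b := (i12.add i3').const_mul _
  refine (intervalIntegral.integral_mono_on hab ?_ im fun x hx => ?_).trans ?_
  · exact ((cL.norm.pow 2).mul hP.c0.abs).intervalIntegrable _ _
  · have h0 : 0 < N x := by have := hN x hx; simp only [hNd]; linarith
    have hr : 0 < √(N x) := Real.sqrt_pos.2 h0
    have hQ : √(N x) ^ 2 = |x / 3 + ξ ^ 2| := by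
      rw [Real.sq_sqrt h0.le, ← abs_of_pos h0]
      simp only [hNd]
      rw [abs_mul]
      rcases hs with h | h <;> rw [h] <;> norm_num
    have := cubic_pt hP hσ hσ2 hr hQ (by rw [Real.sq_sqrt h0.le]; exact hN x hx) (norm_nonneg _) (hL x hx)
    rwa [show √(N x) ^ 4 = (√(N x) ^ 2) ^ 2 by ring, Real.sq_sqrt h0.le] at this
  · rw [intervalIntegral.integral_const_mul, intervalIntegral.integral_add i12 i3',
      intervalIntegral.integral_add (i1.const_mul σ) i2', intervalIntegral.integral_const_mul]
    have a1 : σ * ∫ x in a..b, (N x ^ 2)⁻¹ ≤ 3 := by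
      calc σ * ∫ x in a..b, (N x ^ 2)⁻¹ ≤ σ * (3 / σ) := by gcongr
        _ = 3 := by field_simp
    have a2 : ∫ x in a..b, (zz (x / 3 + ξ ^ 2) ^ 5)⁻¹ ≤ 3 * T0 := by
      rw [← e2, intervalIntegral.integral_of_le hab]
      exact setIntegral_le_integral i2 (.of_forall fun x => by
        have := one_le_zz (x / 3 + ξ ^ 2); simp only [Pi.zero_apply]; positivity)
    have a3 : ∫ x in a..b, (zz x ^ 5)⁻¹ ≤ T0 := by
      rw [T0, intervalIntegral.integral_of_le hab]
      exact setIntegral_le_integral zz_inv_integrable (.of_forall fun x => by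
        have := one_le_zz x; simp only [Pi.zero_apply]; positivity)
    refine mul_le_mul_of_nonneg_left ?_ (by positivity)
    linarith

/-- The constant of `scatter_prof`. -/
def C0 : ℝ := 20800 * (3 + 4 * T0)

lemma C0_ge : 60000 ≤ C0 := by unfold C0; linarith [T0_nonneg]

/-- Near the stationary point `U` is integrable with a bound independent of `ξ`. -/
lemma middle_bound {U U1 U2 : ℝ → ℝ} {B ξ σ : ℝ} (hP : Pf U U1 U2 B) (hσ : 1 ≤ σ)
    (hσ2 : σ ^ 2 = 1 + |ξ|) :
    ∫ x in (-3 * ξ ^ 2 - 3 * σ)..(-3 * ξ ^ 2 + 3 * σ), |U x| ≤ 30 * B := by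
  have hB := hP.pos
  have hab : -3 * ξ ^ 2 - 3 * σ ≤ -3 * ξ ^ 2 + 3 * σ := by linarith
  refine (intervalIntegral.integral_mono_on hab (hP.c0.abs.intervalIntegrable _ _)
    (intervalIntegrable_const (c := 5 * B / σ)) fun x hx => ?_).trans (le_of_eq ?_)
  · refine (hP.b0 x).trans ?_
    have z1 := one_le_zz x
    have : σ ≤ 5 * zz x := by
      have : σ ^ 4 ≤ (5 * zz x) ^ 4 := by
        rw [mul_pow, zz_pow, show σ ^ 4 = (σ ^ 2) ^ 2 by ring, hσ2]
        have hx' : 3 * ξ ^ 2 - 3 * σ ≤ |x| := by have := neg_abs_le x; linarith [hx.2]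
        have h0 := abs_nonneg ξ
        have hx0 := abs_nonneg x
        have hξ := sq_abs ξ
        rcases le_total |ξ| 2 with h | h
        · nlinarith
        · have : σ ≤ |ξ| := by nlinarith
          nlinarith
      exact (pow_le_pow_iff_left₀ (by linarith) (by linarith) (by norm_num)).1 this
    rw [div_le_div_iff₀ (by linarith) (by linarith)]
    nlinarith
  · rw [intervalIntegral.integral_const, smul_eq_mul]
    field_simp
    ring

/-- Cubic closeness of the scattering coefficient to the Fourier transform, for a potential with the
decay of a small solution at time one. -/
lemma scatter_prof {U U1 U2 : ℝ → ℝ} {B ξ σ R κ : ℝ} {c1 c2 : ℝ → ℂ} (hP : Pf U U1 U2 B) (hσ : 1 ≤ σ)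
    (hσ2 : σ ^ 2 = 1 + |ξ|) (hR : 3 * ξ ^ 2 + 3 * σ ≤ R) (hB1 : C0 * B ≤ 1)
    (hz : ZS (fun x => rr * U x) ξ (-R) R c1 c2) (hκ0 : 0 ≤ κ) (hκ1 : κ ≤ 1) (hc : ‖c1 (-R)‖ ≤ κ) :
    |‖c1 R‖ - rr * ‖∫ y in (-R)..R, (U y : ℂ) * ex ξ y‖| ≤ 120 * ((C0 * B) ^ 3 + κ) := by
  have hB := hP.pos
  have hC := C0_ge
  have hrr := rr_pos
  have hrr1 := rr_le_one
  have ew : ∀ a b : ℝ, ∫ y in a..b, ((rr * U y : ℝ) : ℂ) * ex ξ y = rr * ∫ y in a..b, (U y : ℂ) * ex ξ y := by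
    intro a b
    rw [← intervalIntegral.integral_const_mul]
    congr 1; ext y; push_cast; ring
  have nw : ∀ a b : ℝ, ‖∫ y in a..b, ((rr * U y : ℝ) : ℂ) * ex ξ y‖ = rr * ‖∫ y in a..b, (U y : ℂ) * ex ξ y‖ := by
    intro a b
    rw [ew, norm_mul, Complex.norm_real, Real.norm_eq_abs, abs_of_pos hrr]
  have aw : ∀ x, |rr * U x| ≤ |U x| := by
    intro x; rw [abs_mul, abs_of_pos hrr]
    exact mul_le_of_le_one_left (abs_nonneg _) hrr1
  have cU := hP.c0
  have cUE : Continuous (fun y => (U y : ℂ) * ex ξ y) := (Complex.continuous_ofReal.comp cU).mul (ex_cont ξ)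
  have cI : ∀ a : ℝ, Continuous (fun x => ∫ y in a..x, (U y : ℂ) * ex ξ y) := fun a =>
    intervalIntegral.continuous_primitive (fun _ _ => cUE.intervalIntegrable _ _) a
  -- the bound by `40 B` at distance at least `σ` from the stationary point
  have small : ∀ r : ℝ, 0 < r → σ ≤ r ^ 2 → 20 * B * (σ / r ^ 2 + 1 / r) ≤ C0 * B := by
    intro r hr h
    have h1 : σ / r ^ 2 ≤ 1 := by rw [div_le_one (by positivity)]; exact h
    have h2 : 1 / r ≤ 1 := by rw [div_le_one hr]; nlinarith
    nlinarith
  have cub : 20800 * B ^ 3 * (3 + 4 * T0) ≤ (C0 * B) ^ 3 := by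
    have : 20800 * B ^ 3 * (3 + 4 * T0) = C0 * B ^ 3 := by unfold C0; ring
    rw [this, mul_pow]
    gcongr
    exact le_self_pow₀ (by linarith) (by norm_num)
  have l3 : ∀ (L : ℝ → ℂ) (a b : ℝ), a ≤ b → Continuous L → ∫ x in a..b, ‖(rr : ℂ) * L x‖ ^ 2 * |rr * U x| ≤
      ∫ x in a..b, ‖L x‖ ^ 2 * |U x| := by
    intro L a b hab cL
    refine intervalIntegral.integral_mono_on hab ?_ ?_ fun x _ => ?_
    · exact (((continuous_const.mul cL).norm.pow 2).mul (continuous_const.mul cU).abs).intervalIntegrable _ _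
    · exact ((cL.norm.pow 2).mul cU.abs).intervalIntegrable _ _
    · have : ‖(rr : ℂ) * L x‖ ≤ ‖L x‖ := by
        rw [norm_mul, Complex.norm_real, Real.norm_eq_abs, abs_of_pos hrr]
        exact mul_le_of_le_one_left (norm_nonneg _) hrr1
      exact mul_le_mul (pow_le_pow_left₀ (norm_nonneg _) this 2) (aw x) (abs_nonneg _) (by positivity)
  have hx1 : -R ≤ -3 * ξ ^ 2 - 3 * σ := by linarith
  have hx2 : -3 * ξ ^ 2 - 3 * σ ≤ -3 * ξ ^ 2 + 3 * σ := by linarith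
  have hx3 : -3 * ξ ^ 2 + 3 * σ ≤ R := by nlinarith [sq_nonneg ξ]
  have left : ∀ x ∈ Set.Icc (-R) (-3 * ξ ^ 2 - 3 * σ), ‖∫ y in (-R)..x, (U y : ℂ) * ex ξ y‖ ≤
      20 * B * (σ / √(-1 * (x / 3 + ξ ^ 2)) ^ 2 + 1 / √(-1 * (x / 3 + ξ ^ 2))) := by
    intro x hx
    have hs : σ ≤ -1 * (x / 3 + ξ ^ 2) := by linarith [hx.2]
    have h0 : 0 < -1 * (x / 3 + ξ ^ 2) := by linarith
    refine osc hP hσ hσ2 (.inr rfl) (Real.sqrt_pos.2 h0) ?_ hx.1 fun y hy => ?_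
    · rwa [Real.sq_sqrt h0.le]
    · rw [Real.sq_sqrt h0.le]; linarith [hy.2]
  have right : ∀ x ∈ Set.Icc (-3 * ξ ^ 2 + 3 * σ) R, ‖∫ y in R..x, (U y : ℂ) * ex ξ y‖ ≤
      20 * B * (σ / √(1 * (x / 3 + ξ ^ 2)) ^ 2 + 1 / √(1 * (x / 3 + ξ ^ 2))) := by
    intro x hx
    have hs : σ ≤ 1 * (x / 3 + ξ ^ 2) := by linarith [hx.1]
    have h0 : 0 < 1 * (x / 3 + ξ ^ 2) := by linarith
    rw [intervalIntegral.integral_symm, norm_neg]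
    refine osc hP hσ hσ2 (.inl rfl) (Real.sqrt_pos.2 h0) ?_ hx.2 fun y hy => ?_
    · rwa [Real.sq_sqrt h0.le]
    · rw [Real.sq_sqrt h0.le]; linarith [hy.1]
  have rb : ∀ t : ℝ, 0 ≤ t → rr * t ≤ t := fun t ht => mul_le_of_le_one_left ht hrr1
  have main := scatter_abs (B := C0 * B) (κ := κ) (xa := -3 * ξ ^ 2 - 3 * σ) (xb := -3 * ξ ^ 2 + 3 * σ)
    hz (continuous_const.mul cU) hx1 hx2 hx3 (by positivity) hB1 hκ0 hκ1 hc
    (fun x hx => by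
      rw [nw]
      have hs : σ ≤ -1 * (x / 3 + ξ ^ 2) := by linarith [hx.2]
      have h0 : 0 < -1 * (x / 3 + ξ ^ 2) := by linarith
      exact (rb _ (norm_nonneg _)).trans ((left x hx).trans
        (small _ (Real.sqrt_pos.2 h0) (by rwa [Real.sq_sqrt h0.le]))))
    (by
      simp only [ew]
      refine (l3 _ _ _ hx1 (cI _)).trans ((cubic_side hP hσ hσ2 (.inr rfl) hx1 (cI _)
        (fun x hx => by linarith [hx.2]) left).trans cub))
    (by
      refine (intervalIntegral.integral_mono_on hx2
        ((continuous_const.mul cU).abs.intervalIntegrable _ _) (cU.abs.intervalIntegrable _ _)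
        fun x _ => aw x).trans ((middle_bound hP hσ hσ2).trans ?_)
      gcongr; linarith)
    (fun x hx => by
      rw [nw]
      have hs : σ ≤ 1 * (x / 3 + ξ ^ 2) := by linarith [hx.1]
      have h0 : 0 < 1 * (x / 3 + ξ ^ 2) := by linarith
      exact (rb _ (norm_nonneg _)).trans ((right x hx).trans
        (small _ (Real.sqrt_pos.2 h0) (by rwa [Real.sq_sqrt h0.le]))))
    (by
      simp only [ew]
      refine (l3 _ _ _ hx3 (cI _)).trans ((cubic_side hP hσ hσ2 (.inl rfl) hx3 (cI _)
        (fun x hx => by linarith [hx.1]) right).trans cub))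
  rwa [nw] at main

/-! ### Rescaling to time one -/

/-- The information on a solution at time `t = τ³` that enters the estimates: `v0, v1, v2` are the
solution and its first two derivatives, `h` is the Fourier transform of `v0` and `h1 = h'`. -/
structure Spec (v0 v1 v2 : ℝ → ℝ) (h h1 : ℝ → ℂ) (τ ε : ℝ) : Prop where
  d0 : ∀ x, HasDerivAt v0 (v1 x) x
  d1 : ∀ x, HasDerivAt v1 (v2 x) x
  c2 : Continuous v2
  i0 : Integrable v0
  hd : ∀ η, HasDerivAt h (h1 η) η
  ch1 : Continuous h1
  hb : ∀ η, ‖h η‖ ≤ ε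
  ih : Integrable h
  ih' : Integrable (fun η : ℝ => (η : ℂ) * h η)
  inv0 : ∀ x, (v0 x : ℂ) = ((√(2 * π) : ℝ) : ℂ)⁻¹ * ∫ η, h η * ex x η
  inv1 : ∀ x, (v1 x : ℂ) = ((√(2 * π) : ℝ) : ℂ)⁻¹ * (I * ∫ η : ℝ, (η : ℂ) * h η * ex x η)
  iG : Integrable (fun η : ℝ => ‖h1 η - 3 * I * (τ ^ 3 : ℝ) * η ^ 2 * h η‖ ^ 2)
  bG : ∫ η : ℝ, ‖h1 η - 3 * I * (τ ^ 3 : ℝ) * η ^ 2 * h η‖ ^ 2 ≤ ε ^ 2 * τ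
  iF : Integrable (fun x : ℝ => (x * v0 x - 3 * τ ^ 3 * v2 x) ^ 2)
  bF : ∫ x : ℝ, (x * v0 x - 3 * τ ^ 3 * v2 x) ^ 2 ≤ ε ^ 2 * τ

lemma ex_swap (a x y : ℝ) : ex x (a * y) = ex (a * x) y := by
  rw [ex, ex]; congr 1; push_cast; ring

lemma sqrt_two_pi_ge : 1 ≤ √(2 * π) := by
  rw [Real.one_le_sqrt]; linarith [Real.pi_gt_three]

lemma Spec.pf {v0 v1 v2 : ℝ → ℝ} {h h1 : ℝ → ℂ} {τ ε : ℝ} (S : Spec v0 v1 v2 h h1 τ ε) (hτ : 0 < τ)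
    (hε : 0 < ε) :
    Pf (fun x => τ * v0 (τ * x)) (fun x => τ ^ 2 * v1 (τ * x)) (fun x => τ ^ 3 * v2 (τ * x)) (600 * ε) := by
  have hp : ‖((√(2 * π) : ℝ) : ℂ)⁻¹‖ ≤ 1 := by
    rw [norm_inv, Complex.norm_real, Real.norm_eq_abs, abs_of_nonneg (Real.sqrt_nonneg _)]
    exact inv_le_one_of_one_le₀ sqrt_two_pi_ge
  -- the rescaled Fourier side
  set H : ℝ → ℂ := fun η => h (η / τ) with hH
  set H1 : ℝ → ℂ := fun η => (τ : ℂ)⁻¹ * h1 (η / τ) with hH1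
  have τC : (τ : ℂ) ≠ 0 := by exact_mod_cast hτ.ne'
  have dH : ∀ η, HasDerivAt H (H1 η) η := by
    intro η
    have hdiv : HasDerivAt (fun η : ℝ => η / τ) τ⁻¹ η := by
      simpa [div_eq_mul_inv] using (hasDerivAt_id η).div_const τ
    refine ((S.hd (η / τ)).scomp η hdiv).congr_deriv ?_
    simp [hH1]
  have cH1 : Continuous H1 := continuous_const.mul (S.ch1.comp (continuous_id.div_const τ))
  have gG : ∀ η : ℝ, ‖H1 η - 3 * I * η ^ 2 * H η‖ ^ 2 = (τ⁻¹) ^ 2 *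
      ‖h1 (η / τ) - 3 * I * (τ ^ 3 : ℝ) * ((η / τ : ℝ) : ℂ) ^ 2 * h (η / τ)‖ ^ 2 := by
    intro η
    have : H1 η - 3 * I * η ^ 2 * H η = ((τ⁻¹ : ℝ) : ℂ) *
        (h1 (η / τ) - 3 * I * (τ ^ 3 : ℝ) * ((η / τ : ℝ) : ℂ) ^ 2 * h (η / τ)) := by
      simp only [hH, hH1]; push_cast; field_simp
    rw [this, norm_mul, mul_pow, Complex.norm_real, Real.norm_eq_abs, sq_abs]
  have iG : Integrable (fun η : ℝ => ‖H1 η - 3 * I * η ^ 2 * H η‖ ^ 2) := by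
    simp only [gG]
    exact (S.iG.comp_div hτ.ne').const_mul _
  have bG : ∫ η : ℝ, ‖H1 η - 3 * I * η ^ 2 * H η‖ ^ 2 ≤ ε ^ 2 := by
    simp only [gG]
    rw [integral_const_mul, Measure.integral_comp_div
      (fun y : ℝ => ‖h1 y - 3 * I * (τ ^ 3 : ℝ) * (y : ℂ) ^ 2 * h y‖ ^ 2) τ, abs_of_pos hτ, smul_eq_mul]
    calc _ ≤ (τ⁻¹) ^ 2 * (τ * (ε ^ 2 * τ)) := by gcongr; exact S.bG
      _ = ε ^ 2 := by field_simp
  have iH' : Integrable (fun η : ℝ => (η : ℂ) * H η) := by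
    have := (S.ih'.comp_div hτ.ne').const_mul (τ : ℂ)
    refine this.congr (.of_forall fun η => ?_)
    simp only [hH]; push_cast; field_simp
  have e0 : ∀ x, ∫ η, H η * ex x η = τ * ∫ η, h η * ex (τ * x) η := by
    intro x
    have := Measure.integral_comp_div (fun y : ℝ => h y * ex (τ * x) y) τ
    rw [abs_of_pos hτ] at this
    rw [show (τ : ℂ) * ∫ η, h η * ex (τ * x) η = τ • ∫ η, h η * ex (τ * x) η by simp, ← this]
    congr 1; ext η
    simp only [hH]
    rw [← ex_swap, mul_div_cancel₀ _ hτ.ne']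
  have e1 : ∀ x, ∫ η : ℝ, (η : ℂ) * H η * ex x η = τ ^ 2 * ∫ η : ℝ, (η : ℂ) * h η * ex (τ * x) η := by
    intro x
    have := Measure.integral_comp_div (fun y : ℝ => (τ : ℂ) * ((y : ℂ) * h y * ex (τ * x) y)) τ
    rw [abs_of_pos hτ] at this
    rw [show (τ : ℂ) ^ 2 * ∫ η : ℝ, (η : ℂ) * h η * ex (τ * x) η =
      τ • (∫ η : ℝ, (τ : ℂ) * ((η : ℂ) * h η * ex (τ * x) η)) by
        rw [integral_const_mul, Complex.real_smul]; ring, ← this]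
    congr 1; ext η
    simp only [hH]
    rw [← ex_swap, mul_div_cancel₀ _ hτ.ne']
    push_cast; field_simp
  have dl : ∀ x : ℝ, HasDerivAt (fun x : ℝ => τ * x) τ x := by
    intro x; simpa using (hasDerivAt_id x).const_mul τ
  have eF : ∀ x : ℝ, (x * (τ * v0 (τ * x)) - 3 * (τ ^ 3 * v2 (τ * x))) ^ 2 =
      (τ * x * v0 (τ * x) - 3 * τ ^ 3 * v2 (τ * x)) ^ 2 := fun x => by ring
  refine ⟨by positivity, fun x => ?_, fun x => ?_, ?_, fun x => ?_, fun x => ?_, ?_, ?_⟩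
  · refine (((S.d0 (τ * x)).comp x (dl x)).const_mul τ).congr_deriv ?_; ring
  · refine (((S.d1 (τ * x)).comp x (dl x)).const_mul (τ ^ 2)).congr_deriv ?_; ring
  · exact continuous_const.mul (S.c2.comp (continuous_const.mul continuous_id))
  · have hx := decay_zero (one_le_zz x) (zz_pow x) hε dH cH1 (fun η => S.hb _) (S.ih.comp_div hτ.ne') iG bG
    have z0 : 0 < zz x := by linarith [one_le_zz x]
    have : |τ * v0 (τ * x)| = ‖((√(2 * π) : ℝ) : ℂ)⁻¹‖ * ‖∫ η, H η * ex x η‖ := by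
      rw [e0, ← norm_mul, ← Real.norm_eq_abs, ← Complex.norm_real]
      push_cast; rw [S.inv0]; congr 1; ring
    rw [this]
    calc _ ≤ 1 * (300 * ε / zz x) := by gcongr
      _ ≤ 600 * ε / zz x := by rw [one_mul]; gcongr; norm_num
  · have hx := decay_one (one_le_zz x) (zz_pow x) hε dH cH1 (fun η => S.hb _) iH' iG bG
    have z0 : 0 < zz x := by linarith [one_le_zz x]
    have : |τ ^ 2 * v1 (τ * x)| = ‖((√(2 * π) : ℝ) : ℂ)⁻¹‖ * ‖∫ η : ℝ, (η : ℂ) * H η * ex x η‖ := by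
      have : ‖∫ η : ℝ, (η : ℂ) * H η * ex x η‖ = ‖I * ∫ η : ℝ, (η : ℂ) * H η * ex x η‖ := by
        rw [norm_mul, Complex.norm_I, one_mul]
      rw [this, e1, ← norm_mul, ← Real.norm_eq_abs, ← Complex.norm_real]
      push_cast; rw [S.inv1]; congr 1; ring
    rw [this]
    calc _ ≤ 1 * (600 * ε * zz x) := by gcongr
      _ = 600 * ε * zz x := one_mul _
  · simp only [eF]
    exact S.iF.comp_mul_left' hτ.ne'
  · simp only [eF]
    rw [Measure.integral_comp_mul_left (fun y : ℝ => (y * v0 y - 3 * τ ^ 3 * v2 y) ^ 2) τ,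
      abs_of_pos (inv_pos.2 hτ), smul_eq_mul]
    calc _ ≤ τ⁻¹ * (ε ^ 2 * τ) := by gcongr; exact S.bF
      _ = ε ^ 2 := by field_simp
      _ ≤ (600 * ε) ^ 2 := by nlinarith [sq_nonneg ε]

lemma ZS.scale {w : ℝ → ℝ} {ξ R τ : ℝ} {c1 c2 : ℝ → ℂ} (hτ : 0 < τ) (hz : ZS w ξ (-R) R c1 c2) :
    ZS (fun x => τ * w (τ * x)) (τ * ξ) (-(R / τ)) (R / τ) (fun x => c1 (τ * x)) (fun x => c2 (τ * x)) := by
  have hm : ∀ x ∈ Set.Icc (-(R / τ)) (R / τ), τ * x ∈ Set.Icc (-R) R := by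
    intro x hx
    have a := mul_le_mul_of_nonneg_left hx.1 hτ.le
    have b := mul_le_mul_of_nonneg_left hx.2 hτ.le
    rw [mul_neg, mul_div_cancel₀ _ hτ.ne'] at a
    rw [mul_div_cancel₀ _ hτ.ne'] at b
    exact ⟨a, b⟩
  have dl : ∀ x : ℝ, HasDerivAt (fun x : ℝ => τ * x) τ x := by
    intro x; simpa using (hasDerivAt_id x).const_mul τ
  refine ⟨fun x hx => ?_, fun x hx => ?_, fun x hx => hz.norm _ (hm x hx)⟩
  · refine ((hz.d1 _ (hm x hx)).scomp x (dl x)).congr_deriv ?_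
    rw [Complex.real_smul, ex_swap]; push_cast; ring
  · refine ((hz.d2 _ (hm x hx)).scomp x (dl x)).congr_deriv ?_
    rw [Complex.real_smul, ex_swap, show τ * -ξ = -(τ * ξ) by ring]; push_cast; ring

lemma ZS.var {w : ℝ → ℝ} {ξ a b κ : ℝ} {c1 c2 : ℝ → ℂ} (hz : ZS w ξ a b c1 c2) (hw : Continuous w)
    (hab : a ≤ b) (hκ : ∫ x in a..b, |w x| ≤ κ) : ‖c1 b - c1 a‖ ≤ κ := by
  have ci : IntervalIntegrable (fun x => (w x : ℂ) * ex ξ x * c2 x) volume a b := by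
    refine ContinuousOn.intervalIntegrable ?_
    rw [Set.uIcc_of_le hab]
    exact ((Complex.continuous_ofReal.comp hw).mul (ex_cont ξ)).continuousOn.mul hz.cont2
  rw [← intervalIntegral.integral_eq_sub_of_hasDerivAt
    (fun x hx => hz.d1 x (by rwa [Set.uIcc_of_le hab] at hx)) ci]
  refine (intervalIntegral.norm_integral_le_of_norm_le hab (.of_forall fun x hx => ?_)
    (hw.abs.intervalIntegrable _ _)).trans hκ
  rw [norm_mul, norm_mul, norm_ex, Complex.norm_real, Real.norm_eq_abs, mul_one]
  exact mul_le_of_le_one_right (abs_nonneg _) (hz.le2 (Set.Ioc_subset_Icc_self hx))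

open Filter Topology in
set_option maxHeartbeats 800000 in
/-- At a fixed time the reflection coefficient of the truncated potentials has, up to `O(ε³)`, the
modulus of the Fourier transform of the solution. -/
lemma Spec.refl {v0 v1 v2 : ℝ → ℝ} {h h1 : ℝ → ℂ} {τ ε ξ : ℝ} (S : Spec v0 v1 v2 h h1 τ ε) (hτ : 0 < τ)
    (hε : 0 < ε) (hε1 : C0 * (600 * ε) ≤ 1) {w : ℕ → ℝ → ℝ} {c1 c2 : ℕ → ℝ → ℂ}
    (cw : ∀ n, Continuous (w n)) (hw : ∀ n x, |w n x| ≤ |v0 x|)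
    (hw1 : ∀ n : ℕ, ∀ x : ℝ, |x| ≤ (n : ℝ) + 1 → w n x = rr * v0 x)
    (hz : ∀ n : ℕ, ZS (w n) ξ (-(2 * (n + 1))) (2 * (n + 1)) (c1 n) (c2 n))
    (h0 : ∀ n : ℕ, c1 n (-(2 * (n + 1))) = 0) {η : ℝ} (hη : 0 < η) :
    ∀ᶠ n : ℕ in atTop, |‖c1 n (2 * (n + 1))‖ - rr * ‖∫ y, (v0 y : ℂ) * ex ξ y‖| ≤
      120 * (C0 * (600 * ε)) ^ 3 + η := by
  have P := S.pf hτ hε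
  have cv : Continuous v0 := continuous_iff_continuousAt.2 fun x => (S.d0 x).continuousAt
  have tR : Tendsto (fun n : ℕ => (n : ℝ) + 1) atTop atTop :=
    tendsto_atTop_add_const_right _ _ tendsto_natCast_atTop_atTop
  have tR' : Tendsto (fun n : ℕ => -((n : ℝ) + 1)) atTop atBot := tendsto_neg_atTop_atBot.comp tR
  have iE : Integrable (fun y => (v0 y : ℂ) * ex ξ y) := by
    refine S.i0.mono ((Complex.continuous_ofReal.comp cv).mul (ex_cont ξ)).aestronglyMeasurable
      (.of_forall fun y => ?_)
    rw [norm_mul, norm_ex, mul_one, Complex.norm_real]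
  have t1 := intervalIntegral_tendsto_integral S.i0.abs tR' tR
  have t2 := (intervalIntegral_tendsto_integral iE tR' tR).norm
  set J := ∫ y, |v0 y| with hJ
  set K := ‖∫ y, (v0 y : ℂ) * ex ξ y‖ with hK
  set σ := √(1 + |τ * ξ|) with hσd
  have hσ : 1 ≤ σ := by rw [hσd, Real.one_le_sqrt]; linarith [abs_nonneg (τ * ξ)]
  have hσ2 : σ ^ 2 = 1 + |τ * ξ| := Real.sq_sqrt (by positivity)
  have hd : 0 < min 1 (η / 200) := by positivity
  filter_upwards [t1.eventually (lt_mem_nhds (show J - min 1 (η / 200) < J by linarith)),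
    t2.eventually (Metric.ball_mem_nhds _ hd),
    tR.eventually (eventually_ge_atTop (τ * (3 * (τ * ξ) ^ 2 + 3 * σ)))] with n n1 n2 n3
  set R : ℝ := (n : ℝ) + 1 with hR
  have R0 : 0 < R := by positivity
  set κ := min 1 (η / 200) with hκ
  have κ1 : κ ≤ 1 := min_le_left _ _
  have κη : κ ≤ η / 200 := min_le_right _ _
  have iv : ∀ a b, IntervalIntegrable (fun x => |v0 x|) volume a b := fun a b => cv.abs.intervalIntegrable _ _
  have iw : ∀ a b, IntervalIntegrable (fun x => |w n x|) volume a b := fun a b => (cw n).abs.intervalIntegrable _ _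
  have nn : ∀ a b : ℝ, a ≤ b → 0 ≤ ∫ x in a..b, |v0 x| := fun a b hab =>
    intervalIntegral.integral_nonneg hab fun x _ => abs_nonneg _
  have big : ∫ x in (-(2 * R))..(2 * R), |v0 x| ≤ J := by
    rw [intervalIntegral.integral_of_le (by linarith)]
    exact setIntegral_le_integral S.i0.abs (.of_forall fun x => abs_nonneg _)
  rw [← intervalIntegral.integral_add_adjacent_intervals (iv _ (-R)) (iv _ _),
    ← intervalIntegral.integral_add_adjacent_intervals (iv (-R) R) (iv _ _)] at big
  have a1 := nn (-(2 * R)) (-R) (by linarith)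
  have a2 := nn R (2 * R) (by linarith)
  have wl : ∫ x in (-(2 * R))..(-R), |w n x| ≤ κ :=
    (intervalIntegral.integral_mono_on (by linarith) (iw _ _) (iv _ _) fun x _ => hw n x).trans (by linarith)
  have wr : ∫ x in R..(2 * R), |w n x| ≤ κ :=
    (intervalIntegral.integral_mono_on (by linarith) (iw _ _) (iv _ _) fun x _ => hw n x).trans (by linarith)
  have b1 : ‖c1 n (-R)‖ ≤ κ := by
    have := ((hz n).mono (a' := -(2 * R)) (b' := -R) le_rfl (by linarith)).var (cw n) (by linarith) wl
    rwa [h0 n, sub_zero] at this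
  have b2 : ‖c1 n (2 * R) - c1 n R‖ ≤ κ :=
    ((hz n).mono (a' := R) (b' := 2 * R) (by linarith) le_rfl).var (cw n) (by linarith) wr
  have zm : ZS (fun x => rr * v0 x) ξ (-R) R (c1 n) (c2 n) :=
    ((hz n).mono (a' := -R) (b' := R) (by linarith) (by linarith)).congr fun x hx =>
      hw1 n x (abs_le.2 ⟨by linarith [hx.1], by linarith [hx.2]⟩)
  have zs := zm.scale hτ
  have zs' : ZS (fun x => rr * (τ * v0 (τ * x))) (τ * ξ) (-(R / τ)) (R / τ) (fun x => c1 n (τ * x))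
      (fun x => c2 n (τ * x)) := zs.congr fun x _ => by ring
  have e1 : τ * (R / τ) = R := mul_div_cancel₀ _ hτ.ne'
  have e2 : τ * -(R / τ) = -R := by rw [mul_neg, e1]
  have sc := scatter_prof P hσ hσ2 (R := R / τ) (κ := κ) (by rw [le_div_iff₀ hτ]; linarith) hε1 zs' hd.le κ1
    (by simp only [e2]; exact b1)
  simp only [e1] at sc
  have ei : ∫ y in (-(R / τ))..(R / τ), ((τ * v0 (τ * y) : ℝ) : ℂ) * ex (τ * ξ) y =
      ∫ y in (-R)..R, (v0 y : ℂ) * ex ξ y := by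
    have := intervalIntegral.smul_integral_comp_mul_left (a := -(R / τ)) (b := R / τ)
      (fun y => (v0 y : ℂ) * ex ξ y) τ
    rw [e1, e2] at this
    rw [← this, ← intervalIntegral.integral_smul]
    congr 1; ext y
    rw [ex_swap, Complex.real_smul]; push_cast; ring
  rw [ei] at sc
  rw [Real.dist_eq] at n2
  have hrr := rr_pos
  have hrr1 := rr_le_one
  have c3 : |‖c1 n (2 * R)‖ - ‖c1 n R‖| ≤ κ := (abs_norm_sub_norm_le _ _).trans b2
  have c4 : |rr * ‖∫ y in (-R)..R, (v0 y : ℂ) * ex ξ y‖ - rr * K| ≤ κ := by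
    rw [← mul_sub, abs_mul, abs_of_pos hrr]
    nlinarith [abs_nonneg (‖∫ y in (-R)..R, (v0 y : ℂ) * ex ξ y‖ - K)]
  rw [abs_le] at sc c3 c4 ⊢
  constructor <;> linarith

/-! ### The Fourier transform of Schwartz functions -/

lemma two_pi_sqrt_sq : ((√(2 * π) : ℝ) : ℂ) * ((√(2 * π) : ℝ) : ℂ) = 2 * π := by
  rw [← Complex.ofReal_mul, Real.mul_self_sqrt (by positivity)]; push_cast; rfl

lemma two_pi_sqrt_ne : ((√(2 * π) : ℝ) : ℂ) ≠ 0 := by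
  exact_mod_cast (Real.sqrt_pos.2 (by positivity)).ne'

open FourierTransform in
lemma FT_eq (g : ℝ → ℂ) (ξ : ℝ) : FT g ξ = ((√(2 * π) : ℝ) : ℂ)⁻¹ * 𝓕 g (ξ / (2 * π)) := by
  rw [FT, Real.fourier_real_eq_integral_exp_smul]
  congr 2; ext x
  rw [smul_eq_mul]; congr 2
  push_cast
  have : (π : ℂ) ≠ 0 := by exact_mod_cast Real.pi_ne_zero
  field_simp

open FourierTransform in
lemma FT_schwartz (g : SchwartzMap ℝ ℂ) : ∃ G : SchwartzMap ℝ ℂ, ∀ ξ, FT g ξ = G ξ := by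
  have h2 : (2 * π)⁻¹ ≠ 0 := by positivity
  refine ⟨((√(2 * π) : ℝ) : ℂ)⁻¹ • SchwartzMap.compCLMOfContinuousLinearEquiv ℂ
    (ContinuousLinearEquiv.smulLeft (Units.mk0 _ h2)) (𝓕 g), fun ξ => ?_⟩
  rw [FT_eq, smul_apply, smul_eq_mul, SchwartzMap.compCLMOfContinuousLinearEquiv_apply]
  simp only [Function.comp, SchwartzMap.fourier_coe]
  congr 2
  rw [div_eq_inv_mul]; rfl

open FourierTransform in
lemma FT_plancherel (g : SchwartzMap ℝ ℂ) : ∫ ξ, ‖FT g ξ‖ ^ 2 = ∫ x, ‖g x‖ ^ 2 := by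
  simp only [FT_eq, norm_mul, mul_pow]
  rw [integral_const_mul, Measure.integral_comp_div (fun y => ‖𝓕 (g : ℝ → ℂ) y‖ ^ 2)]
  have := SchwartzMap.integral_norm_sq_fourier g
  rw [SchwartzMap.fourier_coe] at this
  rw [this, norm_inv, Complex.norm_real, Real.norm_eq_abs, inv_pow, sq_abs, Real.sq_sqrt (by positivity),
    abs_of_pos (by positivity), smul_eq_mul, ← mul_assoc, inv_mul_cancel₀ (by positivity), one_mul]

open FourierTransform in
lemma FT_inv (g : SchwartzMap ℝ ℂ) (x : ℝ) :
    g x = ((√(2 * π) : ℝ) : ℂ)⁻¹ * ∫ ξ, FT g ξ * ex x ξ := by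
  have h := g.continuous.fourierInv_fourier_eq g.integrable
    (by simpa only [SchwartzMap.fourier_coe] using (𝓕 g).integrable)
  have hx := congrFun h x
  rw [Real.fourierInv_eq'] at hx
  have e : ∀ ξ : ℝ, FT g ξ * ex x ξ = ((√(2 * π) : ℝ) : ℂ)⁻¹ *
      ((fun y : ℝ => 𝓕 (g : ℝ → ℂ) y * ex (2 * π * x) y) (ξ / (2 * π))) := by
    intro ξ
    simp only [FT_eq, mul_assoc]
    congr 2
    rw [ex, ex]; congr 1; push_cast
    have : (π : ℂ) ≠ 0 := by exact_mod_cast Real.pi_ne_zero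
    field_simp
  simp only [e]
  rw [integral_const_mul, Measure.integral_comp_div (fun y : ℝ => 𝓕 (g : ℝ → ℂ) y * ex (2 * π * x) y),
    abs_of_pos (by positivity), Complex.real_smul, ← mul_assoc,
    ← mul_assoc, ← mul_inv, two_pi_sqrt_sq]
  push_cast
  rw [inv_mul_cancel₀ (by simp [Real.pi_ne_zero]), one_mul]
  refine hx.symm.trans ?_
  congr 1; ext y
  rw [smul_eq_mul, mul_comm, ex]
  congr 2
  simp only [RCLike.inner_apply, conj_trivial]; push_cast; ring

lemma sch_mul_x (g : SchwartzMap ℝ ℂ) : ∃ k : SchwartzMap ℝ ℂ, ∀ x : ℝ, (x : ℂ) * g x = k x := by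
  have h : Function.HasTemperateGrowth (fun x : ℝ => (x : ℂ)) :=
    Complex.ofRealCLM.hasTemperateGrowth
  exact ⟨SchwartzMap.smulLeftCLM ℂ _ g, fun x => by rw [SchwartzMap.smulLeftCLM_apply_apply h, smul_eq_mul]⟩

open FourierTransform in
lemma FT_dx (g : SchwartzMap ℝ ℂ) (ξ : ℝ) :
    HasDerivAt (FT g) (-I * FT (fun x : ℝ => (x : ℂ) * g x) ξ) ξ := by
  obtain ⟨k, hk⟩ := sch_mul_x g
  have hx : Integrable (fun x : ℝ => x • g x) := by
    refine k.integrable.congr (.of_forall fun x => ?_)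
    simp only [Complex.real_smul, hk]
  have h := hasDerivAt_fourier g.integrable hx (ξ / (2 * π))
  have hd : HasDerivAt (fun ξ : ℝ => ξ / (2 * π)) (2 * π)⁻¹ ξ := by
    simpa [div_eq_mul_inv] using (hasDerivAt_id ξ).div_const (2 * π)
  have := (h.scomp ξ hd).const_mul (((√(2 * π) : ℝ) : ℂ)⁻¹)
  rw [show FT g = fun ξ => ((√(2 * π) : ℝ) : ℂ)⁻¹ * 𝓕 (g : ℝ → ℂ) (ξ / (2 * π)) from funext (FT_eq g)]
  refine this.congr_deriv ?_
  rw [FT_eq, Real.fourier_real_eq_integral_exp_smul, Real.fourier_real_eq_integral_exp_smul, Complex.real_smul]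
  rw [show ∀ a b c d : ℂ, a * (b * c) = -I * (a * d) ↔ a * (b * c) = a * (-I * d) from
    fun a b c d => by rw [mul_left_comm (-I) a d], ← integral_const_mul, ← integral_const_mul,
    ← integral_const_mul, ← integral_const_mul]
  refine integral_congr_ae (.of_forall fun x => ?_)
  have : (π : ℂ) ≠ 0 := by exact_mod_cast Real.pi_ne_zero
  simp only [smul_eq_mul]
  push_cast
  field_simp

open FourierTransform in
lemma FT_deriv (g : SchwartzMap ℝ ℂ) (ξ : ℝ) : FT (deriv g) ξ = I * ξ * FT g ξ := by
  have h := Real.fourier_deriv g.integrable g.differentiable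
    (SchwartzMap.derivCLM ℂ ℂ g).integrable
  rw [FT_eq, FT_eq, h]
  simp only [smul_eq_mul]
  push_cast
  have : (π : ℂ) ≠ 0 := by exact_mod_cast Real.pi_ne_zero
  field_simp

lemma temperate_exp : Function.HasTemperateGrowth (fun s : ℝ => cexp (I * s)) := by
  have hd : ∀ s : ℝ, HasDerivAt (fun s : ℝ => cexp (I * s)) (I * cexp (I * s)) s := by
    intro s
    have := ((Complex.ofRealCLM.hasDerivAt (x := s)).const_mul I).cexp
    refine this.congr_deriv ?_
    simp [mul_comm]
  have hi : ∀ n : ℕ, iteratedDeriv n (fun s : ℝ => cexp (I * s)) = fun s : ℝ => I ^ n * cexp (I * s) := by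
    intro n
    induction n with
    | zero => simp
    | succ n ih =>
      rw [iteratedDeriv_succ, ih]
      ext s
      rw [((hd s).const_mul _).deriv]; ring
  refine ⟨(contDiff_const.mul Complex.ofRealCLM.contDiff).cexp, fun n => ⟨0, 1, fun s => ?_⟩⟩
  rw [norm_iteratedFDeriv_eq_norm_iteratedDeriv, hi, norm_mul, norm_pow, Complex.norm_I, mul_comm I,
    Complex.norm_exp_ofReal_mul_I]
  simp

lemma sch_phase (g : SchwartzMap ℝ ℂ) (t : ℝ) :
    ∃ k : SchwartzMap ℝ ℂ, ∀ ξ : ℝ, cexp (-(I * t * ξ ^ 3)) * g ξ = k ξ := by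
  have h : Function.HasTemperateGrowth (fun ξ : ℝ => cexp (I * ((-(t * ξ ^ 3) : ℝ) : ℂ))) :=
    temperate_exp.comp (f := fun ξ : ℝ => -(t * ξ ^ 3)) (by fun_prop)
  refine ⟨SchwartzMap.smulLeftCLM ℂ _ g, fun x => by
    rw [SchwartzMap.smulLeftCLM_apply_apply h, smul_eq_mul]
    congr 2; push_cast; ring⟩

/-! ### From the X-norm to the spectral data -/

lemma sch_sq_int (g : SchwartzMap ℝ ℂ) : Integrable (fun x => ‖g x‖ ^ 2) :=
  (g.memLp 2 volume).integrable_norm_pow (by norm_num)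

lemma sch_bdd (g : SchwartzMap ℝ ℂ) : BddAbove (Set.range fun x => ‖g x‖) :=
  ⟨_, by rintro _ ⟨x, rfl⟩; exact SchwartzMap.norm_le_seminorm ℝ g x⟩

lemma V_schwartzC {u : ℝ → ℝ → ℝ} (hu : IsMKdVOn u (Set.Ici 0)) (j : ℕ) {t : ℝ} (ht : 0 ≤ t) :
    ∃ g : SchwartzMap ℝ ℂ, ∀ x, (V u j t x : ℂ) = g x := by
  obtain ⟨g, hg⟩ := V_schwartz hu j ht
  exact ⟨g.postcompCLM Complex.ofRealCLM, fun x => by simp [hg]⟩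

lemma ex_eq_FT (x ξ : ℝ) (z : ℂ) : cexp (I * x * ξ) * z = cexp (-(I * ξ * ((-x : ℝ) : ℂ))) * z := by
  congr 2; push_cast; ring

/-- The weighted norm of the profile is the norm of `∂_ξ` of its Fourier transform, which is
controlled by that of `(∂_ξ - 3 i t ξ²) û`. -/
lemma prof_weighted {u : ℝ → ℝ → ℝ} {t : ℝ} (g P : SchwartzMap ℝ ℂ) (hg : ∀ x, (u t x : ℂ) = g x)
    (hP : ∀ ξ : ℝ, cexp (-(I * t * ξ ^ 3)) * FT g ξ = P ξ) :
    Integrable (fun η : ℝ => ‖-I * FT (fun x : ℝ => (x : ℂ) * g x) η - 3 * I * t * η ^ 2 * FT g η‖ ^ 2) ∧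
    ∫ η : ℝ, ‖-I * FT (fun x : ℝ => (x : ℂ) * g x) η - 3 * I * t * η ^ 2 * FT g η‖ ^ 2 =
      ∫ x : ℝ, ‖(x : ℂ) * prof u t x‖ ^ 2 := by
  have dP : ∀ ξ : ℝ, HasDerivAt P (cexp (-(I * t * ξ ^ 3)) *
      (-I * FT (fun x : ℝ => (x : ℂ) * g x) ξ - 3 * I * t * ξ ^ 2 * FT g ξ)) ξ := by
    intro ξ
    rw [show (P : ℝ → ℂ) = fun ξ : ℝ => cexp (-(I * t * ξ ^ 3)) * FT g ξ from funext fun ξ => (hP ξ).symm]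
    have h3 : HasDerivAt (fun ξ : ℝ => -(I * t * (ξ : ℂ) ^ 3)) (-(I * t * (3 * ξ ^ 2))) ξ := by
      have := ((((hasDerivAt_id ξ).ofReal_comp).fun_pow 3).const_mul (I * t)).neg
      refine this.congr_deriv ?_
      simp
    refine (h3.cexp.mul (FT_dx g ξ)).congr_deriv ?_
    ring
  have nP : ∀ ξ : ℝ, ‖-I * FT (fun x : ℝ => (x : ℂ) * g x) ξ - 3 * I * t * ξ ^ 2 * FT g ξ‖ ^ 2 =
      ‖SchwartzMap.derivCLM ℂ ℂ P ξ‖ ^ 2 := by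
    intro ξ
    rw [SchwartzMap.derivCLM_apply, (dP ξ).deriv, norm_mul,
      show -(I * t * (ξ : ℂ) ^ 3) = ((-(t * ξ ^ 3) : ℝ) : ℂ) * I by push_cast; ring,
      Complex.norm_exp_ofReal_mul_I, one_mul]
  simp only [nP]
  refine ⟨sch_sq_int _, ?_⟩
  rw [← FT_plancherel, ← integral_neg_eq_self]
  congr 1; ext x
  have e : prof u t x = FT P (-x) := by
    rw [prof, FT]
    congr 2; ext ξ
    rw [ex_eq_FT, profFT, ← hP, show (fun x => (u t x : ℂ)) = g from funext hg]
  have e2 : (SchwartzMap.derivCLM ℂ ℂ P : ℝ → ℂ) = deriv P := rfl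
  rw [e, e2, FT_deriv, norm_mul, norm_mul, norm_mul, Complex.norm_I, Complex.norm_real, Complex.norm_real,
    norm_neg, one_mul]

lemma FT_sub (a b : SchwartzMap ℝ ℂ) (c : ℂ) (ξ : ℝ) :
    FT (fun x => a x - c * b x) ξ = FT a ξ - c * FT b ξ := by
  have i : ∀ a : SchwartzMap ℝ ℂ, Integrable (fun x : ℝ => cexp (-(I * x * ξ)) * a x) := by
    intro a
    refine a.integrable.mono (by fun_prop) (.of_forall fun x => ?_)
    rw [norm_mul, show -(I * (x : ℂ) * ξ) = ((-(x * ξ) : ℝ) : ℂ) * I by push_cast; ring,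
      Complex.norm_exp_ofReal_mul_I, one_mul]
  have j : Integrable (fun x : ℝ => c * (cexp (-(I * x * ξ)) * b x)) := (i b).const_mul c
  rw [FT, FT, FT, show (fun x : ℝ => cexp (-(I * x * ξ)) * (a x - c * b x)) =
    fun x : ℝ => cexp (-(I * x * ξ)) * a x - c * (cexp (-(I * x * ξ)) * b x) by ext x; ring,
    integral_sub (i a) j, integral_const_mul]
  ring

lemma tau_cube {t : ℝ} (ht : 1 ≤ t) : (t ^ ((1 : ℝ) / 3)) ^ 3 = t := by
  rw [← Real.rpow_natCast, ← Real.rpow_mul (by linarith)]; norm_num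

lemma tau_weight {t : ℝ} (ht : 1 ≤ t) : (t ^ (-(1 : ℝ) / 6)) ^ 2 * t ^ ((1 : ℝ) / 3) = 1 := by
  rw [← Real.rpow_natCast, ← Real.rpow_mul (by linarith), ← Real.rpow_add (by linarith)]; norm_num

lemma L2norm_nonneg (g : ℝ → ℂ) : 0 ≤ L2norm g := Real.sqrt_nonneg _
lemma H1norm_nonneg (g : ℝ → ℂ) : 0 ≤ H1norm g := Real.sqrt_nonneg _
lemma LinfNorm_nonneg (g : ℝ → ℂ) : 0 ≤ LinfNorm g := Real.iSup_nonneg fun _ => norm_nonneg _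

lemma L2norm_sq (g : ℝ → ℂ) : L2norm g ^ 2 = ∫ x, ‖g x‖ ^ 2 :=
  Real.sq_sqrt (integral_nonneg fun _ => by positivity)

lemma H1norm_sq (g : ℝ → ℂ) : H1norm g ^ 2 = L2norm g ^ 2 + L2norm (deriv g) ^ 2 :=
  Real.sq_sqrt (by positivity)

lemma X_parts {δ α ε t : ℝ} {u : ℝ → ℝ → ℝ} (ht : 1 ≤ t) (hX : Xexpr δ α u t ≤ ε) :
    t ^ (-δ) * H1norm (fun x => (u t x : ℂ)) ≤ ε ∧
    t ^ (-(1:ℝ)/6) * H1norm (fun x => (x : ℂ) * prof u t x) ≤ ε ∧ LinfNorm (profFT u t) ≤ ε := by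
  have t0 : 0 ≤ t := by linarith
  have a1 : 0 ≤ t ^ (-δ) * H1norm (fun x => (u t x : ℂ)) := mul_nonneg (Real.rpow_nonneg t0 _) (H1norm_nonneg _)
  have a2 : 0 ≤ t ^ (-(1:ℝ)/6) * H1norm (fun x => (x : ℂ) * prof u t x) :=
    mul_nonneg (Real.rpow_nonneg t0 _) (H1norm_nonneg _)
  have a3 : 0 ≤ t ^ (α/3 - 1/6) *
        L2norm (fun ξ => ((|ξ| ^ α : ℝ) : ℂ) * FT (fun x => (x : ℂ) * prof u t x) ξ) :=
    mul_nonneg (Real.rpow_nonneg t0 _) (L2norm_nonneg _)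
  have a4 := LinfNorm_nonneg (profFT u t)
  rw [Xexpr] at hX
  exact ⟨by linarith, by linarith, by linarith⟩

lemma norm_profFT (u : ℝ → ℝ → ℝ) (t ξ : ℝ) : ‖profFT u t ξ‖ = ‖FT (fun x => (u t x : ℂ)) ξ‖ := by
  rw [profFT, norm_mul, show -(I * t * (ξ : ℂ) ^ 3) = ((-(t * ξ ^ 3) : ℝ) : ℂ) * I by push_cast; ring,
      Complex.norm_exp_ofReal_mul_I, one_mul]

lemma FT_bdd {u : ℝ → ℝ → ℝ} (hu : IsMKdVOn u (Set.Ici 0)) {t : ℝ} (ht : 0 ≤ t) :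
    BddAbove (Set.range fun ξ => ‖FT (fun x => (u t x : ℂ)) ξ‖) := by
  obtain ⟨g, hg⟩ := V_schwartzC hu 0 ht
  obtain ⟨G, hG⟩ := FT_schwartz g
  simp only [V_zero] at hg
  have := sch_bdd G
  rw [show (fun x => (u t x : ℂ)) = g from funext hg]
  simpa only [hG] using this

/-- The bounds contained in the X-norm at time `t` give the spectral data at scale `τ = t^{1/3}`. -/
lemma spec_of_X {δ α ε t : ℝ} {u : ℝ → ℝ → ℝ} (hu : IsMKdVOn u (Set.Ici 0)) (ht : 1 ≤ t)
    (hX : Xexpr δ α u t ≤ ε) :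
    Spec (V u 0 t) (V u 1 t) (V u 2 t) (FT (fun x => (u t x : ℂ)))
      (fun ξ => -I * FT (fun x : ℝ => (x : ℂ) * u t x) ξ) (t ^ ((1 : ℝ) / 3)) ε := by
  have t0 : 0 ≤ t := by linarith
  obtain ⟨-, x2, x3⟩ := X_parts ht hX
  obtain ⟨g, hg⟩ := V_schwartzC hu 0 t0
  obtain ⟨G, hG⟩ := FT_schwartz g
  obtain ⟨P, hP⟩ := sch_phase G t
  obtain ⟨k, hk⟩ := sch_mul_x g
  obtain ⟨kf, hkf⟩ := FT_schwartz k
  obtain ⟨G', hG'⟩ := sch_mul_x G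
  have hP' : ∀ ξ : ℝ, cexp (-(I * t * ξ ^ 3)) * FT g ξ = P ξ := fun ξ => by rw [hG]; exact hP ξ
  have hgu : ∀ x, (u t x : ℂ) = g x := fun x => by rw [← hg, V_zero]
  have eg : (fun x => (u t x : ℂ)) = g := funext hgu
  have ek : (fun x : ℝ => (x : ℂ) * g x) = k := funext hk
  have d1 : deriv g = fun x => (V u 1 t x : ℂ) := by
    ext x; rw [← eg]
    have := V_dxC hu 0 t0 x
    simp only [V_zero, zero_add] at this
    exact this.deriv
  have d2 : deriv (SchwartzMap.derivCLM ℂ ℂ g) = fun x => (V u 2 t x : ℂ) := by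
    ext x
    rw [show (SchwartzMap.derivCLM ℂ ℂ g : ℝ → ℂ) = deriv g from rfl, d1]
    exact (V_dxC hu 1 t0 x).deriv
  obtain ⟨iG, bG⟩ := prof_weighted g P hgu hP'
  have bG' : ∫ η : ℝ, ‖-I * FT (fun x : ℝ => (x : ℂ) * g x) η - 3 * I * t * η ^ 2 * FT g η‖ ^ 2 ≤
      ε ^ 2 * t ^ ((1 : ℝ) / 3) := by
    rw [bG, ← L2norm_sq]
    set H := H1norm (fun x => (x : ℂ) * prof u t x) with hH
    have h1 : L2norm (fun x : ℝ => (x : ℂ) * prof u t x) ^ 2 ≤ H ^ 2 := by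
      rw [hH, H1norm_sq]; linarith [sq_nonneg (L2norm (deriv (fun x : ℝ => (x : ℂ) * prof u t x)))]
    have h2 : (t ^ (-(1:ℝ)/6) * H) ^ 2 ≤ ε ^ 2 :=
      pow_le_pow_left₀ (mul_nonneg (Real.rpow_nonneg t0 _) (H1norm_nonneg _)) x2 2
    have h3 := mul_le_mul_of_nonneg_right h2 (Real.rpow_nonneg t0 ((1 : ℝ) / 3))
    have h4 := tau_weight ht
    have : (t ^ (-(1:ℝ)/6) * H) ^ 2 * t ^ ((1 : ℝ) / 3) = H ^ 2 := by
      linear_combination H ^ 2 * h4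
    linarith
  set F : SchwartzMap ℝ ℂ := k - (3 * t : ℂ) • SchwartzMap.derivCLM ℂ ℂ (SchwartzMap.derivCLM ℂ ℂ g) with hF
  have hFx : ∀ x, F x = k x - (3 * t : ℂ) * SchwartzMap.derivCLM ℂ ℂ (SchwartzMap.derivCLM ℂ ℂ g) x :=
    fun x => rfl
  have nF : ∀ x : ℝ, (x * V u 0 t x - 3 * (t ^ ((1 : ℝ) / 3)) ^ 3 * V u 2 t x) ^ 2 = ‖F x‖ ^ 2 := by
    intro x
    rw [hFx, SchwartzMap.derivCLM_apply, d2, ← hk, ← hg, tau_cube ht, ← sq_abs, ← Real.norm_eq_abs,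
      ← Complex.norm_real]
    push_cast; rfl
  have FF : ∀ ξ, ‖FT F ξ‖ ^ 2 =
      ‖-I * FT (fun x : ℝ => (x : ℂ) * g x) ξ - 3 * I * t * ξ ^ 2 * FT g ξ‖ ^ 2 := by
    intro ξ
    have e1 : FT F ξ = FT k ξ - 3 * t * (I * ξ * (I * ξ * FT g ξ)) := by
      have := FT_sub k (SchwartzMap.derivCLM ℂ ℂ (SchwartzMap.derivCLM ℂ ℂ g)) (3 * t) ξ
      rw [show (F : ℝ → ℂ) = fun x => k x - (3 * t : ℂ) *
        SchwartzMap.derivCLM ℂ ℂ (SchwartzMap.derivCLM ℂ ℂ g) x from funext hFx, this,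
        show (SchwartzMap.derivCLM ℂ ℂ (SchwartzMap.derivCLM ℂ ℂ g) : ℝ → ℂ) =
          deriv (SchwartzMap.derivCLM ℂ ℂ g) from rfl, FT_deriv,
        show (SchwartzMap.derivCLM ℂ ℂ g : ℝ → ℂ) = deriv g from rfl, FT_deriv]
    have e2 : FT F ξ = I * (-I * FT (fun x : ℝ => (x : ℂ) * g x) ξ - 3 * I * t * ξ ^ 2 * FT g ξ) := by
      rw [e1, ek]; linear_combination (FT k ξ) * Complex.I_sq
    rw [e2, norm_mul, Complex.norm_I, one_mul]
  have eh1 : (fun ξ => -I * FT (fun x : ℝ => (x : ℂ) * u t x) ξ) = fun ξ => -I * FT k ξ := by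
    simp only [hgu, ek]
  rw [eg, eh1]
  rw [ek] at iG bG'
  simp only [ek] at FF
  refine ⟨V_dx hu 0 t0, V_dx hu 1 t0, V_cont hu 2 t0, (V_dec hu 0 t0).integrable, fun η => ?_, ?_,
    fun η => ?_, ?_, ?_, fun x => ?_, fun x => ?_, ?_, ?_, ?_, ?_⟩
  · have := FT_dx g η
    rwa [ek] at this
  · simp only [hkf]
    exact continuous_const.mul kf.continuous
  · have b := FT_bdd hu t0
    have : ‖FT g η‖ = ‖profFT u t η‖ := by rw [norm_profFT, eg]
    rw [this]
    refine le_trans ?_ x3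
    refine le_ciSup (f := fun η => ‖profFT u t η‖) ?_ η
    simpa only [norm_profFT] using b
  · rw [show FT g = G from funext hG]; exact G.integrable
  · simp only [hG, hG']; exact G'.integrable
  · rw [hg]; exact FT_inv g x
  · have := FT_inv (SchwartzMap.derivCLM ℂ ℂ g) x
    rw [show (SchwartzMap.derivCLM ℂ ℂ g : ℝ → ℂ) = deriv g from rfl] at this
    simp only [FT_deriv] at this
    rw [d1] at this
    refine this.trans ?_
    congr 1
    rw [← integral_const_mul]
    exact integral_congr_ae (.of_forall fun ξ => by ring)
  · rw [tau_cube ht]; exact iG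
  · rw [tau_cube ht]; exact bG'
  · simp only [nF]; exact sch_sq_int F
  · simp only [nF]
    rw [← FT_plancherel]
    simp only [FF]; exact bG'

/-! ### Conclusion -/

lemma IV_one_X {δ α ε : ℝ} {u : ℝ → ℝ → ℝ} (hu : IsMKdVOn u (Set.Ici 0)) (hX : Xexpr δ α u 1 ≤ ε) :
    IV u 0 1 + IV u 1 1 ≤ ε ^ 2 := by
  obtain ⟨x1, -, -⟩ := X_parts le_rfl hX
  rw [Real.one_rpow, one_mul] at x1
  have h := pow_le_pow_left₀ (H1norm_nonneg _) x1 2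
  have d : deriv (fun x => (u 1 x : ℂ)) = fun x => (V u 1 1 x : ℂ) := by
    ext x
    have := V_dxC hu 0 zero_le_one x
    simp only [V_zero, zero_add] at this
    exact this.deriv
  rw [H1norm_sq, d, L2norm_sq, L2norm_sq] at h
  simpa only [IV, V_zero, Complex.norm_real, Real.norm_eq_abs, sq_abs] using h

lemma integral_ex_FT (g : ℝ → ℝ) (ξ : ℝ) :
    ‖∫ y, (g y : ℂ) * ex (-ξ) y‖ = √(2 * π) * ‖FT (fun x => (g x : ℂ)) ξ‖ := by
  have e : ∫ y, (g y : ℂ) * ex (-ξ) y = ((√(2 * π) : ℝ) : ℂ) * FT (fun x => (g x : ℂ)) ξ := by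
    rw [FT, ← mul_assoc, mul_inv_cancel₀ two_pi_sqrt_ne, one_mul]
    refine integral_congr_ae (.of_forall fun y => ?_)
    simp only [ex]
    rw [mul_comm]; congr 2; push_cast; ring
  rw [e, norm_mul, Complex.norm_real, Real.norm_eq_abs, abs_of_nonneg (Real.sqrt_nonneg _)]

lemma rr_sqrt_ge : 1 ≤ rr * √(2 * π) := by
  have h : (rr * √(2 * π)) ^ 2 = π := by
    rw [mul_pow, rr_sq, Real.sq_sqrt (by positivity)]; ring
  have h0 : 0 ≤ rr * √(2 * π) := mul_nonneg rr_pos.le (Real.sqrt_nonneg _)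
  nlinarith [Real.pi_gt_three]

/-- The modulus of `û(T, ξ)` differs from that of `û(1, ξ)` by `O(ε³)`: both are given, up to that
error, by the conserved reflection coefficient. -/
lemma FT_growth {δ α ε T : ℝ} {u : ℝ → ℝ → ℝ} (hu : IsMKdVOn u (Set.Ici 0)) (hε : 0 < ε)
    (hε1 : C0 * (600 * ε) ≤ 1) (hX : XLE δ α u ε) (hT : 1 ≤ T) (ξ : ℝ) :
    ‖FT (fun x => (u T x : ℂ)) ξ‖ ≤ ‖FT (fun x => (u 1 x : ℂ)) ξ‖ + 240 * (C0 * (600 * ε)) ^ 3 := by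
  have hC0 := C0_ge
  have ε1 : ε ≤ 1 := by nlinarith
  have h1 := IV_one_X hu (hX 1 le_rfl)
  have hM : ∀ t, 0 < t → IV u 0 t + IV u 1 t ≤ 5 := fun t ht =>
    (H1_all hu ε1 h1 hε.le ht).trans (by nlinarith)
  obtain ⟨K, hK, χ, χ1, χ2, hχ⟩ := exists_cut_seq
  have ex1 : ∀ (n : ℕ) (s : ℝ), ∃ c1 c2 : ℝ → ℂ, 0 < s →
      ZS (pot u (χ n) s) (-ξ) (-(2 * ((n : ℝ) + 1))) (2 * ((n : ℝ) + 1)) c1 c2 ∧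
      c1 (-(2 * ((n : ℝ) + 1))) = 0 ∧ c2 (-(2 * ((n : ℝ) + 1))) = 1 := by
    intro n s
    by_cases hs : 0 < s
    · obtain ⟨c1, c2, h⟩ := exists_ZS (pot_cont hu (hχ n).c hs.le) (-ξ) (Y := 2 * ((n : ℝ) + 1)) (by positivity)
      exact ⟨c1, c2, fun _ => h⟩
    · exact ⟨0, 0, fun h => absurd h hs⟩
  choose C1 C2 hC using ex1
  have key : ∀ s, 1 ≤ s → ∀ η, 0 < η → ∀ᶠ n : ℕ in Filter.atTop,
      |‖C1 n s (2 * (n + 1))‖ - rr * ‖∫ y, (V u 0 s y : ℂ) * ex (-ξ) y‖| ≤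
      120 * (C0 * (600 * ε)) ^ 3 + η := by
    intro s hs η hη
    have s0 : 0 < s := by linarith
    refine (spec_of_X hu hs (hX s hs)).refl (Real.rpow_pos_of_pos s0 _) hε hε1
      (w := fun n => pot u (χ n) s) (c1 := fun n => C1 n s) (c2 := fun n => C2 n s)
      (fun n => pot_cont hu (hχ n).c s0.le) (fun n x => ?_) (fun n x hx => ?_)
      (fun n => (hC n s s0).1) (fun n => (hC n s s0).2.1) hη
    · rw [pot, abs_mul, abs_mul, abs_of_pos rr_pos]
      have a := (hχ n).abs_le_one x
      have b := rr_le_one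
      have c := rr_pos
      calc |χ n x| * (rr * |V u 0 s x|) ≤ 1 * (1 * |V u 0 s x|) := by gcongr
        _ = |V u 0 s x| := by ring
    · rw [pot, (hχ n).one x hx, one_mul]
  have main : rr * ‖∫ y, (V u 0 T y : ℂ) * ex (-ξ) y‖ ≤
      rr * ‖∫ y, (V u 0 1 y : ℂ) * ex (-ξ) y‖ + 240 * (C0 * (600 * ε)) ^ 3 := by
    refine le_of_forall_pos_le_add fun η hη => ?_
    have η3 : 0 < η / 3 := by positivity
    obtain ⟨n, hn⟩ := ((key T hT _ η3).and ((key 1 le_rfl _ η3).and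
      (refl_conserved hu hM hK hχ hT hC η3))).exists
    obtain ⟨a, b, c⟩ := hn
    rw [abs_le] at a b
    linarith [a.1, b.2]
  simp only [V_zero, integral_ex_FT (u T), integral_ex_FT (u 1)] at main
  have hr := rr_sqrt_ge
  have hD : 0 ≤ 240 * (C0 * (600 * ε)) ^ 3 := by
    have : 0 ≤ C0 := by linarith
    positivity
  by_contra! hc
  nlinarith

/-- Proposition 2.5 (uniform control of the Fourier transform of the profile). -/
theorem mkdv_profile_FT_control :
    ∃ C : ℝ, 0 < C ∧ ∃ δ α : ℝ, 0 < δ ∧ 0 < α ∧ α < 1/2 ∧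
      ∃ ε' : ℝ, 0 < ε' ∧
        ∀ ε₁ : ℝ, 0 < ε₁ → ε₁ ≤ ε' →
          ∀ u : ℝ → ℝ → ℝ, IsMKdVOn u (Set.Ici 0) →
            XLE δ α u ε₁ →
            ∀ t : ℝ, 1 ≤ t →
              LinfNorm (profFT u t) ≤ LinfNorm (FT (fun x => (u 0 x : ℂ))) + C * ε₁ ^ 3 := by
  have hC0 : 0 < C0 := by linarith [C0_ge]
  refine ⟨240 * (C0 * 600) ^ 3 + 81, by positivity, 1 / 100, 1 / 4, by norm_num, by norm_num, by norm_num,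
    (C0 * 600)⁻¹, by positivity, fun ε hε hε' u hu hX t ht => ciSup_le fun ξ => ?_⟩
  have hε1 : C0 * (600 * ε) ≤ 1 := by
    calc C0 * (600 * ε) = C0 * 600 * ε := by ring
      _ ≤ C0 * 600 * (C0 * 600)⁻¹ := by gcongr
      _ = 1 := mul_inv_cancel₀ (by positivity)
  have ε1 : ε ≤ 1 := by nlinarith [C0_ge]
  have h1 := IV_one_X hu (hX 1 le_rfl)
  have a := FT_growth hu hε hε1 hX ht ξ
  have b := profile_unit hu (M := 3 * ε) (by positivity)
    (fun t ht _ => (H1_all hu ε1 h1 hε.le ht).trans (by nlinarith [sq_nonneg ε])) ξ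
  have c : ‖FT (fun x => (u 0 x : ℂ)) ξ‖ ≤ LinfNorm (FT (fun x => (u 0 x : ℂ))) :=
    le_ciSup (FT_bdd hu le_rfl) ξ
  have d := (norm_sub_norm_le _ _).trans b
  rw [norm_profFT] at d ⊢
  calc _ ≤ LinfNorm (FT (fun x => (u 0 x : ℂ))) + 3 * (3 * ε) ^ 3 + 240 * (C0 * (600 * ε)) ^ 3 := by linarith
    _ = _ := by ring
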